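/- Fix ν ∈ ℂ. There exists a Hastings–McLeod solution u of the inhomogeneous Painlevé II equation with parameter ν + 1/2, defined on an open set U ⊆ ℝ with closed discrete complement, such that for every compact set K ⊆ U there exist C > 0 and N ∈ ℕ with the property: for all n ≥ N and all t > 0 with ξ := 2^{2/3}·n^{2/3}·(t/n − 1) ∈ K, one has D_{n,ν}(t) ≠ 0, D'¹_{n,ν}(t) ≠ 0, and the ratio r_n(t) = D'¹_{n,ν}(t)/D_{n,ν}(t) (equal, up to the sign (−1)^n, to the constant term π_n(0) of the n-th monic orthogonal polynomial) satisfies |r_n'(t)/r_n(t) + 2^{2/3}·n^{−1/3}·u(ξ)| ≤ C·n^{−2/3}, where r_n' is the derivative with respect to t. -/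

import Mathlib

/-!
Write `r_n = D_{n,ν+1} / D_{n,ν}` (note `D'¹_{n,ν} = D_{n,ν+1}`) and `W_n = -t r_n' / r_n`. The theorem
says that `W_n / t` is `2^{2/3} n^{-1/3} u(ξ) + O(n^{-2/3})`. The proof uses neither Riemann–Hilbert
problems nor any knowledge about Painlevé transcendents; `u` is constructed along the way.

**Integrable structure.** The Desnanot–Jacobi identity (`kminor_desnanot`), applied to Toeplitz
matrices bordered in three ways, combined with `I_μ' = I_{μ∓1} ∓ (μ/t) I_μ`, gives bilinear identities
between the `D_{n,ν}` and their derivatives (`BRule.Aminus`, `BRule.Aplus`, `BRule.P2`, `BRule.C`).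
They imply that `η_n = -log (D_{n,ν+1} D_{n+1,ν} / (D_{n,ν} D_{n+1,ν+1}))` satisfies, as a function of
`s = log t`, a Painlevé III equation with parameters `m = n + 1/2` and `κ = -ν - 1/2`:
`η'' = 2t² sinh 2η - 4t (κ cosh η + m sinh η)` (`hasDerivAt_deriv_etaS`).

**Global control when `Re(-ν)` is large.** Put `k = Re κ`. The right-hand side vanishes, with `κ`
replaced by `k`, on the slow curve `η*`, the positive root of `t sinh η = m tanh η + k`. The linearised
equation there has a large positive zeroth order coefficient, so that maximum principle arguments apply
on the whole line: a solution that stays within `0.02 tanh η*` of `η*` stays within `0.001 tanh η*`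
(`strong_step`). This makes an induction on `n` possible (`eta_close`): closeness of `η_n` controls
`W_{n+1}` through a first-order Riccati equation started at `t = 0` (`chi_bound`), and
`n+1 - W_{n+1} = (n+1 + W_{n+1}) e^{-η_n - η_{n+1}}` then shows that the next determinants do not
vanish and that `η_{n+1}` satisfies the weak bound. The case `n = 0` is a statement about
`I_{-ν} / I_{-ν-1}` (`base_bound`).

**Scaling limit.** With `t = n e^{n^{-2/3} x / λ}`, `λ = 2^{2/3}` and `η_n = λ n^{-1/3} u_n(x)`, the
Painlevé III equation becomes `u_n'' = 2u_n³ + x u_n - κ` up to `O(n^{-1/3})` (`p3rhs_scaled`), and `u_n`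
is close to the positive root of `2w³ + xw = k`. Two such approximate solutions differ little, again by
the maximum principle (`ApproxPII.compare`), so `u_n` is a Cauchy sequence with rate `n^{-1/3}` and
converges to an exact solution without real poles (`base_limit`). That solution is rough-localized near
`±∞`, and barriers turn this into the precise asymptotics (`asym_plus`, `asym_minus`).

**All other `ν ∉ ℕ`.** The quantities `W` and `R = D_{n,ν+2} D_{n,ν} / D_{n,ν+1}²` obey closed
recurrences in `ν` at fixed `n` (`Wt_succ`, `Rt_mul`), whose scaling limit is the Bäcklund
transformation `u ↦ -u - (ν+1)/y`, `y ↦ -y + 2ũ² + x` (`ũ` being the new `u`) of the system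
`u' = y - u² - x/2`, `y' = 2uy + ν + 1`. Hence convergence propagates from `ν` to `ν + 1` as long as
`ν + 1 ≠ 0` (`Pkg.step`). The new poles are zeros of `y`; they are isolated because `u` and `y` are
meromorphic: analyticity of the starting solution comes from the power series construction in
`exists_holomorphic_sol`. Starting from `ν - j` with `j` large, every `ν ∉ ℕ` is reached (`exists_pkg`).

**`ν = m ∈ ℕ`.** Here `I_{-k} = I_k` gives `D_{n,-m} = D_{n,m}`, so that `r_n` for `m` is the inverse of
`r_n` for `-m - 1 ∉ ℕ`. The function `-u` then works, and this is why the sign at `-∞` changes.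
-/

/-- The modified Bessel function of the first kind `I_μ(t)`, for complex order `μ`
and real argument `t`, defined by its convergent power series, with
`(t/2)^μ := exp(μ · log(t/2))` using the real logarithm. -/
noncomputable def besselI (μ : ℂ) (t : ℝ) : ℂ :=
  ∑' k : ℕ, Complex.exp ((2 * (k : ℂ) + μ) * (Real.log (t / 2) : ℂ)) /
    ((k.factorial : ℂ) * Complex.Gamma ((k : ℂ) + μ + 1))

/-- The Toeplitz determinant `D_{n,ν}(t) = det( I_{i-j-ν}(t) )_{i,j=0}^{n-1}`
(with `D_{0,ν}(t) = 1`). -/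
noncomputable def toeplitzD (n : ℕ) (ν : ℂ) (t : ℝ) : ℂ :=
  Matrix.det (Matrix.of fun i j : Fin n => besselI (((i : ℕ) : ℂ) - ((j : ℕ) : ℂ) - ν) t)

/-- The shifted Toeplitz determinant `D'¹_{n,ν}(t) = det( I_{i-j-1-ν}(t) )_{i,j=0}^{n-1}`
(with `D'¹_{0,ν}(t) = 1`). -/
noncomputable def toeplitzD1 (n : ℕ) (ν : ℂ) (t : ℝ) : ℂ :=
  Matrix.det (Matrix.of fun i j : Fin n => besselI (((i : ℕ) : ℂ) - ((j : ℕ) : ℂ) - 1 - ν) t)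

open scoped Classical in
/-- The sign `ε` in the `x → -∞` asymptotics of the Hastings–McLeod solution:
`ε = -1` if `ν ∈ ℕ = {0,1,2,...}` and `ε = +1` otherwise. -/
noncomputable def hmSign (ν : ℂ) : ℂ := if ∃ m : ℕ, ν = (m : ℂ) then -1 else 1

/-- `IsHMSolution ν U u` says that `u` is a Hastings–McLeod solution of the inhomogeneous
Painlevé II equation `u'' = 2u³ + xu + ν + 1/2` with parameter `ν + 1/2`: `u` is twice
continuously differentiable on an open set `U ⊆ ℝ` whose complement is (closed and) discrete,
solves the equation on `U`, and has the prescribed asymptotic behaviour as `x → ±∞`. -/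
def IsHMSolution (ν : ℂ) (U : Set ℝ) (u : ℝ → ℂ) : Prop :=
  IsOpen U ∧ DiscreteTopology ↥(Uᶜ) ∧ ContDiffOn ℝ 2 u U ∧
    (∀ x ∈ U, deriv (deriv u) x = 2 * u x ^ 3 + (x : ℂ) * u x + ν + 1 / 2) ∧
    ∃ M : ℝ, 0 < M ∧ ∃ C : ℝ, 0 < C ∧
      (Set.Ioi M ∪ Set.Iio (-M)) ⊆ U ∧
      (∀ x : ℝ, M < x → ‖u x + (ν + 1 / 2) / (x : ℂ)‖ ≤ C * x ^ (-(5 : ℝ) / 2)) ∧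
      (∀ x : ℝ, x < -M →
        ‖u x - hmSign ν * (Real.sqrt (-x / 2) : ℂ) - (ν + 1 / 2) / (2 * (x : ℂ))‖ ≤
          C * (-x) ^ (-(5 : ℝ) / 2))

/-- The Hamiltonian `H(x) = (1/2)z(z+x) + z·u² - ν·u` associated with a solution `u`
of the inhomogeneous Painlevé II equation, where `z(x) = u'(x) - u(x)² - x/2`. -/
noncomputable def hmHamiltonian (ν : ℂ) (u : ℝ → ℂ) (x : ℝ) : ℂ :=
  (1 / 2) * (deriv u x - u x ^ 2 - (x : ℂ) / 2) * ((deriv u x - u x ^ 2 - (x : ℂ) / 2) + (x : ℂ)) +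
    (deriv u x - u x ^ 2 - (x : ℂ) / 2) * u x ^ 2 - ν * u x

set_option linter.unusedVariables false
open Filter Topology Set
open scoped ComplexConjugate

/-! ### The Desnanot–Jacobi identity -/

/-- The Desnanot–Jacobi identity for a square matrix bordered by two rows and two columns. For
invertible `A` it follows from the Schur complement formula; the general case follows by perturbing
`A` to `A + ε` and letting `ε → 0`. -/
theorem desnanot_blocks {n : ℕ} (A : Matrix (Fin n) (Fin n) ℂ) (B : Matrix (Fin n) (Fin 2) ℂ)
    (C : Matrix (Fin 2) (Fin n) ℂ) (D : Matrix (Fin 2) (Fin 2) ℂ) :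
    let b : Fin 2 → Fin 2 → ℂ := fun i j =>
      (Matrix.fromBlocks A (B.submatrix id (fun _ : Fin 1 => j))
        (C.submatrix (fun _ : Fin 1 => i) id)
        (D.submatrix (fun _ : Fin 1 => i) (fun _ : Fin 1 => j))).det
    (Matrix.fromBlocks A B C D).det * A.det = b 0 0 * b 1 1 - b 0 1 * b 1 0 := by
  intro b
  -- the invertible case follows from the Schur complement formula
  have key : ∀ A : Matrix (Fin n) (Fin n) ℂ, A.det ≠ 0 →
      (Matrix.fromBlocks A B C D).det * A.det =
      (Matrix.fromBlocks A (B.submatrix id (fun _ : Fin 1 => 0))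
        (C.submatrix (fun _ : Fin 1 => 0) id)
        (D.submatrix (fun _ : Fin 1 => 0) (fun _ : Fin 1 => 0))).det *
      (Matrix.fromBlocks A (B.submatrix id (fun _ : Fin 1 => 1))
        (C.submatrix (fun _ : Fin 1 => 1) id)
        (D.submatrix (fun _ : Fin 1 => 1) (fun _ : Fin 1 => 1))).det -
      (Matrix.fromBlocks A (B.submatrix id (fun _ : Fin 1 => 1))
        (C.submatrix (fun _ : Fin 1 => 0) id)
        (D.submatrix (fun _ : Fin 1 => 0) (fun _ : Fin 1 => 1))).det *
      (Matrix.fromBlocks A (B.submatrix id (fun _ : Fin 1 => 0))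
        (C.submatrix (fun _ : Fin 1 => 1) id)
        (D.submatrix (fun _ : Fin 1 => 1) (fun _ : Fin 1 => 0))).det := by
    intro A hA
    let _ := A.invertibleOfIsUnitDet (isUnit_iff_ne_zero.mpr hA)
    simp only [Matrix.det_fromBlocks₁₁, Matrix.det_fin_two, Matrix.det_fin_one]
    simp only [Matrix.sub_apply, Matrix.submatrix_apply, Matrix.mul_apply, id]
    ring
  -- the general case by density of invertible matrices on the line `A + ε`
  have hfin : ∀ᶠ ε : ℂ in nhdsWithin 0 {0}ᶜ, (Matrix.scalar (Fin n) ε + A).det ≠ 0 := by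
    have h0 : (-A).charpoly ≠ 0 := (Matrix.charpoly_monic _).ne_zero
    have hf : {ε : ℂ | (-A).charpoly.IsRoot ε}.Finite := Polynomial.finite_setOfPred_isRoot h0
    have := hf.isClosed.isOpen_compl
    have h2 : ({ε : ℂ | (-A).charpoly.IsRoot ε} \ {0})ᶜ ∈ nhds (0 : ℂ) :=
      (hf.subset Set.sdiff_subset).isClosed.isOpen_compl.mem_nhds (by simp)
    filter_upwards [nhdsWithin_le_nhds h2, self_mem_nhdsWithin] with ε h3 h4 h5
    apply h3
    refine ⟨?_, h4⟩
    simp only [Set.mem_ofPred_eq, Polynomial.IsRoot, Matrix.eval_charpoly, sub_neg_eq_add, h5]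
  have hc : ∀ (m : ℕ) (B : Matrix (Fin n) (Fin m) ℂ) (C : Matrix (Fin m) (Fin n) ℂ)
      (D : Matrix (Fin m) (Fin m) ℂ),
      Continuous fun ε : ℂ => (Matrix.fromBlocks (Matrix.scalar (Fin n) ε + A) B C D).det := by
    intro m B C D
    refine Continuous.matrix_det (Continuous.matrix_fromBlocks ?_ continuous_const
      continuous_const continuous_const)
    refine Continuous.add ?_ continuous_const
    exact Continuous.matrix_diagonal (continuous_pi fun _ => continuous_id)
  have hc0 : Continuous fun ε : ℂ => (Matrix.scalar (Fin n) ε + A).det := by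
    refine Continuous.matrix_det (Continuous.add ?_ continuous_const)
    exact Continuous.matrix_diagonal (continuous_pi fun _ => continuous_id)
  have h1 := ((hc 2 B C D).mul hc0).tendsto 0
  have h2 := (((hc 1 (B.submatrix id (fun _ : Fin 1 => 0)) (C.submatrix (fun _ : Fin 1 => 0) id)
      (D.submatrix (fun _ : Fin 1 => 0) (fun _ : Fin 1 => 0))).mul
      (hc 1 (B.submatrix id (fun _ : Fin 1 => 1)) (C.submatrix (fun _ : Fin 1 => 1) id)
      (D.submatrix (fun _ : Fin 1 => 1) (fun _ : Fin 1 => 1)))).sub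
      ((hc 1 (B.submatrix id (fun _ : Fin 1 => 1)) (C.submatrix (fun _ : Fin 1 => 0) id)
      (D.submatrix (fun _ : Fin 1 => 0) (fun _ : Fin 1 => 1))).mul
      (hc 1 (B.submatrix id (fun _ : Fin 1 => 0)) (C.submatrix (fun _ : Fin 1 => 1) id)
      (D.submatrix (fun _ : Fin 1 => 1) (fun _ : Fin 1 => 0))))).tendsto 0
  have h3 := tendsto_nhds_unique_of_eventuallyEq (h1.mono_left nhdsWithin_le_nhds)
    (h2.mono_left nhdsWithin_le_nhds) (hfin.mono fun ε hε => key _ hε)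
  simpa [b] using h3

/-- The minor of the kernel `K` with rows `r` and columns `s`. -/
noncomputable def kminor {R S : Type} (K : R → S → ℂ) {n : ℕ} (r : Fin n → R) (s : Fin n → S) :
    ℂ := (Matrix.of fun i j => K (r i) (s j)).det

theorem kminor_snoc_eq {R S : Type} (K : R → S → ℂ) {n m : ℕ} (r : Fin n → R) (s : Fin n → S)
    (p : Fin m → R) (q : Fin m → S) :
    kminor K (Fin.append r p) (Fin.append s q) = (Matrix.fromBlocks
      (Matrix.of fun i j => K (r i) (s j)) (Matrix.of fun i j => K (r i) (q j))
      (Matrix.of fun i j => K (p i) (s j)) (Matrix.of fun i j => K (p i) (q j))).det := by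
  rw [kminor, ← Matrix.det_submatrix_equiv_self finSumFinEquiv]
  congr 1
  ext i j
  rcases i with i | i <;> rcases j with j | j <;> simp

/-- Desnanot–Jacobi for minors of a kernel: the rows `p`, `q` and the columns `x`, `y` are added to
a common minor. -/
theorem kminor_desnanot {R S : Type} (K : R → S → ℂ) {n : ℕ} (r : Fin n → R) (s : Fin n → S)
    (p q : R) (x y : S) :
    kminor K (Fin.snoc (Fin.snoc r p : Fin (n + 1) → R) q : Fin (n + 2) → R)
        (Fin.snoc (Fin.snoc s x : Fin (n + 1) → S) y : Fin (n + 2) → S) * kminor K r s =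
      kminor K (Fin.snoc r p : Fin (n + 1) → R) (Fin.snoc s x : Fin (n + 1) → S) *
        kminor K (Fin.snoc r q : Fin (n + 1) → R) (Fin.snoc s y : Fin (n + 1) → S) -
      kminor K (Fin.snoc r p : Fin (n + 1) → R) (Fin.snoc s y : Fin (n + 1) → S) *
        kminor K (Fin.snoc r q : Fin (n + 1) → R) (Fin.snoc s x : Fin (n + 1) → S) := by
  have e1 : ∀ {T : Type} (r : Fin n → T) (p : T), (Fin.snoc r p : Fin (n + 1) → T) =
      Fin.append r (fun _ : Fin 1 => p) := fun r p => (Fin.append_right_eq_snoc r (fun _ => p)).symm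
  have e2 : ∀ {T : Type} (r : Fin n → T) (p q : T),
      (Fin.snoc (Fin.snoc r p : Fin (n + 1) → T) q : Fin (n + 2) → T) =
      Fin.append r ![p, q] := by
    intro T r p q
    have := Fin.append_snoc r (fun _ : Fin 1 => p) q
    rw [e1 r p]
    rw [← this]
    congr 1
    ext i; fin_cases i <;> rfl
  rw [e2, e2]
  simp only [e1]
  rw [kminor_snoc_eq, kminor_snoc_eq, kminor_snoc_eq, kminor_snoc_eq, kminor_snoc_eq]
  have := desnanot_blocks (Matrix.of fun i j => K (r i) (s j))
    (Matrix.of fun i j => K (r i) ((![x, y] : Fin 2 → S) j))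
    (Matrix.of fun i j => K ((![p, q] : Fin 2 → R) i) (s j))
    (Matrix.of fun i j => K ((![p, q] : Fin 2 → R) i) ((![x, y] : Fin 2 → S) j))
  exact this

/-- Moving the last row of a minor to the front. -/
theorem kminor_snoc_row {R S : Type} (K : R → S → ℂ) {n : ℕ} (r : Fin n → R) (p : R)
    (s : Fin (n + 1) → S) :
    kminor K (Fin.snoc r p : Fin (n + 1) → R) s =
      (-1) ^ n * kminor K (Fin.cons p r : Fin (n + 1) → R) s := by
  have := Matrix.det_permute (finRotate (n + 1))
    (Matrix.of fun i j => K ((Fin.cons p r : Fin (n + 1) → R) i) (s j))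
  rw [sign_finRotate] at this
  rw [kminor, kminor]
  simp at this
  rw [← this]
  congr 1
  ext i j
  refine Fin.lastCases ?_ (fun i => ?_) i
  · simp
  · simp [finRotate_apply]
theorem kminor_transpose {R S : Type} (K : R → S → ℂ) {n : ℕ} (r : Fin n → R) (s : Fin n → S) :
    kminor K r s = kminor (fun i j => K j i) s r := by
  rw [kminor, ← Matrix.det_transpose]; rfl

/-- Moving the last column of a minor to the front. -/
theorem kminor_snoc_col {R S : Type} (K : R → S → ℂ) {n : ℕ} (r : Fin (n + 1) → R) (p : S)
    (s : Fin n → S) :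
    kminor K r (Fin.snoc s p : Fin (n + 1) → S) =
      (-1) ^ n * kminor K r (Fin.cons p s : Fin (n + 1) → S) := by
  rw [kminor_transpose, kminor_snoc_row, kminor_transpose K]

/-! ### Bilinear identities for Toeplitz determinants -/

/-- The Toeplitz determinant `det (c (i - j))` with `0 ≤ i, j < n`. -/
noncomputable def tz (n : ℕ) (c : ℤ → ℂ) : ℂ :=
  kminor (fun i j : ℤ => c (i - j)) (fun i : Fin n => (i : ℤ)) (fun j : Fin n => (j : ℤ))

/-- The minor of the Toeplitz matrix `c (i - j)` with rows `0, …, n` and columns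
`0, …, n - 1, n + 1`. It appears in the derivative of `tz (n + 1)`. -/
noncomputable def tzE (n : ℕ) (c : ℤ → ℂ) : ℂ :=
  kminor (fun i j : ℤ => c (i - j)) (fun i : Fin (n + 1) => (i : ℤ))
    (Fin.snoc (fun j : Fin n => (j : ℤ)) ((n : ℤ) + 1) : Fin (n + 1) → ℤ)

theorem kminor_congr {R S R' S' : Type} {K : R → S → ℂ} {K' : R' → S' → ℂ} {n : ℕ}
    {r : Fin n → R} {s : Fin n → S} {r' : Fin n → R'} {s' : Fin n → S'}
    (h : ∀ i j, K (r i) (s j) = K' (r' i) (s' j)) : kminor K r s = kminor K' r' s' := by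
  rw [kminor, kminor]; congr 1; ext i j; exact h i j

theorem snoc_natCast (n : ℕ) : (Fin.snoc (fun j : Fin n => (j : ℤ)) (n : ℤ) : Fin (n + 1) → ℤ) =
    fun j : Fin (n + 1) => (j : ℤ) := by
  ext j; refine Fin.lastCases ?_ (fun i => ?_) j <;> simp

theorem snoc_natCast_succ (n : ℕ) :
    (Fin.snoc (fun j : Fin n => (j : ℤ) + 1) ((n : ℤ) + 1) : Fin (n + 1) → ℤ) =
    fun j : Fin (n + 1) => (j : ℤ) + 1 := by
  ext j; refine Fin.lastCases ?_ (fun i => ?_) j <;> simp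

theorem cons_zero_natCast (n : ℕ) :
    (Fin.cons 0 (fun j : Fin n => (j : ℤ) + 1) : Fin (n + 1) → ℤ) =
      fun j : Fin (n + 1) => (j : ℤ) := by
  ext j; refine Fin.cases ?_ (fun i => ?_) j <;> simp

theorem cons_neg_natCast (n : ℕ) :
    (Fin.cons (-1) (fun j : Fin n => (j : ℤ)) : Fin (n + 1) → ℤ) =
      fun j : Fin (n + 1) => (j : ℤ) - 1 := by
  ext j; refine Fin.cases ?_ (fun i => ?_) j <;> simp

/-- Desnanot–Jacobi for the rows `-1, …, n` and the columns `0, …, n + 1`. -/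
theorem tz_P1 (n : ℕ) (c : ℤ → ℂ) :
    tz (n + 2) (fun k => c (k - 1)) * tz n c =
      tz (n + 1) (fun k => c (k - 1)) * tzE n c - tzE n (fun k => c (k - 1)) * tz (n + 1) c := by
  have h := kminor_desnanot (fun i j : ℤ => c (i - j)) (fun i : Fin n => (i : ℤ))
    (fun i : Fin n => (i : ℤ)) n (-1) n (n + 1)
  have h2 : (Fin.snoc (fun j : Fin (n + 1) => (j : ℤ)) ((n : ℤ) + 1) : Fin (n + 2) → ℤ) =
    fun j : Fin (n + 2) => (j : ℤ) := by simpa using snoc_natCast (n + 1)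
  rw [snoc_natCast, h2, kminor_snoc_row, kminor_snoc_row, kminor_snoc_row, cons_neg_natCast,
    cons_neg_natCast] at h
  have e1 : tz (n + 2) (fun k => c (k - 1)) = kminor (fun i j : ℤ => c (i - j))
      (fun j : Fin (n + 2) => (j : ℤ) - 1) (fun j : Fin (n + 2) => (j : ℤ)) :=
    kminor_congr fun i j => by show c _ = c _; congr 1; ring
  have e2 : tz (n + 1) (fun k => c (k - 1)) = kminor (fun i j : ℤ => c (i - j))
      (fun j : Fin (n + 1) => (j : ℤ) - 1) (fun j : Fin (n + 1) => (j : ℤ)) :=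
    kminor_congr fun i j => by show c _ = c _; congr 1; ring
  have e3 : tzE n (fun k => c (k - 1)) = kminor (fun i j : ℤ => c (i - j))
      (fun j : Fin (n + 1) => (j : ℤ) - 1)
      (Fin.snoc (fun j : Fin n => (j : ℤ)) ((n : ℤ) + 1) : Fin (n + 1) → ℤ) :=
    kminor_congr fun i j => by show c _ = c _; congr 1; ring
  rw [e1, e2, e3, tz, tzE, tz]
  rw [pow_succ] at h
  rcases neg_one_pow_eq_or ℂ n with h4 | h4 <;> rw [h4] at h
  · linear_combination -h
  · linear_combination h

/-- Desnanot–Jacobi for the full Toeplitz determinant of size `n + 2`, with its corner minors. -/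
theorem tz_P3 (n : ℕ) (c : ℤ → ℂ) :
    tz (n + 2) c * tz n c =
      tz (n + 1) c ^ 2 - tz (n + 1) (fun k => c (k - 1)) * tz (n + 1) (fun k => c (k + 1)) := by
  have h := kminor_desnanot (fun i j : ℤ => c (i - j)) (fun i : Fin n => (i : ℤ) + 1)
    (fun i : Fin n => (i : ℤ) + 1) (n + 1) 0 (n + 1) 0
  have h0 : kminor (fun i j : ℤ => c (i - j)) (fun i : Fin n => (i : ℤ) + 1)
    (fun i : Fin n => (i : ℤ) + 1) = tz n c := kminor_congr fun i j => by show c _ = c _; congr 1; ring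
  have h1 : kminor (fun i j : ℤ => c (i - j)) (fun i : Fin (n + 1) => (i : ℤ) + 1)
    (fun i : Fin (n + 1) => (i : ℤ) + 1) = tz (n + 1) c := kminor_congr fun i j => by show c _ = c _; congr 1; ring
  have h2 : kminor (fun i j : ℤ => c (i - j)) (fun i : Fin (n + 1) => (i : ℤ))
    (fun i : Fin (n + 1) => (i : ℤ) + 1) = tz (n + 1) (fun k => c (k - 1)) :=
    kminor_congr fun i j => by show c _ = c _; congr 1; ring
  have h3 : kminor (fun i j : ℤ => c (i - j)) (fun i : Fin (n + 1) => (i : ℤ) + 1)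
    (fun i : Fin (n + 1) => (i : ℤ)) = tz (n + 1) (fun k => c (k + 1)) :=
    kminor_congr fun i j => by show c _ = c _; congr 1; ring
  rw [snoc_natCast_succ, kminor_snoc_row, kminor_snoc_row, kminor_snoc_row, kminor_snoc_col,
    kminor_snoc_col, kminor_snoc_col, cons_zero_natCast, cons_zero_natCast, h0, h1, h2, h3,
    ← tz, ← tz] at h
  rw [pow_succ] at h
  rcases neg_one_pow_eq_or ℂ n with h4 | h4 <;> rw [h4] at h <;> linear_combination h

/-- Expansion of a minor along a first row that is a unit vector. -/
theorem kminor_cons_unit {R S : Type} (K : R → S → ℂ) {n : ℕ} (r : Fin n → R) (p : R)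
    (x : S) (s : Fin n → S) (h1 : K p x = 1) (h2 : ∀ j, K p (s j) = 0) :
    kminor K (Fin.cons p r : Fin (n + 1) → R) (Fin.cons x s : Fin (n + 1) → S) =
      kminor K r s := by
  rw [kminor, Matrix.det_succ_row _ 0, Fin.sum_univ_succ]
  simp [h1, h2, kminor]
  congr 1

/-- A three-term identity between minors whose sizes differ: Desnanot–Jacobi after one row of the
kernel has been replaced by the unit vector of the column `0`. -/
theorem tz_P2 (m : ℕ) (c : ℤ → ℂ) :
    tz (m + 2) (fun k => c (k - 1)) * tz (m + 1) (fun k => c (k + 1)) =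
      tz (m + 1) c * tzE (m + 1) c - tzE m c * tz (m + 2) c := by
  -- The row `none` is the unit vector of the column `0`.
  let K : Option ℤ → ℤ → ℂ := fun i j => match i with
    | some i => c (i - j)
    | none => if j = 0 then 1 else 0
  have h := kminor_desnanot K (fun i : Fin (m + 1) => some ((i : ℤ) + 1))
    (fun i : Fin (m + 1) => (i : ℤ)) (some 0) none ((m + 1 : ℕ) : ℤ) ((m + 1 : ℕ) + 1)
  have c0 : ∀ (n : ℕ), (Fin.cons (some 0) (fun i : Fin n => some ((i : ℤ) + 1)) :
      Fin (n + 1) → Option ℤ) = fun i : Fin (n + 1) => some (i : ℤ) := by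
    intro n; ext j; refine Fin.cases ?_ (fun i => ?_) j <;> simp
  have c1 : (Fin.snoc (Fin.snoc (fun j : Fin (m + 1) => (j : ℤ)) ((m + 1 : ℕ) : ℤ) :
      Fin (m + 2) → ℤ) ((m + 1 : ℕ) + 1 : ℤ) : Fin (m + 3) → ℤ) =
      Fin.cons 0 (fun j : Fin (m + 2) => (j : ℤ) + 1) := by
    rw [snoc_natCast (m + 1), cons_zero_natCast]
    exact_mod_cast snoc_natCast (m + 2)
  have c2 : (Fin.snoc (fun j : Fin (m + 1) => (j : ℤ)) ((m + 1 : ℕ) : ℤ) : Fin (m + 2) → ℤ) =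
      Fin.cons 0 (fun j : Fin (m + 1) => (j : ℤ) + 1) := by
    rw [snoc_natCast (m + 1), cons_zero_natCast]
  have c3 : (Fin.snoc (fun j : Fin (m + 1) => (j : ℤ)) ((m + 1 : ℕ) + 1 : ℤ) :
      Fin (m + 2) → ℤ) = Fin.cons 0 (Fin.snoc (fun j : Fin m => (j : ℤ) + 1) ((m : ℤ) + 2) :
        Fin (m + 1) → ℤ) := by
    rw [Fin.cons_snoc_eq_snoc_cons, cons_zero_natCast]
    rfl
  have z1 : ∀ n (j : Fin n), K none ((j : ℤ) + 1) = 0 := by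
    intro n j; simp only [K]; rw [if_neg]; omega
  have e1 : kminor K (Fin.snoc (Fin.snoc (fun i : Fin (m + 1) => some ((i : ℤ) + 1)) (some 0) :
      Fin (m + 2) → Option ℤ) none : Fin (m + 3) → Option ℤ) (Fin.snoc (Fin.snoc
      (fun j : Fin (m + 1) => (j : ℤ)) ((m + 1 : ℕ) : ℤ) :
      Fin (m + 2) → ℤ) ((m + 1 : ℕ) + 1 : ℤ) : Fin (m + 3) → ℤ) =
      - tz (m + 2) (fun k => c (k - 1)) := by
    rw [c1, kminor_snoc_row, kminor_cons_unit _ _ _ _ _ (by simp [K]) (z1 _), kminor_snoc_row, c0]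
    have : kminor K (fun i : Fin (m + 2) => some (i : ℤ)) (fun j : Fin (m + 2) => (j : ℤ) + 1) =
      tz (m + 2) (fun k => c (k - 1)) := kminor_congr fun i j => by
        simp only [K]; congr 1; ring
    rw [this]
    rw [pow_succ (-1 : ℂ) (m + 1)]
    rcases neg_one_pow_eq_or ℂ (m + 1) with h4 | h4 <;> rw [h4] <;> ring
  have e2 : kminor K (Fin.snoc (fun i : Fin (m + 1) => some ((i : ℤ) + 1)) (some 0) :
      Fin (m + 2) → Option ℤ) (Fin.snoc (fun j : Fin (m + 1) => (j : ℤ)) ((m + 1 : ℕ) : ℤ) :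
      Fin (m + 2) → ℤ) = (-1) ^ (m + 1) * tz (m + 2) c := by
    rw [kminor_snoc_row, snoc_natCast, c0]; rfl
  have e3 : kminor K (Fin.snoc (fun i : Fin (m + 1) => some ((i : ℤ) + 1)) none :
      Fin (m + 2) → Option ℤ) (Fin.snoc (fun j : Fin (m + 1) => (j : ℤ)) ((m + 1 : ℕ) + 1 : ℤ) :
      Fin (m + 2) → ℤ) = (-1) ^ (m + 1) * tzE m c := by
    rw [kminor_snoc_row, c3, kminor_cons_unit _ _ _ _ _ (by simp [K])]
    · congr 1
      refine kminor_congr fun i j => ?_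
      simp only [K]
      refine Fin.lastCases ?_ (fun j => ?_) j
      · simp; congr 1; ring
      · simp
    · intro j
      refine Fin.lastCases ?_ (fun j => ?_) j
      · simp only [Fin.snoc_last, K]; rw [if_neg]; omega
      · simp only [Fin.snoc_castSucc]; exact z1 _ _
  have e4 : kminor K (Fin.snoc (fun i : Fin (m + 1) => some ((i : ℤ) + 1)) (some 0) :
      Fin (m + 2) → Option ℤ) (Fin.snoc (fun j : Fin (m + 1) => (j : ℤ)) ((m + 1 : ℕ) + 1 : ℤ) :
      Fin (m + 2) → ℤ) = (-1) ^ (m + 1) * tzE (m + 1) c := by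
    rw [kminor_snoc_row, c0]; rfl
  have e5 : kminor K (Fin.snoc (fun i : Fin (m + 1) => some ((i : ℤ) + 1)) none :
      Fin (m + 2) → Option ℤ) (Fin.snoc (fun j : Fin (m + 1) => (j : ℤ)) ((m + 1 : ℕ) : ℤ) :
      Fin (m + 2) → ℤ) = (-1) ^ (m + 1) * tz (m + 1) c := by
    rw [kminor_snoc_row, c2, kminor_cons_unit _ _ _ _ _ (by simp [K]) (z1 _)]
    congr 1
    refine kminor_congr fun i j => by simp only [K]; congr 1; ring
  have e6 : kminor K (fun i : Fin (m + 1) => some ((i : ℤ) + 1)) (fun j : Fin (m + 1) => (j : ℤ))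
      = tz (m + 1) (fun k => c (k + 1)) := kminor_congr fun i j => by
        simp only [K]; congr 1; ring
  rw [e1, e2, e3, e4, e5, e6] at h
  rcases neg_one_pow_eq_or ℂ (m + 1) with h4 | h4 <;> rw [h4] at h <;> linear_combination -h

/-! ### Derivatives of Toeplitz determinants -/

theorem hasDerivAt_matrix_det {n : ℕ} {M : ℝ → Matrix (Fin n) (Fin n) ℂ}
    {M' : Matrix (Fin n) (Fin n) ℂ} {t : ℝ}
    (h : ∀ i j, HasDerivAt (fun s => M s i j) (M' i j) t) :
    HasDerivAt (fun s => (M s).det) (∑ j, ((M t).updateCol j (fun i => M' i j)).det) t := by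
  simp only [Matrix.det_apply]
  rw [Finset.sum_comm]
  refine HasDerivAt.fun_sum fun σ _ => ?_
  have h1 : HasDerivAt (fun s => ∏ i, M s (σ i) i)
      (∑ i, (∏ j ∈ Finset.univ.erase i, M t (σ j) j) • M' (σ i) i) t :=
    HasDerivAt.fun_finsetProd fun i _ => h (σ i) i
  rw [← Finset.smul_sum]
  refine (h1.const_smul (Equiv.Perm.sign σ)).congr_deriv ?_
  refine congrArg _ ?_
  refine Finset.sum_congr rfl fun i _ => ?_
  rw [← Finset.mul_prod_erase Finset.univ
    (fun k => (M t).updateCol i (fun k => M' k i) (σ k) k) (Finset.mem_univ i), smul_eq_mul,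
    mul_comm]
  congr 1
  · simp
  · refine Finset.prod_congr rfl fun j hj => ?_
    rw [Matrix.updateCol_ne (Finset.ne_of_mem_erase hj)]

/-- Summing over `j` the determinants in which the column `j` of `M` is multiplied entrywise by
`x i - y j` gives a scalar multiple of `det M`, because `M * adjugate M` and `adjugate M * M` have
the diagonal entries `det M`. -/
theorem sum_det_updateCol_scale {n : ℕ} (M : Matrix (Fin n) (Fin n) ℂ) (x y : Fin n → ℂ) :
    ∑ j, (M.updateCol j (fun i => (x i - y j) * M i j)).det = (∑ i, x i - ∑ j, y j) * M.det := by
  have h1 : ∀ j, (M.updateCol j (fun i => (x i - y j) * M i j)).det =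
      ∑ i, x i * (M i j * M.adjugate j i) - y j * M.det := by
    intro j
    have := Matrix.cramer_apply M (fun i => (x i - y j) * M i j) j
    rw [← this, Matrix.cramer_eq_adjugate_mulVec]
    have h2 : ∑ i, M.adjugate j i * M i j = M.det := by
      have := congrFun (congrFun (Matrix.adjugate_mul M) j) j
      simpa [Matrix.mul_apply] using this
    rw [← h2, Finset.mul_sum, ← Finset.sum_sub_distrib, Matrix.mulVec, dotProduct]
    exact Finset.sum_congr rfl fun i _ => by ring
  rw [Finset.sum_congr rfl fun j _ => h1 j, Finset.sum_sub_distrib, Finset.sum_comm, sub_mul,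
    Finset.sum_mul, Finset.sum_mul]
  congr 1
  refine Finset.sum_congr rfl fun i _ => ?_
  rw [← Finset.mul_sum]
  congr 1
  have := congrFun (congrFun (Matrix.mul_adjugate M) i) i
  simpa [Matrix.mul_apply] using this

/-- Derivative of a Toeplitz determinant whose symbols satisfy `c_k' = c_{k-1} - ((k - ν)/t) c_k`.
Replacing column `j` by the shifted symbols reproduces column `j + 1`, so only the last column
contributes, and the diagonal terms are summed by `sum_det_updateCol_scale`. -/
theorem hasDerivAt_tz (m : ℕ) (c : ℤ → ℝ → ℂ) (ν : ℂ) (t : ℝ)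
    (h : ∀ k : ℤ, HasDerivAt (c k) (c (k - 1) t - ((k - ν) / t) * c k t) t) :
    HasDerivAt (fun s => tz (m + 1) fun k => c k s)
      (tzE m (fun k => c k t) + ((m + 1) * ν / t) * tz (m + 1) fun k => c k t) t := by
  have h1 := hasDerivAt_matrix_det (n := m + 1) (t := t)
    (M := fun s => Matrix.of fun i j => c ((i : ℤ) - (j : ℤ)) s)
    (M' := Matrix.of fun i j => c ((i : ℤ) - (j : ℤ) - 1) t -
      ((((i : ℤ) - (j : ℤ) : ℤ) - ν) / t) * c ((i : ℤ) - (j : ℤ)) t) (fun i j => h _)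
  refine h1.congr_deriv ?_
  set M : Matrix (Fin (m + 1)) (Fin (m + 1)) ℂ := Matrix.of fun i j => c ((i : ℤ) - (j : ℤ)) t
    with hM
  have h2 : ∀ j, (M.updateCol j (fun i => c ((i : ℤ) - (j : ℤ) - 1) t -
      ((((i : ℤ) - (j : ℤ) : ℤ) - ν) / t) * c ((i : ℤ) - (j : ℤ)) t)).det =
      (M.updateCol j (fun i => c ((i : ℤ) - (j : ℤ) - 1) t)).det +
      (M.updateCol j (fun i => ((-(i : ℂ) / t) - (-((j : ℂ) + ν) / t)) * M i j)).det := by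
    intro j
    rw [← Matrix.det_updateCol_add]
    congr 2
    ext i
    simp [hM]
    ring
  simp only [Matrix.of_apply]
  rw [Finset.sum_congr rfl fun j _ => h2 j, Finset.sum_add_distrib, sum_det_updateCol_scale]
  have h3 : M.det = tz (m + 1) fun k => c k t := rfl
  rw [h3]
  congr 1
  · rw [Fin.sum_univ_castSucc]
    rw [Finset.sum_eq_zero, zero_add]
    · rw [tzE, kminor]
      congr 1
      ext i j
      refine Fin.lastCases ?_ (fun j => ?_) j
      · simp; congr 1; ring
      · rw [Matrix.updateCol_ne (Fin.castSucc_lt_last j).ne]; simp [hM]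
    · intro j _
      refine Matrix.det_zero_of_column_eq (i := j.castSucc) (j := j.succ)
        (Fin.castSucc_lt_succ).ne fun i => ?_
      rw [Matrix.updateCol_self, Matrix.updateCol_ne (Fin.castSucc_lt_succ).ne']
      simp [hM]
      congr 1; ring
  · congr 1
    rw [← Finset.sum_sub_distrib]
    rw [Finset.sum_congr rfl (g := fun _ => ν / t) fun i _ => by ring]
    simp
    ring

theorem tz_zero (c : ℤ → ℂ) : tz 0 c = 1 := by simp [tz, kminor]
theorem tz_one (c : ℤ → ℂ) : tz 1 c = c 0 := by simp [tz, kminor]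

theorem tz_reflect (n : ℕ) (c : ℤ → ℂ) : tz n (fun k => c (-k)) = tz n c := by
  rw [tz, tz, kminor_transpose]
  exact kminor_congr fun i j => by show c _ = c _; congr 1; ring

/-- The two differentiation rules satisfied by the sequence `c_k(t) = I_{k-ν}(t)`. -/
structure BRule (c : ℤ → ℝ → ℂ) (ν : ℂ) (t : ℝ) : Prop where
  down : ∀ k : ℤ, HasDerivAt (c k) (c (k - 1) t - ((k - ν) / t) * c k t) t
  up : ∀ k : ℤ, HasDerivAt (c k) (c (k + 1) t + ((k - ν) / t) * c k t) t

theorem BRule.reflect {c : ℤ → ℝ → ℂ} {ν : ℂ} {t : ℝ} (h : BRule c ν t) :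
    BRule (fun k => c (-k)) (-ν) t where
  down k := (h.up (-k)).congr_deriv (by
    rw [show -k + 1 = -(k - 1) by ring]; push_cast; ring)
  up k := (h.down (-k)).congr_deriv (by
    rw [show -k - 1 = -(k + 1) by ring]; push_cast; ring)

theorem BRule.shift {c : ℤ → ℝ → ℂ} {ν : ℂ} {t : ℝ} (h : BRule c ν t) :
    BRule (fun k => c (k - 1)) (ν + 1) t where
  down k := (h.down (k - 1)).congr_deriv (by push_cast; ring)
  up k := (h.up (k - 1)).congr_deriv (by
    rw [show k - 1 + 1 = k + 1 - 1 by ring]; push_cast; ring)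

theorem BRule.shift' {c : ℤ → ℝ → ℂ} {ν : ℂ} {t : ℝ} (h : BRule c ν t) :
    BRule (fun k => c (k + 1)) (ν - 1) t where
  down k := (h.down (k + 1)).congr_deriv (by
    rw [show k + 1 - 1 = k - 1 + 1 by ring]; push_cast; ring)
  up k := (h.up (k + 1)).congr_deriv (by push_cast; ring)

theorem BRule.deriv_tz {c : ℤ → ℝ → ℂ} {ν : ℂ} {t : ℝ} (h : BRule c ν t) (m : ℕ) :
    deriv (fun s => tz (m + 1) fun k => c k s) t =
      tzE m (fun k => c k t) + ((m + 1) * ν / t) * tz (m + 1) fun k => c k t :=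
  (hasDerivAt_tz m c ν t h.down).deriv

theorem BRule.differentiableAt_tz {c : ℤ → ℝ → ℂ} {ν : ℂ} {t : ℝ} (h : BRule c ν t) (n : ℕ) :
    DifferentiableAt ℝ (fun s => tz n fun k => c k s) t := by
  cases n with
  | zero => simp [tz_zero]
  | succ m => exact (hasDerivAt_tz m c ν t h.down).differentiableAt

/-- Toda-type identity: a Wronskian of two neighbouring determinants of size `n + 1` is a product of
determinants of sizes `n + 2` and `n`. -/
theorem BRule.Aminus {c : ℤ → ℝ → ℂ} {ν : ℂ} {t : ℝ} (h : BRule c ν t) (n : ℕ) :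
    tz (n + 2) (fun k => c (k - 1) t) * tz n (fun k => c k t) =
      tz (n + 1) (fun k => c (k - 1) t) * deriv (fun s => tz (n + 1) fun k => c k s) t -
      deriv (fun s => tz (n + 1) fun k => c (k - 1) s) t * tz (n + 1) (fun k => c k t) +
      (n + 1) / t * (tz (n + 1) (fun k => c (k - 1) t) * tz (n + 1) (fun k => c k t)) := by
  have := tz_P1 n fun k => c k t
  rw [h.deriv_tz, h.shift.deriv_tz, this]
  ring

/-- Wronskian of two determinants with the same `ν` and consecutive sizes. -/
theorem BRule.P2 {c : ℤ → ℝ → ℂ} {ν : ℂ} {t : ℝ} (h : BRule c ν t) (n : ℕ) :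
    tz (n + 1) (fun k => c (k - 1) t) * tz n (fun k => c (k + 1) t) =
      tz n (fun k => c k t) * deriv (fun s => tz (n + 1) fun k => c k s) t -
      deriv (fun s => tz n fun k => c k s) t * tz (n + 1) (fun k => c k t) -
      ν / t * (tz n (fun k => c k t) * tz (n + 1) (fun k => c k t)) := by
  cases n with
  | zero =>
    simp only [tz_zero, zero_add, tz_one, deriv_const]
    rw [(h.down 0).deriv]
    push_cast
    simp
    ring
  | succ m =>
    have := tz_P2 m fun k => c k t
    rw [h.deriv_tz, h.deriv_tz, this]
    push_cast
    ring

/-- The reflected form of `BRule.Aminus`. -/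
theorem BRule.Aplus {c : ℤ → ℝ → ℂ} {ν : ℂ} {t : ℝ} (h : BRule c ν t) (n : ℕ) :
    tz (n + 2) (fun k => c k t) * tz n (fun k => c (k - 1) t) =
      tz (n + 1) (fun k => c k t) * deriv (fun s => tz (n + 1) fun k => c (k - 1) s) t -
      deriv (fun s => tz (n + 1) fun k => c k s) t * tz (n + 1) (fun k => c (k - 1) t) +
      (n + 1) / t * (tz (n + 1) (fun k => c (k - 1) t) * tz (n + 1) (fun k => c k t)) := by
  have h1 := h.shift.reflect.Aminus n
  have e1 : ∀ m s, tz m (fun k => c (-(k - 1) - 1) s) = tz m fun k => c k s := fun m s => by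
    rw [← tz_reflect]; congr 1; ext k; congr 1; ring
  have e2 : ∀ m s, tz m (fun k => c (-k - 1) s) = tz m fun k => c (k - 1) s := fun m s => by
    rw [← tz_reflect]; congr 1; ext k; congr 1; ring
  simp only [e1, e2] at h1
  rw [h1]; ring

/-- Comparing `BRule.P2` with its reflection eliminates the derivatives. -/
theorem BRule.C {c : ℤ → ℝ → ℂ} {ν : ℂ} {t : ℝ} (h : BRule c ν t) (n : ℕ) :
    tz (n + 1) (fun k => c (k - 1) t) * tz n (fun k => c (k + 1) t) -
    tz n (fun k => c (k - 1) t) * tz (n + 1) (fun k => c (k + 1) t) =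
      -(2 * ν / t) * (tz (n + 1) (fun k => c k t) * tz n (fun k => c k t)) := by
  have h1 := h.reflect.P2 n
  have e1 : ∀ m s, tz m (fun k => c (-(k - 1)) s) = tz m fun k => c (k + 1) s := fun m s => by
    rw [← tz_reflect]; congr 1; ext k; congr 1; ring
  have e2 : ∀ m s, tz m (fun k => c (-k) s) = tz m fun k => c k s := fun m s => by
    rw [← tz_reflect]; congr 1; ext k; congr 1; ring
  have e3 : ∀ m s, tz m (fun k => c (-(k + 1)) s) = tz m fun k => c (k - 1) s := fun m s => by
    rw [← tz_reflect]; congr 1; ext k; congr 1; ring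
  simp only [e1, e2, e3] at h1
  linear_combination h.P2 n - h1

theorem BRule.C' {c : ℤ → ℝ → ℂ} {ν : ℂ} {t : ℝ} (h : BRule c ν t) (n : ℕ)
    (h0 : tz (n + 1) (fun k => c k t) ≠ 0) :
    deriv (fun s => tz (n + 1) fun k => c (k - 1) s) t * tz (n + 1) (fun k => c (k + 1) t) -
      tz (n + 1) (fun k => c (k - 1) t) * deriv (fun s => tz (n + 1) fun k => c (k + 1) s) t =
      2 * ν / t * (tz (n + 2) (fun k => c k t) * tz n (fun k => c k t)) := by
  have h1 := h.Aminus n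
  have h2 := h.shift'.Aplus n
  simp only [sub_add_cancel] at h2
  have h3 := h.C (n + 1)
  apply mul_left_cancel₀ h0
  linear_combination tz (n + 1) (fun k => c (k + 1) t) * h1 -
    tz (n + 1) (fun k => c (k - 1) t) * h2 - tz n (fun k => c k t) * h3

/-! ### Modified Bessel functions -/

/-- The coefficients `1 / (n! Γ(n + μ + 1))`. If `n + μ + 1` is a pole of `Γ`, the junk value
`Γ = 0` gives the correct coefficient `0`. -/
noncomputable def besA (μ : ℂ) (n : ℕ) : ℂ := ((n.factorial : ℂ) * Complex.Gamma (n + μ + 1))⁻¹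

/-- The entire function with `I_μ(t) = (t/2)^μ besG μ (t²/4)`. -/
noncomputable def besG (μ z : ℂ) : ℂ := ∑' n : ℕ, besA μ n * z ^ n

theorem summable_besA (μ : ℂ) (r : NNReal) : Summable fun n => ‖besA μ n‖ * (r : ℝ) ^ n := by
  have h := Complex.radius_regularizedHGFunSeries_eq_top (a := 0) (b := {μ + 1}) (by simp)
  have h2 := FormalMultilinearSeries.summable_norm_mul_pow
    (Complex.regularizedHGFunSeries 0 {μ + 1}) (r := r) (by rw [h]; exact ENNReal.coe_lt_top)
  refine h2.congr fun n => ?_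
  rw [Complex.regularizedHGFunSeries, FormalMultilinearSeries.ofScalars_norm]
  congr 2
  simp [Complex.regularizedHGFunCoeff, besA]
  rw [show (n : ℂ) + μ + 1 = μ + 1 + n by ring]
  exact Or.inl rfl

theorem besA_succ (μ : ℂ) (n : ℕ) : ((n : ℂ) + 1) * besA μ (n + 1) = besA (μ + 1) n := by
  rw [besA, besA, Nat.factorial_succ]
  push_cast
  have : (n : ℂ) + 1 ≠ 0 := by exact_mod_cast n.succ_ne_zero
  rw [show (n : ℂ) + 1 + μ + 1 = n + (μ + 1) + 1 by ring, mul_assoc, mul_inv _ (_ * _),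
    mul_inv_cancel_left₀ this]

theorem besA_pred (μ : ℂ) (n : ℕ) : besA (μ - 1) n = ((n : ℂ) + μ) * besA μ n := by
  rw [besA, besA, mul_inv, mul_inv, show (n : ℂ) + (μ - 1) + 1 = n + μ by ring,
    Complex.one_div_Gamma_eq_self_mul_one_div_Gamma_add_one]
  ring

theorem hasSum_besG (μ z : ℂ) : HasSum (fun n => besA μ n * z ^ n) (besG μ z) := by
  refine Summable.hasSum (Summable.of_norm ?_)
  refine (summable_besA μ ‖z‖₊).congr fun n => ?_
  simp

theorem hasDerivAt_besG (μ z : ℂ) : HasDerivAt (besG μ) (besG (μ + 1) z) z := by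
  have hR : ∃ R : NNReal, ‖z‖ < R := ⟨‖z‖₊ + 1, by simp⟩
  obtain ⟨R, hR⟩ := hR
  have hsum : Summable fun n : ℕ => (n : ℝ) * ‖besA μ n‖ * (R : ℝ) ^ (n - 1) := by
    rw [← summable_nat_add_iff 1]
    refine (summable_besA (μ + 1) R).congr fun n => ?_
    rw [← besA_succ, norm_mul, Nat.add_sub_cancel]
    congr 2
    rw [← Nat.cast_succ, Complex.norm_natCast]
  have h := hasDerivAt_tsum_of_isPreconnected (g := fun n z => besA μ n * z ^ n)
    (g' := fun n z => besA μ n * (n * z ^ (n - 1))) (y₀ := z) (y := z)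
    hsum (Metric.isOpen_ball (x := (0 : ℂ)) (ε := R))
    (convex_ball _ _).isPreconnected (fun n y _ => (hasDerivAt_pow n y).const_mul _) ?_
    (by simpa using hR) (hasSum_besG μ z).summable (by simpa using hR)
  · refine h.congr_deriv ?_
    have h2 : Summable fun n : ℕ => besA μ n * (n * z ^ (n - 1)) := by
      refine Summable.of_norm_bounded hsum fun n => ?_
      rw [norm_mul, norm_mul, norm_pow, Complex.norm_natCast]
      have : ‖z‖ ^ (n - 1) ≤ (R : ℝ) ^ (n - 1) := pow_le_pow_left₀ (norm_nonneg _) hR.le _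
      calc _ = (n * ‖besA μ n‖) * ‖z‖ ^ (n - 1) := by ring
        _ ≤ _ := by gcongr
    rw [h2.tsum_eq_zero_add]
    simp only [Nat.cast_zero, zero_mul, mul_zero, zero_add, besG]
    refine tsum_congr fun n => ?_
    rw [← besA_succ]; push_cast; ring
  · intro n y hy
    have hy' : ‖y‖ ≤ R := by simpa using (Metric.mem_ball.mp hy).le
    rw [norm_mul, norm_mul, norm_pow, Complex.norm_natCast]
    have : ‖y‖ ^ (n - 1) ≤ (R : ℝ) ^ (n - 1) := pow_le_pow_left₀ (norm_nonneg _) hy' _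
    calc _ = (n * ‖besA μ n‖) * ‖y‖ ^ (n - 1) := by ring
      _ ≤ _ := by gcongr

theorem besG_pred (μ z : ℂ) : besG (μ - 1) z = μ * besG μ z + z * besG (μ + 1) z := by
  have h0 := hasSum_besG (μ - 1) z
  have h1 := (hasSum_besG μ z).mul_left μ
  have h2 : HasSum (fun n : ℕ => (n : ℂ) * besA μ n * z ^ n) (z * besG (μ + 1) z) := by
    rw [← hasSum_nat_add_iff' 1]
    simp only [Finset.range_one, Finset.sum_singleton, Nat.cast_zero, zero_mul, sub_zero]
    have e : (fun n : ℕ => ((n + 1 : ℕ) : ℂ) * besA μ (n + 1) * z ^ (n + 1)) =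
        fun n => z * (besA (μ + 1) n * z ^ n) := by
      ext n; rw [← besA_succ]; push_cast; ring
    rw [e]
    exact (hasSum_besG (μ + 1) z).mul_left z
  refine h0.unique ?_
  have e : (fun n : ℕ => besA (μ - 1) n * z ^ n) =
      fun n => μ * (besA μ n * z ^ n) + (n : ℂ) * besA μ n * z ^ n := by
    ext n; rw [besA_pred]; ring
  rw [e]
  exact h1.add h2

theorem besG_zero (μ : ℂ) : besG μ 0 = (Complex.Gamma (μ + 1))⁻¹ := by
  rw [besG, tsum_eq_single 0]
  · simp [besA]
  · intro n hn; simp [hn]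

theorem besselI_eq (μ : ℂ) {t : ℝ} (ht : 0 < t) :
    besselI μ t = Complex.exp (μ * (Real.log (t / 2) : ℂ)) * besG μ ((t / 2 : ℂ) ^ 2) := by
  have h2 : (t / 2 : ℂ) = Complex.exp (Real.log (t / 2) : ℂ) := by
    rw [← Complex.ofReal_exp, Real.exp_log (by positivity)]; push_cast; rfl
  rw [besselI, besG, ← tsum_mul_left]
  refine tsum_congr fun k => ?_
  rw [besA, h2, ← Complex.exp_nat_mul, ← Complex.exp_nat_mul, div_eq_mul_inv, mul_left_comm,
    ← Complex.exp_add, mul_comm]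
  congr 2
  push_cast; ring

theorem hasDerivAt_besselI (μ : ℂ) {t : ℝ} (ht : 0 < t) :
    HasDerivAt (besselI μ) (besselI (μ + 1) t + μ / t * besselI μ t) t := by
  have ht' : (t : ℂ) ≠ 0 := by exact_mod_cast ht.ne'
  have h1 : HasDerivAt (fun s : ℝ => (Real.log (s / 2) : ℂ)) ((t⁻¹ : ℝ) : ℂ) t := by
    have : HasDerivAt (fun s : ℝ => Real.log (s / 2)) (t⁻¹) t :=
      (((hasDerivAt_id t).div_const 2).log (by simp; positivity)).congr_deriv (by
        simp; field_simp)
    exact this.ofReal_comp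
  have h2 : HasDerivAt (fun s : ℝ => (s / 2 : ℂ) ^ 2) (t / 2 : ℂ) t := by
    have : HasDerivAt (fun s : ℝ => (s : ℂ)) 1 t := by simpa using (hasDerivAt_id t).ofReal_comp
    exact ((this.div_const 2).pow 2).congr_deriv (by simp; ring)
  have h3 := ((h1.const_mul μ).cexp).mul ((hasDerivAt_besG μ ((t / 2 : ℂ) ^ 2)).comp t h2)
  have h4 := h3.congr_of_eventuallyEq (f₁ := besselI μ) (by
    filter_upwards [lt_mem_nhds ht] with s hs
    exact besselI_eq μ hs)
  refine h4.congr_deriv ?_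
  rw [besselI_eq μ ht, besselI_eq (μ + 1) ht, add_mul, Complex.exp_add, one_mul]
  have h5 : Complex.exp (Real.log (t / 2) : ℂ) = (t / 2 : ℂ) := by
    rw [← Complex.ofReal_exp, Real.exp_log (by positivity)]; push_cast; rfl
  rw [h5]
  push_cast
  simp only [Function.comp]
  ring

theorem besselI_pred (μ : ℂ) {t : ℝ} (ht : 0 < t) :
    besselI (μ - 1) t = 2 * μ / t * besselI μ t + besselI (μ + 1) t := by
  have ht' : (t : ℂ) ≠ 0 := by exact_mod_cast ht.ne'
  have h5 : Complex.exp (Real.log (t / 2) : ℂ) = (t / 2 : ℂ) := by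
    rw [← Complex.ofReal_exp, Real.exp_log (by positivity)]; push_cast; rfl
  rw [besselI_eq μ ht, besselI_eq (μ + 1) ht, besselI_eq (μ - 1) ht, sub_mul, add_mul,
    Complex.exp_add, Complex.exp_sub, one_mul, besG_pred, h5]
  field_simp

theorem brule_bessel (ν : ℂ) {t : ℝ} (ht : 0 < t) :
    BRule (fun k s => besselI (k - ν) s) ν t where
  up k := (hasDerivAt_besselI _ ht).congr_deriv (by push_cast; rw [show (k : ℂ) - ν + 1 = k + 1 - ν by ring])
  down k := (hasDerivAt_besselI _ ht).congr_deriv (by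
    have := besselI_pred (k - ν) ht
    push_cast
    rw [show (k : ℂ) - 1 - ν = k - ν - 1 by ring, this]
    ring)

/-! ### Recurrences for the Bessel Toeplitz determinants -/

theorem toeplitzD_eq_tz (n : ℕ) (ν : ℂ) (t : ℝ) :
    toeplitzD n ν t = tz n (fun k => besselI (k - ν) t) := by
  rw [toeplitzD, tz, kminor]; congr 1; ext i j; simp

/-- The shifted determinant is the determinant for `ν + 1`. -/
theorem toeplitzD1_eq (n : ℕ) (ν : ℂ) (t : ℝ) : toeplitzD1 n ν t = toeplitzD n (ν + 1) t := by
  rw [toeplitzD, toeplitzD1]; congr 1; ext i j; simp; congr 1; ring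

theorem toeplitzD_succ_eq_tz (n : ℕ) (ν : ℂ) (t : ℝ) :
    toeplitzD n (ν + 1) t = tz n (fun k => besselI ((k - 1 : ℤ) - ν) t) := by
  rw [toeplitzD_eq_tz]; congr 1; ext k; congr 1; push_cast; ring

theorem toeplitzD_pred_eq_tz (n : ℕ) (ν : ℂ) (t : ℝ) :
    toeplitzD n (ν - 1) t = tz n (fun k => besselI ((k + 1 : ℤ) - ν) t) := by
  rw [toeplitzD_eq_tz]; congr 1; ext k; congr 1; push_cast; ring

theorem toeplitzD_zero (ν : ℂ) (t : ℝ) : toeplitzD 0 ν t = 1 := by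
  rw [toeplitzD_eq_tz, tz_zero]

theorem differentiableAt_toeplitzD (n : ℕ) (ν : ℂ) {t : ℝ} (ht : 0 < t) :
    DifferentiableAt ℝ (toeplitzD n ν) t := by
  have := (brule_bessel ν ht).differentiableAt_tz n
  simpa only [← toeplitzD_eq_tz] using this

theorem toeplitzD_P3 (n : ℕ) (ν : ℂ) (t : ℝ) :
    toeplitzD (n + 2) ν t * toeplitzD n ν t =
      toeplitzD (n + 1) ν t ^ 2 - toeplitzD (n + 1) (ν + 1) t * toeplitzD (n + 1) (ν - 1) t := by
  simp only [toeplitzD_succ_eq_tz, toeplitzD_pred_eq_tz]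
  simp only [toeplitzD_eq_tz]
  exact tz_P3 n _

theorem toeplitzD_Aminus (n : ℕ) (ν : ℂ) {t : ℝ} (ht : 0 < t) :
    toeplitzD (n + 2) (ν + 1) t * toeplitzD n ν t =
      toeplitzD (n + 1) (ν + 1) t * deriv (toeplitzD (n + 1) ν) t -
      deriv (toeplitzD (n + 1) (ν + 1)) t * toeplitzD (n + 1) ν t +
      (n + 1) / t * (toeplitzD (n + 1) (ν + 1) t * toeplitzD (n + 1) ν t) := by
  have := (brule_bessel ν ht).Aminus n
  simpa only [← toeplitzD_succ_eq_tz, ← toeplitzD_eq_tz] using this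

theorem toeplitzD_Aplus (n : ℕ) (ν : ℂ) {t : ℝ} (ht : 0 < t) :
    toeplitzD (n + 2) ν t * toeplitzD n (ν + 1) t =
      toeplitzD (n + 1) ν t * deriv (toeplitzD (n + 1) (ν + 1)) t -
      deriv (toeplitzD (n + 1) ν) t * toeplitzD (n + 1) (ν + 1) t +
      (n + 1) / t * (toeplitzD (n + 1) (ν + 1) t * toeplitzD (n + 1) ν t) := by
  have := (brule_bessel ν ht).Aplus n
  simpa only [← toeplitzD_succ_eq_tz, ← toeplitzD_eq_tz] using this

theorem toeplitzD_C (n : ℕ) (ν : ℂ) {t : ℝ} (ht : 0 < t) :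
    toeplitzD (n + 1) (ν + 1) t * toeplitzD n (ν - 1) t -
      toeplitzD n (ν + 1) t * toeplitzD (n + 1) (ν - 1) t =
      -(2 * ν / t) * (toeplitzD (n + 1) ν t * toeplitzD n ν t) := by
  have := (brule_bessel ν ht).C n
  simpa only [← toeplitzD_succ_eq_tz, ← toeplitzD_pred_eq_tz, ← toeplitzD_eq_tz] using this

theorem toeplitzD_C' (n : ℕ) (ν : ℂ) {t : ℝ} (ht : 0 < t) (h0 : toeplitzD (n + 1) ν t ≠ 0) :
    deriv (toeplitzD (n + 1) (ν + 1)) t * toeplitzD (n + 1) (ν - 1) t -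
      toeplitzD (n + 1) (ν + 1) t * deriv (toeplitzD (n + 1) (ν - 1)) t =
      2 * ν / t * (toeplitzD (n + 2) ν t * toeplitzD n ν t) := by
  have := (brule_bessel ν ht).C' n (by rwa [← toeplitzD_eq_tz])
  simpa only [← toeplitzD_succ_eq_tz, ← toeplitzD_pred_eq_tz, ← toeplitzD_eq_tz] using this

/-- `W_n = -t r_n'(t) / r_n(t)` at `t = e^s`, where `r_n = D_{n,ν+1} / D_{n,ν}`. -/
noncomputable def WS (ν : ℂ) (n : ℕ) (s : ℝ) : ℂ :=
  (Real.exp s : ℂ) * (deriv (toeplitzD n ν) (Real.exp s) / toeplitzD n ν (Real.exp s) -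
    deriv (toeplitzD n (ν + 1)) (Real.exp s) / toeplitzD n (ν + 1) (Real.exp s))

/-- `f_n = D_{n,ν+1} D_{n+1,ν} / (D_{n,ν} D_{n+1,ν+1})`, the ratio `r_n / r_{n+1}`, at `t = e^s`. -/
noncomputable def fS (ν : ℂ) (n : ℕ) (s : ℝ) : ℂ :=
  toeplitzD n (ν + 1) (Real.exp s) * toeplitzD (n + 1) ν (Real.exp s) /
    (toeplitzD n ν (Real.exp s) * toeplitzD (n + 1) (ν + 1) (Real.exp s))

/-- The determinants `D_{n,ν}` and `D_{n,ν+1}` do not vanish at `t = e^s`. -/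
def NZ (ν : ℂ) (n : ℕ) (s : ℝ) : Prop :=
  toeplitzD n ν (Real.exp s) ≠ 0 ∧ toeplitzD n (ν + 1) (Real.exp s) ≠ 0

theorem NZ_zero (ν : ℂ) (s : ℝ) : NZ ν 0 s := by simp [NZ, toeplitzD_zero]

theorem WS_zero (ν : ℂ) (s : ℝ) : WS ν 0 s = 0 := by
  have : ∀ ν, deriv (toeplitzD 0 ν) = fun _ => 0 := fun ν => by
    rw [show toeplitzD 0 ν = fun _ => 1 from funext fun t => toeplitzD_zero ν t]
    exact deriv_const' 1
  simp [WS, this]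

theorem hasDerivAt_toeplitzD_exp (ν : ℂ) (n : ℕ) (s : ℝ) :
    HasDerivAt (fun s => toeplitzD n ν (Real.exp s))
      (Real.exp s * deriv (toeplitzD n ν) (Real.exp s)) s := by
  have h := (differentiableAt_toeplitzD n ν (Real.exp_pos s)).hasDerivAt.scomp s
    (Real.hasDerivAt_exp s)
  refine h.congr_deriv ?_
  rw [Complex.real_smul]

theorem fS_ne_zero {ν : ℂ} {n : ℕ} {s : ℝ} (h1 : NZ ν n s) (h2 : NZ ν (n + 1) s) :
    fS ν n s ≠ 0 :=
  div_ne_zero (mul_ne_zero h1.2 h2.1) (mul_ne_zero h1.1 h2.2)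

theorem hasDerivAt_fS {ν : ℂ} {n : ℕ} {s : ℝ} (h1 : NZ ν n s) (h2 : NZ ν (n + 1) s) :
    HasDerivAt (fS ν n) (fS ν n s * (WS ν (n + 1) s - WS ν n s)) s := by
  obtain ⟨a1, a2⟩ := h1
  obtain ⟨b1, b2⟩ := h2
  have h := ((hasDerivAt_toeplitzD_exp (ν + 1) n s).mul (hasDerivAt_toeplitzD_exp ν (n + 1) s)).div
    ((hasDerivAt_toeplitzD_exp ν n s).mul (hasDerivAt_toeplitzD_exp (ν + 1) (n + 1) s))
    (mul_ne_zero a1 b2)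
  refine h.congr_deriv ?_
  simp only [fS, WS, Pi.mul_apply]
  field_simp
  ring

theorem WS_add {ν : ℂ} {n : ℕ} {s : ℝ} (h : NZ ν (n + 1) s) :
    (n + 1 : ℂ) + WS ν (n + 1) s = Real.exp s *
      (toeplitzD (n + 2) (ν + 1) (Real.exp s) * toeplitzD n ν (Real.exp s)) /
      (toeplitzD (n + 1) ν (Real.exp s) * toeplitzD (n + 1) (ν + 1) (Real.exp s)) := by
  obtain ⟨a1, a2⟩ := h
  have ht : (Real.exp s : ℂ) ≠ 0 := by exact_mod_cast (Real.exp_pos s).ne'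
  rw [toeplitzD_Aminus n ν (Real.exp_pos s), WS]
  field_simp
  ring

theorem WS_sub {ν : ℂ} {n : ℕ} {s : ℝ} (h : NZ ν (n + 1) s) :
    (n + 1 : ℂ) - WS ν (n + 1) s = Real.exp s *
      (toeplitzD (n + 2) ν (Real.exp s) * toeplitzD n (ν + 1) (Real.exp s)) /
      (toeplitzD (n + 1) ν (Real.exp s) * toeplitzD (n + 1) (ν + 1) (Real.exp s)) := by
  obtain ⟨a1, a2⟩ := h
  have ht : (Real.exp s : ℂ) ≠ 0 := by exact_mod_cast (Real.exp_pos s).ne'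
  rw [toeplitzD_Aplus n ν (Real.exp_pos s), WS]
  field_simp
  ring

/-- Nonvanishing propagates to the next size as long as `W ≠ ±N`. -/
theorem NZ_succ {ν : ℂ} {n : ℕ} {s : ℝ} (h : NZ ν (n + 1) s)
    (h1 : (n + 1 : ℂ) + WS ν (n + 1) s ≠ 0) (h2 : (n + 1 : ℂ) - WS ν (n + 1) s ≠ 0) :
    NZ ν (n + 2) s := by
  rw [WS_add h] at h1
  rw [WS_sub h] at h2
  constructor
  · rintro h3; simp [h3] at h2
  · rintro h3; simp [h3] at h1

/-- The recurrence `N - W_N = (N + W_N) f_N f_{N-1}`, written for `N = n + 1`. -/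
theorem fS_succ {ν : ℂ} {n : ℕ} {s : ℝ} (h : NZ ν n s) (h' : NZ ν (n + 1) s)
    (h'' : NZ ν (n + 2) s) :
    ((n + 1 : ℂ) - WS ν (n + 1) s) =
      ((n + 1 : ℂ) + WS ν (n + 1) s) * (fS ν (n + 1) s * fS ν n s) := by
  rw [WS_add h', WS_sub h', fS, fS]
  obtain ⟨a1, a2⟩ := h
  obtain ⟨b1, b2⟩ := h'
  obtain ⟨c1, c2⟩ := h''
  field_simp

private theorem WS_rel_alg {E a a' am b b' bm c ν n : ℂ} (hE : E ≠ 0) (ha : a ≠ 0) (ha' : a' ≠ 0)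
    (hb : b ≠ 0) (hb' : b' ≠ 0) (hC : b' * am - a' * bm = -(2 * ν / E) * (b * a))
    (hP : c * a = b ^ 2 - b' * bm) :
    (E * b' * (a ^ 2 - a' * am) / (b * (a * a')) - n) +
      ((n + 1) - E * (c * a') / (b * b')) - 2 * ν - 1 =
      E * ((a' * b / (a * b'))⁻¹ - a' * b / (a * b')) := by
  have hc : c = (b ^ 2 - b' * bm) / a := by rw [← hP]; field_simp
  have hν : 2 * ν = E * (a' * bm - b' * am) / (b * a) := by
    rw [show a' * bm - b' * am = 2 * ν / E * (b * a) by linear_combination -hC]; field_simp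
  rw [hν, hc]
  field_simp
  ring

/-- The recurrence `W_n + W_{n+1} - 2ν - 1 = t (1/f_n - f_n)`. -/
theorem WS_rel {ν : ℂ} {n : ℕ} {s : ℝ} (h1 : NZ ν n s) (h2 : NZ ν (n + 1) s) :
    WS ν n s + WS ν (n + 1) s - 2 * ν - 1 = Real.exp s * ((fS ν n s)⁻¹ - fS ν n s) := by
  have ht : (Real.exp s : ℂ) ≠ 0 := by exact_mod_cast (Real.exp_pos s).ne'
  have hC := toeplitzD_C n ν (Real.exp_pos s)
  have hP := toeplitzD_P3 n ν (Real.exp s)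
  have e2 := WS_sub h2
  obtain ⟨a1, a2⟩ := h1
  obtain ⟨b1, b2⟩ := h2
  -- `n + W_n` through the determinants of size at most `n + 1`, also valid for `n = 0`
  have e3 : WS ν n s = Real.exp s * toeplitzD (n + 1) (ν + 1) (Real.exp s) *
        (toeplitzD n ν (Real.exp s) ^ 2 -
          toeplitzD n (ν + 1) (Real.exp s) * toeplitzD n (ν - 1) (Real.exp s)) /
          (toeplitzD (n + 1) ν (Real.exp s) *
          (toeplitzD n ν (Real.exp s) * toeplitzD n (ν + 1) (Real.exp s))) - n := by
    cases n with
    | zero => simp [WS_zero, toeplitzD_zero]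
    | succ m =>
      have := WS_add (ν := ν) (n := m) (s := s) ⟨a1, a2⟩
      rw [← toeplitzD_P3]
      push_cast at this ⊢
      rw [eq_sub_iff_add_eq, add_comm, this]
      field_simp
  have e4 : WS ν (n + 1) s = (n + 1 : ℂ) - Real.exp s *
      (toeplitzD (n + 2) ν (Real.exp s) * toeplitzD n (ν + 1) (Real.exp s)) /
      (toeplitzD (n + 1) ν (Real.exp s) * toeplitzD (n + 1) (ν + 1) (Real.exp s)) := by
    rw [← e2]; ring
  rw [e3, e4, fS]
  exact WS_rel_alg ht a1 a2 b1 b2 hC hP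

/-! ### The Painlevé III equation -/

theorem hasDerivAt_exp_ofReal (s : ℝ) :
    HasDerivAt (fun s : ℝ => ((Real.exp s : ℝ) : ℂ)) (Real.exp s : ℂ) s :=
  (Real.hasDerivAt_exp s).ofReal_comp

/-- Backward and forward Riccati equations for `W_n` and `W_{n+1}`, by simultaneous induction on `n`:
`fS_succ` carries the forward equation at `n` to the backward one at `n + 1`, and `WS_rel` returns
from backward to forward. -/
theorem hasDerivAt_WS_aux {ν : ℂ} (n : ℕ) (h : ∀ k ≤ n + 1, ∀ s, NZ ν k s) (s : ℝ) :
    HasDerivAt (WS ν n) (-(Real.exp s * ((n - WS ν n s) * (fS ν n s)⁻¹ -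
      (n + WS ν n s) * fS ν n s))) s ∧
    HasDerivAt (WS ν (n + 1)) (Real.exp s * ((n + 1 - WS ν (n + 1) s) * (fS ν n s)⁻¹ -
      (n + 1 + WS ν (n + 1) s) * fS ν n s)) s := by
  induction n with
  | zero =>
    have hb : HasDerivAt (WS ν 0) (-(Real.exp s * (((0 : ℕ) - WS ν 0 s) * (fS ν 0 s)⁻¹ -
        ((0 : ℕ) + WS ν 0 s) * fS ν 0 s))) s := by
      have : WS ν 0 = fun _ => 0 := funext fun s => WS_zero ν s
      rw [this]
      simpa using hasDerivAt_const s (0 : ℂ)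
    refine ⟨hb, ?_⟩
    exact step 0 h s hb
  | succ n ih =>
    have h' : ∀ k ≤ n + 1, ∀ s, NZ ν k s := fun k hk s => h k (hk.trans (Nat.le_succ _)) s
    have hb : HasDerivAt (WS ν (n + 1)) (-(Real.exp s * (((n + 1 : ℕ) - WS ν (n + 1) s) *
        (fS ν (n + 1) s)⁻¹ - ((n + 1 : ℕ) + WS ν (n + 1) s) * fS ν (n + 1) s))) s := by
      refine (ih h').2.congr_deriv ?_
      have e := fS_succ (h n (by omega) s) (h (n + 1) (by omega) s) (h (n + 2) le_rfl s)
      have f1 := fS_ne_zero (h n (by omega) s) (h (n + 1) (by omega) s)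
      have f2 := fS_ne_zero (h (n + 1) (by omega) s) (h (n + 2) le_rfl s)
      push_cast
      rw [e]
      field_simp
      ring
    exact ⟨hb, step (n + 1) h s hb⟩
where
  step {ν : ℂ} (n : ℕ) (h : ∀ k ≤ n + 1, ∀ s, NZ ν k s) (s : ℝ)
      (hW : HasDerivAt (WS ν n) (-(Real.exp s * ((n - WS ν n s) * (fS ν n s)⁻¹ -
        (n + WS ν n s) * fS ν n s))) s) :
      HasDerivAt (WS ν (n + 1)) (Real.exp s * ((n + 1 - WS ν (n + 1) s) * (fS ν n s)⁻¹ -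
        (n + 1 + WS ν (n + 1) s) * fS ν n s)) s := by
    have hN : ∀ s, NZ ν n s := h n (by omega)
    have hN1 : ∀ s, NZ ν (n + 1) s := h (n + 1) le_rfl
    have f1 := fS_ne_zero (hN s) (hN1 s)
    have hf := hasDerivAt_fS (hN s) (hN1 s)
    have e : WS ν (n + 1) = fun s => 2 * ν + 1 +
        (Real.exp s : ℂ) * ((fS ν n s)⁻¹ - fS ν n s) - WS ν n s := by
      funext s
      have := WS_rel (hN s) (hN1 s)
      linear_combination this
    have hd := (((hasDerivAt_exp_ofReal s).mul ((hf.inv f1).sub hf)).const_add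
      (2 * ν + 1)).sub hW
    refine (hd.congr_of_eventuallyEq (.of_forall fun s => by rw [e]; rfl)).congr_deriv ?_
    rw [e]
    simp only [Pi.sub_apply, Pi.inv_apply]
    field_simp
    ring

theorem hasDerivAt_WS {ν : ℂ} {n : ℕ} (h : ∀ k ≤ n + 1, ∀ s, NZ ν k s) (s : ℝ) :
    HasDerivAt (WS ν n) (-(Real.exp s * ((n - WS ν n s) * (fS ν n s)⁻¹ -
      (n + WS ν n s) * fS ν n s))) s := (hasDerivAt_WS_aux n h s).1

theorem hasDerivAt_WS_succ {ν : ℂ} {n : ℕ} (h : ∀ k ≤ n + 1, ∀ s, NZ ν k s) (s : ℝ) :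
    HasDerivAt (WS ν (n + 1)) (Real.exp s * ((n + 1 - WS ν (n + 1) s) * (fS ν n s)⁻¹ -
      (n + 1 + WS ν (n + 1) s) * fS ν n s)) s := (hasDerivAt_WS_aux n h s).2

/-- The logarithmic variable `η_n = -log f_n` (principal branch). -/
noncomputable def etaS (ν : ℂ) (n : ℕ) (s : ℝ) : ℂ := -Complex.log (fS ν n s)

theorem exp_neg_etaS {ν : ℂ} {n : ℕ} {s : ℝ} (h1 : NZ ν n s) (h2 : NZ ν (n + 1) s) :
    Complex.exp (-etaS ν n s) = fS ν n s := by
  rw [etaS, neg_neg, Complex.exp_log (fS_ne_zero h1 h2)]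

theorem exp_etaS {ν : ℂ} {n : ℕ} {s : ℝ} (h1 : NZ ν n s) (h2 : NZ ν (n + 1) s) :
    Complex.exp (etaS ν n s) = (fS ν n s)⁻¹ := by
  rw [← exp_neg_etaS h1 h2, ← Complex.exp_neg, neg_neg]

theorem two_sinh_etaS {ν : ℂ} {n : ℕ} {s : ℝ} (h1 : NZ ν n s) (h2 : NZ ν (n + 1) s) :
    2 * Complex.sinh (etaS ν n s) = (fS ν n s)⁻¹ - fS ν n s := by
  rw [Complex.two_sinh, exp_etaS h1 h2, exp_neg_etaS h1 h2]

theorem two_cosh_etaS {ν : ℂ} {n : ℕ} {s : ℝ} (h1 : NZ ν n s) (h2 : NZ ν (n + 1) s) :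
    2 * Complex.cosh (etaS ν n s) = (fS ν n s)⁻¹ + fS ν n s := by
  rw [Complex.two_cosh, exp_etaS h1 h2, exp_neg_etaS h1 h2]

/-- First-order form of the Painlevé III equation: `θη = 2(W+κ) - 2t sinh η`, `κ = -ν-1/2`. -/
theorem hasDerivAt_etaS {ν : ℂ} {n : ℕ} {s : ℝ} (h1 : NZ ν n s) (h2 : NZ ν (n + 1) s)
    (hs : fS ν n s ∈ Complex.slitPlane) :
    HasDerivAt (etaS ν n) (2 * (WS ν n s - ν - 1 / 2) -
      2 * Real.exp s * Complex.sinh (etaS ν n s)) s := by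
  have := ((hasDerivAt_fS h1 h2).clog_real hs).neg
  refine this.congr_deriv ?_
  have f1 := fS_ne_zero h1 h2
  have e1 := two_sinh_etaS h1 h2
  have e2 := WS_rel h1 h2
  field_simp
  linear_combination (Real.exp s : ℂ) * e1 - e2

theorem hasDerivAt_WS' {ν : ℂ} {n : ℕ} (h : ∀ k ≤ n + 1, ∀ s, NZ ν k s) (s : ℝ) :
    HasDerivAt (WS ν n) (2 * Real.exp s * (WS ν n s * Complex.cosh (etaS ν n s) -
      n * Complex.sinh (etaS ν n s))) s := by
  refine (hasDerivAt_WS h s).congr_deriv ?_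
  have e1 := two_sinh_etaS (h n (by omega) s) (h (n + 1) le_rfl s)
  have e2 := two_cosh_etaS (h n (by omega) s) (h (n + 1) le_rfl s)
  linear_combination (Real.exp s : ℂ) * n * e1 - (Real.exp s : ℂ) * WS ν n s * e2

/-- The Painlevé III equation in the variable `s = log t`. -/
theorem hasDerivAt_deriv_etaS {ν : ℂ} {n : ℕ} (h : ∀ k ≤ n + 1, ∀ s, NZ ν k s)
    (hs : ∀ s, fS ν n s ∈ Complex.slitPlane) (s : ℝ) :
    HasDerivAt (fun s => 2 * (WS ν n s - ν - 1 / 2) -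
      2 * Real.exp s * Complex.sinh (etaS ν n s))
      (2 * (Real.exp s : ℂ) ^ 2 * Complex.sinh (2 * etaS ν n s) -
        4 * Real.exp s * ((-ν - 1 / 2) * Complex.cosh (etaS ν n s) +
          (n + 1 / 2) * Complex.sinh (etaS ν n s))) s := by
  have h1 := hasDerivAt_etaS (h n (by omega) s) (h (n + 1) le_rfl s) (hs s)
  have h2 := hasDerivAt_WS' h s
  have h3 := (((h2.sub_const ν).sub_const (1 / 2)).const_mul 2).sub
    (((hasDerivAt_exp_ofReal s).const_mul 2).mul ((Complex.hasDerivAt_sinh _).comp s h1))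
  refine h3.congr_deriv ?_
  rw [Complex.sinh_two_mul]
  simp only [Function.comp]
  ring

/-! ### Behaviour as `t → 0` -/

/-- The operator `z d/dz` applied to the logarithm of an analytic function that is not locally zero is
bounded near `0`. -/
theorem logDeriv_bounded {P : ℂ → ℂ} (hP : AnalyticAt ℂ P 0) (h0 : ∃ᶠ z in 𝓝[≠] 0, P z ≠ 0) :
    ∃ C : ℝ, ∀ᶠ z in 𝓝[≠] (0 : ℂ), ‖z * deriv P z / P z‖ ≤ C := by
  have h1 : ¬ ∀ᶠ z in 𝓝 (0 : ℂ), P z = 0 := by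
    intro h
    have h2 := h.filter_mono (nhdsWithin_le_nhds (s := {(0 : ℂ)}ᶜ))
    exact h0 (h2.mono fun z hz => by simpa using hz)
  -- Factor `P = z^m g` with `g 0 ≠ 0`; then `z P'/P = m + z g'/g`.
  obtain ⟨m, g, hg, hg0, hPg⟩ := (hP.exists_eventuallyEq_pow_smul_nonzero_iff).2 h1
  have hc : ContinuousAt (fun z => (m : ℂ) + z * deriv g z / g z) 0 :=
    continuousAt_const.add ((continuousAt_id.mul hg.deriv.continuousAt).div hg.continuousAt hg0)
  refine ⟨‖(m : ℂ) + 0 * deriv g 0 / g 0‖ + 1, ?_⟩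
  have h3 : ∀ᶠ z in 𝓝 (0 : ℂ), ‖(m : ℂ) + z * deriv g z / g z‖ <
      ‖(m : ℂ) + 0 * deriv g 0 / g 0‖ + 1 := hc.norm.eventually (gt_mem_nhds (lt_add_one _))
  have h4 := hg.continuousAt.eventually_ne hg0
  have h5 := hg.eventually_analyticAt
  have h6 := Filter.EventuallyEq.eventuallyEq_nhds hPg
  have : ∀ᶠ z in 𝓝 (0 : ℂ), z ≠ 0 → ‖z * deriv P z / P z‖ ≤
      ‖(m : ℂ) + 0 * deriv g 0 / g 0‖ + 1 := by
    filter_upwards [h3, h4, h5, h6] with z a3 a4 a5 a6 hz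
    have e2 : deriv P z = m * z ^ (m - 1) * g z + z ^ m * deriv g z := by
      rw [a6.deriv_eq]
      have := ((hasDerivAt_pow m z).mul a5.differentiableAt.hasDerivAt).deriv
      simp only [sub_zero, smul_eq_mul]
      exact this
    have e1 : P z = z ^ m * g z := by simpa using a6.eq_of_nhds
    have hzm : z ^ m ≠ 0 := pow_ne_zero _ hz
    have e3 : (m : ℂ) * z ^ (m - 1) * z = m * z ^ m := by
      cases m with
      | zero => simp
      | succ k => simp [pow_succ]; ring
    have : z * deriv P z / P z = (m : ℂ) + z * deriv g z / g z := by
      rw [e1, e2]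
      field_simp
      linear_combination (g z) * e3
    rw [this]; exact a3.le
  exact eventually_nhdsWithin_of_forall (fun _ h => h) |>.and (this.filter_mono nhdsWithin_le_nhds)
    |>.mono fun z hz => hz.2 hz.1

/-- The entire function of `z = t²/4` obtained from `D_{n,ν}` by removing the power of `t`. -/
noncomputable def detG (n : ℕ) (ν z : ℂ) : ℂ :=
  Matrix.det (Matrix.of fun i j : Fin n => besG (((i : ℕ) : ℂ) - ((j : ℕ) : ℂ) - ν) z)

theorem differentiable_detG (n : ℕ) (ν : ℂ) : Differentiable ℂ (detG n ν) := by
  intro z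
  unfold detG
  simp only [Matrix.det_apply]
  refine DifferentiableAt.fun_sum fun σ _ => ?_
  refine DifferentiableAt.const_smul ?_ _
  refine DifferentiableAt.fun_finsetProd fun i _ => ?_
  exact (hasDerivAt_besG _ _).differentiableAt

theorem toeplitzD_exp_eq (n : ℕ) (ν : ℂ) (s : ℝ) :
    toeplitzD n ν (Real.exp s) = Complex.exp (-(n * ν) * ((s - Real.log 2 : ℝ) : ℂ)) *
      detG n ν (Complex.exp (2 * s) / 4) := by
  have hL : Real.log (Real.exp s / 2) = s - Real.log 2 := by
    rw [Real.log_div (Real.exp_pos s).ne' two_ne_zero, Real.log_exp]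
  have hz : ((Real.exp s : ℝ) / 2 : ℂ) ^ 2 = Complex.exp (2 * s) / 4 := by
    rw [div_pow, Complex.ofReal_exp, ← Complex.exp_nat_mul]; norm_num
  set L : ℂ := ((s - Real.log 2 : ℝ) : ℂ)
  have e : (Matrix.of fun i j : Fin n => besselI (((i : ℕ) : ℂ) - ((j : ℕ) : ℂ) - ν) (Real.exp s)) =
      Matrix.of fun i j : Fin n => Complex.exp ((((i : ℕ) : ℂ) - ν) * L) *
        (Matrix.of fun i j : Fin n => Complex.exp (-((j : ℕ) : ℂ) * L) *
        (Matrix.of fun i j : Fin n => besG (((i : ℕ) : ℂ) - ((j : ℕ) : ℂ) - ν)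
          (Complex.exp (2 * s) / 4)) i j) i j := by
    ext i j
    simp only [Matrix.of_apply]
    rw [besselI_eq _ (Real.exp_pos s), hL, hz, ← mul_assoc, ← Complex.exp_add]
    congr 2; ring
  rw [toeplitzD, e, Matrix.det_mul_column, Matrix.det_mul_row, ← mul_assoc, ← Finset.prod_mul_distrib,
    detG]
  congr 1
  simp only [← Complex.exp_add]
  rw [Finset.prod_congr rfl (g := fun _ => Complex.exp (-ν * L)) (fun i _ => by congr 1; ring)]
  rw [Finset.prod_const, ← Complex.exp_nat_mul]
  congr 1; simp; ring

theorem logDeriv_toeplitzD_bounded (n : ℕ) (ν : ℂ) (h : ∀ s, toeplitzD n ν (Real.exp s) ≠ 0) :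
    ∃ C s1 : ℝ, ∀ s ≤ s1, ‖(Real.exp s : ℂ) * (deriv (toeplitzD n ν) (Real.exp s) /
      toeplitzD n ν (Real.exp s))‖ ≤ C := by
  have hne : ∀ s : ℝ, detG n ν (Complex.exp (2 * s) / 4) ≠ 0 := by
    intro s hs
    apply h s
    rw [toeplitzD_exp_eq, hs, mul_zero]
  have ht : Tendsto (fun s : ℝ => Complex.exp (2 * s) / 4) atBot (𝓝[≠] (0 : ℂ)) := by
    refine tendsto_nhdsWithin_iff.2 ⟨?_, .of_forall fun s => by
      simp [Complex.exp_ne_zero]⟩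
    rw [tendsto_zero_iff_norm_tendsto_zero]
    have e : (fun s : ℝ => ‖Complex.exp (2 * s) / 4‖) = fun s => Real.exp (2 * s) / 4 := by
      funext s
      rw [norm_div, Complex.norm_exp]; simp
    rw [e]
    have := (Real.tendsto_exp_atBot.comp
      (tendsto_id.const_mul_atBot (two_pos : (0 : ℝ) < 2))).div_const 4
    simpa using this
  obtain ⟨C, hC⟩ := logDeriv_bounded ((differentiable_detG n ν).analyticAt 0)
    (ht.frequently (Eventually.frequently (.of_forall hne)))
  obtain ⟨s1, hs1⟩ := eventually_atBot.1 (ht.eventually hC)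
  refine ⟨‖-(n * ν)‖ + 2 * C, s1, fun s hs => ?_⟩
  have h1 := hasDerivAt_toeplitzD_exp ν n s
  have h2 : HasDerivAt (fun s : ℝ => toeplitzD n ν (Real.exp s))
      (Complex.exp (-(n * ν) * ((s - Real.log 2 : ℝ) : ℂ)) * -(n * ν) *
        detG n ν (Complex.exp (2 * s) / 4) +
        Complex.exp (-(n * ν) * ((s - Real.log 2 : ℝ) : ℂ)) *
          (deriv (detG n ν) (Complex.exp (2 * s) / 4) * (Complex.exp (2 * s) * 2 / 4))) s := by
    have a1 : HasDerivAt (fun s : ℝ => Complex.exp (-(n * ν) * ((s - Real.log 2 : ℝ) : ℂ)))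
        (Complex.exp (-(n * ν) * ((s - Real.log 2 : ℝ) : ℂ)) * -(n * ν)) s := by
      have : HasDerivAt (fun s : ℝ => (-(n * ν) * ((s - Real.log 2 : ℝ) : ℂ))) (-(n * ν)) s := by
        simpa using (((hasDerivAt_id s).sub_const (Real.log 2)).ofReal_comp).const_mul (-(n * ν))
      exact this.cexp
    have a2 : HasDerivAt (fun s : ℝ => Complex.exp (2 * s) / 4) (Complex.exp (2 * s) * 2 / 4) s := by
      have : HasDerivAt (fun s : ℝ => (2 * s : ℂ)) 2 s := by
        simpa using ((hasDerivAt_id s).ofReal_comp).const_mul (2 : ℂ)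
      exact this.cexp.div_const 4
    have a3 := ((differentiable_detG n ν).differentiableAt.hasDerivAt).comp s a2
    have := a1.mul a3
    refine this.congr_of_eventuallyEq (.of_forall fun s => ?_)
    exact toeplitzD_exp_eq n ν s
  have h3 := h1.unique h2
  have e : (Real.exp s : ℂ) * (deriv (toeplitzD n ν) (Real.exp s) /
      toeplitzD n ν (Real.exp s)) = -(n * ν) + 2 * (Complex.exp (2 * s) / 4 *
        deriv (detG n ν) (Complex.exp (2 * s) / 4) / detG n ν (Complex.exp (2 * s) / 4)) := by
    rw [← mul_div_assoc, h3, toeplitzD_exp_eq]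
    have b1 := hne s
    have b2 := Complex.exp_ne_zero (-(n * ν) * ((s - Real.log 2 : ℝ) : ℂ))
    field_simp
  rw [e]
  refine (norm_add_le _ _).trans (add_le_add le_rfl ?_)
  rw [norm_mul]
  have := hs1 s hs
  simp only [Complex.norm_ofNat]
  linarith

/-- `W_n` stays bounded as `t → 0`; this selects the solution of the forward Riccati equation. -/
theorem WS_bounded {ν : ℂ} {n : ℕ} (h : ∀ s, NZ ν n s) :
    ∃ C s1 : ℝ, ∀ s ≤ s1, ‖WS ν n s‖ ≤ C := by
  obtain ⟨C1, s1, h1⟩ := logDeriv_toeplitzD_bounded n ν fun s => (h s).1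
  obtain ⟨C2, s2, h2⟩ := logDeriv_toeplitzD_bounded n (ν + 1) fun s => (h s).2
  refine ⟨C1 + C2, min s1 s2, fun s hs => ?_⟩
  rw [WS, mul_sub]
  exact (norm_sub_le _ _).trans (add_le_add (h1 s (hs.trans (min_le_left _ _)))
    (h2 s (hs.trans (min_le_right _ _))))

/-! ### Barrier arguments -/

/-- A point where a real function has a local maximum has nonpositive second derivative. -/
theorem second_deriv_nonpos_of_isLocalMax {l l1 : ℝ → ℝ} {l2 s0 : ℝ}
    (h : ∀ᶠ s in 𝓝 s0, HasDerivAt l (l1 s) s) (h1 : HasDerivAt l1 l2 s0)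
    (hm : IsLocalMax l s0) : l2 ≤ 0 := by
  by_contra! hl
  have e1 : deriv l =ᶠ[𝓝 s0] l1 := h.mono fun s hs => hs.deriv
  have e2 : deriv (deriv l) s0 = l2 := by rw [e1.deriv_eq]; exact h1.deriv
  have e3 : deriv l s0 = 0 := hm.deriv_eq_zero
  have hmin := isLocalMin_of_deriv_deriv_pos (by rw [e2]; exact hl) e3 h.self_of_nhds.continuousAt
  have hc : l =ᶠ[𝓝 s0] fun _ => l s0 := by
    filter_upwards [hm, hmin] with s a1 a2 using le_antisymm a1 a2
  have h4 : deriv l =ᶠ[𝓝 s0] fun _ => 0 := by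
    filter_upwards [hc.eventuallyEq_nhds] with s hs
    rw [hs.deriv_eq]; simp
  rw [h4.deriv_eq] at e2
  simp at e2
  exact hl.ne e2

/-- Second-order barrier: a complex function cannot touch a barrier `E` from below if at every
point above the barrier its radial second derivative exceeds that of `E`. -/
theorem barrier_two {a b : ℝ} {δ δ1 δ2 : ℝ → ℂ} {E E1 E2 : ℝ → ℝ}
    (hδ : ∀ s ∈ Icc a b, HasDerivAt δ (δ1 s) s) (hδ1 : ∀ s ∈ Icc a b, HasDerivAt δ1 (δ2 s) s)
    (hE : ∀ s ∈ Icc a b, HasDerivAt E (E1 s) s) (hE1 : ∀ s ∈ Icc a b, HasDerivAt E1 (E2 s) s)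
    (hpos : ∀ s ∈ Icc a b, 0 < E s) (ha : ‖δ a‖ < E a) (hb : ‖δ b‖ < E b)
    (h : ∀ s ∈ Ioo a b, E s ≤ ‖δ s‖ → E2 s * ‖δ s‖ < (conj (δ s) * δ2 s).re) :
    ∀ s ∈ Icc a b, ‖δ s‖ < E s := by
  intro s hs
  by_contra! hcon
  have hcont : ContinuousOn (fun s => ‖δ s‖ - E s) (Icc a b) := fun s hs =>
    ((hδ s hs).continuousAt.norm.sub (hE s hs).continuousAt).continuousWithinAt
  obtain ⟨s0, hs0, hmax⟩ := isCompact_Icc.exists_isMaxOn ⟨s, hs⟩ hcont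
  have h0 : 0 ≤ ‖δ s0‖ - E s0 := (sub_nonneg.2 hcon).trans (hmax hs)
  have hs0' : s0 ∈ Ioo a b := by
    refine ⟨lt_of_le_of_ne hs0.1 ?_, lt_of_le_of_ne hs0.2 ?_⟩
    · rintro rfl; linarith
    · rintro rfl; linarith
  have hnear : ∀ᶠ s in 𝓝 s0, s ∈ Icc a b := Icc_mem_nhds hs0'.1 hs0'.2
  have hp : 0 < ‖δ s0‖ := by linarith [hpos s0 hs0]
  set e : ℂ := conj (δ s0) / ‖δ s0‖ with he
  have hen : ‖e‖ = 1 := by simp [he, hp.ne']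
  have hes : (e * δ s0).re = ‖δ s0‖ := by
    rw [he, div_mul_eq_mul_div, mul_comm (conj _), Complex.mul_conj, Complex.normSq_eq_norm_sq]
    rw [← Complex.ofReal_div, Complex.ofReal_re]; field_simp
  have hder : ∀ {g : ℝ → ℂ} {g' : ℂ} {s : ℝ}, HasDerivAt g g' s →
      HasDerivAt (fun s => (e * g s).re) ((e * g').re) s := fun hg =>
    Complex.reCLM.hasFDerivAt.comp_hasDerivAt _ (hg.const_mul e)
  have key := second_deriv_nonpos_of_isLocalMax (l := fun s => (e * δ s).re - E s)
    (l1 := fun s => (e * δ1 s).re - E1 s) (l2 := (e * δ2 s0).re - E2 s0) (s0 := s0)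
    (hnear.mono fun s hs => (hder (hδ s hs)).sub (hE s hs))
    ((hder (hδ1 s0 hs0)).sub (hE1 s0 hs0))
    (hnear.mono fun s hs => by
      have h1 : (e * δ s).re ≤ ‖δ s‖ := (Complex.re_le_norm _).trans (by rw [norm_mul, hen, one_mul])
      have h2 : ‖δ s‖ - E s ≤ ‖δ s0‖ - E s0 := hmax hs
      simp only [hes]; linarith)
  have h3 := h s0 hs0' (sub_nonneg.1 h0)
  have h4 : (e * δ2 s0).re * ‖δ s0‖ = (conj (δ s0) * δ2 s0).re := by
    rw [he, div_mul_eq_mul_div, Complex.div_ofReal_re]; field_simp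
  nlinarith

/-- First-crossing principle: a function that starts negative and decreases strictly wherever it
reaches `0` for the first time stays negative. -/
theorem first_crossing {φ : ℝ → ℝ} (hc : Continuous φ) {s1 : ℝ} (h1 : ∀ s ≤ s1, φ s < 0)
    (h : ∀ s0, φ s0 = 0 → (∀ s < s0, φ s < 0) → ∃ φ', HasDerivAt φ φ' s0 ∧ φ' < 0) :
    ∀ s, φ s < 0 := by
  by_contra! hcon
  obtain ⟨s2, hs2⟩ := hcon
  set S : Set ℝ := {s | 0 ≤ φ s}
  have hS : IsClosed S := isClosed_le continuous_const hc
  have hbd : BddBelow S := ⟨s1, fun s hs => by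
    by_contra! hlt; exact absurd (h1 s hlt.le) (not_lt.2 hs)⟩
  have hmem : sInf S ∈ S := hS.csInf_mem ⟨s2, hs2⟩ hbd
  have hlt : ∀ s < sInf S, φ s < 0 := fun s hs => not_le.1 fun hn => absurd (csInf_le hbd hn) (not_le.2 hs)
  have h0 : φ (sInf S) = 0 := by
    refine le_antisymm ?_ hmem
    have : ∀ᶠ s in 𝓝[<] (sInf S), φ s ≤ 0 := eventually_nhdsWithin_of_forall fun s hs => (hlt s hs).le
    exact le_of_tendsto (hc.continuousAt.mono_left nhdsWithin_le_nhds) this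
  obtain ⟨φ', hd, hneg⟩ := h _ h0 hlt
  have h5 : ∀ᶠ s in 𝓝[<] (sInf S), slope φ (sInf S) s < 0 :=
    ((hasDerivAt_iff_tendsto_slope.1 hd).mono_left (nhdsWithin_mono _ (fun x hx => ne_of_lt hx))).eventually
      (gt_mem_nhds hneg)
  obtain ⟨s, hs, hs'⟩ := (h5.and self_mem_nhdsWithin).exists
  rw [slope_def_field, h0, sub_zero] at hs
  have : 0 < φ s / (s - sInf S) := div_pos_of_neg_of_neg (hlt s hs') (sub_neg.2 hs')
  linarith

theorem hasDerivAt_norm_sq {z : ℝ → ℂ} {dz : ℂ} {s : ℝ} (h : HasDerivAt z dz s) :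
    HasDerivAt (fun s => ‖z s‖ ^ 2) (2 * (conj (z s) * dz).re) s := by
  have := h.norm_sq
  refine this.congr_deriv ?_
  rw [Complex.inner, mul_comm dz]

/-- First-order barrier: the modulus of a complex function that starts below `b` stays below `b` if it
grows more slowly than `b` at every point of contact. -/
theorem barrier_one {ζ ζ1 : ℝ → ℂ} {b b1 : ℝ → ℝ} (hζ : ∀ s, HasDerivAt ζ (ζ1 s) s)
    (hb : ∀ s, HasDerivAt b (b1 s) s) (hpos : ∀ s, 0 < b s) {s1 : ℝ} (h1 : ∀ s ≤ s1, ‖ζ s‖ < b s)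
    (h : ∀ s, ‖ζ s‖ = b s → (conj (ζ s) * ζ1 s).re < b s * b1 s) : ∀ s, ‖ζ s‖ < b s := by
  have key := first_crossing (φ := fun s => ‖ζ s‖ ^ 2 - b s ^ 2) (s1 := s1)
    (by
      have c1 : Continuous ζ := continuous_iff_continuousAt.2 fun s => (hζ s).continuousAt
      have c2 : Continuous b := continuous_iff_continuousAt.2 fun s => (hb s).continuousAt
      fun_prop)
    (fun s hs => by nlinarith [h1 s hs, norm_nonneg (ζ s)])
    (fun s0 h0 _ => by
      refine ⟨_, (hasDerivAt_norm_sq (hζ s0)).sub ((hb s0).pow 2), ?_⟩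
      have : ‖ζ s0‖ = b s0 := by
        have := hpos s0
        nlinarith [norm_nonneg (ζ s0)]
      have := h s0 this
      push_cast
      simp only [pow_one]
      linarith)
  intro s
  have := key s
  nlinarith [norm_nonneg (ζ s), hpos s]

/-- Landau-type inequality: a bound on `g` and on `g''` bounds `g'`. -/
theorem landau_ineq {g g1 g2 : ℝ → ℂ} {x h A B : ℝ} (hh : 0 < h)
    (hg : ∀ s ∈ Icc x (x + h), HasDerivAt g (g1 s) s)
    (hg1 : ∀ s ∈ Icc x (x + h), HasDerivAt g1 (g2 s) s)
    (hA : ∀ s ∈ Icc x (x + h), ‖g s‖ ≤ A) (hB : ∀ s ∈ Icc x (x + h), ‖g2 s‖ ≤ B) :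
    ‖g1 x‖ ≤ 2 * A / h + B * h := by
  have hx : x ∈ Icc x (x + h) := ⟨le_rfl, by linarith⟩
  have hxh : x + h ∈ Icc x (x + h) := ⟨by linarith, le_rfl⟩
  have hB0 : 0 ≤ B := (norm_nonneg _).trans (hB x hx)
  have h1 : ∀ s ∈ Icc x (x + h), ‖g1 s - g1 x‖ ≤ B * h := fun s hs => by
    have := (convex_Icc x (x + h)).norm_image_sub_le_of_norm_hasDerivWithin_le
      (fun s hs => (hg1 s hs).hasDerivWithinAt) hB hx hs
    refine this.trans (mul_le_mul_of_nonneg_left ?_ hB0)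
    rw [Real.norm_eq_abs, abs_le]; constructor <;> linarith [hs.1, hs.2]
  have h2 := (convex_Icc x (x + h)).norm_image_sub_le_of_norm_hasDerivWithin_le
      (f := fun s => g s - (s : ℂ) * g1 x) (f' := fun s => g1 s - g1 x)
      (fun s hs => ((hg s hs).sub (by
        simpa using ((hasDerivAt_id s).ofReal_comp).mul_const (g1 x))).hasDerivWithinAt) h1 hx hxh
  have e : g (x + h) - ((x + h : ℝ) : ℂ) * g1 x - (g x - (x : ℂ) * g1 x) =
      g (x + h) - g x - h * g1 x := by push_cast; ring
  rw [e, add_sub_cancel_left, Real.norm_of_nonneg hh.le] at h2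
  have h3 : ‖(h : ℂ) * g1 x‖ ≤ 2 * A + B * h * h := by
    have : (h : ℂ) * g1 x = g (x + h) - g x - (g (x + h) - g x - h * g1 x) := by ring
    rw [this]
    refine (norm_sub_le _ _).trans (add_le_add ((norm_sub_le _ _).trans ?_) h2)
    linarith [hA _ hx, hA _ hxh]
  rw [norm_mul, Complex.norm_real, Real.norm_of_nonneg hh.le] at h3
  rw [← sub_nonneg]
  have : 2 * A / h + B * h - ‖g1 x‖ = (2 * A + B * h * h - h * ‖g1 x‖) / h := by field_simp
  rw [this]
  exact div_nonneg (by linarith) hh.le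

/-! ### The slow curve -/

/-- The function `η ↦ m / cosh η + k / sinh η`, strictly decreasing from `∞` to `0` on `η > 0`. -/
noncomputable def slowH (m k η : ℝ) : ℝ := m / Real.cosh η + k / Real.sinh η

/-- The slow curve: the positive solution `η` of `e^s = m / cosh η + k / sinh η`, i.e. the
equilibrium of the Painlevé III equation with real parameters `m`, `k`. -/
noncomputable def slow (m k s : ℝ) : ℝ :=
  Classical.epsilon fun η => 0 < η ∧ slowH m k η = Real.exp s

theorem slowH_strictAnti {m k : ℝ} (hm : 0 < m) (hk : 0 < k) :
    StrictAntiOn (slowH m k) (Ioi 0) := by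
  intro x hx y hy hxy
  have h1 : Real.cosh x < Real.cosh y := Real.cosh_strictMonoOn (mem_Ici.2 (le_of_lt hx))
    (mem_Ici.2 (le_of_lt hy)) hxy
  have h2 : Real.sinh x < Real.sinh y := Real.sinh_lt_sinh.2 hxy
  have h3 : 0 < Real.sinh x := Real.sinh_pos_iff.2 hx
  exact add_lt_add (div_lt_div_of_pos_left hm (Real.cosh_pos x) h1)
    (div_lt_div_of_pos_left hk h3 h2)

theorem slow_exists {m k : ℝ} (hm : 0 < m) (hk : 0 < k) (s : ℝ) :
    ∃ η, 0 < η ∧ slowH m k η = Real.exp s := by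
  set t := Real.exp s
  have ht : 0 < t := Real.exp_pos s
  have hab : Real.arsinh (k / t) ≤ Real.arsinh ((m + k) / t) :=
    Real.arsinh_le_arsinh.2 (by gcongr; linarith)
  have ha : 0 < Real.arsinh (k / t) := Real.arsinh_pos_iff.2 (by positivity)
  have hc : ContinuousOn (slowH m k) (Icc (Real.arsinh (k / t)) (Real.arsinh ((m + k) / t))) := by
    intro x hx
    have h3 : 0 < Real.sinh x := Real.sinh_pos_iff.2 (ha.trans_le hx.1)
    have h4 := Real.cosh_pos x
    refine ContinuousAt.continuousWithinAt ?_
    unfold slowH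
    exact (continuousAt_const.div Real.continuous_cosh.continuousAt h4.ne').add
      (continuousAt_const.div Real.continuous_sinh.continuousAt h3.ne')
  have := intermediate_value_Icc' hab hc
  obtain ⟨η, hη, h⟩ := this (show t ∈ _ from by
    constructor
    · have h1 : Real.sinh (Real.arsinh ((m + k) / t)) = (m + k) / t := Real.sinh_arsinh _
      have h0 : 0 < Real.sinh (Real.arsinh ((m + k) / t)) := by rw [h1]; positivity
      have h2 := Real.sinh_lt_cosh (Real.arsinh ((m + k) / t))
      have : slowH m k (Real.arsinh ((m + k) / t)) ≤
          m / Real.sinh (Real.arsinh ((m + k) / t)) + k / Real.sinh (Real.arsinh ((m + k) / t)) := by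
        unfold slowH; gcongr
      refine this.trans ?_
      rw [← add_div, h1]
      field_simp; rfl
    · unfold slowH
      rw [Real.sinh_arsinh]
      have := Real.cosh_pos (Real.arsinh (k / t))
      have h5 : k / (k / t) = t := by field_simp
      rw [h5]
      have : 0 < m / Real.cosh (Real.arsinh (k / t)) := by positivity
      linarith)
  exact ⟨η, ha.trans_le hη.1, h⟩

section
variable {m k : ℝ} (hm : 0 < m) (hk : 0 < k) (s : ℝ)
include hm hk

theorem slow_pos : 0 < slow m k s := (Classical.epsilon_spec (slow_exists hm hk s)).1

theorem slowH_slow : slowH m k (slow m k s) = Real.exp s :=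
  (Classical.epsilon_spec (slow_exists hm hk s)).2

theorem slow_unique {η : ℝ} (hη : 0 < η) (h : slowH m k η = Real.exp s) : slow m k s = η :=
  (slowH_strictAnti hm hk).injOn (slow_pos hm hk s) hη ((slowH_slow hm hk s).trans h.symm)

theorem slow_anti : StrictAnti (slow m k) := by
  intro s1 s2 h
  have h1 := slowH_slow hm hk s1
  have h2 := slowH_slow hm hk s2
  have h3 : slowH m k (slow m k s1) < slowH m k (slow m k s2) := by
    rw [h1, h2]; exact Real.exp_lt_exp.2 h
  exact ((slowH_strictAnti hm hk).lt_iff_gt (slow_pos hm hk s1) (slow_pos hm hk s2)).1 h3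

theorem slow_continuous : Continuous (slow m k) := by
  have h1 : Monotone (fun s => -Real.log (slow m k s)) := fun s1 s2 h =>
    neg_le_neg (Real.log_le_log (slow_pos hm hk s2) ((slow_anti hm hk).antitone h))
  have h2 : Function.Surjective (fun s => -Real.log (slow m k s)) := by
    intro x'
    obtain ⟨x, rfl⟩ : ∃ x, x' = -x := ⟨-x', (neg_neg _).symm⟩
    have hx := Real.exp_pos x
    have hp : 0 < slowH m k (Real.exp x) := by
      have h3 : 0 < Real.sinh (Real.exp x) := Real.sinh_pos_iff.2 hx
      have h4 := Real.cosh_pos (Real.exp x)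
      unfold slowH; positivity
    refine ⟨Real.log (slowH m k (Real.exp x)), ?_⟩
    show -Real.log (slow m k _) = -x
    rw [slow_unique hm hk _ hx (by rw [Real.exp_log hp]), Real.log_exp]
  have h3 := h1.continuous_of_surjective h2
  have := Real.continuous_exp.comp h3.neg
  refine this.congr fun s => ?_
  simp [Real.exp_log (slow_pos hm hk s)]

theorem slow_sinh_eq : Real.exp s * Real.sinh (slow m k s) = m * Real.tanh (slow m k s) + k := by
  have h1 := slowH_slow hm hk s
  have h3 : 0 < Real.sinh (slow m k s) := Real.sinh_pos_iff.2 (slow_pos hm hk s)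
  have h4 := Real.cosh_pos (slow m k s)
  rw [← h1, slowH, Real.tanh_eq_sinh_div_cosh]
  field_simp

end

theorem hasDerivAt_tanh (x : ℝ) : HasDerivAt Real.tanh (1 - Real.tanh x ^ 2) x := by
  have h4 := Real.cosh_pos x
  have := (Real.hasDerivAt_sinh x).div (Real.hasDerivAt_cosh x) h4.ne'
  have e : Real.tanh = Real.sinh / Real.cosh := funext fun x => Real.tanh_eq_sinh_div_cosh x
  rw [e]
  refine this.congr_deriv ?_
  simp only [Pi.div_apply]
  field_simp

theorem tanh_pos' {x : ℝ} (hx : 0 < x) : 0 < Real.tanh x := by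
  rw [Real.tanh_eq_sinh_div_cosh]
  exact div_pos (Real.sinh_pos_iff.2 hx) (Real.cosh_pos x)

theorem tanh_lt_one' (x : ℝ) : Real.tanh x < 1 := by
  rw [Real.tanh_eq_sinh_div_cosh, div_lt_one (Real.cosh_pos x)]
  exact Real.sinh_lt_cosh x

theorem cosh_mul_tanh (x : ℝ) : Real.cosh x * Real.tanh x = Real.sinh x := by
  have h4 := Real.cosh_pos x
  rw [Real.tanh_eq_sinh_div_cosh]; field_simp

/-- `-θη*` as a function of `T = tanh η*`. -/
noncomputable def slowP (m k T : ℝ) : ℝ := T * (m * T + k) / (m * T ^ 3 + k)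

/-- The derivative of `slowP` in `T`. -/
noncomputable def slowPT (m k T : ℝ) : ℝ :=
  (-(m ^ 2 * T ^ 4) + 2 * m * k * T - 2 * m * k * T ^ 3 + k ^ 2) / (m * T ^ 3 + k) ^ 2

/-- The common size `t cosh η* / (m T³ + k)` of the derivatives of the slow curve. -/
noncomputable def slowJ (m k T : ℝ) : ℝ := (m * T + k) / (T * (m * T ^ 3 + k))

section
variable {m k : ℝ} (hm : 0 < m) (hk : 0 < k) (s : ℝ)
include hm hk

theorem hasDerivAt_slow :
    HasDerivAt (slow m k) (-slowP m k (Real.tanh (slow m k s))) s := by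
  set η := slow m k s with hη
  have hp : 0 < η := slow_pos hm hk s
  have h3 : 0 < Real.sinh η := Real.sinh_pos_iff.2 hp
  have h4 := Real.cosh_pos η
  have ht := slowH_slow hm hk s
  have hpos : 0 < slowH m k η := by rw [ht]; exact Real.exp_pos s
  have hd : HasDerivAt (fun η => Real.log (slowH m k η))
      ((-(m * Real.sinh η) / Real.cosh η ^ 2 + -(k * Real.cosh η) / Real.sinh η ^ 2) /
        slowH m k η) η := by
    refine HasDerivAt.log ?_ hpos.ne'
    have a1 := ((Real.hasDerivAt_cosh η).fun_inv h4.ne').const_mul m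
    have a2 := ((Real.hasDerivAt_sinh η).fun_inv h3.ne').const_mul k
    refine (a1.add a2).congr_deriv ?_
    ring
  have hne : ((-(m * Real.sinh η) / Real.cosh η ^ 2 + -(k * Real.cosh η) / Real.sinh η ^ 2) /
        slowH m k η) ≠ 0 := by
    refine div_ne_zero (ne_of_lt ?_) hpos.ne'
    have : 0 < (m * Real.sinh η) / Real.cosh η ^ 2 + (k * Real.cosh η) / Real.sinh η ^ 2 := by
      positivity
    rw [neg_div, neg_div]; linarith
  have := HasDerivAt.of_local_left_inverse (f := fun η => Real.log (slowH m k η)) (g := slow m k)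
    (a := s) (slow_continuous hm hk).continuousAt hd hne
    (.of_forall fun s => by simp only [slowH_slow hm hk s, Real.log_exp])
  refine this.congr_deriv ?_
  have hT := cosh_mul_tanh η
  have hT0 := tanh_pos' hp
  set T := Real.tanh η
  have e1 : -(m * Real.sinh η) / Real.cosh η ^ 2 + -(k * Real.cosh η) / Real.sinh η ^ 2 =
      -(m * T ^ 3 + k) / (Real.cosh η * T ^ 2) := by
    rw [← hT]; field_simp; ring
  have e2 : slowH m k η = (m * T + k) / (Real.cosh η * T) := by
    rw [slowH, ← hT]; field_simp
  have h5 : m * T ^ 3 + k ≠ 0 := by positivity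
  have h6 : m * T + k ≠ 0 := by positivity
  rw [e1, e2, slowP, neg_div, neg_div, inv_neg]
  field_simp

theorem slowT_pos : 0 < Real.tanh (slow m k s) := tanh_pos' (slow_pos hm hk s)

theorem hasDerivAt_slowT : HasDerivAt (fun s => Real.tanh (slow m k s))
    (-((1 - Real.tanh (slow m k s) ^ 2) * slowP m k (Real.tanh (slow m k s)))) s := by
  refine ((hasDerivAt_tanh _).comp s (hasDerivAt_slow hm hk s)).congr_deriv ?_
  ring

omit s in
theorem hasDerivAt_slowP {T : ℝ} (hT : 0 < T) :
    HasDerivAt (slowP m k) (slowPT m k T) T := by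
  have h0 : m * T ^ 3 + k ≠ 0 := by positivity
  have a1 := (hasDerivAt_id T).mul (((hasDerivAt_id T).const_mul m).add_const k)
  have a2 := ((hasDerivAt_pow 3 T).const_mul m).add_const k
  have := a1.div a2 h0
  refine this.congr_deriv ?_
  simp only [slowPT, id, Pi.mul_apply]
  push_cast
  congr 1
  ring

theorem hasDerivAt_slow2 : HasDerivAt (fun s => -slowP m k (Real.tanh (slow m k s)))
    (slowPT m k (Real.tanh (slow m k s)) * ((1 - Real.tanh (slow m k s) ^ 2) *
      slowP m k (Real.tanh (slow m k s)))) s := by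
  refine (((hasDerivAt_slowP hm hk (slowT_pos hm hk s)).comp s
    (hasDerivAt_slowT hm hk s)).neg).congr_deriv ?_
  ring

theorem hasDerivAt_slowT2 : HasDerivAt
    (fun s => -((1 - Real.tanh (slow m k s) ^ 2) * slowP m k (Real.tanh (slow m k s))))
    ((-2 * Real.tanh (slow m k s) * slowP m k (Real.tanh (slow m k s)) +
      (1 - Real.tanh (slow m k s) ^ 2) * slowPT m k (Real.tanh (slow m k s))) *
      ((1 - Real.tanh (slow m k s) ^ 2) * slowP m k (Real.tanh (slow m k s)))) s := by
  have h1 := hasDerivAt_slowT hm hk s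
  have h2 := (hasDerivAt_slowP hm hk (slowT_pos hm hk s)).comp s h1
  refine ((((h1.fun_pow 2).const_sub 1).fun_mul h2).fun_neg).congr_deriv ?_
  simp only [Function.comp, Nat.cast_ofNat]
  ring

omit s in
theorem slowP_eq {T : ℝ} (hT : 0 < T) : slowP m k T = T ^ 2 * slowJ m k T := by
  rw [slowP, slowJ]; field_simp

omit s in
theorem slowJ_pos {T : ℝ} (hT : 0 < T) : 0 < slowJ m k T := by
  rw [slowJ]; positivity

omit s in
theorem slowPT_bound {T : ℝ} (hT : 0 < T) (hT1 : T < 1) : |slowPT m k T| * T ^ 2 ≤ 1 := by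
  have hD : 0 < m * T ^ 3 + k := by positivity
  rw [slowPT, abs_div, abs_of_pos (pow_pos hD 2), div_mul_eq_mul_div, div_le_one (pow_pos hD 2),
    show ∀ X : ℝ, |X| * T ^ 2 = |X * T ^ 2| from fun X => by
      rw [abs_mul, abs_of_pos (pow_pos hT 2)], abs_le]
  have e1 : 0 ≤ m * k * T * (1 - T ^ 2) := by
    have : 0 ≤ 1 - T ^ 2 := by nlinarith
    positivity
  have e2 : 0 ≤ k ^ 2 * (1 - T ^ 2) := by
    have : 0 ≤ 1 - T ^ 2 := by nlinarith
    positivity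
  have e3 : 0 < m * k * T ^ 3 := by positivity
  constructor
  · nlinarith [mul_nonneg e1 (sq_nonneg T), sq_nonneg (k * T)]
  · nlinarith [mul_nonneg e1 (sq_nonneg T), sq_nonneg (m * T ^ 3), mul_nonneg e3.le (sq_nonneg T)]

omit s in
/-- Bound for the second derivative of the slow curve. -/
theorem slow_second_bound {T : ℝ} (hT : 0 < T) (hT1 : T < 1) :
    |slowPT m k T * ((1 - T ^ 2) * slowP m k T)| ≤ slowJ m k T := by
  have hJ := slowJ_pos hm hk hT
  have h1 := slowPT_bound hm hk hT hT1
  have h2 : 0 ≤ 1 - T ^ 2 := by nlinarith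
  rw [slowP_eq hm hk hT, abs_mul, abs_of_nonneg (a := (1 - T ^ 2) * _) (by positivity)]
  have : |slowPT m k T| * ((1 - T ^ 2) * (T ^ 2 * slowJ m k T)) =
    (|slowPT m k T| * T ^ 2) * (1 - T ^ 2) * slowJ m k T := by ring
  rw [this]
  have h3 : 1 - T ^ 2 ≤ 1 := by nlinarith
  calc _ ≤ 1 * 1 * slowJ m k T := by gcongr
    _ = _ := by ring

omit s in
/-- Bound for the second derivative of `tanh η*`. -/
theorem slowT_second_bound {T : ℝ} (hT : 0 < T) (hT1 : T < 1) :
    |(-2 * T * slowP m k T + (1 - T ^ 2) * slowPT m k T) * ((1 - T ^ 2) * slowP m k T)| ≤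
      3 * slowJ m k T := by
  have hJ := slowJ_pos hm hk hT
  have h1 := slowPT_bound hm hk hT hT1
  have h2 : 0 ≤ 1 - T ^ 2 := by nlinarith
  have h3 : 1 - T ^ 2 ≤ 1 := by nlinarith
  have hp : 0 < slowP m k T := by rw [slowP_eq hm hk hT]; positivity
  have h4 : T ^ 3 * slowP m k T ≤ 1 := by
    rw [slowP, ← mul_div_assoc, div_le_one (by positivity)]
    have h5 : T ^ 5 ≤ T ^ 3 := pow_le_pow_of_le_one hT.le hT1.le (by norm_num)
    have h6 : T ^ 4 ≤ 1 := pow_le_one₀ hT.le hT1.le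
    nlinarith
  have h5 : |-2 * T * slowP m k T + (1 - T ^ 2) * slowPT m k T| ≤
      2 * T * slowP m k T + |slowPT m k T| := by
    refine (abs_add_le _ _).trans (add_le_add ?_ ?_)
    · rw [abs_of_nonpos (by nlinarith [mul_pos hT hp])]; linarith
    · rw [abs_mul, abs_of_nonneg h2]
      nlinarith [abs_nonneg (slowPT m k T)]
  rw [abs_mul, abs_of_nonneg (a := (1 - T ^ 2) * _) (by positivity)]
  calc _ ≤ (2 * T * slowP m k T + |slowPT m k T|) * (1 * slowP m k T) := by gcongr
    _ = (2 * (T ^ 3 * slowP m k T) + |slowPT m k T| * T ^ 2) * slowJ m k T := by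
        rw [slowP_eq hm hk hT]; ring
    _ ≤ 3 * slowJ m k T := by gcongr; linarith

end

theorem sinh_le_mul_cosh {x : ℝ} (hx : 0 ≤ x) : Real.sinh x ≤ x * Real.cosh x := by
  have hmono : MonotoneOn (fun x => x * Real.cosh x - Real.sinh x) (Ici 0) := by
    refine monotoneOn_of_deriv_nonneg (convex_Ici 0) (by fun_prop) (by fun_prop) fun x hx => ?_
    rw [interior_Ici] at hx
    have : HasDerivAt (fun x => x * Real.cosh x - Real.sinh x) (x * Real.sinh x) x := by
      refine (((hasDerivAt_id x).mul (Real.hasDerivAt_cosh x)).sub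
        (Real.hasDerivAt_sinh x)).congr_deriv ?_
      simp
    rw [this.deriv]
    exact mul_nonneg (le_of_lt hx) (Real.sinh_nonneg_iff.2 (le_of_lt hx))
  have := hmono (mem_Ici.2 (le_refl (0 : ℝ))) (mem_Ici.2 hx) hx
  simp at this
  linarith

/-- Monotonicity and Lipschitz dependence of the slow curve on `m`. -/
theorem slow_shift {m k : ℝ} (hm : 0 < m) (hk : 0 < k) (s : ℝ) :
    slow m k s ≤ slow (m + 1) k s ∧ slow (m + 1) k s - slow m k s ≤
      Real.tanh (slow m k s) * Real.tanh (slow (m + 1) k s) / k := by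
  have hm1 : 0 < m + 1 := by linarith
  have p1 := slow_pos hm hk s
  have p2 := slow_pos hm1 hk s
  have hle : slow m k s ≤ slow (m + 1) k s := by
    refine ((slowH_strictAnti hm1 hk).le_iff_ge p2 p1).1 ?_
    rw [slowH_slow hm1 hk, ← slowH_slow hm hk s]
    unfold slowH
    have := Real.cosh_pos (slow m k s)
    gcongr; linarith
  refine ⟨hle, ?_⟩
  have e1 := slow_sinh_eq hm hk s
  have e2 := slow_sinh_eq hm1 hk s
  have t1 := tanh_pos' p1
  have t2 := tanh_pos' p2
  have c1 := cosh_mul_tanh (slow m k s)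
  have c2 := cosh_mul_tanh (slow (m + 1) k s)
  obtain ⟨d, hd⟩ : ∃ d, d = slow (m + 1) k s - slow m k s := ⟨_, rfl⟩
  have hd0 : 0 ≤ d := by linarith
  have hd2 : slow (m + 1) k s = slow m k s + d := by linarith
  rw [← hd]
  have hC1 := Real.one_le_cosh (slow m k s)
  have hC2 : Real.cosh d ≤ Real.cosh (slow (m + 1) k s) := by
    refine Real.cosh_strictMonoOn.monotoneOn (mem_Ici.2 hd0) (mem_Ici.2 p2.le) (by linarith)
  have s1 : d * Real.cosh (slow m k s) ≤
      Real.sinh (slow (m + 1) k s) - Real.sinh (slow m k s) := by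
    rw [hd2, Real.sinh_add]
    have := Real.self_le_sinh_iff.2 hd0
    have h5 := Real.one_le_cosh d
    have h6 : 0 < Real.sinh (slow m k s) := Real.sinh_pos_iff.2 p1
    nlinarith
  have s2 : Real.tanh (slow (m + 1) k s) - Real.tanh (slow m k s) ≤ d := by
    have h7 : Real.sinh d = Real.cosh (slow m k s) * Real.cosh (slow (m + 1) k s) *
        (Real.tanh (slow (m + 1) k s) - Real.tanh (slow m k s)) := by
      rw [hd, Real.sinh_sub]
      rw [← c1, ← c2]; ring
    have h8 := sinh_le_mul_cosh hd0
    have h9 : Real.cosh (slow m k s) * Real.cosh (slow (m + 1) k s) *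
        (Real.tanh (slow (m + 1) k s) - Real.tanh (slow m k s)) ≤
        Real.cosh (slow m k s) * Real.cosh (slow (m + 1) k s) * d := by
      rw [← h7]
      have : Real.cosh d ≤ Real.cosh (slow m k s) * Real.cosh (slow (m + 1) k s) := by
        nlinarith [Real.cosh_pos (slow (m + 1) k s)]
      nlinarith
    exact le_of_mul_le_mul_left h9 (by have := Real.cosh_pos (slow (m + 1) k s); positivity)
  have ht := Real.exp_pos s
  rw [le_div_iff₀ hk]
  rw [← c1] at e1
  have key : d * (Real.exp s * Real.cosh (slow m k s) - m) ≤ Real.tanh (slow (m + 1) k s) := by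
    nlinarith
  have h10 : k = (Real.exp s * Real.cosh (slow m k s) - m) * Real.tanh (slow m k s) := by
    linarith
  calc d * k = d * (Real.exp s * Real.cosh (slow m k s) - m) * Real.tanh (slow m k s) := by
        rw [mul_assoc, ← h10]
    _ ≤ _ := by rw [mul_comm (Real.tanh (slow m k s))]; gcongr

/-- A lower bound for `e^{-η*}`, hence linear growth of the slow curve as `s → -∞` at worst. -/
theorem exp_neg_slow_ge {m k : ℝ} (hm : 0 < m) (hk : 0 < k) (s : ℝ) :
    Real.exp s / (Real.exp s + 2 * (m + k)) ≤ Real.exp (-slow m k s) := by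
  have p1 := slow_pos hm hk s
  have e1 := slow_sinh_eq hm hk s
  have t1 := tanh_lt_one' (slow m k s)
  have ht := Real.exp_pos s
  have h1 := Real.exp_pos (slow m k s)
  have h2 : Real.exp (slow m k s) ≤ 2 * Real.sinh (slow m k s) + 1 := by
    have := Real.sinh_eq (slow m k s)
    have : Real.exp (-slow m k s) ≤ 1 := Real.exp_le_one_iff.2 (by linarith)
    linarith
  rw [Real.exp_neg, div_le_iff₀ (by positivity), inv_mul_eq_div, le_div_iff₀ h1]
  nlinarith

/-! ### Closeness to the slow curve improves itself -/

theorem norm_sinh_sub_le {z : ℂ} (hz : ‖z‖ ≤ 1) : ‖Complex.sinh z - z‖ ≤ ‖z‖ ^ 3 := by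
  have h1 := Complex.exp_bound hz (n := 3) (by norm_num)
  have h2 := Complex.exp_bound (x := -z) (by rwa [norm_neg]) (n := 3) (by norm_num)
  simp only [Finset.sum_range_succ, Finset.range_zero, Finset.sum_empty, norm_neg] at h1 h2
  norm_num [Nat.factorial] at h1 h2
  have e : Complex.sinh z - z = ((Complex.exp z - (1 + z + z ^ 2 / 2)) -
    (Complex.exp (-z) - (1 + -z + z ^ 2 / 2))) / 2 := by
    rw [Complex.sinh]; ring
  rw [e, norm_div, Complex.norm_ofNat, div_le_iff₀ (by norm_num)]
  refine (norm_sub_le _ _).trans ?_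
  have : 0 ≤ ‖z‖ ^ 3 := by positivity
  linarith

theorem norm_cosh_sub_le {z : ℂ} (hz : ‖z‖ ≤ 1) : ‖Complex.cosh z - 1‖ ≤ ‖z‖ ^ 2 := by
  have h1 := Complex.norm_exp_sub_one_sub_id_le hz
  have h2 := Complex.norm_exp_sub_one_sub_id_le (x := -z) (by rwa [norm_neg])
  rw [norm_neg] at h2
  have e : Complex.cosh z - 1 = ((Complex.exp z - 1 - z) + (Complex.exp (-z) - 1 - -z)) / 2 := by
    rw [Complex.cosh]; ring
  rw [e, norm_div, Complex.norm_ofNat, div_le_iff₀ (by norm_num)]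
  refine (norm_add_le _ _).trans ?_
  linarith

/-- The right-hand side of the Painlevé III equation. -/
noncomputable def p3rhs (t m : ℝ) (κ y : ℂ) : ℂ :=
  2 * (t : ℂ) ^ 2 * Complex.sinh (2 * y) - 4 * t * (κ * Complex.cosh y + m * Complex.sinh y)

/-- The linearisation of `p3rhs` at the slow curve. -/
noncomputable def slowQ (t k η : ℝ) : ℝ := 4 * t ^ 2 * Real.sinh η ^ 2 + 4 * t * k / Real.sinh η

/-- Exact expansion of the Painlevé III right-hand side around a point of the slow curve. -/
theorem p3rhs_expand {t m k η : ℝ} (hη : 0 < η) (h : t * Real.sinh η = m * Real.tanh η + k)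
    (κ δ : ℂ) :
    p3rhs t m κ (η + δ) = slowQ t k η * δ +
      4 * t ^ 2 * Real.sinh η * Real.cosh η * (Complex.cosh (2 * δ) - Complex.cosh δ) +
      2 * t ^ 2 * Real.cosh (2 * η) * (Complex.sinh (2 * δ) - 2 * δ) -
      4 * t * (k * Real.sinh η + m * Real.cosh η) * (Complex.sinh δ - δ) -
      4 * t * (κ - k) * (Real.cosh η * Complex.cosh δ + Real.sinh η * Complex.sinh δ) := by
  have hS : 0 < Real.sinh η := Real.sinh_pos_iff.2 hη
  have hC := Real.cosh_pos η
  obtain ⟨x, hx⟩ : ∃ x, x = k / Real.sinh η := ⟨_, rfl⟩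
  have hkx : k = x * Real.sinh η := by rw [hx]; field_simp
  have hm : t * Real.cosh η = m + x * Real.cosh η := by
    rw [Real.tanh_eq_sinh_div_cosh, hkx] at h
    field_simp at h
    linarith
  have hmc : (t : ℂ) * Real.cosh η = m + x * Real.cosh η := by exact_mod_cast hm
  have hCSc : (Real.cosh η : ℂ) ^ 2 = (Real.sinh η : ℂ) ^ 2 + 1 := by
    exact_mod_cast Real.cosh_sq η
  have e1 : (slowQ t k η : ℂ) = 4 * t ^ 2 * Real.sinh η ^ 2 + 4 * t * x := by
    rw [slowQ, mul_div_assoc, ← hx]; push_cast; ring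
  have e2 : Complex.sinh (2 * (η + δ)) = 2 * Real.sinh η * Real.cosh η * Complex.cosh (2 * δ) +
      Real.cosh (2 * η) * Complex.sinh (2 * δ) := by
    rw [mul_add, Complex.sinh_add, Complex.sinh_two_mul (η : ℂ)]; push_cast; ring
  have e3 : Complex.sinh (η + δ) = Real.sinh η * Complex.cosh δ + Real.cosh η * Complex.sinh δ := by
    rw [Complex.sinh_add]; push_cast; ring
  have e4 : Complex.cosh (η + δ) = Real.cosh η * Complex.cosh δ + Real.sinh η * Complex.sinh δ := by
    rw [Complex.cosh_add]; push_cast; ring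
  have e5 : (Real.cosh (2 * η) : ℂ) = (Real.cosh η : ℂ) ^ 2 + (Real.sinh η : ℂ) ^ 2 := by
    rw [Real.cosh_two_mul]; push_cast; ring
  have e6 : (k : ℂ) = x * Real.sinh η := by exact_mod_cast hkx
  rw [p3rhs, e1, e2, e3, e4, e5, e6]
  generalize (Real.sinh η : ℂ) = S at *
  generalize (Real.cosh η : ℂ) = C at *
  linear_combination (4 * t * S * Complex.cosh δ + 4 * t * δ * C) * hmc + 4 * t * x * δ * hCSc

theorem slowQ_mul_tanh {t m k η : ℝ} (hη : 0 < η)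
    (h : t * Real.sinh η = m * Real.tanh η + k) :
    slowQ t k η * Real.tanh η = 4 * (t * Real.cosh η) * (m * Real.tanh η ^ 3 + k) := by
  have hS : 0 < Real.sinh η := Real.sinh_pos_iff.2 hη
  have hC := Real.cosh_pos η
  have hCT := cosh_mul_tanh η
  have hCS := Real.cosh_sq η
  have hT := tanh_pos' hη
  have hk : k = t * (Real.cosh η * Real.tanh η) - m * Real.tanh η := by rw [hCT]; linarith
  have hT2 : Real.cosh η ^ 2 * (1 - Real.tanh η ^ 2) = 1 := by
    rw [mul_sub, ← mul_pow, hCT, hCS]; ring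
  rw [slowQ, ← hCT, hk]
  generalize Real.cosh η = C at *
  generalize Real.tanh η = T at *
  field_simp
  linear_combination (-t * (C * t - m)) * hT2

set_option maxHeartbeats 1000000 in
/-- Near the slow curve the Painlevé III right-hand side is its linearisation, up to a small
relative error and the contribution of `κ - k`. -/
theorem p3rhs_linear {t m k η B : ℝ} (ht : 0 < t) (hm : 0 < m) (hk : 0 < k) (hη : 0 < η)
    (h : t * Real.sinh η = m * Real.tanh η + k) {κ δ : ℂ} (hκ : ‖κ - k‖ ≤ B)
    (hδ : ‖δ‖ ≤ 20 * (1 / 1000) * Real.tanh η) :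
    ‖p3rhs t m κ (η + δ) - slowQ t k η * δ‖ ≤ 0.15 * slowQ t k η * ‖δ‖ +
      2 * B * slowQ t k η * Real.tanh η / k := by
  have hS : 0 < Real.sinh η := Real.sinh_pos_iff.2 hη
  have hC := Real.cosh_pos η
  have hT := tanh_pos' hη
  have hT1 := tanh_lt_one' η
  have hCT := cosh_mul_tanh η
  have hCS := Real.cosh_sq η
  set S := Real.sinh η
  set C := Real.cosh η
  set T := Real.tanh η
  set d := ‖δ‖ with hd
  have hd0 : 0 ≤ d := norm_nonneg _
  have hB : 0 ≤ B := (norm_nonneg _).trans hκ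
  have hd1 : d ≤ 0.02 := by linarith
  have hQ : 4 * t ^ 2 * S ^ 2 ≤ slowQ t k η := by
    have : 0 < 4 * t * k / S := by positivity
    show _ ≤ 4 * t ^ 2 * S ^ 2 + 4 * t * k / S
    linarith
  have hQ0 : 0 < slowQ t k η := lt_of_lt_of_le (by positivity) hQ
  have hQT : slowQ t k η * T = 4 * (t * C) * (m * T ^ 3 + k) := slowQ_mul_tanh hη h
  set Q := slowQ t k η
  have b1 : ‖Complex.cosh (2 * δ) - Complex.cosh δ‖ ≤ 5 * d ^ 2 := by
    have a1 := norm_cosh_sub_le (z := 2 * δ) (by simp; linarith)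
    have a2 := norm_cosh_sub_le (z := δ) (by linarith)
    have : Complex.cosh (2 * δ) - Complex.cosh δ =
      (Complex.cosh (2 * δ) - 1) - (Complex.cosh δ - 1) := by ring
    rw [this]
    refine (norm_sub_le _ _).trans ?_
    simp only [norm_mul, Complex.norm_ofNat] at a1
    rw [← hd] at a1 a2
    linarith
  have b2 : ‖Complex.sinh (2 * δ) - 2 * δ‖ ≤ 8 * d ^ 3 := by
    have a1 := norm_sinh_sub_le (z := 2 * δ) (by simp; linarith)
    simp only [norm_mul, Complex.norm_ofNat] at a1
    rw [← hd] at a1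
    linarith
  have b3 : ‖Complex.sinh δ - δ‖ ≤ d ^ 3 := norm_sinh_sub_le (by linarith)
  have b4 : ‖Complex.cosh δ‖ ≤ 1.1 := by
    have a2 := norm_cosh_sub_le (z := δ) (by linarith)
    have : Complex.cosh δ = 1 + (Complex.cosh δ - 1) := by ring
    rw [this]
    refine (norm_add_le _ _).trans ?_
    simp only [norm_one]
    rw [← hd] at a2
    have := pow_le_pow_left₀ hd0 hd1 2
    linarith
  have b5 : ‖Complex.sinh δ‖ ≤ 0.1 := by
    have : Complex.sinh δ = δ + (Complex.sinh δ - δ) := by ring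
    rw [this]
    refine (norm_add_le _ _).trans ?_
    have : d ^ 3 ≤ 0.02 := by
      have := pow_le_pow_left₀ hd0 hd1 3
      linarith
    linarith
  have hSC : S ≤ C := (Real.sinh_lt_cosh η).le
  have hc2 : Real.cosh (2 * η) ≤ 2 * C ^ 2 := by rw [Real.cosh_two_mul]; linarith
  have hc20 : 0 < Real.cosh (2 * η) := Real.cosh_pos _
  -- the bracket in the linear part of `m sinh + κ cosh`
  have hR : t * (k * S + m * C) ≤ 2 * t ^ 2 * C ^ 2 := by
    have h1 : k ≤ t * S := by have := mul_pos hm hT; linarith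
    have h2 : m * T ≤ t * S := by linarith
    have h3 : m ≤ t * C := by
      have : m * T ≤ (t * C) * T := by rw [mul_assoc, hCT]; exact h2
      exact le_of_mul_le_mul_right this hT
    have h4 : k ≤ t * C := h1.trans (by gcongr)
    have : k * S + m * C ≤ t * C * C + t * C * C := by gcongr
    calc t * (k * S + m * C) ≤ t * (t * C * C + t * C * C) := by gcongr
      _ = _ := by ring
  have hR0 : 0 < t * (k * S + m * C) := by positivity
  have hd3 : C * d ≤ 0.02 * S := by
    calc C * d ≤ C * (20 * (1 / 1000) * T) := by gcongr
      _ = 0.02 * (C * T) := by ring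
      _ = 0.02 * S := by rw [hCT]
  have hd2 : C ^ 2 * d ^ 2 ≤ 0.0004 * S ^ 2 := by
    have := pow_le_pow_left₀ (by positivity) hd3 2
    rw [mul_pow, mul_pow] at this
    linarith
  rw [p3rhs_expand hη h]
  have e : ∀ a b c d e : ℂ, a + b + c - d - e - a = b + c - d - e := fun a b c d e => by ring
  rw [e]
  refine (norm_sub_le _ _).trans ((add_le_add ((norm_sub_le _ _).trans
    (add_le_add (norm_add_le _ _) le_rfl)) le_rfl).trans ?_)
  have n1 : ‖4 * (t : ℂ) ^ 2 * Real.sinh η * Real.cosh η *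
      (Complex.cosh (2 * δ) - Complex.cosh δ)‖ ≤ 0.1 * Q * d := by
    rw [norm_mul]
    have : ‖4 * (t : ℂ) ^ 2 * Real.sinh η * Real.cosh η‖ = 4 * t ^ 2 * S * C := by
      simp only [norm_mul, norm_pow, Complex.norm_real, Complex.norm_ofNat]
      rw [Real.norm_of_nonneg ht.le, Real.norm_of_nonneg hS.le, Real.norm_of_nonneg hC.le]
    rw [this]
    calc 4 * t ^ 2 * S * C * _ ≤ 4 * t ^ 2 * S * C * (5 * d ^ 2) := by gcongr
      _ = 5 * (4 * t ^ 2 * S * (C * d)) * d := by ring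
      _ ≤ 5 * (4 * t ^ 2 * S * (0.02 * S)) * d := by gcongr
      _ = 0.1 * (4 * t ^ 2 * S ^ 2) * d := by ring
      _ ≤ _ := by gcongr
  have n2 : ‖2 * (t : ℂ) ^ 2 * Real.cosh (2 * η) * (Complex.sinh (2 * δ) - 2 * δ)‖ ≤
      0.01 * Q * d := by
    rw [norm_mul]
    have : ‖2 * (t : ℂ) ^ 2 * Real.cosh (2 * η)‖ = 2 * t ^ 2 * Real.cosh (2 * η) := by
      simp only [norm_mul, norm_pow, Complex.norm_real, Complex.norm_ofNat]
      rw [Real.norm_of_nonneg ht.le, Real.norm_of_nonneg hc20.le]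
    rw [this]
    calc 2 * t ^ 2 * Real.cosh (2 * η) * _ ≤ 2 * t ^ 2 * (2 * C ^ 2) * (8 * d ^ 3) := by gcongr
      _ = 32 * (t ^ 2 * (C ^ 2 * d ^ 2)) * d := by ring
      _ ≤ 32 * (t ^ 2 * (0.0004 * S ^ 2)) * d := by gcongr
      _ = 0.0032 * (4 * t ^ 2 * S ^ 2) * d := by ring
      _ ≤ 0.01 * Q * d := by gcongr; norm_num
  have n3 : ‖4 * (t : ℂ) * (k * Real.sinh η + m * Real.cosh η) * (Complex.sinh δ - δ)‖ ≤
      0.01 * Q * d := by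
    rw [norm_mul]
    have : ‖4 * (t : ℂ) * (k * Real.sinh η + m * Real.cosh η)‖ = 4 * (t * (k * S + m * C)) := by
      have : 4 * (t : ℂ) * (k * Real.sinh η + m * Real.cosh η) =
        ((4 * (t * (k * S + m * C)) : ℝ) : ℂ) := by
        simp only [Complex.ofReal_mul, Complex.ofReal_add, Complex.ofReal_ofNat]; ring
      rw [this, Complex.norm_real, Real.norm_of_nonneg (by positivity)]
    rw [this]
    calc 4 * (t * (k * S + m * C)) * _ ≤ 4 * (2 * t ^ 2 * C ^ 2) * d ^ 3 := by gcongr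
      _ = 8 * (t ^ 2 * (C ^ 2 * d ^ 2)) * d := by ring
      _ ≤ 8 * (t ^ 2 * (0.0004 * S ^ 2)) * d := by gcongr
      _ = 0.0008 * (4 * t ^ 2 * S ^ 2) * d := by ring
      _ ≤ 0.01 * Q * d := by gcongr; norm_num
  have n4 : ‖4 * (t : ℂ) * (κ - k) * (Real.cosh η * Complex.cosh δ +
      Real.sinh η * Complex.sinh δ)‖ ≤ 2 * B * Q * T / k := by
    rw [norm_mul]
    have h1 : ‖(Real.cosh η : ℂ) * Complex.cosh δ + Real.sinh η * Complex.sinh δ‖ ≤ 2 * C := by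
      refine (norm_add_le _ _).trans ?_
      rw [norm_mul, norm_mul, Complex.norm_real, Complex.norm_real, Real.norm_of_nonneg hS.le,
        Real.norm_of_nonneg hC.le]
      have h1 : C * ‖Complex.cosh δ‖ ≤ C * 1.1 := by gcongr
      have h2 : S * ‖Complex.sinh δ‖ ≤ C * 0.1 := by gcongr
      linarith
    have h2 : ‖4 * (t : ℂ) * (κ - k)‖ ≤ 4 * t * B := by
      rw [norm_mul, norm_mul, Complex.norm_real, Complex.norm_ofNat, Real.norm_of_nonneg ht.le]
      gcongr
    calc _ ≤ 4 * t * B * (2 * C) := by gcongr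
      _ = 2 * B * (4 * (t * C) * k) / k := by field_simp
      _ ≤ 2 * B * (4 * (t * C) * (m * T ^ 3 + k)) / k := by
          have : 0 < m * T ^ 3 := by positivity
          gcongr; linarith
      _ = _ := by rw [← hQT]; ring
  have := mul_nonneg hQ0.le hd0
  linarith


/-- A solution of the Painlevé III equation that stays within `0.02 tanh η*` of the slow curve
automatically stays within `0.001 tanh η*` of it. -/
theorem strong_step {m k B : ℝ} (hm : 0 < m) (hB : 0 ≤ B) (hkB : 4000 * (B + 1) ≤ k) {κ : ℂ}
    (hκ : ‖κ - k‖ ≤ B) {y y1 : ℝ → ℂ} (hy : ∀ s, HasDerivAt y (y1 s) s)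
    (hy1 : ∀ s, HasDerivAt y1 (p3rhs (Real.exp s) m κ (y s)) s)
    (hap : ∀ s, ‖y s - slow m k s‖ ≤ 20 * (1 / 1000) * Real.tanh (slow m k s)) (s : ℝ) :
    ‖y s - slow m k s‖ ≤ 1 / 1000 * Real.tanh (slow m k s) := by
  have hk : 0 < k := by linarith
  have key : ∀ ϵ > 0, ‖y s - slow m k s‖ <
      1 / 1000 * Real.tanh (slow m k s) + ϵ * (Real.exp s + Real.exp (-s)) := by
    intro ϵ hϵ
    set R := |s| + 0.02 / ϵ with hR
    have hR0 : 0 < R := by positivity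
    have hRe : 0.02 < ϵ * Real.exp R := by
      have h1 := Real.add_one_le_exp R
      have h2 : ϵ * (0.02 / ϵ + 1) ≤ ϵ * Real.exp R := by
        have := abs_nonneg s
        gcongr; linarith
      have h3 : ϵ * (0.02 / ϵ + 1) = 0.02 + ϵ := by field_simp
      linarith
    have hs : s ∈ Icc (-R) R := by
      have h1 := abs_le.1 (le_refl |s|)
      have h2 : 0 ≤ 0.02 / ϵ := by positivity
      constructor <;> linarith [h1.1, h1.2]
    have hbd : ∀ r, ‖y r - slow m k r‖ ≤ 0.02 := fun r => by
      have := hap r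
      have := tanh_lt_one' (slow m k r)
      linarith
    refine barrier_two (a := -R) (b := R) (δ := fun s => y s - slow m k s)
      (δ1 := fun s => y1 s - (-slowP m k (Real.tanh (slow m k s)) : ℝ))
      (δ2 := fun s => p3rhs (Real.exp s) m κ (y s) - (slowPT m k (Real.tanh (slow m k s)) *
        ((1 - Real.tanh (slow m k s) ^ 2) * slowP m k (Real.tanh (slow m k s))) : ℝ))
      (E := fun s => 1 / 1000 * Real.tanh (slow m k s) + ϵ * (Real.exp s + Real.exp (-s)))
      (E1 := fun s => 1 / 1000 *
        (-((1 - Real.tanh (slow m k s) ^ 2) * slowP m k (Real.tanh (slow m k s)))) +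
        ϵ * (Real.exp s - Real.exp (-s)))
      (E2 := fun s => 1 / 1000 *
        ((-2 * Real.tanh (slow m k s) * slowP m k (Real.tanh (slow m k s)) +
      (1 - Real.tanh (slow m k s) ^ 2) * slowPT m k (Real.tanh (slow m k s))) *
      ((1 - Real.tanh (slow m k s) ^ 2) * slowP m k (Real.tanh (slow m k s)))) +
        ϵ * (Real.exp s + Real.exp (-s))) ?_ ?_ ?_ ?_ ?_ ?_ ?_ ?_ s hs
    · exact fun r hr => (hy r).fun_sub (hasDerivAt_slow hm hk r).ofReal_comp
    · exact fun r hr => (hy1 r).fun_sub (hasDerivAt_slow2 hm hk r).ofReal_comp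
    · refine fun r hr => ((hasDerivAt_slowT hm hk r).const_mul _).fun_add ?_
      refine (((Real.hasDerivAt_exp r).fun_add ((hasDerivAt_neg r).exp)).const_mul ϵ).congr_deriv ?_
      ring
    · refine fun r hr => ((hasDerivAt_slowT2 hm hk r).const_mul _).fun_add ?_
      refine (((Real.hasDerivAt_exp r).fun_sub ((hasDerivAt_neg r).exp)).const_mul ϵ).congr_deriv ?_
      ring
    · intro r hr
      have := slowT_pos hm hk r
      positivity
    · have := hbd (-R)
      have := slowT_pos hm hk (-R)
      have : 0 < ϵ * Real.exp (-R) := by positivity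
      simp only [neg_neg]
      linarith
    · have := hbd R
      have := slowT_pos hm hk R
      have : 0 < ϵ * Real.exp (-R) := by positivity
      linarith
    · intro r hr hE
      have hT := slowT_pos hm hk r
      have hT1 := tanh_lt_one' (slow m k r)
      have hη := slow_pos hm hk r
      have hs := slow_sinh_eq hm hk r
      have ht := Real.exp_pos r
      have hlin := p3rhs_linear ht hm hk hη hs hκ (hap r)
      have hsb := slow_second_bound hm hk hT hT1
      have hTb := (le_abs_self _).trans (slowT_second_bound hm hk hT hT1)
      have hQT := slowQ_mul_tanh hη hs
      have hCT := cosh_mul_tanh (slow m k r)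
      rw [add_sub_cancel] at hlin
      set T := Real.tanh (slow m k r) with hTdef
      set Q := slowQ (Real.exp r) k (slow m k r) with hQdef
      set J := slowJ m k T
      set δ := y r - slow m k r
      set A2 := slowPT m k T * ((1 - T ^ 2) * slowP m k T)
      set A3 := (-2 * T * slowP m k T + (1 - T ^ 2) * slowPT m k T) *
        ((1 - T ^ 2) * slowP m k T)
      have he : 0 < ϵ * (Real.exp r + Real.exp (-r)) := by positivity
      set e := ϵ * (Real.exp r + Real.exp (-r))
      have hδ : 0 < ‖δ‖ := lt_of_lt_of_le (by positivity) hE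
      have hD : 0 < m * T ^ 3 + k := by positivity
      -- `Q T² = 4 (m T + k) (m T³ + k)`
      have hQ2 : Q * T ^ 2 = 4 * (m * T + k) * (m * T ^ 3 + k) := by
        have : Q * T ^ 2 = (Q * T) * T := by ring
        rw [this, hQT, ← hs, ← hCT]; ring
      have hQ4 : 4 * k ^ 2 ≤ Q := by
        have h1 : 4 * k ^ 2 ≤ Q * T ^ 2 := by
          rw [hQ2]
          have : 4 * k ^ 2 = 4 * (0 + k) * (0 + k) := by ring
          rw [this]
          gcongr <;> positivity
        have h2 : 0 < Q := by
          have : 0 < Q * T ^ 2 := lt_of_lt_of_le (by positivity) h1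
          exact (pos_iff_pos_of_mul_pos this).2 (by positivity)
        have : T ^ 2 ≤ 1 := pow_le_one₀ hT.le hT1.le
        nlinarith
      have hk1 : 4000 ≤ k := by linarith
      have hQpos : 0 < Q := lt_of_lt_of_le (by positivity) hQ4
      have hJ : J ≤ Q * T / 1000000 := by
        have h1 : J * (4 * (m * T ^ 3 + k) ^ 2) = Q * T := by
          have : Q * T = Q * T ^ 2 / T := by field_simp
          rw [this, hQ2]
          simp only [J, slowJ]
          field_simp
        have hJ0 := slowJ_pos hm hk hT
        have h2 : (1000000 : ℝ) ≤ 4 * (m * T ^ 3 + k) ^ 2 := by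
          have h3 : 4000 ≤ m * T ^ 3 + k := by
            have : 0 < m * T ^ 3 := by positivity
            linarith
          nlinarith
        rw [le_div_iff₀ (by norm_num), ← h1]
        exact mul_le_mul_of_nonneg_left h2 hJ0.le
      have hBk : 2 * B * Q * T / k ≤ 0.0005 * (Q * T) := by
        rw [div_le_iff₀ hk]
        have : 2 * B * (Q * T) ≤ (0.0005 * k) * (Q * T) := by
          exact mul_le_mul_of_nonneg_right (by linarith) (by positivity)
        linarith
      have hre : Q * ‖δ‖ ^ 2 - ‖δ‖ * (0.15 * Q * ‖δ‖ + 2 * B * Q * T / k + J) ≤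
          ((starRingEnd ℂ) δ * (p3rhs (Real.exp r) m κ (y r) - (A2 : ℝ))).re := by
        have e1 : (starRingEnd ℂ) δ * (p3rhs (Real.exp r) m κ (y r) - (A2 : ℝ)) =
          ((Q * ‖δ‖ ^ 2 : ℝ) : ℂ) +
            (starRingEnd ℂ) δ * ((p3rhs (Real.exp r) m κ (y r) - Q * δ) - (A2 : ℝ)) := by
          have : ((Q * ‖δ‖ ^ 2 : ℝ) : ℂ) = Q * ((starRingEnd ℂ) δ * δ) := by
            rw [Complex.conj_mul', Complex.ofReal_mul, Complex.ofReal_pow]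
          rw [this]; ring
        rw [e1, Complex.add_re, Complex.ofReal_re]
        have h1 := neg_le_of_abs_le (Complex.abs_re_le_norm ((starRingEnd ℂ) δ *
          ((p3rhs (Real.exp r) m κ (y r) - Q * δ) - (A2 : ℝ))))
        have h2 : ‖(starRingEnd ℂ) δ * ((p3rhs (Real.exp r) m κ (y r) - Q * δ) - (A2 : ℝ))‖ ≤
            ‖δ‖ * (0.15 * Q * ‖δ‖ + 2 * B * Q * T / k + J) := by
          rw [norm_mul, RCLike.norm_conj]
          gcongr
          refine (norm_sub_le _ _).trans (add_le_add hlin ?_)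
          rw [Complex.norm_real]; exact hsb
        linarith
      refine lt_of_lt_of_le ?_ hre
      have hfin : 1 / 1000 * A3 + e < Q * ‖δ‖ - (0.15 * Q * ‖δ‖ + 2 * B * Q * T / k + J) := by
        have h1 : Q * (1 / 1000 * T + e) ≤ Q * ‖δ‖ := by gcongr
        have h2 : 4 * e ≤ Q * e := by
          gcongr; nlinarith
        have h3 : 0 < Q * T := by positivity
        linarith
      calc _ < (Q * ‖δ‖ - (0.15 * Q * ‖δ‖ + 2 * B * Q * T / k + J)) * ‖δ‖ := by gcongr
        _ = _ := by ring
  refine le_of_forall_pos_lt_add fun ε hε => ?_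
  have hp : 0 < Real.exp s + Real.exp (-s) := by positivity
  have := key (ε / (Real.exp s + Real.exp (-s))) (by positivity)
  rwa [div_mul_cancel₀ _ hp.ne'] at this

/-! ### The forward Riccati equation -/

theorem norm_exp_sub_one_le' {z : ℂ} (hz : ‖z‖ ≤ 1 / 1000) : ‖Complex.exp z - 1‖ ≤ 1.01 * ‖z‖ := by
  have h := Complex.norm_exp_sub_one_sub_id_le (x := z) (by linarith)
  have e : Complex.exp z - 1 = (Complex.exp z - 1 - z) + z := by ring
  rw [e]
  refine (norm_add_le _ _).trans ?_
  nlinarith [norm_nonneg z]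

theorem norm_cosh_add_sub_le {x : ℝ} (hx : 0 < x) {δ : ℂ} (hz : ‖δ‖ ≤ 1 / 1000) :
    ‖Complex.cosh (x + δ) - Real.cosh x‖ ≤ 1.01 * Real.cosh x * ‖δ‖ := by
  have h1 := norm_cosh_sub_le (z := δ) (by linarith)
  have h2 := norm_sinh_sub_le (z := δ) (by linarith)
  have hC := Real.cosh_pos x
  have hS : 0 < Real.sinh x := Real.sinh_pos_iff.2 hx
  have hSC := (Real.sinh_lt_cosh x).le
  have e : Complex.cosh (x + δ) - Real.cosh x = Real.cosh x * (Complex.cosh δ - 1) +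
      Real.sinh x * ((Complex.sinh δ - δ) + δ) := by
    rw [Complex.cosh_add]; push_cast; ring
  rw [e]
  refine (norm_add_le _ _).trans ?_
  rw [norm_mul, norm_mul, Complex.norm_real, Complex.norm_real, Real.norm_of_nonneg hC.le,
    Real.norm_of_nonneg hS.le]
  have h3 : ‖(Complex.sinh δ - δ) + δ‖ ≤ ‖δ‖ ^ 3 + ‖δ‖ := (norm_add_le _ _).trans (by gcongr)
  have h4 : Real.cosh x * ‖Complex.cosh δ - 1‖ ≤ Real.cosh x * ‖δ‖ ^ 2 := by gcongr
  have h5 : Real.sinh x * ‖(Complex.sinh δ - δ) + δ‖ ≤ Real.cosh x * (‖δ‖ ^ 3 + ‖δ‖) := by gcongr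
  have hd := norm_nonneg δ
  have h6 : ‖δ‖ ^ 2 + ‖δ‖ ^ 3 + ‖δ‖ ≤ 1.01 * ‖δ‖ := by
    nlinarith [mul_nonneg hd (mul_nonneg hd hd), mul_nonneg hd hd]
  nlinarith

/-- With `one_add_tanh`: multiplication by `cosh η*` turns `1 ∓ tanh η*` into `e^{∓η*}`. -/
theorem one_sub_tanh (x : ℝ) : (1 - Real.tanh x) * Real.cosh x = Real.exp (-x) := by
  rw [sub_mul, one_mul, mul_comm, cosh_mul_tanh, Real.cosh_eq, Real.sinh_eq]; ring

theorem one_add_tanh (x : ℝ) : (1 + Real.tanh x) * Real.cosh x = Real.exp x := by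
  rw [add_mul, one_mul, mul_comm (Real.tanh x), cosh_mul_tanh, Real.cosh_eq, Real.sinh_eq]; ring

/-- The real inequality behind the barrier for `ζ`. -/
theorem chi_real_ineq {X T p b e : ℝ} (hX : 4000 ≤ X) (hT : 0 < T) (hT1 : T < 1)
    (hp : 0 ≤ p) (hpX : p ≤ X * T / 4000) (he : 0 < e) (hb : b = 4 / 1000 * T + e) :
    -2 * X * b + 2.02 / 1000 * X * T * (2 + b) + 2 * p * (1 + b) <
      4 / 1000 * -((1 - T ^ 2) * p) - 3 * e := by
  have hXT : 0 < X * T := by positivity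
  have hb0 : 0 < b := by rw [hb]; positivity
  have h1 : 2 * p * (1 + b) ≤ 2 * (X * T / 4000) * (1 + b) := by gcongr
  have h2 : (1 - T ^ 2) * p ≤ X * T / 4000 := by nlinarith [mul_nonneg (sq_nonneg T) hp]
  have h3 : X * T * b ≤ X * b := by
    have : T * (X * b) ≤ 1 * (X * b) := by gcongr
    linarith
  have h4 : X * b = 4 / 1000 * (X * T) + X * e := by rw [hb]; ring
  have h5 : 4000 * e ≤ X * e := by gcongr
  linarith

/-- If `η` is close to the slow curve then `χ = 1 - W/N` is close to `1 - tanh η*`, where `W`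
solves the forward Riccati equation and stays bounded as `t → 0`. -/
theorem chi_bound {m k N : ℝ} (hm : 0 < m) (hk : 4000 ≤ k) (hN : 0 < N) {η W : ℝ → ℂ}
    (hη : ∀ s, ‖η s - slow m k s‖ ≤ 1 / 1000 * Real.tanh (slow m k s))
    (hW : ∀ s, HasDerivAt W (Real.exp s * ((N - W s) * Complex.exp (η s) -
      (N + W s) * Complex.exp (-η s))) s)
    (hbd : ∃ C s1 : ℝ, ∀ s ≤ s1, ‖W s‖ ≤ C) (s : ℝ) :
    ‖(1 - W s / N) / ((1 - Real.tanh (slow m k s) : ℝ) : ℂ) - 1‖ ≤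
      4 / 1000 * Real.tanh (slow m k s) := by
  have hk0 : 0 < k := by linarith
  have hden : ∀ s, 0 < 1 - Real.tanh (slow m k s) := fun s => by
    have := tanh_lt_one' (slow m k s); linarith
  set ζ : ℝ → ℂ := fun s => (1 - W s / N) / ((1 - Real.tanh (slow m k s) : ℝ) : ℂ) - 1 with hζ
  have hχ : ∀ s, 1 - W s / N = ((1 - Real.tanh (slow m k s) : ℝ) : ℂ) * (1 + ζ s) := fun s => by
    have : ((1 - Real.tanh (slow m k s) : ℝ) : ℂ) ≠ 0 := by exact_mod_cast (hden s).ne'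
    simp only [hζ]
    field_simp; ring
  have hNc : (N : ℂ) ≠ 0 := by exact_mod_cast hN.ne'
  have hζd : ∀ s, HasDerivAt ζ
      (-(2 * (Real.exp s * Real.cosh (slow m k s) : ℝ)) * ζ s
        - 2 * Real.exp s * (Complex.cosh (η s) - Real.cosh (slow m k s)) * (1 + ζ s)
        + 2 * (Real.exp s * Real.cosh (slow m k s) : ℝ) *
            (Complex.exp (-(η s - slow m k s)) - 1)
        - (1 + ζ s) * ((1 + Real.tanh (slow m k s)) *
            slowP m k (Real.tanh (slow m k s)) : ℝ)) s := by
    intro s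
    have hc : ((1 - Real.tanh (slow m k s) : ℝ) : ℂ) ≠ 0 := by exact_mod_cast (hden s).ne'
    have h1 := ((hW s).div_const (N : ℂ)).const_sub 1
    have h2 := ((hasDerivAt_slowT hm hk0 s).const_sub 1).ofReal_comp
    refine ((h1.fun_div h2 hc).sub_const 1).congr_deriv ?_
    have h3 := hχ s
    have hWs : W s = N - N * (((1 - Real.tanh (slow m k s) : ℝ) : ℂ) * (1 + ζ s)) := by
      rw [← h3]; field_simp; ring
    have hC := Real.cosh_pos (slow m k s)
    have hCc : (Real.cosh (slow m k s) : ℂ) ≠ 0 := by exact_mod_cast hC.ne'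
    have e1 : ((1 - Real.tanh (slow m k s) : ℝ) : ℂ) * Real.cosh (slow m k s) =
        Complex.exp (-(slow m k s : ℂ)) := by
      rw [← Complex.ofReal_mul, one_sub_tanh, Complex.ofReal_exp, Complex.ofReal_neg]
    have e2 : Complex.exp (-η s) = Complex.exp (-(slow m k s : ℂ)) *
        Complex.exp (-(η s - slow m k s)) := by
      rw [← Complex.exp_add]; congr 1; ring
    have e3 : Complex.exp (η s) = 2 * Complex.cosh (η s) - Complex.exp (-η s) := by
      rw [Complex.two_cosh]; ring
    rw [h3, hWs, e3, e2, ← e1]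
    push_cast at hc ⊢
    generalize Complex.exp (-(η s - slow m k s)) = F
    generalize Complex.cosh (η s) = Ch
    generalize (slowP m k (Real.tanh (slow m k s)) : ℂ) = p
    simp only [← Complex.ofReal_cosh, ← Complex.ofReal_tanh] at *
    generalize (Real.tanh (slow m k s) : ℂ) = T at *
    field_simp
    ring
  obtain ⟨C0, s1, hC0⟩ := hbd
  -- The additional term `ϵ e^{-3s}` makes the barrier hold as `s → -∞`, where only boundedness of `W`
  -- is known.
  have key : ∀ ϵ > 0, ∀ s, ‖ζ s‖ < 4 / 1000 * Real.tanh (slow m k s) + ϵ * Real.exp (-(3 * s)) := by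
    intro ϵ hϵ
    set C1 := 1 + (1 + |C0| / N) * (1 + 2 * (m + k)) ^ 2 with hC1
    have hC1p : 0 < C1 := by positivity
    refine barrier_one (b1 := fun s => 4 / 1000 *
        (-((1 - Real.tanh (slow m k s) ^ 2) * slowP m k (Real.tanh (slow m k s)))) -
          3 * (ϵ * Real.exp (-(3 * s)))) (s1 := min s1 (min 0 (-(C1 / ϵ)))) hζd ?_ ?_ ?_ ?_
    · intro s
      have h1 : HasDerivAt (fun s : ℝ => ϵ * Real.exp (-(3 * s)))
          (-(3 * (ϵ * Real.exp (-(3 * s))))) s := by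
        refine (((hasDerivAt_id s).const_mul 3).neg.exp.const_mul ϵ).congr_deriv ?_
        simp; ring
      exact (((hasDerivAt_slowT hm hk0 s).const_mul _).fun_add h1).congr_deriv (by ring)
    · intro s
      have := slowT_pos hm hk0 s
      positivity
    · intro s hs
      have hs1 : s ≤ s1 := hs.trans (min_le_left _ _)
      have hs2 : s ≤ 0 := hs.trans ((min_le_right _ _).trans (min_le_left _ _))
      have hs3 : s ≤ -(C1 / ϵ) := hs.trans ((min_le_right _ _).trans (min_le_right _ _))
      have hT := slowT_pos hm hk0 s
      have hq := exp_neg_slow_ge hm hk0 s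
      have ht := Real.exp_pos s
      have ht1 : Real.exp s ≤ 1 := Real.exp_le_one_iff.2 hs2
      have hq2 : Real.exp s / (1 + 2 * (m + k)) ≤ Real.exp (-slow m k s) := by
        refine le_trans ?_ hq
        gcongr
      have hq3 : (Real.exp s / (1 + 2 * (m + k))) ^ 2 ≤ 1 - Real.tanh (slow m k s) := by
        have h1 := one_sub_tanh (slow m k s)
        have h2 : Real.cosh (slow m k s) * Real.exp (-slow m k s) ≤ 1 := by
          have h3 : Real.exp (-slow m k s) ≤ 1 := by
            have := slow_pos hm hk0 s
            exact Real.exp_le_one_iff.2 (by linarith)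
          have h4 : Real.exp (slow m k s) * Real.exp (-slow m k s) = 1 := by
            rw [← Real.exp_add]; simp
          rw [Real.cosh_eq]
          nlinarith [Real.exp_pos (-slow m k s)]
        calc _ ≤ Real.exp (-slow m k s) ^ 2 := by gcongr
          _ = (1 - Real.tanh (slow m k s)) * (Real.cosh (slow m k s) * Real.exp (-slow m k s)) := by
            rw [← mul_assoc, h1]; ring
          _ ≤ (1 - Real.tanh (slow m k s)) * 1 := by
            have := hden s
            gcongr
          _ = _ := mul_one _
      have hn1 : ‖1 - W s / N‖ ≤ 1 + |C0| / N := by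
        refine (norm_sub_le _ _).trans ?_
        rw [norm_one, norm_div, Complex.norm_real, Real.norm_of_nonneg hN.le]
        gcongr
        exact (hC0 s hs1).trans (le_abs_self _)
      have hn2 : ‖ζ s‖ ≤ 1 + (1 + |C0| / N) / (Real.exp s / (1 + 2 * (m + k))) ^ 2 := by
        simp only [hζ]
        refine (norm_sub_le _ _).trans ?_
        rw [norm_one, norm_div, Complex.norm_real, Real.norm_of_nonneg (hden s).le]
        have := div_le_div₀ (by positivity) hn1 (by positivity) hq3
        linarith
      have hn3 : (1 + |C0| / N) / (Real.exp s / (1 + 2 * (m + k))) ^ 2 =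
          (1 + |C0| / N) * (1 + 2 * (m + k)) ^ 2 * Real.exp (-s) ^ 2 := by
        rw [Real.exp_neg]; field_simp
      have hE : 1 ≤ Real.exp (-s) := Real.one_le_exp (by linarith)
      have hn4 : ‖ζ s‖ ≤ C1 * Real.exp (-s) ^ 2 := by
        rw [hn3] at hn2
        refine hn2.trans ?_
        rw [hC1, add_mul, one_mul]
        have := one_le_pow₀ (n := 2) hE
        linarith
      have hn5 : C1 < ϵ * Real.exp (-s) := by
        have h1 := Real.add_one_le_exp (-s)
        have h2 : C1 / ϵ < Real.exp (-s) := by linarith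
        rw [div_lt_iff₀ hϵ] at h2; linarith
      have hn6 : Real.exp (-(3 * s)) = Real.exp (-s) * Real.exp (-s) ^ 2 := by
        rw [← pow_succ', ← Real.exp_nat_mul]; congr 1; push_cast; ring
      rw [hn6]
      have h7 : C1 * Real.exp (-s) ^ 2 ≤ (ϵ * Real.exp (-s)) * Real.exp (-s) ^ 2 := by gcongr
      linarith
    · intro s hs
      have hT := slowT_pos hm hk0 s
      have hT1 := tanh_lt_one' (slow m k s)
      have hp1 := slow_pos hm hk0 s
      have hse := slow_sinh_eq hm hk0 s
      have hCT := cosh_mul_tanh (slow m k s)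
      have hC := Real.cosh_pos (slow m k s)
      have ht := Real.exp_pos s
      have hd : ‖η s - slow m k s‖ ≤ 1 / 1000 := (hη s).trans (by linarith)
      have hch := norm_cosh_add_sub_le hp1 hd
      rw [add_sub_cancel] at hch
      have hex := norm_exp_sub_one_le' (z := -(η s - slow m k s)) (by rwa [norm_neg])
      rw [norm_neg] at hex
      have hηs := hη s
      generalize hδ : ‖η s - slow m k s‖ = d at *
      generalize Complex.exp (-(η s - slow m k s)) - 1 = φ at *
      generalize Complex.cosh (η s) - Real.cosh (slow m k s) = e at *
      generalize Real.tanh (slow m k s) = T at *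
      generalize Real.cosh (slow m k s) = C at *
      generalize ζ s = z at *
      have he : 0 < ϵ * Real.exp (-(3 * s)) := by positivity
      obtain ⟨X, hX⟩ : ∃ X, X = Real.exp s * C := ⟨_, rfl⟩
      have hX0 : 0 < X := by rw [hX]; positivity
      have hXT : X * T = m * T + k := by rw [hX, mul_assoc, hCT, hse]
      have hXk : 4000 ≤ X := by nlinarith
      have hp : slowP m k T ≤ X * T / 4000 := by
        have hD : 0 < m * T ^ 3 + k := by positivity
        rw [slowP, ← hXT, div_le_iff₀ hD]
        have : 4000 ≤ m * T ^ 3 + k := by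
          have : 0 < m * T ^ 3 := by positivity
          linarith
        calc T * (X * T) = (X * T) * T := by ring
          _ ≤ (X * T) * 1 := by gcongr
          _ = X * T / 4000 * 4000 := by ring
          _ ≤ _ := by gcongr
      have hp0 : 0 ≤ slowP m k T := by rw [slowP]; positivity
      have hreal := chi_real_ineq hXk hT hT1 hp0 hp he rfl
      rw [← hs] at hreal ⊢
      rw [← hX]
      generalize slowP m k T = p at *
      have hz := norm_nonneg z
      have n1 : ‖(1 : ℂ) + z‖ ≤ 1 + ‖z‖ := (norm_add_le _ _).trans (by rw [norm_one])
      have hd0 : 0 ≤ d := by rw [← hδ]; exact norm_nonneg _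
      have m1 : ‖2 * (Real.exp s : ℂ) * e * (1 + z)‖ ≤ 2.02 / 1000 * X * T * (1 + ‖z‖) := by
        rw [norm_mul, norm_mul, norm_mul, Complex.norm_real, Real.norm_of_nonneg ht.le,
          Complex.norm_ofNat]
        calc _ ≤ 2 * Real.exp s * (1.01 * C * (1 / 1000 * T)) * (1 + ‖z‖) := by
              gcongr
              exact hch.trans (by gcongr)
          _ = _ := by rw [hX]; ring
      have m2 : ‖2 * (X : ℂ) * φ‖ ≤ 2.02 / 1000 * X * T := by
        rw [norm_mul, norm_mul, Complex.norm_real, Real.norm_of_nonneg hX0.le, Complex.norm_ofNat]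
        calc _ ≤ 2 * X * (1.01 * (1 / 1000 * T)) := by
              gcongr
              exact hex.trans (by gcongr)
          _ = _ := by ring
      have m3 : ‖(1 + z) * (((1 + T) * p : ℝ) : ℂ)‖ ≤ 2 * p * (1 + ‖z‖) := by
        rw [norm_mul, Complex.norm_real, Real.norm_of_nonneg (by positivity)]
        calc _ ≤ (1 + ‖z‖) * ((1 + 1) * p) := by gcongr
          _ = _ := by ring
      have hzz : conj z * z = ((‖z‖ ^ 2 : ℝ) : ℂ) := by
        rw [Complex.conj_mul', Complex.ofReal_pow]
      have e1 : conj z * (-(2 * (X : ℂ)) * z - 2 * Real.exp s * e * (1 + z) + 2 * X * φ -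
          (1 + z) * (((1 + T) * p : ℝ) : ℂ)) = ((-(2 * X) * ‖z‖ ^ 2 : ℝ) : ℂ) +
          conj z * (-(2 * Real.exp s * e * (1 + z)) + 2 * X * φ -
          (1 + z) * (((1 + T) * p : ℝ) : ℂ)) := by
        rw [Complex.ofReal_mul (-(2 * X)), ← hzz]; push_cast; ring
      rw [e1, Complex.add_re, Complex.ofReal_re]
      have h1 := (Complex.re_le_norm (conj z * (-(2 * Real.exp s * e * (1 + z)) + 2 * X * φ -
          (1 + z) * (((1 + T) * p : ℝ) : ℂ))))
      rw [norm_mul, RCLike.norm_conj] at h1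
      have h2 : ‖-(2 * Real.exp s * e * (1 + z)) + 2 * X * φ -
          (1 + z) * (((1 + T) * p : ℝ) : ℂ)‖ ≤ 2.02 / 1000 * X * T * (1 + ‖z‖) +
          2.02 / 1000 * X * T + 2 * p * (1 + ‖z‖) := by
        refine (norm_sub_le _ _).trans (add_le_add ((norm_add_le _ _).trans (add_le_add ?_ m2)) m3)
        rwa [norm_neg]
      have hz0 : 0 < ‖z‖ := by rw [hs]; positivity
      have h3 := mul_le_mul_of_nonneg_left h2 hz
      have h4 := mul_lt_mul_of_pos_left hreal hz0
      linarith
  refine le_of_forall_pos_lt_add fun ε hε => ?_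
  have := key (ε / Real.exp (-(3 * s))) (by positivity) s
  rwa [div_mul_cancel₀ _ (Real.exp_pos _).ne'] at this

/-! ### The quotient of Bessel functions -/

/-- The real inequality behind the barrier for `n = 0`. -/
theorem base_real_ineq {X T p b e k B w : ℝ} (hB : 0 ≤ B) (hkB : 4000 * (B + 1) ≤ k)
    (hkX : k ≤ X * T) (hT : 0 < T) (hT1 : T < 1)
    (hp : 0 ≤ p) (hpX : p ≤ X * T / 4000) (he : 0 < e) (hb : b = 4 / 1000 * T + e)
    (hw : w ≤ 5 / 1000 * X) :
    -b * (2 * X - T + p - w) + T + p + 2 * B - (4 / 1000 * -((1 - T ^ 2) * p) - e) < 0 := by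
  have hX0 : 0 < X := by
    have : 0 < X * T := by linarith
    exact (pos_iff_pos_of_mul_pos this).2 hT
  have hX : 4000 ≤ X := by
    have : X * T ≤ X * 1 := by gcongr
    linarith
  have hXT : 0 < X * T := by positivity
  have hb0 : 0 < b := by rw [hb]; positivity
  have h1 : b * (1.99 * X) ≤ b * (2 * X - T + p - w) := by
    gcongr; linarith
  have h2 : (1 - T ^ 2) * p ≤ X * T / 4000 := by nlinarith [mul_nonneg (sq_nonneg T) hp]
  have h4 : X * b = 4 / 1000 * (X * T) + X * e := by rw [hb]; ring
  have h5 : 4000 * e ≤ X * e := by gcongr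
  linarith

/-- The case `n = 0`: the quotient of consecutive Bessel functions is close to `e^{-η*}`. -/
theorem base_bound {k B : ℝ} (hB : 0 ≤ B) (hkB : 4000 * (B + 1) ≤ k) {a : ℂ}
    (ha : a.re = k + 1 / 2) (hκ : ‖a - 1 / 2 - k‖ ≤ B) {P Q : ℝ → ℂ}
    (hP : ∀ s, HasDerivAt P (Real.exp s * Q s + (a - 1) * P s) s)
    (hQ : ∀ s, HasDerivAt Q (Real.exp s * P s - a * Q s) s)
    (h0 : ∃ C s1 : ℝ, ∀ s ≤ s1, P s ≠ 0 ∧ ‖Q s‖ ≤ C * Real.exp s * ‖P s‖) (s : ℝ) :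
    P s ≠ 0 ∧ ‖Q s * Real.exp (slow (1 / 2) k s) - P s‖ ≤
      4 / 1000 * Real.tanh (slow (1 / 2) k s) * ‖P s‖ := by
  have hk0 : 0 < k := by linarith
  have hm : (0 : ℝ) < 1 / 2 := by norm_num
  set η := slow (1 / 2) k with hη
  set G : ℝ → ℂ := fun s => Q s * Real.exp (η s) - P s with hG
  have hQG : ∀ s, Q s = Real.exp (-η s) * (G s + P s) := fun s => by
    simp only [hG, sub_add_cancel]
    rw [mul_comm (Q s), ← mul_assoc, ← Complex.ofReal_mul, ← Real.exp_add]; simp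
  have hGd : ∀ s, HasDerivAt G (-(a + slowP (1 / 2) k (Real.tanh (η s)) +
      Real.exp s * Real.exp (-η s)) * G s + P s * (Real.tanh (η s) -
      slowP (1 / 2) k (Real.tanh (η s)) - 2 * (a - 1 / 2 - k))) s := by
    intro s
    have h1 := (hasDerivAt_slow hm hk0 s).exp.ofReal_comp
    refine (((hQ s).fun_mul h1).fun_sub (hP s)).congr_deriv ?_
    have hs := slow_sinh_eq hm hk0 s
    rw [Real.sinh_eq] at hs
    have hs' : (Real.exp s : ℂ) * ((Real.exp (η s) - Real.exp (-η s)) / 2) =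
      1 / 2 * Real.tanh (η s) + k := by
      rw [← hη] at hs
      have := congrArg (fun x : ℝ => (x : ℂ)) hs
      push_cast at this ⊢
      exact this
    have hee : (Real.exp (η s) : ℂ) * Real.exp (-η s) = 1 := by
      rw [← Complex.ofReal_mul, ← Real.exp_add]; simp
    rw [hQG s]
    simp only [← hη, Complex.ofReal_mul, Complex.ofReal_neg]
    generalize (Real.exp (η s) : ℂ) = q' at *
    generalize (Real.exp (-η s) : ℂ) = q at *
    generalize (Real.tanh (η s) : ℂ) = T at *
    generalize (slowP (1 / 2) k (Real.tanh (η s)) : ℂ) = p at *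
    linear_combination (2 * P s) * hs' + (- (a + p) * (G s + P s)) * hee
  have hPd : ∀ s, HasDerivAt P ((Real.exp s * Real.exp (-η s) + a - 1) * P s +
      Real.exp s * Real.exp (-η s) * G s) s := fun s =>
    (hP s).congr_deriv (by rw [hQG s]; ring)
  -- In this barrier for `G = Q e^η - P` relative to `P`, the term `ϵ e^{-s}` provides the start as
  -- `s → -∞`.
  have key : ∀ ϵ > 0, ϵ ≤ 1 → ∀ s, ‖G s‖ ^ 2 - (4 / 1000 * Real.tanh (η s) +
      ϵ * Real.exp (-s)) ^ 2 * ‖P s‖ ^ 2 < 0 := by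
    intro ϵ hϵ hϵ1
    obtain ⟨C, s1, h0⟩ := h0
    have hb0 : ∀ s, 0 < 4 / 1000 * Real.tanh (η s) + ϵ * Real.exp (-s) := fun s => by
      have := slowT_pos hm hk0 s
      positivity
    have hbd : ∀ s, HasDerivAt (fun s => 4 / 1000 * Real.tanh (η s) + ϵ * Real.exp (-s))
        (4 / 1000 * -((1 - Real.tanh (η s) ^ 2) * slowP (1 / 2) k (Real.tanh (η s))) -
        ϵ * Real.exp (-s)) s := fun s => by
      have h1 : HasDerivAt (fun s : ℝ => ϵ * Real.exp (-s)) (-(ϵ * Real.exp (-s))) s := by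
        refine ((hasDerivAt_neg s).exp.const_mul ϵ).congr_deriv ?_
        ring
      exact (((hasDerivAt_slowT hm hk0 s).const_mul _).fun_add h1).congr_deriv (by ring)
    -- `t e^{-η*} b` is small compared with `t cosh η*`
    have hw : ∀ s, Real.exp s * Real.exp (-η s) * (4 / 1000 * Real.tanh (η s) +
        ϵ * Real.exp (-s)) ≤ 4 / 1000 * (Real.exp s * Real.exp (-η s)) + 1 := fun s => by
      have hT1 := tanh_lt_one' (η s)
      have hη0 : 0 < η s := slow_pos hm hk0 s
      have h1 : Real.exp (-η s) ≤ 1 := Real.exp_le_one_iff.2 (by linarith)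
      have h2 : Real.exp s * Real.exp (-s) = 1 := by rw [← Real.exp_add]; simp
      have h3 : Real.exp s * Real.exp (-η s) * (ϵ * Real.exp (-s)) ≤ 1 := by
        calc _ = (Real.exp s * Real.exp (-s)) * Real.exp (-η s) * ϵ := by ring
          _ ≤ 1 * 1 * 1 := by rw [h2]; gcongr
          _ = 1 := by norm_num
      have h4 : Real.exp s * Real.exp (-η s) * (4 / 1000 * Real.tanh (η s)) ≤
          Real.exp s * Real.exp (-η s) * (4 / 1000 * 1) := by gcongr
      linarith
    have hPP : ∀ s, (conj (P s) * ((Real.exp s * Real.exp (-η s) + a - 1) * P s +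
      Real.exp s * Real.exp (-η s) * G s)).re ≥ (Real.exp s * Real.exp (-η s) + k - 1 / 2) *
        ‖P s‖ ^ 2 - Real.exp s * Real.exp (-η s) * (‖P s‖ * ‖G s‖) := by
      intro s
      obtain ⟨w, hw⟩ : ∃ w, w = Real.exp s * Real.exp (-η s) := ⟨_, rfl⟩
      have hw0 : 0 < w := by rw [hw]; positivity
      have hzz : conj (P s) * P s = ((‖P s‖ ^ 2 : ℝ) : ℂ) := by
        rw [Complex.conj_mul', Complex.ofReal_pow]
      rw [← Complex.ofReal_mul, ← hw]
      have e1 : conj (P s) * ((w + a - 1) * P s + w * G s) =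
          ((‖P s‖ ^ 2 : ℝ) : ℂ) * (w + a - 1) + w * (conj (P s) * G s) := by
        rw [← hzz]; ring
      rw [e1, Complex.add_re, Complex.re_ofReal_mul, Complex.re_ofReal_mul]
      have h1 := neg_le_of_abs_le (Complex.abs_re_le_norm (conj (P s) * G s))
      rw [norm_mul, RCLike.norm_conj] at h1
      have h2 := mul_le_mul_of_nonneg_left h1 hw0.le
      simp only [Complex.sub_re, Complex.add_re, Complex.ofReal_re, ha, Complex.one_re]
      linarith
    refine first_crossing (s1 := min s1 (-((|C| * (Real.exp s1 + 2 * (1 / 2 + k)) + 1) / ϵ)))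
      ?_ ?_ ?_
    · have c1 : Continuous G := continuous_iff_continuousAt.2 fun s => (hGd s).continuousAt
      have c2 : Continuous P := continuous_iff_continuousAt.2 fun s => (hP s).continuousAt
      have c3 := continuous_iff_continuousAt.2 fun s => (hbd s).continuousAt
      exact (c1.norm.pow 2).sub ((c3.pow 2).mul (c2.norm.pow 2))
    · intro s hs
      obtain ⟨hP0, hQb⟩ := h0 s (hs.trans (min_le_left _ _))
      have hs1 : s ≤ s1 := hs.trans (min_le_left _ _)
      have hs2 := hs.trans (min_le_right _ _)
      have hPp : 0 < ‖P s‖ := norm_pos_iff.2 hP0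
      have hq := exp_neg_slow_ge hm hk0 s
      have ht := Real.exp_pos s
      have hT := slowT_pos hm hk0 s
      have h1 : Real.exp s * Real.exp (η s) ≤ Real.exp s1 + 2 * (1 / 2 + k) := by
        rw [Real.exp_neg] at hq
        rw [div_le_iff₀ (by positivity), inv_mul_eq_div, le_div_iff₀ (Real.exp_pos _)] at hq
        have : Real.exp s ≤ Real.exp s1 := Real.exp_le_exp.2 hs1
        linarith
      have h2 : ‖G s‖ ≤ (|C| * (Real.exp s1 + 2 * (1 / 2 + k)) + 1) * ‖P s‖ := by
        refine (norm_sub_le _ _).trans ?_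
        rw [norm_mul, Complex.norm_real, Real.norm_of_nonneg (Real.exp_pos _).le]
        have h3 : ‖Q s‖ * Real.exp (η s) ≤ (|C| * Real.exp s * ‖P s‖) * Real.exp (η s) := by
          gcongr
          refine hQb.trans ?_
          gcongr
          exact le_abs_self _
        have h4 : |C| * (Real.exp s * Real.exp (η s)) * ‖P s‖ ≤
          |C| * (Real.exp s1 + 2 * (1 / 2 + k)) * ‖P s‖ := by gcongr
        linarith
      have h5 : |C| * (Real.exp s1 + 2 * (1 / 2 + k)) + 1 < ϵ * Real.exp (-s) := by
        have h6 := Real.add_one_le_exp (-s)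
        have h7 : (|C| * (Real.exp s1 + 2 * (1 / 2 + k)) + 1) / ϵ < Real.exp (-s) := by linarith
        rw [div_lt_iff₀ hϵ] at h7; linarith
      have h8 : ‖G s‖ < (4 / 1000 * Real.tanh (η s) + ϵ * Real.exp (-s)) * ‖P s‖ := by
        refine h2.trans_lt ?_
        have : 0 < 4 / 1000 * Real.tanh (η s) := by
          have : 0 < Real.tanh (η s) := hT
          positivity
        exact mul_lt_mul_of_pos_right (by linarith) hPp
      rw [← mul_pow, sub_neg]
      gcongr
    · intro s0 h1 h2
      refine ⟨_, (hasDerivAt_norm_sq (hGd s0)).sub (((hbd s0).fun_pow 2).fun_mul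
        (hasDerivAt_norm_sq (hPd s0))), ?_⟩
      have hP0 : P s0 ≠ 0 := by
        have hmono : MonotoneOn (fun s => ‖P s‖ ^ 2) (Iic s0) := by
          refine monotoneOn_of_deriv_nonneg (convex_Iic s0) ?_ ?_ ?_
          · exact fun s hs => (hasDerivAt_norm_sq (hPd s)).continuousAt.continuousWithinAt
          · exact fun s hs =>
              (hasDerivAt_norm_sq (hPd s)).differentiableAt.differentiableWithinAt
          · intro s hs
            rw [interior_Iic] at hs
            rw [(hasDerivAt_norm_sq (hPd s)).deriv]
            have h3 := hPP s
            have h4 := h2 s hs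
            rw [← mul_pow, sub_neg] at h4
            have h5 := lt_of_pow_lt_pow_left₀ 2 (mul_nonneg (hb0 s).le (norm_nonneg _)) h4
            have h6 : Real.exp s * Real.exp (-η s) * (‖P s‖ * ‖G s‖) ≤
                (4 / 1000 * (Real.exp s * Real.exp (-η s)) + 1) * ‖P s‖ ^ 2 := by
              calc _ ≤ Real.exp s * Real.exp (-η s) * (‖P s‖ * ((4 / 1000 * Real.tanh (η s) +
                    ϵ * Real.exp (-s)) * ‖P s‖)) := by gcongr
                _ = (Real.exp s * Real.exp (-η s) * (4 / 1000 * Real.tanh (η s) +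
                    ϵ * Real.exp (-s))) * ‖P s‖ ^ 2 := by ring
                _ ≤ _ := by gcongr; exact hw s
            have h7 : 0 ≤ (996 / 1000 * (Real.exp s * Real.exp (-η s)) + k - 3 / 2) *
                ‖P s‖ ^ 2 := by
              have : 0 < Real.exp s * Real.exp (-η s) := by positivity
              refine mul_nonneg ?_ (by positivity)
              linarith
            linarith
        obtain ⟨C', s1', h0'⟩ := (⟨C, s1, h0⟩ : ∃ C s1 : ℝ, ∀ s ≤ s1, P s ≠ 0 ∧
          ‖Q s‖ ≤ C * Real.exp s * ‖P s‖)
        have h3 := hmono (a := min s1 s0) (mem_Iic.2 (min_le_right _ _)) (mem_Iic.2 le_rfl)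
          (min_le_right _ _)
        have h4 := norm_pos_iff.2 (h0 (min s1 s0) (min_le_left _ _)).1
        have h5 : 0 < ‖P s0‖ ^ 2 := lt_of_lt_of_le (by positivity) h3
        exact fun h => by simp [h] at h5
      have hT := slowT_pos hm hk0 s0
      have hT1 := tanh_lt_one' (slow (1 / 2) k s0)
      have hse := slow_sinh_eq hm hk0 s0
      have hCT := cosh_mul_tanh (slow (1 / 2) k s0)
      have hC := Real.cosh_pos (slow (1 / 2) k s0)
      have ht := Real.exp_pos s0
      have hPP' := hPP s0
      have hw' := hw s0
      have hbp := hb0 s0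
      have hchs : Real.exp (-slow (1 / 2) k s0) = Real.cosh (slow (1 / 2) k s0) -
        Real.sinh (slow (1 / 2) k s0) := (Real.cosh_sub_sinh _).symm
      have hsh := Real.sinh_pos_iff.2 (slow_pos hm hk0 s0)
      have hwp : 0 < Real.exp s0 * Real.exp (-η s0) := by positivity
      rw [← hη] at hT hT1 hse hCT hC hchs hsh
      obtain ⟨X, hX⟩ : ∃ X, X = Real.exp s0 * Real.cosh (η s0) := ⟨_, rfl⟩
      have hX0 : 0 < X := by rw [hX]; positivity
      have hXT : X * Real.tanh (η s0) = 1 / 2 * Real.tanh (η s0) + k := by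
        rw [hX, mul_assoc, hCT, hse]
      obtain ⟨w, hwdef⟩ : ∃ w, w = Real.exp s0 * Real.exp (-η s0) := ⟨_, rfl⟩
      have hwX : 2 * X - Real.tanh (η s0) = 2 * k + 2 * w := by
        rw [hX, hwdef, hchs, mul_sub, hse]; ring
      have hwX' : w ≤ X := by
        rw [hX, hwdef, hchs]
        have := mul_pos ht hsh
        linarith
      have hN : 0 < ‖P s0‖ := norm_pos_iff.2 hP0
      have h3 : ‖G s0‖ = (4 / 1000 * Real.tanh (η s0) + ϵ * Real.exp (-s0)) * ‖P s0‖ := by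
        rw [← mul_pow, sub_eq_zero] at h1
        exact (pow_left_inj₀ (norm_nonneg _) (mul_nonneg hbp.le hN.le) two_ne_zero).1 h1
      have hzz : conj (G s0) * G s0 = ((‖G s0‖ ^ 2 : ℝ) : ℂ) := by
        rw [Complex.conj_mul', Complex.ofReal_pow]
      have hTX : Real.tanh (η s0) * (X * Real.tanh (η s0)) ≤ 1 * (X * Real.tanh (η s0)) := by
        gcongr
      have hkX : k ≤ X * Real.tanh (η s0) := by linarith
      have hX4 : 4000 ≤ X := by
        have : X * Real.tanh (η s0) ≤ X * 1 := by gcongr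
        linarith
      have hp0 : 0 ≤ slowP (1 / 2) k (Real.tanh (η s0)) := by rw [slowP]; positivity
      have hp : slowP (1 / 2) k (Real.tanh (η s0)) ≤ X * Real.tanh (η s0) / 4000 := by
        rw [slowP, ← hXT, div_le_iff₀ (by positivity)]
        have : 4000 ≤ 1 / 2 * Real.tanh (η s0) ^ 3 + k := by
          have : 0 < 1 / 2 * Real.tanh (η s0) ^ 3 := by positivity
          linarith
        have h5 : X * Real.tanh (η s0) / 4000 * 4000 ≤
          X * Real.tanh (η s0) / 4000 * (1 / 2 * Real.tanh (η s0) ^ 3 + k) := by gcongr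
        linarith
      rw [← Complex.ofReal_mul, ← hwdef] at hPP' ⊢
      rw [← hwdef] at hw'
      clear hPP h0 hGd hPd hbd hb0 h1 h2 hQG hw
      generalize slowP (1 / 2) k (Real.tanh (η s0)) = p at *
      generalize Real.tanh (η s0) = T at *
      obtain ⟨e, he⟩ : ∃ e, e = ϵ * Real.exp (-s0) := ⟨_, rfl⟩
      have he0 : 0 < e := by rw [he]; positivity
      rw [← he] at hbp hw' h3 ⊢
      obtain ⟨b, hb⟩ : ∃ b, b = 4 / 1000 * T + e := ⟨_, rfl⟩
      rw [← hb] at hbp hw' h3 ⊢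
      have hreal := base_real_ineq (w := w * b) hB hkB hkX hT hT1 hp0 hp he0 hb (by linarith)
      have e1 : conj (G s0) * (-(a + p + w) * G s0 + P s0 * (T - p - 2 * (a - 1 / 2 - k))) =
          ((‖G s0‖ ^ 2 : ℝ) : ℂ) * (-(a + p + w)) +
          conj (G s0) * (P s0 * (T - p - 2 * (a - 1 / 2 - k))) := by
        rw [← hzz]; ring
      rw [e1, Complex.add_re, Complex.re_ofReal_mul]
      have h4 := Complex.re_le_norm (conj (G s0) * (P s0 * (T - p - 2 * (a - 1 / 2 - k))))
      rw [norm_mul, norm_mul, RCLike.norm_conj] at h4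
      have h5 : ‖(T : ℂ) - p - 2 * (a - 1 / 2 - k)‖ ≤ T + p + 2 * B := by
        refine (norm_sub_le _ _).trans (add_le_add ((norm_sub_le _ _).trans ?_) ?_)
        · rw [Complex.norm_real, Complex.norm_real, Real.norm_of_nonneg hT.le,
            Real.norm_of_nonneg hp0]
        · rw [norm_mul, Complex.norm_ofNat]; linarith
      have h6 : ‖G s0‖ * (‖P s0‖ * ‖(T : ℂ) - p - 2 * (a - 1 / 2 - k)‖) ≤
        ‖G s0‖ * (‖P s0‖ * (T + p + 2 * B)) := by gcongr
      have h7 : (-(a + p + w)).re = -(k + 1 / 2 + p + w) := by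
        simp [ha]
      rw [h7]
      rw [h3] at h4 h6 hPP' ⊢
      have h8 := mul_le_mul_of_nonneg_left hPP' (sq_nonneg b)
      have h9 := mul_lt_mul_of_pos_left hreal (mul_pos hbp (pow_pos hN 2))
      have hw2 : 2 * X - T + p - w * b = 2 * k + 2 * w + p - w * b := by linarith
      rw [hw2] at h9
      simp only [Nat.add_one_sub_one, pow_one, Nat.cast_ofNat]
      have h10 := h4.trans h6
      generalize (conj (G s0) * (P s0 * (↑T - ↑p - 2 * (a - 1 / 2 - ↑k)))).re = r1 at *
      generalize (conj (P s0) * ((↑w + a - 1) * P s0 + ↑w * G s0)).re = r2 at *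
      generalize ‖P s0‖ = N at *
      linarith
  have hbs : ∀ ϵ > 0, ϵ ≤ 1 → ∀ s, ‖G s‖ < (4 / 1000 * Real.tanh (η s) +
      ϵ * Real.exp (-s)) * ‖P s‖ := fun ϵ hϵ hϵ1 s => by
    have h1 := key ϵ hϵ hϵ1 s
    rw [← mul_pow, sub_neg] at h1
    have hT := slowT_pos hm hk0 s
    refine lt_of_pow_lt_pow_left₀ 2 (mul_nonneg ?_ (norm_nonneg _)) h1
    positivity
  refine ⟨fun h => ?_, ?_⟩
  · have h1 := hbs 1 one_pos le_rfl s
    rw [h, norm_zero, mul_zero] at h1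
    exact absurd h1 (norm_nonneg _).not_gt
  · have hlim : Tendsto (fun ϵ : ℝ => (4 / 1000 * Real.tanh (η s) + ϵ * Real.exp (-s)) * ‖P s‖)
        (𝓝[>] 0) (𝓝 ((4 / 1000 * Real.tanh (η s) + 0 * Real.exp (-s)) * ‖P s‖)) := by
      refine Tendsto.mono_left ?_ nhdsWithin_le_nhds
      exact Continuous.tendsto (by fun_prop) 0
    rw [zero_mul, add_zero] at hlim
    refine ge_of_tendsto hlim ?_
    filter_upwards [Ioc_mem_nhdsGT (zero_lt_one' ℝ)] with ϵ hϵ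
    exact (hbs ϵ hϵ.1 hϵ.2 s).le

/-! ### Induction on `n` -/

theorem etaS_eq {ν : ℂ} {n : ℕ} {s : ℝ} {Y : ℂ} (hf : fS ν n s = Complex.exp (-Y))
    (hY : |Y.im| ≤ 1) : etaS ν n s = Y ∧ fS ν n s ∈ Complex.slitPlane := by
  have h3 := Real.pi_gt_three
  have h1 := abs_le.1 hY
  have h2 : Complex.log (fS ν n s) = -Y := by
    rw [hf, Complex.log_exp] <;> simp <;> linarith
  refine ⟨by rw [etaS, h2, neg_neg], ?_⟩
  rw [Complex.mem_slitPlane_iff_arg, ← Complex.log_im, h2, hf]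
  refine ⟨?_, Complex.exp_ne_zero _⟩
  rw [Complex.neg_im]
  intro h4
  linarith

theorem tanh_mono : Monotone Real.tanh :=
  monotone_of_deriv_nonneg (fun x => (hasDerivAt_tanh x).differentiableAt) fun x => by
    rw [(hasDerivAt_tanh x).deriv]
    have h1 := tanh_lt_one' x
    have h2 := tanh_lt_one' (-x)
    rw [Real.tanh_neg] at h2
    nlinarith

theorem norm_log_one_add_le' {z : ℂ} (hz : ‖z‖ ≤ 1 / 2) : ‖Complex.log (1 + z)‖ ≤ 3 / 2 * ‖z‖ :=
  Complex.norm_log_one_add_half_le_self hz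

/-- The a priori bound improves itself by a factor `20`. -/
theorem strong_of_weak {ν : ℂ} {k B : ℝ} (hB : 0 ≤ B) (hkB : 4000 * (B + 1) ≤ k)
    (hκ : ‖-ν - 1 / 2 - k‖ ≤ B) {n : ℕ} (h : ∀ j ≤ n + 1, ∀ s, NZ ν j s) {Y : ℝ → ℂ}
    (hf : ∀ s, fS ν n s = Complex.exp (-Y s))
    (hY : ∀ s, ‖Y s - slow (n + 1 / 2) k s‖ ≤ 20 * (1 / 1000) * Real.tanh (slow (n + 1 / 2) k s))
    (s : ℝ) : fS ν n s ∈ Complex.slitPlane ∧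
      ‖etaS ν n s - slow (n + 1 / 2) k s‖ ≤ 1 / 1000 * Real.tanh (slow (n + 1 / 2) k s) := by
  have hm : (0 : ℝ) < n + 1 / 2 := by positivity
  have hk0 : 0 < k := by linarith
  have key : ∀ s, etaS ν n s = Y s ∧ fS ν n s ∈ Complex.slitPlane := by
    intro s
    refine etaS_eq (hf s) ?_
    have h1 := Complex.abs_im_le_norm (Y s - slow (n + 1 / 2) k s)
    rw [Complex.sub_im, Complex.ofReal_im, sub_zero] at h1
    have h2 := tanh_lt_one' (slow (n + 1 / 2) k s)
    linarith [hY s]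
  refine ⟨(key s).2, ?_⟩
  refine strong_step hm hB hkB hκ
    (fun s => hasDerivAt_etaS (h n (by omega) s) (h (n + 1) le_rfl s) (key s).2)
    (fun s => (hasDerivAt_deriv_etaS h (fun s => (key s).2) s).congr_deriv ?_) ?_ s
  · rw [p3rhs]; push_cast; ring
  · intro s; rw [(key s).1]; exact hY s

theorem bessel_base (ν : ℂ) {k B : ℝ} (hB : 0 ≤ B) (hkB : 4000 * (B + 1) ≤ k)
    (hk : (-ν).re = k + 1 / 2) (hκ : ‖-ν - 1 / 2 - k‖ ≤ B) (s : ℝ) :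
    besselI (-ν - 1) (Real.exp s) ≠ 0 ∧
    ‖besselI (-ν) (Real.exp s) * Real.exp (slow (1 / 2) k s) - besselI (-ν - 1) (Real.exp s)‖ ≤
      4 / 1000 * Real.tanh (slow (1 / 2) k s) * ‖besselI (-ν - 1) (Real.exp s)‖ := by
  refine base_bound (P := fun s => besselI (-ν - 1) (Real.exp s))
    (Q := fun s => besselI (-ν) (Real.exp s)) hB hkB hk hκ ?_ ?_ ?_ s
  · intro s
    have ht : (Real.exp s : ℂ) ≠ 0 := by exact_mod_cast (Real.exp_pos s).ne'
    refine ((hasDerivAt_besselI (-ν - 1) (Real.exp_pos s)).scomp s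
      (Real.hasDerivAt_exp s)).congr_deriv ?_
    rw [Complex.real_smul, sub_add_cancel]
    field_simp
  · intro s
    have ht : (Real.exp s : ℂ) ≠ 0 := by exact_mod_cast (Real.exp_pos s).ne'
    refine ((hasDerivAt_besselI (-ν) (Real.exp_pos s)).scomp s
      (Real.hasDerivAt_exp s)).congr_deriv ?_
    rw [Complex.real_smul, besselI_pred _ (Real.exp_pos s)]
    field_simp
    ring
  · have hg : besG (-ν - 1) 0 ≠ 0 := by
      rw [besG_zero, sub_add_cancel]
      refine inv_ne_zero (Complex.Gamma_ne_zero_of_re_pos ?_)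
      rw [hk]; linarith
    have c1 := (hasDerivAt_besG (-ν - 1) 0).continuousAt
    have c2 := (hasDerivAt_besG (-ν) 0).continuousAt
    have hz : Tendsto (fun s : ℝ => ((Real.exp s : ℝ) / 2 : ℂ) ^ 2) atBot (𝓝 0) := by
      have h1 : Tendsto (fun s : ℝ => ((Real.exp s : ℝ) : ℂ)) atBot (𝓝 ((0 : ℝ) : ℂ)) :=
        (Complex.continuous_ofReal.tendsto _).comp Real.tendsto_exp_atBot
      simpa using (h1.div_const 2).pow 2
    have e1 := hz.eventually (c1.eventually_ne hg)
    have e2 := hz.eventually ((c2.div c1 hg).norm.eventually (gt_mem_nhds (lt_add_one _)))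
    obtain ⟨s1, hs1⟩ := (e1.and e2).exists_forall_of_atBot
    refine ⟨(‖besG (-ν) 0 / besG (-ν - 1) 0‖ + 1) / 2, s1, fun s hs => ?_⟩
    obtain ⟨h1, h2⟩ := hs1 s hs
    simp only [Pi.div_apply] at h2
    rw [besselI_eq _ (Real.exp_pos s), besselI_eq _ (Real.exp_pos s)]
    have hP : Complex.exp ((-ν - 1) * (Real.log (Real.exp s / 2) : ℂ)) ≠ 0 := Complex.exp_ne_zero _
    refine ⟨mul_ne_zero hP h1, ?_⟩
    have h3 : Complex.exp (-ν * (Real.log (Real.exp s / 2) : ℂ)) =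
        Complex.exp ((-ν - 1) * (Real.log (Real.exp s / 2) : ℂ)) * ((Real.exp s / 2 : ℝ) : ℂ) := by
      have : ((Real.exp s / 2 : ℝ) : ℂ) = Complex.exp (Real.log (Real.exp s / 2) : ℂ) := by
        rw [← Complex.ofReal_exp, Real.exp_log (by positivity)]
      rw [this, ← Complex.exp_add]
      congr 1; ring
    rw [h3]
    rw [norm_div, div_lt_iff₀ (norm_pos_iff.2 h1)] at h2
    rw [norm_mul, norm_mul, norm_mul, Complex.norm_real, Real.norm_of_nonneg (by positivity)]
    have hE := norm_pos_iff.2 hP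
    have ht := Real.exp_pos s
    calc _ = ‖Complex.exp ((-ν - 1) * (Real.log (Real.exp s / 2) : ℂ))‖ * (Real.exp s / 2) *
          ‖besG (-ν) ((Real.exp s / 2 : ℂ) ^ 2)‖ := rfl
      _ ≤ ‖Complex.exp ((-ν - 1) * (Real.log (Real.exp s / 2) : ℂ))‖ * (Real.exp s / 2) *
          ((‖besG (-ν) 0 / besG (-ν - 1) 0‖ + 1) *
            ‖besG (-ν - 1) ((Real.exp s / 2 : ℂ) ^ 2)‖) := by gcongr
      _ = _ := by ring

theorem toeplitzD_one (ν : ℂ) (t : ℝ) : toeplitzD 1 ν t = besselI (-ν) t := by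
  simp [toeplitzD]

/-- Start of the induction: `f_0` is the quotient `I_{-ν} / I_{-ν-1}`. -/
theorem eta_close_zero {ν : ℂ} {k B : ℝ} (hB : 0 ≤ B) (hkB : 4000 * (B + 1) ≤ k)
    (hk : (-ν).re = k + 1 / 2) (hκ : ‖-ν - 1 / 2 - k‖ ≤ B) :
    (∀ s, NZ ν 1 s) ∧ ∀ s, ∃ Y : ℂ, fS ν 0 s = Complex.exp (-Y) ∧
      ‖Y - slow (1 / 2) k s‖ ≤ 20 * (1 / 1000) * Real.tanh (slow (1 / 2) k s) := by
  have hk0 : 0 < k := by linarith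
  have key : ∀ s, besselI (-ν - 1) (Real.exp s) ≠ 0 ∧ ∃ g : ℂ, ‖g‖ ≤ 4 / 1000 *
      Real.tanh (slow (1 / 2) k s) ∧ besselI (-ν) (Real.exp s) = Complex.exp (-slow (1 / 2) k s) *
        (1 + g) * besselI (-ν - 1) (Real.exp s) := by
    intro s
    obtain ⟨h1, h2⟩ := bessel_base ν hB hkB hk hκ s
    refine ⟨h1, (besselI (-ν) (Real.exp s) * Real.exp (slow (1 / 2) k s) -
      besselI (-ν - 1) (Real.exp s)) / besselI (-ν - 1) (Real.exp s), ?_, ?_⟩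
    · rw [norm_div, div_le_iff₀ (norm_pos_iff.2 h1)]; exact h2
    · rw [Complex.exp_neg, Complex.ofReal_exp]
      have := Complex.exp_ne_zero (slow (1 / 2) k s)
      field_simp
      ring
  have hg1 : ∀ s, ∀ g : ℂ, ‖g‖ ≤ 4 / 1000 * Real.tanh (slow (1 / 2) k s) → ‖g‖ ≤ 1 / 2 :=
    fun s g h => h.trans (by linarith [tanh_lt_one' (slow (1 / 2) k s)])
  have hg2 : ∀ g : ℂ, ‖g‖ ≤ 1 / 2 → 1 + g ≠ 0 := fun g h h0 => by
    have : g = -1 := by linear_combination h0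
    rw [this, norm_neg, norm_one] at h; linarith
  refine ⟨fun s => ?_, fun s => ?_⟩
  · obtain ⟨h1, g, h2, h3⟩ := key s
    constructor
    · rw [toeplitzD_one, h3]
      exact mul_ne_zero (mul_ne_zero (Complex.exp_ne_zero _) (hg2 g (hg1 s g h2))) h1
    · rw [toeplitzD_one, neg_add']; exact h1
  · obtain ⟨h1, g, h2, h3⟩ := key s
    refine ⟨slow (1 / 2) k s - Complex.log (1 + g), ?_, ?_⟩
    · have e1 : Complex.exp (-(slow (1 / 2) k s - Complex.log (1 + g))) =
          Complex.exp (-slow (1 / 2) k s) * (1 + g) := by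
        rw [neg_sub, sub_eq_add_neg, Complex.exp_add, Complex.exp_log (hg2 g (hg1 s g h2)),
          mul_comm]
      rw [e1, fS]
      simp only [toeplitzD_zero, zero_add, toeplitzD_one, one_mul, neg_add', h3]
      field_simp
    · rw [sub_sub_cancel_left, norm_neg]
      have := norm_log_one_add_le' (hg1 s g h2)
      linarith [norm_nonneg g]

/-- Inductive step up to a weaker constant: nonvanishing at `n + 2`, and a logarithm `Y` of `1/f_{n+1}`
within `0.02 tanh η*` of the next slow curve. -/
theorem eta_close_succ {ν : ℂ} {k : ℝ} (hk : 4000 ≤ k) {n : ℕ}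
    (h : ∀ j ≤ n + 1, ∀ s, NZ ν j s)
    (hη : ∀ s, ‖etaS ν n s - slow (n + 1 / 2) k s‖ ≤
      1 / 1000 * Real.tanh (slow (n + 1 / 2) k s)) (s : ℝ) :
    NZ ν (n + 2) s ∧ ∃ Y : ℂ, fS ν (n + 1) s = Complex.exp (-Y) ∧
      ‖Y - slow (n + 1 + 1 / 2) k s‖ ≤ 20 * (1 / 1000) * Real.tanh (slow (n + 1 + 1 / 2) k s) := by
  have hk0 : 0 < k := by linarith
  have hm : (0 : ℝ) < n + 1 / 2 := by positivity
  have hN : (0 : ℝ) < n + 1 := by positivity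
  have hch := chi_bound hm hk hN hη (W := WS ν (n + 1)) (fun s => by
    refine (hasDerivAt_WS_succ h s).congr_deriv ?_
    rw [exp_etaS (h n (by omega) s) (h (n + 1) le_rfl s),
      exp_neg_etaS (h n (by omega) s) (h (n + 1) le_rfl s)]
    push_cast; ring) (WS_bounded (fun s => h (n + 1) le_rfl s)) s
  have hη' := hη s
  have hss := slow_shift hm hk0 s
  rw [show (n : ℝ) + 1 / 2 + 1 = n + 1 + 1 / 2 by ring] at hss
  obtain ⟨hs1, hs2⟩ := hss
  have hT := slowT_pos hm hk0 s
  have hT1 := tanh_lt_one' (slow (n + 1 / 2) k s)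
  have hT' : Real.tanh (slow (n + 1 / 2) k s) ≤ Real.tanh (slow (n + 1 + 1 / 2) k s) :=
    tanh_mono hs1
  have e1 := one_sub_tanh (slow (n + 1 / 2) k s)
  have e2 := one_add_tanh (slow (n + 1 / 2) k s)
  have hC := Real.cosh_pos (slow (n + 1 / 2) k s)
  set σ := slow (n + 1 / 2) k s with hσ
  set σ' := slow (n + 1 + 1 / 2) k s with hσ'
  set T := Real.tanh σ with hTd
  set ζ := (1 - WS ν (n + 1) s / ((n + 1 : ℝ) : ℂ)) / ((1 - T : ℝ) : ℂ) - 1 with hζ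
  obtain ⟨q, hq⟩ : ∃ q : ℝ, q = Real.exp (-(2 * σ)) := ⟨_, rfl⟩
  have hq0 : 0 < q := by rw [hq]; positivity
  have hq1 : q ≤ 1 := by
    rw [hq, Real.exp_le_one_iff]; linarith [slow_pos hm hk0 s]
  have hqT : q * (1 + T) = 1 - T := by
    have h3 : Real.exp (-(2 * σ)) * Real.exp σ = Real.exp (-σ) := by
      rw [← Real.exp_add]; congr 1; ring
    rw [← e1, ← e2, ← hq] at h3
    exact mul_right_cancel₀ hC.ne' (by linarith)
  have hT1c : ((1 - T : ℝ) : ℂ) ≠ 0 := by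
    rw [Complex.ofReal_ne_zero]; linarith
  have hNc : ((n : ℂ) + 1) ≠ 0 := by exact_mod_cast hN.ne'
  have hzb : ‖ζ‖ ≤ 1 / 2 := hch.trans (by linarith)
  have hzq : ‖-(q * ζ)‖ ≤ ‖ζ‖ := by
    rw [norm_neg, norm_mul, Complex.norm_real, Real.norm_of_nonneg hq0.le]
    exact mul_le_of_le_one_left (norm_nonneg _) hq1
  have hg2 : ∀ g : ℂ, ‖g‖ ≤ 1 / 2 → 1 + g ≠ 0 := fun g h h0 => by
    have : g = -1 := by linear_combination h0
    rw [this, norm_neg, norm_one] at h; linarith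
  have n1 := hg2 _ hzb
  have n2 := hg2 _ (hzq.trans hzb)
  have hNW : (n + 1 : ℂ) - WS ν (n + 1) s = (n + 1) * (1 - T) * (1 + ζ) := by
    rw [hζ, add_sub_cancel]
    push_cast at hT1c ⊢
    field_simp
  have hqTc : (q : ℂ) * (1 + T) = 1 - T := by exact_mod_cast hqT
  have hNW' : (n + 1 : ℂ) + WS ν (n + 1) s = (n + 1) * (1 + T) * (1 + -(q * ζ)) := by
    clear_value ζ
    linear_combination -hNW + (n + 1) * ζ * hqTc
  have hTc : (1 : ℂ) + T ≠ 0 := by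
    have : (1 + T : ℝ) ≠ 0 := by linarith
    exact_mod_cast this
  have hnz : NZ ν (n + 2) s := by
    refine NZ_succ (h (n + 1) le_rfl s) ?_ ?_
    · rw [hNW']; exact mul_ne_zero (mul_ne_zero hNc hTc) n2
    · rw [hNW]; push_cast at hT1c; exact mul_ne_zero (mul_ne_zero hNc hT1c) n1
  refine ⟨hnz, 2 * σ - etaS ν n s - Complex.log (1 + ζ) + Complex.log (1 + -(q * ζ)), ?_, ?_⟩
  · have hf := fS_succ (h n (by omega) s) (h (n + 1) le_rfl s) hnz
    rw [hNW, hNW'] at hf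
    have hf0 : fS ν n s ≠ 0 := fS_ne_zero (h n (by omega) s) (h (n + 1) le_rfl s)
    have h5 : Complex.exp (-(2 * σ - etaS ν n s - Complex.log (1 + ζ) +
        Complex.log (1 + -(q * ζ)))) = q * (fS ν n s)⁻¹ * (1 + ζ) * (1 + -(q * ζ))⁻¹ := by
      rw [← exp_etaS (h n (by omega) s) (h (n + 1) le_rfl s), hq]
      have e7 : -(2 * (σ : ℂ) - etaS ν n s - Complex.log (1 + ζ) + Complex.log (1 + -(q * ζ))) =
        ((-(2 * σ) : ℝ) : ℂ) + etaS ν n s + Complex.log (1 + ζ) -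
          Complex.log (1 + -(q * ζ)) := by push_cast; ring
      rw [← hq, e7, Complex.exp_sub, Complex.exp_add, Complex.exp_add, Complex.exp_log n1,
        Complex.exp_log n2, ← Complex.ofReal_exp, ← hq, div_eq_mul_inv]
    rw [h5, ← mul_left_inj' hf0, ← mul_right_inj' (mul_ne_zero (mul_ne_zero hNc hTc) n2), ← hf]
    clear_value ζ
    clear hNW' hzq h5
    generalize 1 + -((q : ℂ) * ζ) = z2 at *
    field_simp
    linear_combination -hqTc
  · have l1 := norm_log_one_add_le' hzb
    have l2 := norm_log_one_add_le' (hzq.trans hzb)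
    have e3 : 2 * σ - etaS ν n s - Complex.log (1 + ζ) + Complex.log (1 + -(q * ζ)) - σ' =
      -(etaS ν n s - σ) - Complex.log (1 + ζ) + Complex.log (1 + -(q * ζ)) - (σ' - σ : ℝ) := by
      push_cast; ring
    have e4 : ‖((σ' - σ : ℝ) : ℂ)‖ ≤ 1 / 4000 * Real.tanh σ' := by
      rw [Complex.norm_real, Real.norm_of_nonneg (by linarith)]
      refine hs2.trans ?_
      rw [div_le_iff₀ hk0]
      have hT'0 : 0 < Real.tanh σ' := by linarith
      calc T * Real.tanh σ' ≤ 1 * Real.tanh σ' := by gcongr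
        _ = 1 / 4000 * Real.tanh σ' * 4000 := by ring
        _ ≤ _ := by gcongr
    rw [e3]
    refine (norm_sub_le _ _).trans ?_
    have e5 := norm_add_le (-(etaS ν n s - σ) - Complex.log (1 + ζ)) (Complex.log (1 + -(q * ζ)))
    have e6 := norm_sub_le (-(etaS ν n s - σ)) (Complex.log (1 + ζ))
    rw [norm_neg] at e6
    linarith

/-- For `Re(-ν)` large, all determinants are nonzero on `t > 0` and `η_n` stays uniformly close
to the slow curve. -/
theorem eta_close {ν : ℂ} {k B : ℝ} (hB : 0 ≤ B) (hkB : 4000 * (B + 1) ≤ k)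
    (hk : (-ν).re = k + 1 / 2) (hκ : ‖-ν - 1 / 2 - k‖ ≤ B) (n : ℕ) :
    (∀ j ≤ n + 1, ∀ s, NZ ν j s) ∧ ∀ s, fS ν n s ∈ Complex.slitPlane ∧
      ‖etaS ν n s - slow (n + 1 / 2) k s‖ ≤ 1 / 1000 * Real.tanh (slow (n + 1 / 2) k s) := by
  induction n with
  | zero =>
    obtain ⟨h1, h2⟩ := eta_close_zero hB hkB hk hκ
    choose Y hY using h2
    have h3 : ∀ j ≤ 0 + 1, ∀ s, NZ ν j s := by
      intro j hj s
      interval_cases j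
      · exact NZ_zero ν s
      · exact h1 s
    refine ⟨h3, strong_of_weak hB hkB hκ h3 (fun s => (hY s).1) fun s => ?_⟩
    have := (hY s).2
    simpa using this
  | succ n ih =>
    obtain ⟨h1, h2⟩ := ih
    have h4 := fun s => eta_close_succ (by linarith : (4000 : ℝ) ≤ k) h1 (fun s => (h2 s).2) s
    choose h5 Y hY using h4
    have h3 : ∀ j ≤ n + 1 + 1, ∀ s, NZ ν j s := by
      intro j hj s
      rcases Nat.lt_or_ge j (n + 2) with h | h
      · exact h1 j (by omega) s
      · rw [show j = n + 2 by omega]; exact h5 s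
    refine ⟨h3, strong_of_weak hB hkB hκ h3 (fun s => (hY s).1) fun s => ?_⟩
    have := (hY s).2
    push_cast
    exact this

/-! ### Scaling the Painlevé III equation -/

/-- The scaling constant `λ = 2^{2/3}`. -/
noncomputable def lam : ℝ := (2 : ℝ) ^ ((2 : ℝ) / 3)

theorem lam_pos : 0 < lam := by unfold lam; positivity

theorem lam_cube : lam ^ 3 = 4 := by
  unfold lam
  rw [← Real.rpow_natCast, ← Real.rpow_mul (by norm_num)]
  norm_num

theorem lam_ge : 1 ≤ lam := by
  by_contra! h
  have := pow_lt_one₀ lam_pos.le h (n := 3) (by norm_num)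
  rw [lam_cube] at this; norm_num at this

theorem lam_le : lam ≤ 2 := by
  by_contra! h
  have := pow_lt_pow_left₀ h (by norm_num) (n := 3) (by norm_num)
  rw [lam_cube] at this; norm_num at this

theorem norm_sinh_sub_cubic_le {z : ℂ} (hz : ‖z‖ ≤ 1) :
    ‖Complex.sinh z - z - z ^ 3 / 6‖ ≤ ‖z‖ ^ 5 := by
  have h1 := Complex.exp_bound hz (n := 5) (by norm_num)
  have h2 := Complex.exp_bound (x := -z) (by rwa [norm_neg]) (n := 5) (by norm_num)
  simp only [Finset.sum_range_succ, Finset.range_zero, Finset.sum_empty, norm_neg] at h1 h2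
  norm_num [Nat.factorial] at h1 h2
  have e : Complex.sinh z - z - z ^ 3 / 6 =
      ((Complex.exp z - (1 + z + z ^ 2 / 2 + z ^ 3 / 6 + z ^ 4 / 24)) -
    (Complex.exp (-z) - (1 + -z + z ^ 2 / 2 + (-z) ^ 3 / 6 + z ^ 4 / 24))) / 2 := by
    rw [Complex.sinh]; ring
  rw [e, norm_div, Complex.norm_ofNat, div_le_iff₀ (by norm_num)]
  refine (norm_sub_le _ _).trans ?_
  have : 0 ≤ ‖z‖ ^ 5 := by positivity
  linarith

/-- The algebra behind `p3rhs_scaled`: an exact formula for the difference between the scaled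
Painlevé III and the Painlevé II right-hand sides. -/
theorem p3rhs_key {ε N x p τ : ℝ} {κ u z S2 S1 c1 sz : ℂ}
    (hNc : (N : ℂ) * (ε : ℂ) ^ 3 = 1) (ez : N * z * p = x * u) (ez3 : N * z ^ 3 = 4 * u ^ 3)
    (hS2 : Complex.sinh (2 * z) - 2 * z - (2 * z) ^ 3 / 6 = S2)
    (hS1 : Complex.sinh z - z - z ^ 3 / 6 = S1) (hc1 : Complex.cosh z - 1 = c1)
    (hsz : Complex.sinh z - z = sz) :
    (ε : ℂ) ^ 3 / 4 * (2 * ((N * τ : ℝ) : ℂ) ^ 2 * Complex.sinh (2 * z) -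
      4 * ((N * τ : ℝ) : ℂ) * (κ * Complex.cosh z + ((N + 1 / 2 : ℝ) : ℂ) * Complex.sinh z)) -
      (2 * u ^ 3 + x * u - κ) =
      N * z * (((τ - 1) ^ 2 + (τ - 1 - p) : ℝ) : ℂ) +
      N * z ^ 3 * (((τ - 1) * (2 / 3 * τ + 1 / 2) : ℝ) : ℂ) +
      N * (((1 / 2 * τ ^ 2 : ℝ) : ℂ) * S2 - (τ : ℂ) * S1) - κ * ((τ - 1 : ℝ) : ℂ) -
      τ * κ * c1 - ((1 / 2 * τ : ℝ) : ℂ) * (z + sz) := by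
  have e2 : Complex.sinh (2 * z) = 2 * z + 4 / 3 * z ^ 3 + S2 := by rw [← hS2]; ring
  have e1 : Complex.sinh z = z + z ^ 3 / 6 + S1 := by rw [← hS1]; ring
  have e3 : Complex.cosh z = 1 + c1 := by rw [← hc1]; ring
  have esz : z + sz = z + z ^ 3 / 6 + S1 := by rw [← e1, ← hsz]; ring
  rw [esz, e2, e3, e1]
  push_cast
  have h1 : 2 * u ^ 3 = N * z ^ 3 / 2 := by rw [ez3]; ring
  rw [h1, ← ez]
  linear_combination (1 / 2 * N * τ ^ 2 * (2 * z + 4 / 3 * z ^ 3 + S2) -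
      τ * (κ * (1 + c1) + (N + 1 / 2) * (z + z ^ 3 / 6 + S1))) * hNc

set_option maxHeartbeats 1600000 in
/-- In the scaled variables the Painlevé III right-hand side is a perturbation of the
Painlevé II one. -/
theorem p3rhs_scaled {ε N x : ℝ} {κ u : ℂ} (hε : 0 < ε) (hε1 : ε ≤ 1) (hN : N * ε ^ 3 = 1)
    (hx : ε ^ 2 * |x| ≤ 1) (hu : ε * ‖u‖ ≤ 1 / 4) :
    ‖(ε : ℂ) ^ 3 / 4 * p3rhs (N * Real.exp (ε ^ 2 * x / lam)) (N + 1 / 2) κ (lam * ε * u) -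
      (2 * u ^ 3 + x * u - κ)‖ ≤ (5000 + 20 * ‖κ‖) * ε * (1 + |x| + ‖u‖) ^ 5 := by
  have hl := lam_pos
  have hl1 := lam_ge
  have hl2 := lam_le
  obtain ⟨R, hR⟩ : ∃ R, R = 1 + |x| + ‖u‖ := ⟨_, rfl⟩
  have hx0 := abs_nonneg x
  have hu0 := norm_nonneg u
  have hR1 : 1 ≤ R := by linarith
  obtain ⟨p, hp⟩ : ∃ p, p = ε ^ 2 * x / lam := ⟨_, rfl⟩
  obtain ⟨z, hz⟩ : ∃ z : ℂ, z = lam * ε * u := ⟨_, rfl⟩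
  have hp1 : |p| ≤ ε ^ 2 * |x| := by
    rw [hp, abs_div, abs_mul, abs_of_pos hl, abs_of_pos (pow_pos hε 2)]
    exact div_le_self (by positivity) hl1
  have hpR : |p| ≤ ε ^ 2 * R := hp1.trans (by gcongr; linarith)
  have hp2 : |p| ≤ 1 := hp1.trans hx
  have hzn : ‖z‖ = lam * ε * ‖u‖ := by
    rw [hz, norm_mul, norm_mul, Complex.norm_real, Complex.norm_real,
      Real.norm_of_nonneg hl.le, Real.norm_of_nonneg hε.le]
  have hzR : ‖z‖ ≤ 2 * ε * R := by
    rw [hzn]; gcongr; linarith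
  have hz1 : ‖z‖ ≤ 1 / 2 := by
    rw [hzn]
    calc lam * ε * ‖u‖ ≤ 2 * ε * ‖u‖ := by gcongr
      _ = 2 * (ε * ‖u‖) := by ring
      _ ≤ 2 * (1 / 4) := by gcongr
      _ = 1 / 2 := by norm_num
  have hz2 : ‖2 * z‖ ≤ 1 := by rw [norm_mul, Complex.norm_ofNat]; linarith
  have s1 := norm_sinh_sub_cubic_le (hz1.trans (by norm_num))
  have s2 := norm_sinh_sub_cubic_le hz2
  have s3 := norm_cosh_sub_le (hz1.trans (by norm_num))
  have s4 := norm_sinh_sub_le (hz1.trans (by norm_num))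
  have t1 : |Real.exp p - 1 - p| ≤ p ^ 2 := Real.abs_exp_sub_one_sub_id_le hp2
  have t2 : |Real.exp p - 1| ≤ 2 * |p| := Real.abs_exp_sub_one_le hp2
  have t3 : Real.exp p ≤ 3 := by have := (abs_le.1 t2).2; linarith
  have t0 := Real.exp_pos p
  rw [← hp, ← hz, p3rhs]
  generalize hτ : Real.exp p = τ at *
  have hNc : (N : ℂ) * (ε : ℂ) ^ 3 = 1 := by exact_mod_cast hN
  have hεc : (ε : ℂ) ≠ 0 := by exact_mod_cast hε.ne'
  have hlc : (lam : ℂ) ≠ 0 := by exact_mod_cast hl.ne'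
  have hl3 : (lam : ℂ) ^ 3 = 4 := by exact_mod_cast lam_cube
  have hNz : 0 < N := by
    by_contra! h
    have := mul_nonpos_of_nonpos_of_nonneg h (pow_pos hε 3).le
    linarith
  generalize hS2 : Complex.sinh (2 * z) - 2 * z - (2 * z) ^ 3 / 6 = S2 at *
  generalize hS1 : Complex.sinh z - z - z ^ 3 / 6 = S1 at *
  generalize hc1 : Complex.cosh z - 1 = c1 at *
  generalize hsz : Complex.sinh z - z = sz at *
  have ez : N * z * p = x * u := by
    rw [hz, hp]; push_cast; field_simp; linear_combination (x * u) * hNc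
  have ez3 : N * z ^ 3 = 4 * u ^ 3 := by
    rw [hz]
    linear_combination (lam ^ 3 * u ^ 3) * hNc + u ^ 3 * hl3
  rw [p3rhs_key (S1 := S1) hNc ez ez3 hS2 (by rw [hsz]; exact hS1) hc1 hsz]
  have hκ := norm_nonneg κ
  have hz0 := norm_nonneg z
  have hpp : p ^ 2 ≤ (ε ^ 2 * R) ^ 2 := by
    rw [← sq_abs]; gcongr
  have hNn : ‖(N : ℂ)‖ = N := by rw [Complex.norm_real, Real.norm_of_nonneg hNz.le]
  have hτn : ‖(τ : ℂ)‖ = τ := by rw [Complex.norm_real, Real.norm_of_nonneg t0.le]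
  have hεR : ε * R ≤ ε * R ^ 5 := by
    gcongr; exact le_self_pow₀ hR1 (by norm_num)
  have hεεR : ε ^ 2 * R ^ 5 ≤ ε * R ^ 5 := by
    gcongr; exact pow_le_of_le_one hε.le hε1 (by norm_num)
  have hR5 : ∀ j ≤ 5, ε ^ 2 * R ^ j ≤ ε * R ^ 5 := fun j hj => by
    refine le_trans ?_ hεεR
    gcongr
  have m1 : ‖N * z * (((τ - 1) ^ 2 + (τ - 1 - p) : ℝ) : ℂ)‖ ≤ 10 * (ε * R ^ 5) := by
    have : |(τ - 1) ^ 2 + (τ - 1 - p)| ≤ 5 * (ε ^ 2 * R) ^ 2 := by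
      refine (abs_add_le _ _).trans ?_
      rw [abs_pow]
      have : |τ - 1| ^ 2 ≤ (2 * |p|) ^ 2 := by gcongr
      rw [mul_pow, sq_abs p] at this
      linarith
    rw [norm_mul, norm_mul, hNn, Complex.norm_real, Real.norm_eq_abs]
    calc _ ≤ N * (2 * ε * R) * (5 * (ε ^ 2 * R) ^ 2) := by gcongr
      _ = (N * ε ^ 3) * (10 * (ε ^ 2 * R ^ 3)) := by ring
      _ ≤ _ := by rw [hN, one_mul]; have := hR5 3 (by norm_num); linarith
  have m2 : ‖N * z ^ 3 * (((τ - 1) * (2 / 3 * τ + 1 / 2) : ℝ) : ℂ)‖ ≤ 48 * (ε * R ^ 5) := by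
    have : |(τ - 1) * (2 / 3 * τ + 1 / 2)| ≤ 2 * (ε ^ 2 * R) * 3 := by
      rw [abs_mul, abs_of_pos (by positivity : 0 < 2 / 3 * τ + 1 / 2)]
      have : |τ - 1| ≤ 2 * (ε ^ 2 * R) := by linarith
      gcongr
      linarith
    rw [norm_mul, norm_mul, hNn, Complex.norm_real, Real.norm_eq_abs, norm_pow]
    calc _ ≤ N * (2 * ε * R) ^ 3 * (2 * (ε ^ 2 * R) * 3) := by gcongr
      _ = (N * ε ^ 3) * (48 * (ε ^ 2 * R ^ 4)) := by ring
      _ ≤ _ := by rw [hN, one_mul]; have := hR5 4 (by norm_num); linarith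
  have hS : ‖((1 / 2 * τ ^ 2 : ℝ) : ℂ) * S2 - (τ : ℂ) * S1‖ ≤ 147 * ‖z‖ ^ 5 := by
    refine (norm_sub_le _ _).trans ?_
    rw [norm_mul, norm_mul, hτn, Complex.norm_real, Real.norm_of_nonneg (by positivity)]
    rw [norm_mul, Complex.norm_ofNat, mul_pow] at s2
    have h1 : 1 / 2 * τ ^ 2 * ‖S2‖ ≤ 1 / 2 * 3 ^ 2 * (2 ^ 5 * ‖z‖ ^ 5) := by gcongr
    have h2 : τ * ‖S1‖ ≤ 3 * ‖z‖ ^ 5 := by gcongr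
    linarith
  have m3 : ‖N * (((1 / 2 * τ ^ 2 : ℝ) : ℂ) * S2 - (τ : ℂ) * S1)‖ ≤ 4704 * (ε * R ^ 5) := by
    rw [norm_mul, hNn]
    calc _ ≤ N * (147 * (2 * ε * R) ^ 5) := by gcongr; exact hS.trans (by gcongr)
      _ = (N * ε ^ 3) * (4704 * (ε ^ 2 * R ^ 5)) := by ring
      _ ≤ _ := by rw [hN, one_mul]; linarith
  have m4 : ‖κ * ((τ - 1 : ℝ) : ℂ)‖ ≤ 2 * ‖κ‖ * (ε * R ^ 5) := by
    rw [norm_mul, Complex.norm_real, Real.norm_eq_abs]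
    have h1 := hR5 1 (by norm_num)
    calc _ ≤ ‖κ‖ * (2 * (ε * R ^ 5)) := by
          gcongr; linarith
      _ = _ := by ring
  have m5 : ‖τ * κ * c1‖ ≤ 12 * ‖κ‖ * (ε * R ^ 5) := by
    rw [norm_mul, norm_mul, hτn]
    have h1 := hR5 2 (by norm_num)
    calc _ ≤ 3 * ‖κ‖ * (2 * ε * R) ^ 2 := by gcongr; exact s3.trans (by gcongr)
      _ = 12 * ‖κ‖ * (ε ^ 2 * R ^ 2) := by ring
      _ ≤ _ := by gcongr
  have m6 : ‖((1 / 2 * τ : ℝ) : ℂ) * (z + sz)‖ ≤ 6 * (ε * R ^ 5) := by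
    rw [norm_mul, Complex.norm_real, Real.norm_of_nonneg (by positivity)]
    have h2 : ‖z‖ ^ 3 ≤ ‖z‖ := pow_le_of_le_one hz0 (by linarith) (by norm_num)
    have h1 : ‖z + sz‖ ≤ 2 * ‖z‖ := (norm_add_le _ _).trans (by linarith)
    calc _ ≤ 1 / 2 * 3 * (2 * (2 * ε * R)) := by gcongr; linarith
      _ = 6 * (ε * R) := by ring
      _ ≤ _ := by gcongr
  rw [← hR]
  refine (norm_sub_le_of_le (norm_sub_le_of_le (norm_sub_le_of_le (norm_add_le_of_le
    (norm_add_le_of_le m1 m2) m3) m4) m5) m6).trans ?_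
  have hER : 0 ≤ ε * R ^ 5 := by positivity
  have hκE := mul_nonneg hκ hER
  have e1 : 2 * ‖κ‖ * (ε * R ^ 5) = 2 * (‖κ‖ * (ε * R ^ 5)) := by ring
  have e2 : 12 * ‖κ‖ * (ε * R ^ 5) = 12 * (‖κ‖ * (ε * R ^ 5)) := by ring
  have e3 : (5000 + 20 * ‖κ‖) * ε * R ^ 5 = 5000 * (ε * R ^ 5) + 20 * (‖κ‖ * (ε * R ^ 5)) := by
    ring
  rw [e1, e2, e3]
  linarith

/-! ### Approximate solutions of Painlevé II -/

/-- In the scaled variables the slow curve grows at most linearly. -/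
theorem slow_le_scaled {N ε k x A : ℝ} (hε : 0 < ε) (hε1 : ε ≤ 1) (hN : N * ε ^ 3 = 1)
    (hk : 0 < k) (hA : 3 + k ≤ A) (hx : lam * ε * (A * (1 + |x|)) ≤ 1) :
    slow (N + 1 / 2) k (Real.log N + ε ^ 2 * x / lam) ≤ lam * ε * (A * (1 + |x|)) := by
  have hl := lam_pos
  have hl1 := lam_ge
  have hNz : 0 < N := by
    by_contra! h
    have := mul_nonpos_of_nonpos_of_nonneg h (pow_pos hε 3).le
    linarith
  have hA0 : 0 < A := by linarith
  have hx0 := abs_nonneg x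
  obtain ⟨r, hr⟩ : ∃ r, r = 1 + |x| := ⟨_, rfl⟩
  rw [← hr] at hx ⊢
  have hr1 : 1 ≤ r := by linarith
  obtain ⟨η, hη⟩ : ∃ η, η = lam * ε * (A * r) := ⟨_, rfl⟩
  rw [← hη] at hx ⊢
  have hη0 : 0 < η := by rw [hη]; positivity
  have hm : 0 < N + 1 / 2 := by linarith
  have hs : Real.exp (Real.log N + ε ^ 2 * x / lam) = N * Real.exp (ε ^ 2 * x / lam) := by
    rw [Real.exp_add, Real.exp_log hNz]
  have hle : slowH (N + 1 / 2) k η ≤ Real.exp (Real.log N + ε ^ 2 * x / lam) := by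
    rw [hs, slowH]
    have h1 : 1 + η ^ 2 / 2 ≤ Real.cosh η := by
      have e1 := Real.cosh_two_mul (η / 2)
      have e2 := Real.cosh_sq (η / 2)
      rw [show 2 * (η / 2) = η by ring] at e1
      have e3 : η / 2 ≤ Real.sinh (η / 2) := Real.self_le_sinh_iff.2 (by linarith)
      have e4 := pow_le_pow_left₀ (by linarith) e3 2
      linarith
    have h2 : η ≤ Real.sinh η := Real.self_le_sinh_iff.2 hη0.le
    have h3 : (N + 1 / 2) / Real.cosh η ≤ (N + 1 / 2) * (1 - η ^ 2 / 3) := by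
      rw [div_le_iff₀ (Real.cosh_pos _), mul_assoc]
      refine le_mul_of_one_le_right hm.le ?_
      have h4 : η ^ 2 ≤ 1 := pow_le_one₀ hη0.le hx
      calc 1 ≤ (1 - η ^ 2 / 3) * (1 + η ^ 2 / 2) := by nlinarith [sq_nonneg η]
        _ ≤ _ := by apply mul_le_mul_of_nonneg_left h1; linarith
    have h4 : k / Real.sinh η ≤ k / η := by gcongr
    have h5 : N * (1 - ε ^ 2 * |x|) ≤ N * Real.exp (ε ^ 2 * x / lam) := by
      apply mul_le_mul_of_nonneg_left _ hNz.le
      have := Real.add_one_le_exp (ε ^ 2 * x / lam)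
      have h6 : |ε ^ 2 * x / lam| ≤ ε ^ 2 * |x| := by
        rw [abs_div, abs_mul, abs_of_pos hl, abs_of_pos (pow_pos hε 2)]
        exact div_le_self (by positivity) hl1
      have := (abs_le.1 h6).1
      linarith
    refine le_trans ?_ h5
    have h6 : N * η ^ 2 / 3 * ε = lam ^ 2 * A ^ 2 * r ^ 2 / 3 := by
      rw [hη]; linear_combination (lam ^ 2 * A ^ 2 * r ^ 2 / 3) * hN
    have h7 : N * (ε ^ 2 * |x|) * ε = |x| := by linear_combination |x| * hN
    have h8 : k / η * ε ≤ 1 := by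
      rw [div_mul_eq_mul_div, div_le_one hη0, hη]
      have : k ≤ lam * (A * r) := by
        calc k ≤ 1 * (A * 1) := by linarith
          _ ≤ _ := by gcongr
      calc k * ε ≤ lam * (A * r) * ε := by gcongr
        _ = _ := by ring
    have h9 : 3 * r ^ 2 ≤ lam ^ 2 * A ^ 2 * r ^ 2 / 3 := by
      have : (9 : ℝ) ≤ lam ^ 2 * A ^ 2 := by
        calc (9 : ℝ) = 1 ^ 2 * 3 ^ 2 := by norm_num
          _ ≤ _ := by gcongr; linarith
      have := mul_le_mul_of_nonneg_right this (sq_nonneg r)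
      linarith
    have h10 : r ≤ r ^ 2 := by nlinarith
    have h11 : (N * (ε ^ 2 * |x|) + 1 / 2 + k / η) * ε ≤ N * η ^ 2 / 3 * ε := by
      rw [h6, add_mul, add_mul, h7]
      linarith
    have h12 := le_of_mul_le_mul_right h11 hε
    have := sq_nonneg η
    linarith
  by_contra! hlt
  have := slowH_strictAnti hm hk (mem_Ioi.2 hη0) (mem_Ioi.2 (slow_pos hm hk _)) hlt
  rw [slowH_slow hm hk] at this
  linarith

/-- The slow curve consists of the zeros of the Painlevé III right-hand side with real parameters. -/
theorem p3rhs_slow {m k : ℝ} (hm : 0 < m) (hk : 0 < k) (s : ℝ) :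
    p3rhs (Real.exp s) m (k : ℂ) (slow m k s : ℂ) = 0 := by
  have h := slow_sinh_eq hm hk s
  have h2 := cosh_mul_tanh (slow m k s)
  generalize slow m k s = η at *
  have e : (Real.exp s) * Real.sinh η * Real.cosh η = m * Real.sinh η + k * Real.cosh η := by
    rw [h, ← h2]; ring
  have e1 : (Real.exp s : ℂ) * Complex.sinh η * Complex.cosh η =
      m * Complex.sinh η + k * Complex.cosh η := by
    exact_mod_cast e
  rw [p3rhs, Complex.sinh_two_mul]
  linear_combination 4 * (Real.exp s : ℂ) * e1

/-- The rescaled slow curve solves the cubic `2w³ + xw = k` up to a small error. -/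
theorem slow_scaled_cubic {N ε k x A : ℝ} (hε : 0 < ε) (hε1 : ε ≤ 1) (hN : N * ε ^ 3 = 1)
    (hk : 0 < k) (hA : 3 + k ≤ A) (hx : ε * (A * (1 + |x|)) ≤ 1 / 4) {w : ℝ}
    (hw : w = slow (N + 1 / 2) k (Real.log N + ε ^ 2 * x / lam) / (lam * ε)) :
    0 < w ∧ w ≤ A * (1 + |x|) ∧
    |2 * w ^ 3 + x * w - k| ≤ (5000 + 20 * k) * ε * (1 + |x| + w) ^ 5 := by
  have hl := lam_pos
  have hl2 := lam_le
  have hNz : 0 < N := by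
    by_contra! h
    have := mul_nonpos_of_nonpos_of_nonneg h (pow_pos hε 3).le
    linarith
  have hm : 0 < N + 1 / 2 := by linarith
  have hx0 := abs_nonneg x
  have hAx : 0 ≤ ε * (A * (1 + |x|)) := by
    have : 0 < A := by linarith
    positivity
  have h1 := slow_le_scaled (x := x) hε hε1 hN hk hA (by
    calc lam * ε * (A * (1 + |x|)) = lam * (ε * (A * (1 + |x|))) := by ring
      _ ≤ 2 * (1 / 4) := by gcongr
      _ ≤ 1 := by norm_num)
  have hw0 : 0 < w := by
    rw [hw]; have := slow_pos hm hk (Real.log N + ε ^ 2 * x / lam); positivity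
  have hwA : w ≤ A * (1 + |x|) := by
    rw [hw, div_le_iff₀ (by positivity)]
    linarith
  refine ⟨hw0, hwA, ?_⟩
  have hs : lam * ε * w = slow (N + 1 / 2) k (Real.log N + ε ^ 2 * x / lam) := by
    rw [hw]; field_simp
  have hx1 : ε ^ 2 * |x| ≤ 1 := by
    have : ε * |x| ≤ 1 / 4 := by
      refine le_trans ?_ hx
      apply mul_le_mul_of_nonneg_left _ hε.le
      calc |x| ≤ 1 * (1 + |x|) := by linarith
        _ ≤ _ := by gcongr; linarith
    calc ε ^ 2 * |x| = ε * (ε * |x|) := by ring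
      _ ≤ 1 * (1 / 4) := by gcongr
      _ ≤ 1 := by norm_num
  have hu : ε * ‖(w : ℂ)‖ ≤ 1 / 4 := by
    rw [Complex.norm_real, Real.norm_of_nonneg hw0.le]
    refine le_trans ?_ hx
    gcongr
  have h2 := p3rhs_scaled (κ := (k : ℂ)) hε hε1 hN hx1 hu
  have h3 := p3rhs_slow hm hk (Real.log N + ε ^ 2 * x / lam)
  rw [Real.exp_add, Real.exp_log hNz, ← hs] at h3
  rw [show ((lam : ℂ) * ε * w) = ((lam * ε * w : ℝ) : ℂ) by push_cast; ring, h3, mul_zero,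
    zero_sub, norm_neg, Complex.norm_real, Complex.norm_real, Real.norm_of_nonneg hw0.le,
    Real.norm_of_nonneg hk.le] at h2
  rw [← Real.norm_eq_abs, ← Complex.norm_real]
  rwa [show ((2 * w ^ 3 + x * w - k : ℝ) : ℂ) = 2 * (w : ℂ) ^ 3 + x * w - k by push_cast; ring]

/-- Closeness of a complex number `u` to the positive real root of `2w³ + xw = k`, up to
generous constants. -/
def NearRoot (k x : ℝ) (u : ℂ) (w : ℝ) : Prop :=
  0 < w ∧ |2 * w ^ 3 + x * w - k| ≤ k / 2 ∧ ‖u - w‖ ≤ 1 / 1000 * w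

theorem NearRoot.norm_le {k x : ℝ} {u : ℂ} {w : ℝ} (h : NearRoot k x u w) :
    ‖u‖ ≤ 1001 / 1000 * w := by
  obtain ⟨h1, -, h3⟩ := h
  have := norm_sub_norm_le u w
  rw [Complex.norm_real, Real.norm_of_nonneg h1.le] at this
  linarith

theorem NearRoot.re_mul {k x : ℝ} {u u' : ℂ} {w w' : ℝ} (h : NearRoot k x u w)
    (h' : NearRoot k x u' w') : 997 / 1000 * (w * w') ≤ (u * u').re := by
  have h1 := h'.norm_le
  have hp := mul_pos h.1 h'.1
  have e : u * u' = w * w' + ((u - w) * u' + w * (u' - w')) := by ring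
  have h2 : ‖(u - w) * u' + w * (u' - w')‖ ≤ 3 / 1000 * (w * w') := by
    refine (norm_add_le _ _).trans ?_
    rw [norm_mul, norm_mul, Complex.norm_real, Real.norm_of_nonneg h.1.le]
    have a1 : ‖u - w‖ * ‖u'‖ ≤ (1 / 1000 * w) * (1001 / 1000 * w') :=
      mul_le_mul h.2.2 h1 (norm_nonneg _) (by have := h.1; positivity)
    have a2 : w * ‖u' - w'‖ ≤ w * (1 / 1000 * w') :=
      mul_le_mul_of_nonneg_left h'.2.2 h.1.le
    linarith
  have h3 := (abs_le.1 ((Complex.abs_re_le_norm _).trans h2)).1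
  rw [e, Complex.add_re]
  have : ((w : ℂ) * w').re = w * w' := by
    rw [← Complex.ofReal_mul, Complex.ofReal_re]
  linarith

/-- The zeroth order coefficient of the linearised equation is at least `36`. -/
theorem NearRoot.coeff {k x : ℝ} (hk : 288 ≤ k) {u u' : ℂ} {w w' : ℝ} (h : NearRoot k x u w)
    (h' : NearRoot k x u' w') : 36 ≤ (2 * (u ^ 2 + u * u' + u' ^ 2) + x).re := by
  -- `main` is applied to the smaller of the two roots `w`, `w'`, whose square bounds all three products.
  -- The constant is a little less than `6` because `u`, `u'` are only near the roots.
  have main : ∀ v, 0 < v → |2 * v ^ 3 + x * v - k| ≤ k / 2 → 36 ≤ 5982 / 1000 * v ^ 2 + x := by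
    intro v hv hc
    by_cases hx : 36 ≤ x
    · have := sq_nonneg v; linarith
    have h1 := (abs_le.1 hc).1
    have h2 : 0 < 2 * v ^ 2 + x := by
      by_contra! hcon
      have := mul_nonneg_of_nonpos_of_nonpos hcon (neg_nonpos.2 hv.le)
      nlinarith
    by_cases hv4 : 4 ≤ v
    · nlinarith
    push Not at hv4
    have h3 : k / 2 ≤ 4 * (2 * v ^ 2 + x) := by
      have := mul_le_mul_of_nonneg_right hv4.le h2.le
      nlinarith
    have := sq_nonneg v
    linarith
  have m1 := main w h.1 h.2.1
  have m2 := main w' h'.1 h'.2.1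
  have r1 := h.re_mul h
  have r2 := h.re_mul h'
  have r3 := h'.re_mul h'
  have e : (2 * (u ^ 2 + u * u' + u' ^ 2) + (x : ℂ)).re =
      2 * ((u * u).re + (u * u').re + (u' * u').re) + x := by
    rw [Complex.add_re, Complex.ofReal_re, pow_two, pow_two,
      show (2 : ℂ) = ((2 : ℝ) : ℂ) by norm_num, Complex.re_ofReal_mul, Complex.add_re,
      Complex.add_re]
  rw [e]
  have hw := h.1
  have hw' := h'.1
  rcases le_total w w' with hl | hl
  · have a1 : w ^ 2 ≤ w * w' := by nlinarith
    have a2 : w ^ 2 ≤ w' * w' := by nlinarith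
    nlinarith
  · have a1 : w' ^ 2 ≤ w * w' := by nlinarith
    have a2 : w' ^ 2 ≤ w * w := by nlinarith
    nlinarith

/-- `(u, v)` is an approximate solution of `u' = v`, `v' = 2u³ + xu - κ` on `[-L, L]` with
accuracy `(1+L)⁻¹⁰`, lying close to the positive root of the cubic. -/
structure ApproxPII (κ : ℂ) (k A C L : ℝ) (u v : ℝ → ℂ) : Prop where
  du : ∀ x ∈ Icc (-L) L, HasDerivAt u (v x) x
  dv : ∀ x ∈ Icc (-L) L, ∃ g, HasDerivAt v g x ∧
    ‖g - (2 * u x ^ 3 + x * u x - κ)‖ ≤ C * ((1 + L) ^ 10)⁻¹ * (1 + |x|) ^ 5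
  near : ∀ x ∈ Icc (-L) L, ∃ w, NearRoot k x (u x) w ∧ w ≤ A * (1 + |x|)

theorem inv_cosh_le {L : ℝ} (hL : 0 ≤ L) :
    (1 + L) / Real.cosh L ≤ 6 * (Nat.factorial 11) * ((1 + L) ^ 10)⁻¹ := by
  have h1 := Real.pow_div_factorial_le_exp (1 + L) (by linarith) 11
  have h2 : Real.exp L ≤ 2 * Real.cosh L := by
    rw [Real.cosh_eq]; have := Real.exp_pos (-L); linarith
  have h3 : Real.exp (1 + L) ≤ 3 * Real.exp L := by
    rw [Real.exp_add]
    have := Real.exp_one_lt_d9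
    gcongr; linarith
  have hf : (0 : ℝ) < (Nat.factorial 11 : ℝ) := by positivity
  rw [div_le_iff₀ hf] at h1
  rw [div_le_iff₀ (Real.cosh_pos _)]
  have hp : 0 < (1 + L) ^ 10 := by positivity
  rw [show 6 * (Nat.factorial 11 : ℝ) * ((1 + L) ^ 10)⁻¹ * Real.cosh L =
    (6 * Real.cosh L * (Nat.factorial 11 : ℝ)) / (1 + L) ^ 10 by field_simp, le_div_iff₀ hp]
  calc (1 + L) * (1 + L) ^ 10 = (1 + L) ^ 11 := by ring
    _ ≤ _ := h1
    _ ≤ _ := by gcongr; linarith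

theorem pow5_le (x : ℝ) : (1 + |x|) ^ 5 ≤ 8 * (1 + x ^ 2) ^ 3 := by
  have h := abs_nonneg x
  rw [← sq_abs x]
  generalize |x| = y at *
  have h1 : (1 + y) ^ 2 ≤ 2 * (1 + y ^ 2) := by nlinarith [sq_nonneg (1 - y)]
  calc (1 + y) ^ 5 ≤ (1 + y) ^ 6 := pow_le_pow_right₀ (by linarith) (by norm_num)
    _ = ((1 + y) ^ 2) ^ 3 := by ring
    _ ≤ (2 * (1 + y ^ 2)) ^ 3 := by gcongr
    _ = _ := by ring

/-- Two approximate solutions differ by little. The difference satisfies a linear equation whose zeroth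
order coefficient has real part at least `36`. In the barrier, the polynomial term absorbs the
residual, while the `cosh` term dominates the a priori bound at the endpoints `±L`. -/
theorem ApproxPII.compare {κ : ℂ} {k A C L L' : ℝ} {u v u' v' : ℝ → ℂ} (hk : 288 ≤ k)
    (hA : 0 < A) (hC : 0 < C) (hL : 0 ≤ L) (hLL : L ≤ L')
    (h : ApproxPII κ k A C L u v) (h' : ApproxPII κ k A C L' u' v') :
    ∀ x ∈ Icc (-L) L, ‖u x - u' x‖ ≤
      (4 * C * (1 + x ^ 2) ^ 3 + 18 * A * (Nat.factorial 11) * Real.cosh x) *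
        ((1 + L) ^ 10)⁻¹ := by
  obtain ⟨ε, hε⟩ : ∃ ε, ε = ((1 + L) ^ 10)⁻¹ := ⟨_, rfl⟩
  have hε0 : 0 < ε := by rw [hε]; positivity
  have hε' : ((1 + L') ^ 10)⁻¹ ≤ ε := by rw [hε]; gcongr
  obtain ⟨C2, hC2⟩ : ∃ C2, C2 = 3 * A * ((1 + L) / Real.cosh L) := ⟨_, rfl⟩
  have hC20 : 0 < C2 := by rw [hC2]; have := Real.cosh_pos L; positivity
  have hsub : ∀ x ∈ Icc (-L) L, x ∈ Icc (-L') L' := fun x hx =>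
    ⟨by linarith [hx.1], by linarith [hx.2]⟩
  choose! g hg1 hg2 using h.dv
  choose! g' hg1' hg2' using h'.dv
  have hx_le : ∀ x ∈ Icc (-L) L, ‖u x - u' x‖ ≤ 3 * A * (1 + |x|) := by
    intro x hx
    obtain ⟨w, hw, hwA⟩ := h.near x hx
    obtain ⟨w', hw', hwA'⟩ := h'.near x (hsub x hx)
    have := hw.norm_le
    have := hw'.norm_le
    have := norm_sub_le (u x) (u' x)
    have : 0 ≤ A * (1 + |x|) := by positivity
    linarith
  have key := barrier_two (a := -L) (b := L) (δ := fun x => u x - u' x)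
    (δ1 := fun x => v x - v' x) (δ2 := fun x => g x - g' x)
    (E := fun x => 4 * C * ε * (1 + x ^ 2) ^ 3 + C2 * Real.cosh x)
    (E1 := fun x => 4 * C * ε * (6 * x * (1 + x ^ 2) ^ 2) + C2 * Real.sinh x)
    (E2 := fun x => 4 * C * ε * (6 * (1 + x ^ 2) ^ 2 + 24 * x ^ 2 * (1 + x ^ 2)) + C2 * Real.cosh x)
    (fun x hx => (h.du x hx).fun_sub (h'.du x (hsub x hx)))
    (fun x hx => (hg1 x hx).fun_sub (hg1' x (hsub x hx)))
    (fun x hx => by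
      have e1 : HasDerivAt (fun x : ℝ => (1 + x ^ 2)) (2 * x) x := by
        simpa using (hasDerivAt_pow 2 x).const_add 1
      have := ((e1.fun_pow 3).const_mul (4 * C * ε)).fun_add
        ((Real.hasDerivAt_cosh x).const_mul C2)
      exact this.congr_deriv (by rw [show (3 - 1 : ℕ) = 2 from rfl]; push_cast; ring))
    (fun x hx => by
      have e1 : HasDerivAt (fun x : ℝ => (1 + x ^ 2)) (2 * x) x := by
        simpa using (hasDerivAt_pow 2 x).const_add 1
      have e2 : HasDerivAt (fun x : ℝ => 6 * x) (6 * 1) x := (hasDerivAt_id x).const_mul 6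
      have := ((e2.fun_mul (e1.fun_pow 2)).const_mul (4 * C * ε)).fun_add
        ((Real.hasDerivAt_sinh x).const_mul C2)
      exact this.congr_deriv (by rw [show (2 - 1 : ℕ) = 1 from rfl]; push_cast; ring))
    (fun x hx => by have := Real.cosh_pos x; positivity)
    (by
      refine (hx_le (-L) ⟨le_rfl, by linarith⟩).trans_lt ?_
      simp only [abs_neg, abs_of_nonneg hL, Real.cosh_neg]
      rw [hC2, show 3 * A * ((1 + L) / Real.cosh L) * Real.cosh L = 3 * A * (1 + L) by
        have := (Real.cosh_pos L).ne'; field_simp]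
      have : 0 < 4 * C * ε * (1 + (-L) ^ 2) ^ 3 := by positivity
      linarith)
    (by
      refine (hx_le L ⟨by linarith, le_rfl⟩).trans_lt ?_
      simp only [abs_of_nonneg hL]
      rw [hC2, show 3 * A * ((1 + L) / Real.cosh L) * Real.cosh L = 3 * A * (1 + L) by
        have := (Real.cosh_pos L).ne'; field_simp]
      have : 0 < 4 * C * ε * (1 + L ^ 2) ^ 3 := by positivity
      linarith)
    (fun x hx hE => by
      have hx' : x ∈ Icc (-L) L := Ioo_subset_Icc_self hx
      obtain ⟨w, hw, hwA⟩ := h.near x hx'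
      obtain ⟨w', hw', hwA'⟩ := h'.near x (hsub x hx')
      have hQ := hw.coeff hk hw'
      have r1 := hg2 x hx'
      have r2 := hg2' x (hsub x hx')
      rw [← hε] at r1
      have r2' : ‖g' x - (2 * u' x ^ 3 + x * u' x - κ)‖ ≤ C * ε * (1 + |x|) ^ 5 :=
        r2.trans (by gcongr)
      change _ ≤ ‖u x - u' x‖ at hE
      change _ * ‖u x - u' x‖ < (conj (u x - u' x) * (g x - g' x)).re
      obtain ⟨d, hd⟩ : ∃ d, d = u x - u' x := ⟨_, rfl⟩
      obtain ⟨ρ, hρ⟩ : ∃ ρ, ρ = (g x - (2 * u x ^ 3 + x * u x - κ)) -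
        (g' x - (2 * u' x ^ 3 + x * u' x - κ)) := ⟨_, rfl⟩
      have hρn : ‖ρ‖ ≤ 2 * (C * ε * (1 + |x|) ^ 5) := by
        rw [hρ]; exact (norm_sub_le _ _).trans (by linarith)
      have e : g x - g' x = (2 * (u x ^ 2 + u x * u' x + u' x ^ 2) + x) * d + ρ := by
        rw [hρ, hd]; ring
      rw [← hd] at hE ⊢
      generalize 2 * (u x ^ 2 + u x * u' x + u' x ^ 2) + (x : ℂ) = Q at *
      have hd0 : 0 < ‖d‖ := lt_of_lt_of_le (by have := Real.cosh_pos x; positivity) hE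
      have e2 : (conj d * (g x - g' x)).re = Q.re * ‖d‖ ^ 2 + (conj d * ρ).re := by
        rw [e, mul_add, Complex.add_re, show conj d * (Q * d) = Q * (conj d * d) by ring,
          Complex.conj_mul']
        rw [← Complex.ofReal_pow, Complex.re_mul_ofReal]
      have e3 : -(‖d‖ * ‖ρ‖) ≤ (conj d * ρ).re := by
        have := (abs_le.1 (Complex.abs_re_le_norm (conj d * ρ))).1
        rwa [norm_mul, RCLike.norm_conj] at this
      rw [e2]
      have hp := pow5_le x
      have b1 : 6 * (1 + x ^ 2) ^ 2 + 24 * x ^ 2 * (1 + x ^ 2) ≤ 30 * (1 + x ^ 2) ^ 3 := by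
        have := sq_nonneg x
        generalize x ^ 2 = y at *
        nlinarith [mul_nonneg this this, mul_nonneg this (mul_nonneg this this)]
      have hc := mul_pos hC20 (Real.cosh_pos x)
      have hCε : 0 < C * ε := by positivity
      have b2 := mul_le_mul_of_nonneg_left b1 hCε.le
      have b3 := mul_le_mul_of_nonneg_left hp hCε.le
      have b4 : 0 < C * ε * (1 + x ^ 2) ^ 3 := by positivity
      have b5 : 4 * C * ε * (6 * (1 + x ^ 2) ^ 2 + 24 * x ^ 2 * (1 + x ^ 2)) + C2 * Real.cosh x <
          36 * ‖d‖ - ‖ρ‖ := by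
        linarith
      have b6 := mul_lt_mul_of_pos_right b5 hd0
      have b7 := mul_le_mul_of_nonneg_right hQ (sq_nonneg ‖d‖)
      linarith)
  intro x hx
  refine (key x hx).le.trans ?_
  rw [← hε]
  have h1 := inv_cosh_le hL
  rw [← hε] at h1
  have h2 : C2 ≤ 3 * A * (6 * (Nat.factorial 11) * ε) := by rw [hC2]; gcongr
  have h3 := mul_le_mul_of_nonneg_right h2 (Real.cosh_pos x).le
  linarith

/-! ### Limits of approximate solutions -/

theorem ApproxPII.norm_le {κ : ℂ} {k A C L : ℝ} {u v : ℝ → ℂ} (hA : 0 < A)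
    (h : ApproxPII κ k A C L u v) {x : ℝ} (hx : x ∈ Icc (-L) L) : ‖u x‖ ≤ 2 * A * (1 + |x|) := by
  obtain ⟨w, hw, hwA⟩ := h.near x hx
  have := hw.norm_le
  have : 0 ≤ A * (1 + |x|) := by positivity
  linarith

theorem norm_cubic_sub_le {x X B : ℝ} {κ a b : ℂ} (hx : |x| ≤ X) (ha : ‖a‖ ≤ B) (hb : ‖b‖ ≤ B) :
    ‖(2 * a ^ 3 + x * a - κ) - (2 * b ^ 3 + x * b - κ)‖ ≤ (6 * B ^ 2 + X) * ‖a - b‖ := by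
  have hB : 0 ≤ B := (norm_nonneg _).trans ha
  have e : (2 * a ^ 3 + x * a - κ) - (2 * b ^ 3 + x * b - κ) =
      (2 * (a * a + a * b + b * b) + x) * (a - b) := by ring
  rw [e, norm_mul]
  apply mul_le_mul_of_nonneg_right _ (norm_nonneg _)
  refine (norm_add_le _ _).trans ?_
  rw [norm_mul, Complex.norm_ofNat, Complex.norm_real, Real.norm_eq_abs]
  have h1 : ‖a * a + a * b + b * b‖ ≤ B * B + B * B + B * B := by
    refine (norm_add₃_le).trans ?_
    rw [norm_mul, norm_mul, norm_mul]
    gcongr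
  linarith

/-- On a fixed compact interval the derivatives are close as well, by `landau_ineq`. -/
theorem ApproxPII.compare_both {κ : ℂ} {k A C : ℝ} (hk : 288 ≤ k) (hA : 0 < A) (hC : 0 < C)
    (X : ℝ) (hX : 0 ≤ X) : ∃ K : ℝ, ∀ (L L' : ℝ) (u v u' v' : ℝ → ℂ), X + 1 ≤ L → L ≤ L' →
      ApproxPII κ k A C L u v → ApproxPII κ k A C L' u' v' → ∀ x, |x| ≤ X →
      ‖u x - u' x‖ ≤ K * ((1 + L) ^ 10)⁻¹ ∧ ‖v x - v' x‖ ≤ K * ((1 + L) ^ 10)⁻¹ := by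
  obtain ⟨K1, hK1⟩ : ∃ K1, K1 = 4 * C * (1 + (X + 1) ^ 2) ^ 3 +
    18 * A * (Nat.factorial 11) * Real.cosh (X + 1) := ⟨_, rfl⟩
  have hc0 := Real.cosh_pos (X + 1)
  have hK10 : 0 ≤ K1 := by rw [hK1]; positivity
  obtain ⟨B, hB⟩ : ∃ B, B = 2 * A * (1 + (X + 1)) := ⟨_, rfl⟩
  have hB0 : 0 ≤ B := by rw [hB]; positivity
  obtain ⟨K2, hK2⟩ : ∃ K2, K2 = (6 * B ^ 2 + (X + 1)) * K1 + 2 * C * (1 + (X + 1)) ^ 5 := ⟨_, rfl⟩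
  have hK20 : 0 ≤ K2 := by rw [hK2]; positivity
  refine ⟨2 * K1 + K2, ?_⟩
  intro L L' u v u' v' hL hLL h h' x hx
  have hL0 : 0 ≤ L := by linarith
  have hcmp := h.compare hk hA hC hL0 hLL h'
  obtain ⟨ε, hε⟩ : ∃ ε, ε = ((1 + L) ^ 10)⁻¹ := ⟨_, rfl⟩
  have hε0 : 0 < ε := by rw [hε]; positivity
  have hε' : ((1 + L') ^ 10)⁻¹ ≤ ε := by rw [hε]; gcongr
  rw [← hε] at hcmp ⊢
  have hu : ∀ y, |y| ≤ X + 1 → ‖u y - u' y‖ ≤ K1 * ε := by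
    intro y hy
    refine (hcmp y (abs_le.1 (hy.trans hL))).trans ?_
    apply mul_le_mul_of_nonneg_right _ hε0.le
    rw [hK1]
    have h1 : y ^ 2 ≤ (X + 1) ^ 2 := by rw [← sq_abs]; gcongr
    have h2 : Real.cosh y ≤ Real.cosh (X + 1) := by
      rw [Real.cosh_le_cosh, abs_of_nonneg (by linarith : 0 ≤ X + 1)]; exact hy
    gcongr
  have hK1ε : 0 ≤ K1 * ε := by positivity
  have hK2ε : 0 ≤ K2 * ε := by positivity
  refine ⟨(hu x (by linarith)).trans (by linarith), ?_⟩
  have hy : ∀ y ∈ Icc x (x + 1), |y| ≤ X + 1 := fun y hy => by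
    have := abs_le.1 hx
    exact abs_le.2 ⟨by linarith [hy.1], by linarith [hy.2]⟩
  have hyL : ∀ y ∈ Icc x (x + 1), y ∈ Icc (-L) L := fun y h => abs_le.1 ((hy y h).trans hL)
  have hyL' : ∀ y ∈ Icc x (x + 1), y ∈ Icc (-L') L' :=
    fun y h => abs_le.1 (((hy y h).trans hL).trans hLL)
  choose! g hg1 hg2 using h.dv
  choose! g' hg1' hg2' using h'.dv
  have := landau_ineq (g := fun y => u y - u' y) (g1 := fun y => v y - v' y)
    (g2 := fun y => g y - g' y) (x := x) (h := 1) (A := K1 * ε) (B := K2 * ε) one_pos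
    (fun y h1 => (h.du y (hyL y h1)).fun_sub (h'.du y (hyL' y h1)))
    (fun y h1 => (hg1 y (hyL y h1)).fun_sub (hg1' y (hyL' y h1)))
    (fun y h1 => hu y (hy y h1))
    (fun y h1 => by
      have b1 : ‖u y‖ ≤ B := (h.norm_le hA (hyL y h1)).trans (by rw [hB]; gcongr; exact hy y h1)
      have b2 : ‖u' y‖ ≤ B := (h'.norm_le hA (hyL' y h1)).trans (by rw [hB]; gcongr; exact hy y h1)
      have b3 := norm_cubic_sub_le (κ := κ) (hy y h1) b1 b2
      have hp : (1 + |y|) ^ 5 ≤ (1 + (X + 1)) ^ 5 := by gcongr; exact hy y h1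
      have b4 : ‖g y - (2 * u y ^ 3 + y * u y - κ)‖ ≤ C * ε * (1 + (X + 1)) ^ 5 :=
        (hg2 y (hyL y h1)).trans (by rw [← hε]; gcongr)
      have b5 : ‖g' y - (2 * u' y ^ 3 + y * u' y - κ)‖ ≤ C * ε * (1 + (X + 1)) ^ 5 :=
        (hg2' y (hyL' y h1)).trans (by gcongr)
      have b6 : (6 * B ^ 2 + (X + 1)) * ‖u y - u' y‖ ≤ (6 * B ^ 2 + (X + 1)) * (K1 * ε) :=
        mul_le_mul_of_nonneg_left (hu y (hy y h1)) (by positivity)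
      have e : g y - g' y = ((2 * u y ^ 3 + y * u y - κ) - (2 * u' y ^ 3 + y * u' y - κ)) +
        (g y - (2 * u y ^ 3 + y * u y - κ)) - (g' y - (2 * u' y ^ 3 + y * u' y - κ)) := by ring
      show ‖g y - g' y‖ ≤ _
      rw [e]
      refine (norm_sub_le_of_le (norm_add_le_of_le (b3.trans b6) b4) b5).trans ?_
      rw [hK2]; apply le_of_eq; ring)
  linarith

/-- A locally uniformly Cauchy sequence with rate `E` converges locally uniformly with the same rate. -/
theorem exists_limit_of_cauchy {f : ℕ → ℝ → ℂ} {E : ℕ → ℝ} (hE : Tendsto E atTop (𝓝 0))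
    (h : ∀ X : ℝ, 0 ≤ X → ∃ (K : ℝ) (N : ℕ), ∀ n m, N ≤ n → n ≤ m → ∀ x, |x| ≤ X →
      ‖f n x - f m x‖ ≤ K * E n) :
    ∃ F : ℝ → ℂ, ∀ X : ℝ, 0 ≤ X → ∃ (K : ℝ) (N : ℕ), ∀ n, N ≤ n → ∀ x, |x| ≤ X →
      ‖f n x - F x‖ ≤ K * E n := by
  have hx : ∀ x, ∃ l, Tendsto (fun n => f n x) atTop (𝓝 l) := by
    intro x
    obtain ⟨K, N, hK⟩ := h |x| (abs_nonneg x)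
    have : CauchySeq (fun n => f (n + N) x) := by
      refine cauchySeq_of_le_tendsto_0' (fun n => K * E (n + N)) ?_ ?_
      · intro n m hnm
        rw [dist_eq_norm]
        exact hK _ _ (by omega) (by omega) x le_rfl
      · have := ((tendsto_add_atTop_iff_nat N).2 hE).const_mul K
        simpa using this
    obtain ⟨l, hl⟩ := cauchySeq_tendsto_of_complete this
    exact ⟨l, (tendsto_add_atTop_iff_nat (f := fun n => f n x) N).1 hl⟩
  choose F hF using hx
  refine ⟨F, fun X hX => ?_⟩
  obtain ⟨K, N, hK⟩ := h X hX
  refine ⟨K, N, fun n hn x hx => ?_⟩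
  have h1 : Tendsto (fun m => ‖f n x - f m x‖) atTop (𝓝 ‖f n x - F x‖) :=
    ((tendsto_const_nhds).sub (hF x)).norm
  exact le_of_tendsto h1 (eventually_atTop.2 ⟨n, fun m hm => hK n m hn hm x hx⟩)

theorem tendstoUniformlyOn_of_rate {f : ℕ → ℝ → ℂ} {F : ℝ → ℂ} {E : ℕ → ℝ} {s : Set ℝ} {K : ℝ}
    {N : ℕ} (hE : Tendsto E atTop (𝓝 0))
    (h : ∀ n, N ≤ n → ∀ x ∈ s, ‖f n x - F x‖ ≤ K * E n) : TendstoUniformlyOn f F atTop s := by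
  rw [Metric.tendstoUniformlyOn_iff]
  intro ε hε
  have h1 : Tendsto (fun n => K * E n) atTop (𝓝 0) := by simpa using hE.const_mul K
  filter_upwards [h1.eventually (gt_mem_nhds hε), eventually_ge_atTop N] with n hn hN x hx
  rw [dist_comm, dist_eq_norm]
  exact (h n hN x hx).trans_lt hn

/-- A sequence of approximate solutions on growing intervals converges to an exact solution. -/
theorem ApproxPII.limit {κ : ℂ} {k A C : ℝ} (hk : 288 ≤ k) (hA : 0 < A) (hC : 0 < C)
    {L : ℕ → ℝ} {un vn : ℕ → ℝ → ℂ} {n0 : ℕ} (hLm : Monotone L) (hL : Tendsto L atTop atTop)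
    (h : ∀ n, n0 ≤ n → ApproxPII κ k A C (L n) (un n) (vn n)) :
    ∃ u v : ℝ → ℂ, (∀ x, HasDerivAt u (v x) x) ∧
      (∀ x, HasDerivAt v (2 * u x ^ 3 + x * u x - κ) x) ∧
      (∀ x, ∃ w, NearRoot k x (u x) w) ∧
      ∀ X : ℝ, 0 ≤ X → ∃ (K : ℝ) (N : ℕ), ∀ n, N ≤ n → ∀ x, |x| ≤ X →
        ‖un n x - u x‖ ≤ K * ((1 + L n) ^ 10)⁻¹ ∧ ‖vn n x - v x‖ ≤ K * ((1 + L n) ^ 10)⁻¹ := by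
  have hE : Tendsto (fun n => ((1 + L n) ^ 10)⁻¹) atTop (𝓝 0) :=
    tendsto_inv_atTop_zero.comp ((tendsto_pow_atTop (by norm_num : (10 : ℕ) ≠ 0)).comp
      (tendsto_atTop_add_const_left _ 1 hL))
  have hLX : ∀ X : ℝ, ∃ N, n0 ≤ N ∧ ∀ n, N ≤ n → X ≤ L n := by
    intro X
    obtain ⟨N, hN⟩ := eventually_atTop.1 (hL.eventually (eventually_ge_atTop X))
    exact ⟨max n0 N, le_max_left _ _, fun n hn => hN n ((le_max_right _ _).trans hn)⟩
  have hcmp : ∀ X : ℝ, 0 ≤ X → ∃ (K : ℝ) (N : ℕ), ∀ n m, N ≤ n → n ≤ m → ∀ x, |x| ≤ X →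
      ‖un n x - un m x‖ ≤ K * ((1 + L n) ^ 10)⁻¹ ∧
      ‖vn n x - vn m x‖ ≤ K * ((1 + L n) ^ 10)⁻¹ := by
    intro X hX
    obtain ⟨K, hK⟩ := ApproxPII.compare_both (κ := κ) hk hA hC X hX
    obtain ⟨N, hN0, hN⟩ := hLX (X + 1)
    exact ⟨K, N, fun n m hn hm => hK (L n) (L m) _ _ _ _ (hN n hn) (hLm hm) (h n (by omega))
      (h m (by omega))⟩
  obtain ⟨u, hu⟩ := exists_limit_of_cauchy (f := un) hE (fun X hX => by
    obtain ⟨K, N, hK⟩ := hcmp X hX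
    exact ⟨K, N, fun n m hn hm x hx => (hK n m hn hm x hx).1⟩)
  obtain ⟨v, hv⟩ := exists_limit_of_cauchy (f := vn) hE (fun X hX => by
    obtain ⟨K, N, hK⟩ := hcmp X hX
    exact ⟨K, N, fun n m hn hm x hx => (hK n m hn hm x hx).2⟩)
  have hut : ∀ x, Tendsto (fun n => un n x) atTop (𝓝 (u x)) := fun x => by
    obtain ⟨K, N, hK⟩ := hu |x| (abs_nonneg x)
    have := tendstoUniformlyOn_of_rate (s := {x}) (f := un) (F := u) hE
      (fun n hn y hy => hK n hn y (by rw [mem_singleton_iff.1 hy]))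
    exact this.tendsto_at (mem_singleton x)
  have hvt : ∀ x, Tendsto (fun n => vn n x) atTop (𝓝 (v x)) := fun x => by
    obtain ⟨K, N, hK⟩ := hv |x| (abs_nonneg x)
    have := tendstoUniformlyOn_of_rate (s := {x}) (f := vn) (F := v) hE
      (fun n hn y hy => hK n hn y (by rw [mem_singleton_iff.1 hy]))
    exact this.tendsto_at (mem_singleton x)
  have hIoo : ∀ {X y : ℝ}, y ∈ Ioo (-X) X → |y| ≤ X := fun hy => (abs_lt.2 hy).le
  have hmem : ∀ x : ℝ, x ∈ Ioo (-(|x| + 1)) (|x| + 1) := fun x => abs_lt.1 (by linarith)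
  refine ⟨u, v, ?_, ?_, ?_, ?_⟩
  · intro x
    obtain ⟨K, N, hK⟩ := hv (|x| + 1) (by positivity)
    obtain ⟨N', hN0, hN'⟩ := hLX (|x| + 1)
    refine hasDerivAt_of_tendstoUniformlyOn (f := un) (f' := vn) (l := atTop) isOpen_Ioo
      (tendstoUniformlyOn_of_rate hE (fun n hn y hy => hK n hn y (hIoo hy))) ?_
      (fun y _ => hut y) (hmem x)
    filter_upwards [eventually_ge_atTop N'] with n hn y hy
    exact (h n (by omega)).du y (abs_le.1 ((hIoo hy).trans (hN' n hn)))
  · intro x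
    obtain ⟨X, hXd⟩ : ∃ X, X = |x| + 1 := ⟨_, rfl⟩
    have hX0 : 0 ≤ X := by rw [hXd]; positivity
    have hmx : x ∈ Ioo (-X) X := by rw [hXd]; exact hmem x
    obtain ⟨K, N, hK⟩ := hu X hX0
    obtain ⟨N', hN0, hN'⟩ := hLX X
    obtain ⟨B, hB⟩ : ∃ B, B = 2 * A * (1 + X) := ⟨_, rfl⟩
    have hB0 : 0 ≤ B := by rw [hB]; positivity
    have b1 : ∀ n, N' ≤ n → ∀ y, |y| ≤ X → ‖un n y‖ ≤ B := fun n hn y hy =>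
      ((h n (by omega)).norm_le hA (abs_le.1 (hy.trans (hN' n hn)))).trans (by rw [hB]; gcongr)
    have b2 : ∀ y, |y| ≤ X → ‖u y‖ ≤ B := fun y hy =>
      le_of_tendsto (hut y).norm (eventually_atTop.2 ⟨N', fun n hn => b1 n hn y hy⟩)
    have hd : ∀ n, N' ≤ n → ∀ y, |y| ≤ X → HasDerivAt (vn n) (deriv (vn n) y) y ∧
        ‖deriv (vn n) y - (2 * un n y ^ 3 + y * un n y - κ)‖ ≤
          C * ((1 + L n) ^ 10)⁻¹ * (1 + |y|) ^ 5 := fun n hn y hy => by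
      obtain ⟨g, hg, hg'⟩ := (h n (by omega)).dv y (abs_le.1 (hy.trans (hN' n hn)))
      rw [hg.deriv]; exact ⟨hg, hg'⟩
    refine hasDerivAt_of_tendstoUniformlyOn (f := vn) (f' := fun n y => deriv (vn n) y)
      (g' := fun x => 2 * u x ^ 3 + x * u x - κ) (l := atTop) isOpen_Ioo
      (tendstoUniformlyOn_of_rate (N := max N N')
        (K := C * (1 + X) ^ 5 + (6 * B ^ 2 + X) * K) hE (fun n hn y hy => ?_)) ?_
      (fun y _ => hvt y) hmx
    · have hn1 := (le_max_left _ _).trans hn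
      have hn2 := (le_max_right _ _).trans hn
      have hy' := hIoo hy
      have hEn : 0 ≤ ((1 + L n) ^ 10)⁻¹ := by
        have := hX0.trans (hN' n hn2); positivity
      have c1 := norm_cubic_sub_le (κ := κ) hy' (b1 n hn2 y hy') (b2 y hy')
      have c2 := mul_le_mul_of_nonneg_left (hK n hn1 y hy') (by positivity : 0 ≤ 6 * B ^ 2 + X)
      have c3 : C * ((1 + L n) ^ 10)⁻¹ * (1 + |y|) ^ 5 ≤ C * ((1 + L n) ^ 10)⁻¹ * (1 + X) ^ 5 := by
        gcongr
      rw [show deriv (vn n) y - (2 * u y ^ 3 + y * u y - κ) =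
        (deriv (vn n) y - (2 * un n y ^ 3 + y * un n y - κ)) +
        ((2 * un n y ^ 3 + y * un n y - κ) - (2 * u y ^ 3 + y * u y - κ)) by ring]
      refine (norm_add_le_of_le ((hd n hn2 y hy').2.trans c3) (c1.trans c2)).trans ?_
      apply le_of_eq; ring
    · filter_upwards [eventually_ge_atTop N'] with n hn y hy
      exact (hd n hn y (hIoo hy)).1
  · intro x
    obtain ⟨N', hN0, hN'⟩ := hLX |x|
    have hw : ∀ n, ∃ w, NearRoot k x (un (n + N') x) w ∧ w ≤ A * (1 + |x|) := fun n =>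
      (h (n + N') (by omega)).near x (abs_le.1 (hN' _ (by omega)))
    choose w hw1 hw2 using hw
    obtain ⟨w0, hw0, φ, hφ, hφt⟩ := isCompact_Icc.tendsto_subseq
      (fun n => (⟨(hw1 n).1.le, hw2 n⟩ : w n ∈ Icc 0 (A * (1 + |x|))))
    have hc : Continuous (fun y : ℝ => |2 * y ^ 3 + x * y - k|) := by fun_prop
    have h1 : |2 * w0 ^ 3 + x * w0 - k| ≤ k / 2 :=
      le_of_tendsto ((hc.tendsto w0).comp hφt) (Eventually.of_forall fun n => (hw1 (φ n)).2.1)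
    have h2 : Tendsto (fun n => un (φ n + N') x) atTop (𝓝 (u x)) :=
      (hut x).comp (tendsto_atTop_mono (fun n => by omega) hφ.tendsto_atTop)
    have h3 : ‖u x - w0‖ ≤ 1 / 1000 * w0 :=
      le_of_tendsto_of_tendsto
        (h2.sub ((Complex.continuous_ofReal.tendsto w0).comp hφt)).norm
        (hφt.const_mul (1 / 1000)) (Eventually.of_forall fun n => (hw1 (φ n)).2.2)
    refine ⟨w0, ⟨lt_of_le_of_ne hw0.1 ?_, h1, h3⟩⟩
    rintro rfl
    have := (abs_le.1 h1).1
    norm_num at this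
    linarith
  · intro X hX
    obtain ⟨K, N, hK⟩ := hu X hX
    obtain ⟨K', N', hK'⟩ := hv X hX
    obtain ⟨N'', hN0, hN''⟩ := hLX X
    refine ⟨max K K', max (max N N') N'', fun n hn x hx => ?_⟩
    have hn1 : N ≤ n := ((le_max_left _ _).trans (le_max_left _ _)).trans hn
    have hn2 : N' ≤ n := ((le_max_right _ _).trans (le_max_left _ _)).trans hn
    have hn3 : N'' ≤ n := (le_max_right _ _).trans hn
    have hEn : 0 ≤ ((1 + L n) ^ 10)⁻¹ := by
      have := hX.trans (hN'' n hn3); positivity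
    exact ⟨(hK n hn1 x hx).trans (mul_le_mul_of_nonneg_right (le_max_left _ _) hEn),
      (hK' n hn2 x hx).trans (mul_le_mul_of_nonneg_right (le_max_right _ _) hEn)⟩

/-! ### Convergence of the scaled `η_n` -/

/-- The small parameter `ε = n^{-1/3}` of the double scaling limit. -/
noncomputable def eps (n : ℕ) : ℝ := (n : ℝ) ^ (-(1 : ℝ) / 3)

theorem eps_pos {n : ℕ} (hn : 1 ≤ n) : 0 < eps n := by
  have : (0 : ℝ) < n := by exact_mod_cast hn
  unfold eps; positivity

theorem eps_cube {n : ℕ} (hn : 1 ≤ n) : (n : ℝ) * eps n ^ 3 = 1 := by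
  have h : (0 : ℝ) < n := by exact_mod_cast hn
  rw [eps, ← Real.rpow_natCast, ← Real.rpow_mul h.le]
  norm_num
  rw [Real.rpow_neg h.le, Real.rpow_one]
  exact mul_inv_cancel₀ h.ne'

theorem eps_le_one {n : ℕ} (hn : 1 ≤ n) : eps n ≤ 1 :=
  Real.rpow_le_one_of_one_le_of_nonpos (by exact_mod_cast hn) (by norm_num)

theorem eps_tendsto : Tendsto eps atTop (𝓝 0) := by
  have h := (tendsto_rpow_neg_atTop (y := (1 : ℝ) / 3) (by norm_num)).comp
    (tendsto_natCast_atTop_atTop (R := ℝ))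
  refine h.congr fun n => ?_
  simp only [Function.comp, eps]
  norm_num

/-- Logarithmic time corresponding to the scaled variable `x`: `t = n e^{ε²x/λ}`. -/
noncomputable def sTime (n : ℕ) (x : ℝ) : ℝ := Real.log n + eps n ^ 2 * x / lam

/-- Scaled version of `η_n`. -/
noncomputable def uS (ν : ℂ) (n : ℕ) (x : ℝ) : ℂ := etaS ν n (sTime n x) / (lam * eps n)

/-- Scaled version of `t η_n'`. -/
noncomputable def vS (ν : ℂ) (n : ℕ) (x : ℝ) : ℂ :=
  eps n / lam ^ 2 * (2 * (WS ν n (sTime n x) - ν - 1 / 2) -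
      2 * Real.exp (sTime n x) * Complex.sinh (etaS ν n (sTime n x)))

theorem hasDerivAt_sTime (n : ℕ) (x : ℝ) : HasDerivAt (sTime n) (eps n ^ 2 / lam) x := by
  have := (((hasDerivAt_id x).const_mul (eps n ^ 2)).div_const lam).const_add (Real.log n)
  refine this.congr_deriv (by ring)

/-- The scaled `η_n` is an approximate solution of Painlevé II on the interval `|x| ≤ L` with
`(1 + L)^10 = n^{1/3}`. -/
theorem approxPII_base {ν : ℂ} {k B : ℝ} (hB : 0 ≤ B) (hkB : 4000 * (B + 1) ≤ k)
    (hk : (-ν).re = k + 1 / 2) (hκ : ‖-ν - 1 / 2 - k‖ ≤ B) {n : ℕ} (hn : 1 ≤ n) {L A C C0 : ℝ}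
    (hA : A = 3 + k) (hC : C = (5000 + 20 * ‖-ν - 1 / 2‖) * (1 + 2 * A) ^ 5)
    (hC0 : C0 = (5000 + 20 * k) * (1 + A) ^ 5)
    (hL : (1 + L) ^ 10 * eps n = 1) (hL1 : 0 ≤ L) (hLA : 5 * A ≤ 1 + L)
    (hLC : 2 * C0 ≤ k * (1 + L)) : ApproxPII (-ν - 1 / 2) k A C L (uS ν n) (vS ν n) := by
  have hk0 : 0 < k := by linarith
  have hA0 : 0 < A := by linarith
  obtain ⟨hNZ, hη⟩ := eta_close hB hkB hk hκ n
  have hε := eps_pos hn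
  have hε1 := eps_le_one hn
  have hN := eps_cube hn
  have hl := lam_pos
  have hlc : (lam : ℂ) ≠ 0 := by exact_mod_cast hl.ne'
  have hl3 : (lam : ℂ) ^ 3 = 4 := by exact_mod_cast lam_cube
  have hn0 : (0 : ℝ) < n := by exact_mod_cast hn
  have hm : (0 : ℝ) < n + 1 / 2 := by linarith
  have hεinv : ((1 + L) ^ 10)⁻¹ = eps n := by
    exact inv_eq_of_mul_eq_one_right hL
  have hs : ∀ x, HasDerivAt (uS ν n) (vS ν n x) x := by
    intro x
    have h1 := hasDerivAt_etaS (hNZ n (by omega) (sTime n x)) (hNZ (n + 1) le_rfl _) (hη _).1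
    have h2 := (h1.scomp x (hasDerivAt_sTime n x)).div_const (lam * eps n : ℂ)
    refine h2.congr_deriv ?_
    rw [vS, Complex.real_smul]
    have : (eps n : ℂ) ≠ 0 := by exact_mod_cast hε.ne'
    push_cast
    field_simp
  have hexp : ∀ x, Real.exp (sTime n x) = n * Real.exp (eps n ^ 2 * x / lam) := fun x => by
    rw [sTime, Real.exp_add, Real.exp_log hn0]
  have huη : ∀ x, (lam * eps n : ℂ) * uS ν n x = etaS ν n (sTime n x) := fun x => by
    have : (eps n : ℂ) ≠ 0 := by exact_mod_cast hε.ne'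
    rw [uS]; field_simp
  have hv : ∀ x, HasDerivAt (vS ν n) ((eps n : ℂ) ^ 3 / 4 *
      p3rhs (n * Real.exp (eps n ^ 2 * x / lam)) (n + 1 / 2) (-ν - 1 / 2)
        (lam * eps n * uS ν n x)) x := by
    intro x
    have h1 := hasDerivAt_deriv_etaS hNZ (fun s => (hη s).1) (sTime n x)
    have h2 := (h1.scomp x (hasDerivAt_sTime n x)).const_mul (eps n / lam ^ 2 : ℂ)
    refine h2.congr_deriv ?_
    rw [huη, ← hexp, p3rhs, Complex.real_smul, ← hl3]
    push_cast
    field_simp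
  have hnear : ∀ x ∈ Icc (-L) L, ∃ w, NearRoot k x (uS ν n x) w ∧ w ≤ A * (1 + |x|) := by
    intro x hx
    have hxL : |x| ≤ L := abs_le.2 hx
    have hx0 := abs_nonneg x
    have hP : 1 ≤ (1 + L) ^ 8 := one_le_pow₀ (by linarith)
    have hxA : eps n * (A * (1 + |x|)) ≤ 1 / 4 := by
      have h1 : eps n * (A * (1 + |x|)) ≤ eps n * (A * (1 + L)) := by gcongr
      have h2 : 5 * A * (eps n * (1 + L)) ≤ (1 + L) * (eps n * (1 + L)) := by gcongr
      have h3 : (1 + L) * (eps n * (1 + L)) * (1 + L) ^ 8 = 1 := by linear_combination hL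
      have h4 := le_mul_of_one_le_right (by positivity : 0 ≤ (1 + L) * (eps n * (1 + L))) hP
      linarith
    obtain ⟨w, hw⟩ : ∃ w, w = slow (n + 1 / 2) k (sTime n x) / (lam * eps n) := ⟨_, rfl⟩
    obtain ⟨c1, c2, c3⟩ := slow_scaled_cubic hε hε1 hN hk0 hA.ge hxA hw
    refine ⟨w, ⟨c1, c3.trans ?_, ?_⟩, c2⟩
    · have h1 : 1 + |x| + w ≤ (1 + A) * (1 + L) := by
        have : A * (1 + |x|) ≤ A * (1 + L) := by gcongr
        linarith
      have h2 : (5000 + 20 * k) * eps n * (1 + |x| + w) ^ 5 ≤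
          (5000 + 20 * k) * eps n * ((1 + A) * (1 + L)) ^ 5 := by gcongr
      refine h2.trans ?_
      have h3 : (5000 + 20 * k) * eps n * ((1 + A) * (1 + L)) ^ 5 = C0 * (eps n * (1 + L) ^ 5) := by
        rw [hC0]; ring
      rw [h3]
      have hP4 : 1 ≤ (1 + L) ^ 4 := one_le_pow₀ (by linarith)
      have h5 : 2 * C0 * (eps n * (1 + L) ^ 5) ≤ k * (1 + L) * (eps n * (1 + L) ^ 5) := by gcongr
      have h6 : k * (1 + L) * (eps n * (1 + L) ^ 5) * (1 + L) ^ 4 = k := by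
        linear_combination k * hL
      have h4 := le_mul_of_one_le_right
        (by positivity : 0 ≤ k * (1 + L) * (eps n * (1 + L) ^ 5)) hP4
      linarith
    · have h1 := (hη (sTime n x)).2
      have hsp := slow_pos hm hk0 (sTime n x)
      have h2 : Real.tanh (slow (n + 1 / 2) k (sTime n x)) ≤ slow (n + 1 / 2) k (sTime n x) := by
        rw [Real.tanh_eq_sinh_div_cosh, div_le_iff₀ (Real.cosh_pos _)]
        exact sinh_le_mul_cosh hsp.le
      have e : uS ν n x - w =
          (etaS ν n (sTime n x) - slow (n + 1 / 2) k (sTime n x)) / (lam * eps n : ℝ) := by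
        rw [hw, uS]; push_cast; ring
      rw [e, norm_div, Complex.norm_real, Real.norm_of_nonneg (by positivity : 0 ≤ lam * eps n), hw,
        ← mul_div_assoc]
      gcongr
      linarith
  refine ⟨fun x _ => hs x, fun x hx => ⟨_, hv x, ?_⟩, hnear⟩
  have hxL : |x| ≤ L := abs_le.2 hx
  have hx0 := abs_nonneg x
  obtain ⟨w, hw1, hw2⟩ := hnear x hx
  have hu := hw1.norm_le
  have hP : 1 ≤ (1 + L) ^ 8 := one_le_pow₀ (by linarith)
  have hxA : eps n * (A * (1 + |x|)) ≤ 1 / 5 := by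
    have h1 : eps n * (A * (1 + |x|)) ≤ eps n * (A * (1 + L)) := by gcongr
    have h2 : 5 * A * (eps n * (1 + L)) ≤ (1 + L) * (eps n * (1 + L)) := by gcongr
    have h3 : (1 + L) * (eps n * (1 + L)) * (1 + L) ^ 8 = 1 := by linear_combination hL
    have h4 := le_mul_of_one_le_right (by positivity : 0 ≤ (1 + L) * (eps n * (1 + L))) hP
    linarith
  have hx1 : eps n ^ 2 * |x| ≤ 1 := by
    have : eps n * |x| ≤ 1 / 5 := by
      refine le_trans ?_ hxA
      apply mul_le_mul_of_nonneg_left _ hε.le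
      calc |x| ≤ 1 * (1 + |x|) := by linarith
        _ ≤ _ := by gcongr; linarith
    calc eps n ^ 2 * |x| = eps n * (eps n * |x|) := by ring
      _ ≤ 1 * (1 / 5) := by gcongr
      _ ≤ 1 := by norm_num
  have hu1 : eps n * ‖uS ν n x‖ ≤ 1 / 4 := by
    have h1 : ‖uS ν n x‖ ≤ 1001 / 1000 * (A * (1 + |x|)) := hu.trans (by linarith)
    have h2 := mul_le_mul_of_nonneg_left h1 hε.le
    linarith
  have main := p3rhs_scaled (κ := -ν - 1 / 2) hε hε1 hN hx1 hu1
  refine main.trans ?_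
  rw [hεinv, hC]
  have h1 : 1 + |x| + ‖uS ν n x‖ ≤ (1 + 2 * A) * (1 + |x|) := by
    have : 0 ≤ A * (1 + |x|) := by positivity
    linarith
  have h2 := pow_le_pow_left₀ (by positivity) h1 5
  have h3 : 0 ≤ (5000 + 20 * ‖-ν - 1 / 2‖) * eps n := by positivity
  refine (mul_le_mul_of_nonneg_left h2 h3).trans (le_of_eq (by ring))

/-- Convergence of the scaled `η_n` to a pole-free solution of Painlevé II. -/
theorem base_limit {ν : ℂ} {k B : ℝ} (hB : 0 ≤ B) (hkB : 4000 * (B + 1) ≤ k)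
    (hk : (-ν).re = k + 1 / 2) (hκ : ‖-ν - 1 / 2 - k‖ ≤ B) :
    ∃ u v : ℝ → ℂ, (∀ x, HasDerivAt u (v x) x) ∧
      (∀ x, HasDerivAt v (2 * u x ^ 3 + x * u x - (-ν - 1 / 2)) x) ∧
      (∀ x, ∃ w, NearRoot k x (u x) w) ∧
      ∀ X : ℝ, 0 ≤ X → ∃ (K : ℝ) (N : ℕ), ∀ n, N ≤ n → ∀ x, |x| ≤ X →
        ‖uS ν n x - u x‖ ≤ K * eps n ∧ ‖vS ν n x - v x‖ ≤ K * eps n := by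
  have hk0 : 0 < k := by linarith
  obtain ⟨A, hA⟩ : ∃ A, A = 3 + k := ⟨_, rfl⟩
  obtain ⟨C, hC⟩ : ∃ C, C = (5000 + 20 * ‖-ν - 1 / 2‖) * (1 + 2 * A) ^ 5 := ⟨_, rfl⟩
  obtain ⟨C0, hC0⟩ : ∃ C0, C0 = (5000 + 20 * k) * (1 + A) ^ 5 := ⟨_, rfl⟩
  have hA0 : 0 < A := by linarith
  have hCp : 0 < C := by rw [hC]; positivity
  obtain ⟨L, hLd⟩ : ∃ L : ℕ → ℝ, L = fun n : ℕ => (n : ℝ) ^ ((1 : ℝ) / 30) - 1 := ⟨_, rfl⟩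
  have hLm : Monotone L := fun a b hab => by
    rw [hLd]; simp only
    have : (a : ℝ) ≤ b := by exact_mod_cast hab
    gcongr
  have hLt : Tendsto L atTop atTop := by
    rw [hLd]
    exact tendsto_atTop_add_const_right _ (-1) ((tendsto_rpow_atTop (by norm_num)).comp
      tendsto_natCast_atTop_atTop)
  have hLe : ∀ n, 1 ≤ n → (1 + L n) ^ 10 * eps n = 1 := fun n hn => by
    have hn0 : (0 : ℝ) < n := by exact_mod_cast hn
    rw [hLd, eps]; simp only [add_sub_cancel]
    rw [← Real.rpow_natCast, ← Real.rpow_mul hn0.le, ← Real.rpow_add hn0]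
    norm_num
  obtain ⟨n0, hn0⟩ := eventually_atTop.1 ((eventually_ge_atTop 1).and
    (hLt.eventually (eventually_ge_atTop (5 * A + 2 * C0 / k))))
  have hC0p : 0 < 2 * C0 / k := by rw [hC0]; positivity
  have happ : ∀ n, n0 ≤ n → ApproxPII (-ν - 1 / 2) k A C (L n) (uS ν n) (vS ν n) := fun n hn => by
    obtain ⟨h1, h2⟩ := hn0 n hn
    refine approxPII_base hB hkB hk hκ h1 hA hC hC0 (hLe n h1) (by linarith) (by linarith) ?_
    have : 2 * C0 / k ≤ 1 + L n := by linarith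
    rw [div_le_iff₀ hk0] at this
    linarith
  obtain ⟨u, v, h1, h2, h3, h4⟩ := ApproxPII.limit (by linarith) hA0 hCp hLm hLt happ
  refine ⟨u, v, h1, h2, h3, fun X hX => ?_⟩
  obtain ⟨K, N, hK⟩ := h4 X hX
  refine ⟨K, max N 1, fun n hn x hx => ?_⟩
  have hn1 : 1 ≤ n := (le_max_right _ _).trans hn
  have := hK n ((le_max_left _ _).trans hn) x hx
  rwa [show ((1 + L n) ^ 10)⁻¹ = eps n from
    inv_eq_of_mul_eq_one_right (hLe n hn1)] at this

/-! ### Asymptotics at `+∞` -/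

/-- The algebraic form in which the hypothesis of `barrier_two` is verified for a linear equation
`d'' = Q d + ρ`. -/
theorem barrier_alg {d Q ρ : ℂ} {E E2 q r : ℝ} (hE : 0 < E) (hd : E ≤ ‖d‖) (hQ : q ≤ Q.re)
    (hq : 0 ≤ q) (hρ : ‖ρ‖ ≤ r) (h : E2 + r < q * E) :
    E2 * ‖d‖ < (conj d * (Q * d + ρ)).re := by
  have hd0 : 0 < ‖d‖ := hE.trans_le hd
  have e2 : (conj d * (Q * d + ρ)).re = Q.re * ‖d‖ ^ 2 + (conj d * ρ).re := by
    rw [mul_add, Complex.add_re, show conj d * (Q * d) = Q * (conj d * d) by ring,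
      Complex.conj_mul', ← Complex.ofReal_pow, Complex.re_mul_ofReal]
  have e3 : -(‖d‖ * ‖ρ‖) ≤ (conj d * ρ).re := by
    have := (abs_le.1 (Complex.abs_re_le_norm (conj d * ρ))).1
    rwa [norm_mul, RCLike.norm_conj] at this
  rw [e2]
  have h1 := mul_le_mul_of_nonneg_left hd hq
  have h2 : E2 < q * ‖d‖ - ‖ρ‖ := by linarith
  have h3 := mul_lt_mul_of_pos_right h2 hd0
  have h4 := mul_le_mul_of_nonneg_right hQ (sq_nonneg ‖d‖)
  linarith

theorem norm_quad_le {a b : ℂ} {r : ℝ} (ha : ‖a‖ ≤ r) (hb : ‖b‖ ≤ r) :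
    ‖2 * (a ^ 2 + a * b + b ^ 2)‖ ≤ 6 * r ^ 2 := by
  have hr : 0 ≤ r := (norm_nonneg _).trans ha
  rw [norm_mul, Complex.norm_ofNat]
  have h1 : ‖a ^ 2 + a * b + b ^ 2‖ ≤ r ^ 2 + r * r + r ^ 2 := by
    refine norm_add₃_le.trans ?_
    rw [norm_mul, norm_pow, norm_pow]
    gcongr
  linarith

theorem hasDerivAt_inv_pow (m : ℕ) {x : ℝ} (hx : x ≠ 0) :
    HasDerivAt (fun x : ℝ => (x⁻¹) ^ m) (-(m : ℝ) * (x⁻¹) ^ (m + 1)) x := by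
  have := (hasDerivAt_inv hx).fun_pow m
  refine this.congr_deriv ?_
  rcases m with _ | m
  · simp
  · simp only [Nat.add_sub_cancel, ← inv_pow]; push_cast; ring

/-- A solution of Painlevé II that is at most `√x / 4` near `+∞` is asymptotic to `-α/x`, with error
`O(x⁻³)`, and its derivative is bounded. -/
theorem asym_plus {α : ℂ} {u v : ℝ → ℂ} {M : ℝ} (hM : 1 ≤ M)
    (h1 : ∀ x, M < x → HasDerivAt u (v x) x)
    (h2 : ∀ x, M < x → HasDerivAt v (2 * u x ^ 3 + x * u x + α) x)
    (h3 : ∀ x, M < x → ‖u x‖ ≤ Real.sqrt x / 4) :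
    ∃ M' C : ℝ, M ≤ M' ∧ 0 < C ∧ ∀ x, M' < x → ‖u x + α / x‖ ≤ C / x ^ 3 ∧ ‖v x‖ ≤ C := by
  obtain ⟨a, ha⟩ : ∃ a, a = M + 4 + 16 * ‖α‖ ^ 2 := ⟨_, rfl⟩
  have hα0 := norm_nonneg α
  have haM : M < a := by have := sq_nonneg ‖α‖; linarith
  have ha4 : 4 ≤ a := by rw [ha]; nlinarith
  have haα : 16 * ‖α‖ ^ 2 ≤ a := by rw [ha]; linarith
  obtain ⟨R0, hR0⟩ : ∃ R0, R0 = 2 * ‖α‖ ^ 3 + 2 * ‖α‖ := ⟨_, rfl⟩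
  have hR00 : 0 ≤ R0 := by rw [hR0]; positivity
  obtain ⟨C, hC⟩ : ∃ C, C = 4 * R0 + 1 + a ^ 3 * (‖u a + α * ((a⁻¹ : ℝ) : ℂ)‖ + 1) := ⟨_, rfl⟩
  have hC0 : 0 < C := by rw [hC]; have : 0 < a := by linarith
                         positivity
  have ht : ∀ x, a ≤ x → ‖α * ((x⁻¹ : ℝ) : ℂ)‖ ≤ Real.sqrt x / 4 ∧ ‖u x‖ ≤ Real.sqrt x / 4 := by
    intro x hx
    refine ⟨?_, h3 x (by linarith)⟩
    have hx0 : 0 < x := by linarith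
    rw [norm_mul, Complex.norm_real, Real.norm_of_nonneg (by positivity)]
    have e1 : ‖α‖ * x⁻¹ ≤ ‖α‖ := mul_le_of_le_one_right hα0 (inv_le_one_of_one_le₀ (by linarith))
    have e2 : 4 * ‖α‖ ≤ Real.sqrt x := by
      apply Real.le_sqrt_of_sq_le; rw [mul_pow]; linarith
    linarith
  -- Barrier `C x⁻³ + ϵ x`; the second term dominates at the right endpoint and is removed by
  -- `ϵ → 0`.
  have key : ∀ x, a ≤ x → ‖u x + α * ((x⁻¹ : ℝ) : ℂ)‖ ≤ C * x⁻¹ ^ 3 := by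
    intro x hx
    have hx0 : 0 < x := by linarith
    have hlim : Tendsto (fun b : ℝ => C * x⁻¹ ^ 3 + (Real.sqrt b)⁻¹ * x) atTop
        (𝓝 (C * x⁻¹ ^ 3 + 0 * x)) :=
      ((tendsto_inv_atTop_zero.comp Real.tendsto_sqrt_atTop).mul_const x).const_add _
    rw [zero_mul, add_zero] at hlim
    refine ge_of_tendsto hlim ?_
    filter_upwards [eventually_ge_atTop x] with b hb
    obtain ⟨ϵ, hϵ⟩ : ∃ ϵ, ϵ = (Real.sqrt b)⁻¹ := ⟨_, rfl⟩
    have hb0 : 0 < b := by linarith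
    have hϵ0 : 0 < ϵ := by rw [hϵ]; positivity
    rw [← hϵ]
    have main := barrier_two (a := a) (b := b) (δ := fun x => u x + α * ((x⁻¹ : ℝ) : ℂ))
      (δ1 := fun x => v x + α * ((-x⁻¹ ^ 2 : ℝ) : ℂ))
      (δ2 := fun x => 2 * u x ^ 3 + x * u x + α + α * ((2 * x⁻¹ ^ 3 : ℝ) : ℂ))
      (E := fun x => C * x⁻¹ ^ 3 + ϵ * x) (E1 := fun x => C * (-(3 : ℕ) * x⁻¹ ^ (3 + 1)) + ϵ)
      (E2 := fun x => C * (12 * x⁻¹ ^ 5))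
      (fun x hx => by
        have hx0 : x ≠ 0 := by linarith [hx.1]
        have := ((hasDerivAt_inv_pow 1 hx0).ofReal_comp).const_mul α
        simp only [pow_one] at this
        refine ((h1 x (by linarith [hx.1])).fun_add this).congr_deriv ?_
        norm_num)
      (fun x hx => by
        have hx0 : x ≠ 0 := by linarith [hx.1]
        have := ((hasDerivAt_inv_pow 2 hx0).fun_neg.ofReal_comp).const_mul α
        refine ((h2 x (by linarith [hx.1])).fun_add this).congr_deriv ?_
        norm_num)
      (fun x hx => by
        have hx0 : x ≠ 0 := by linarith [hx.1]
        refine (((hasDerivAt_inv_pow 3 hx0).const_mul C).fun_add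
          ((hasDerivAt_id x).const_mul ϵ)).congr_deriv (by ring))
      (fun x hx => by
        have hx0 : x ≠ 0 := by linarith [hx.1]
        refine ((((hasDerivAt_inv_pow 4 hx0).const_mul (-(3 : ℕ) : ℝ)).const_mul C).add_const
          ϵ).congr_deriv (by push_cast; ring))
      (fun x hx => by
        have : 0 < x := by linarith [hx.1]
        positivity)
      (by
        have ha0 : 0 < a := by linarith
        have e1 : ‖u a + α * ((a⁻¹ : ℝ) : ℂ)‖ + 1 ≤ C * a⁻¹ ^ 3 := by
          rw [inv_pow, ← div_eq_mul_inv, le_div_iff₀ (by positivity), hC]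
          have := pow_pos ha0 3
          linarith
        have : 0 < ϵ * a := by positivity
        show ‖u a + α * ((a⁻¹ : ℝ) : ℂ)‖ < _
        linarith)
      (by
        show ‖u b + α * ((b⁻¹ : ℝ) : ℂ)‖ < C * b⁻¹ ^ 3 + ϵ * b
        obtain ⟨t1, t2⟩ := ht b (by linarith)
        have e1 : ϵ * b = Real.sqrt b := by
          rw [hϵ]
          nth_rewrite 2 [← Real.mul_self_sqrt hb0.le]
          have := (Real.sqrt_pos.2 hb0).ne'
          field_simp
        have := norm_add_le (u b) (α * ((b⁻¹ : ℝ) : ℂ))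
        have := Real.sqrt_pos.2 hb0
        have : 0 < C * b⁻¹ ^ 3 := by positivity
        rw [e1]
        linarith)
      (fun x hx hE => by
        have hxa : a < x := hx.1
        have hx0 : 0 < x := by linarith
        obtain ⟨t1, t2⟩ := ht x hxa.le
        change C * x⁻¹ ^ 3 + ϵ * x ≤ ‖u x + α * ((x⁻¹ : ℝ) : ℂ)‖ at hE
        show C * (12 * x⁻¹ ^ 5) * ‖u x + α * ((x⁻¹ : ℝ) : ℂ)‖ <
          (conj (u x + α * ((x⁻¹ : ℝ) : ℂ)) *
            (2 * u x ^ 3 + x * u x + α + α * ((2 * x⁻¹ ^ 3 : ℝ) : ℂ))).re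
        have hxc : (x : ℂ) ≠ 0 := by exact_mod_cast hx0.ne'
        have hqx : x * x⁻¹ = 1 := mul_inv_cancel₀ hx0.ne'
        have hqxc : (x : ℂ) * ((x⁻¹ : ℝ) : ℂ) = 1 := by exact_mod_cast hqx
        have hq0 : 0 < x⁻¹ := by positivity
        have hq4 : x⁻¹ ≤ 1 / 4 := by rw [one_div]; gcongr; linarith
        have hs : Real.sqrt x ^ 2 = x := Real.sq_sqrt hx0.le
        generalize x⁻¹ = q at *
        have hQ : 5 / 8 * x ≤ (2 * (u x ^ 2 + u x * (-(α * (q : ℂ))) + (-(α * (q : ℂ))) ^ 2) +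
            (x : ℂ)).re := by
          have := norm_quad_le t2 (by rwa [norm_neg] : ‖-(α * (q : ℂ))‖ ≤ Real.sqrt x / 4)
          have := (abs_le.1 ((Complex.abs_re_le_norm _).trans this)).1
          rw [Complex.add_re, Complex.ofReal_re]
          rw [div_pow, hs] at this
          linarith
        have e : 2 * u x ^ 3 + x * u x + α + α * ((2 * q ^ 3 : ℝ) : ℂ) =
            (2 * (u x ^ 2 + u x * (-(α * (q : ℂ))) + (-(α * (q : ℂ))) ^ 2) + (x : ℂ)) *
              (u x + α * q) + (2 * α - 2 * α ^ 3) * ((q ^ 3 : ℝ) : ℂ) := by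
          push_cast
          linear_combination (-α) * hqxc
        rw [e]
        refine barrier_alg (q := 5 / 8 * x) (r := R0 * q ^ 3) (by positivity) hE hQ
          (by positivity) ?_ ?_
        · rw [norm_mul, Complex.norm_real, Real.norm_of_nonneg (by positivity)]
          gcongr
          refine (norm_sub_le _ _).trans ?_
          rw [norm_mul, norm_mul, norm_pow, Complex.norm_ofNat, hR0]; linarith
        · have e1 : 5 / 8 * x * (C * q ^ 3 + ϵ * x) = 5 / 8 * C * q ^ 2 + 5 / 8 * ϵ * x ^ 2 := by
            linear_combination (5 / 8 * C * q ^ 2) * hqx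
          rw [e1]
          have e2 : q ^ 3 ≤ 1 / 4 * q ^ 2 := by
            rw [pow_succ, mul_comm]; gcongr
          have e3 : q ^ 5 ≤ (1 / 4) ^ 3 * q ^ 2 := by
            rw [show q ^ 5 = q ^ 3 * q ^ 2 by ring]; gcongr
          have e4 : 0 < 5 / 8 * ϵ * x ^ 2 := by positivity
          have hCR : 4 * R0 ≤ C := by
            have ha0 : 0 < a := by linarith
            have : 0 < a ^ 3 * (‖u a + α * ((a⁻¹ : ℝ) : ℂ)‖ + 1) := by positivity
            rw [hC]; linarith
          have e5 := mul_le_mul_of_nonneg_left e2 hR00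
          have e6 := mul_le_mul_of_nonneg_right hCR (sq_nonneg q)
          have e7 := mul_le_mul_of_nonneg_left e3 hC0.le
          have e8 : 0 ≤ C * q ^ 2 := by positivity
          linarith)
    exact (main x ⟨hx, hb⟩).le
  have key2 : ∀ x, a ≤ x → ‖u x‖ ≤ (C + ‖α‖) * x⁻¹ := by
    intro x hx
    have hx0 : 0 < x := by linarith
    have e1 := key x hx
    have hq1 : x⁻¹ ≤ 1 := inv_le_one_of_one_le₀ (by linarith)
    have e2 : x⁻¹ ^ 3 ≤ x⁻¹ := pow_le_of_le_one (by positivity) hq1 (by norm_num)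
    have e3 := norm_sub_le (u x + α * ((x⁻¹ : ℝ) : ℂ)) (α * ((x⁻¹ : ℝ) : ℂ))
    rw [add_sub_cancel_right, norm_mul α, Complex.norm_real,
      Real.norm_of_nonneg (by positivity)] at e3
    have := mul_le_mul_of_nonneg_left e2 hC0.le
    linarith
  obtain ⟨D, hD⟩ : ∃ D, D = C + ‖α‖ := ⟨_, rfl⟩
  have hD0 : 0 < D := by rw [hD]; positivity
  rw [← hD] at key2
  have key3 : ∀ x, a < x → ‖v x‖ ≤ 2 * D + (2 * D ^ 3 + D + ‖α‖) := by
    intro x hx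
    have hq : ∀ s, a ≤ s → 0 < s⁻¹ ∧ s⁻¹ ≤ 1 ∧ s * s⁻¹ = 1 := fun s hs => by
      have hs0 : 0 < s := by linarith
      exact ⟨by positivity, inv_le_one_of_one_le₀ (by linarith), mul_inv_cancel₀ hs0.ne'⟩
    have hD1 : ∀ s, a ≤ s → ‖u s‖ ≤ D := fun s hs =>
      (key2 s hs).trans (mul_le_of_le_one_right hD0.le (hq s hs).2.1)
    have := landau_ineq (g := u) (g1 := v) (x := x) (h := 1) (A := D)
      (B := 2 * D ^ 3 + D + ‖α‖) one_pos (fun s hs => h1 s (by linarith [hs.1]))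
      (fun s hs => h2 s (by linarith [hs.1])) (fun s hs => hD1 s (by linarith [hs.1]))
      (fun s hs => by
        have hs1 : a ≤ s := by linarith [hs.1]
        have hs0 : 0 < s := by linarith
        refine norm_add₃_le.trans ?_
        rw [norm_mul, norm_mul, norm_pow, Complex.norm_ofNat, Complex.norm_real,
          Real.norm_of_nonneg hs0.le]
        have b1 := pow_le_pow_left₀ (norm_nonneg _) (hD1 s hs1) 3
        have b2 := mul_le_mul_of_nonneg_left (key2 s hs1) hs0.le
        have b3 : s * (D * s⁻¹) = D := by
          rw [mul_left_comm, (hq s hs1).2.2, mul_one]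
        linarith)
    linarith
  refine ⟨a, C + (2 * D + (2 * D ^ 3 + D + ‖α‖)), haM.le, by positivity, fun x hx => ⟨?_, ?_⟩⟩
  · have hx0 : 0 < x := by linarith
    have := key x hx.le
    rw [show α / (x : ℂ) = α * ((x⁻¹ : ℝ) : ℂ) by push_cast; rfl]
    refine this.trans ?_
    rw [inv_pow, ← div_eq_mul_inv]
    gcongr
    have : 0 ≤ 2 * D + (2 * D ^ 3 + D + ‖α‖) := by positivity
    linarith
  · have := key3 x hx
    linarith

/-! ### Asymptotics at `-∞` -/

theorem hasDerivAt_sqrt_half {y : ℝ} (hy : 0 < y) :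
    HasDerivAt (fun y : ℝ => Real.sqrt (y / 2)) ((Real.sqrt (y / 2))⁻¹ / 4) y := by
  have := ((hasDerivAt_id y).div_const 2).sqrt (by simpa using hy.ne')
  refine this.congr_deriv ?_
  simp only [id]
  have : 0 < Real.sqrt (y / 2) := Real.sqrt_pos.2 (by linarith)
  field_simp
  norm_num

theorem hasDerivAt_sqrt_half_inv_pow (m : ℕ) {y : ℝ} (hy : 0 < y) :
    HasDerivAt (fun y : ℝ => (Real.sqrt (y / 2))⁻¹ ^ m)
      (-(m / 4 : ℝ) * (Real.sqrt (y / 2))⁻¹ ^ (m + 2)) y := by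
  have h0 : Real.sqrt (y / 2) ≠ 0 := (Real.sqrt_pos.2 (by linarith)).ne'
  refine ((hasDerivAt_inv_pow m h0).comp y (hasDerivAt_sqrt_half hy)).congr_deriv ?_
  ring

/-- `2(û²+ûũ+ũ²) - 2s²` has large real part and norm at most `10 s²`. -/
theorem minus_coeff {a b : ℂ} {s : ℝ} (hs : 0 < s) (ha : ‖a - s‖ ≤ s / 10) (hb : ‖b - s‖ ≤ s / 10) :
    2 * s ^ 2 ≤ (2 * (a ^ 2 + a * b + b ^ 2) - 2 * (s : ℂ) ^ 2).re ∧
      ‖2 * (a ^ 2 + a * b + b ^ 2) - 2 * (s : ℂ) ^ 2‖ ≤ 10 * s ^ 2 := by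
  obtain ⟨p, hp⟩ : ∃ p, p = a - s := ⟨_, rfl⟩
  obtain ⟨r, hr⟩ : ∃ r, r = b - s := ⟨_, rfl⟩
  rw [← hp] at ha
  rw [← hr] at hb
  have ea : a = s + p := by rw [hp]; ring
  have eb : b = s + r := by rw [hr]; ring
  have e : 2 * (a ^ 2 + a * b + b ^ 2) - 2 * (s : ℂ) ^ 2 = ((4 * s ^ 2 : ℝ) : ℂ) +
      (6 * s * (p + r) + 2 * (p ^ 2 + p * r + r ^ 2)) := by
    rw [ea, eb]; push_cast; ring
  have b1 : ‖6 * s * (p + r) + 2 * (p ^ 2 + p * r + r ^ 2)‖ ≤ 2 * s ^ 2 := by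
    refine (norm_add_le _ _).trans ?_
    have h1 := norm_quad_le ha hb
    have h2 : ‖6 * (s : ℂ) * (p + r)‖ ≤ 6 * s * (s / 10 + s / 10) := by
      rw [norm_mul, norm_mul, Complex.norm_real, Real.norm_of_nonneg hs.le, Complex.norm_ofNat]
      gcongr
      exact (norm_add_le _ _).trans (by linarith)
    nlinarith
  rw [e]
  constructor
  · have := (abs_le.1 ((Complex.abs_re_le_norm _).trans b1)).1
    rw [Complex.add_re, Complex.ofReal_re]
    linarith
  · refine (norm_add_le _ _).trans ?_
    rw [Complex.norm_real, Real.norm_of_nonneg (by positivity)]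
    have := sq_nonneg s
    linarith

/-- A solution of Painlevé II close to `√(y/2)` at `-y → -∞` satisfies
`u = √(y/2) - α/(2y) + O(y^{-5/2})`; here `u` is regarded as a function of `y`. -/
theorem asym_minus {α : ℂ} {u v : ℝ → ℂ} {M : ℝ} (hM : 1 ≤ M)
    (h1 : ∀ y, M < y → HasDerivAt u (v y) y)
    (h2 : ∀ y, M < y → HasDerivAt v (2 * u y ^ 3 - y * u y + α) y)
    (h3 : ∀ y, M < y → ‖u y - Real.sqrt (y / 2)‖ ≤ Real.sqrt (y / 2) / 10) :
    ∃ M' C : ℝ, M ≤ M' ∧ 0 < C ∧ ∀ y, M' < y →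
      ‖u y - Real.sqrt (y / 2) + α / (2 * y)‖ ≤ C * (Real.sqrt (y / 2))⁻¹ ^ 5 ∧
      ‖v y - ((Real.sqrt (y / 2))⁻¹ / 4 : ℝ)‖ ≤ C * (Real.sqrt (y / 2))⁻¹ ^ 3 := by
  obtain ⟨S, hS⟩ : ∃ S : ℝ → ℝ, S = fun y => Real.sqrt (y / 2) := ⟨_, rfl⟩
  have hSy : ∀ y, Real.sqrt (y / 2) = S y := fun y => by rw [hS]
  simp only [hSy] at h3 ⊢
  obtain ⟨a, ha⟩ : ∃ a, a = M + 8 + 3 * ‖α‖ := ⟨_, rfl⟩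
  have hα0 := norm_nonneg α
  have haM : M < a := by linarith
  have ha8 : 8 ≤ a := by linarith
  have dS : ∀ y, a ≤ y → HasDerivAt S ((S y)⁻¹ / 4) y := fun y hy => by
    rw [hS]; exact hasDerivAt_sqrt_half (by linarith)
  have dq : ∀ (m : ℕ) y, a ≤ y →
      HasDerivAt (fun y => (S y)⁻¹ ^ m) (-(m / 4 : ℝ) * (S y)⁻¹ ^ (m + 2)) y := fun m y hy => by
    rw [hS]; exact hasDerivAt_sqrt_half_inv_pow m (by linarith)
  have S2 : ∀ y, a ≤ y → 2 ≤ S y ∧ 2 * S y ^ 2 = y ∧ 0 < (S y)⁻¹ ∧ (S y)⁻¹ ≤ 1 / 2 ∧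
      S y * (S y)⁻¹ = 1 := fun y hy => by
    have hy0 : 0 ≤ y / 2 := by linarith
    have e1 : 2 ≤ S y := by
      rw [← hSy]; apply Real.le_sqrt_of_sq_le; linarith
    have e2 : 2 * S y ^ 2 = y := by
      rw [← hSy, Real.sq_sqrt hy0]; ring
    have e0 : 0 < S y := by linarith
    refine ⟨e1, e2, by positivity, ?_, mul_inv_cancel₀ e0.ne'⟩
    rw [one_div]; gcongr
  have hβ : ∀ y, a ≤ y → ‖(S y - α / 4 * (((S y)⁻¹ ^ 2 : ℝ) : ℂ)) - S y‖ ≤ S y / 10 := by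
    intro y hy
    obtain ⟨s1, s2, s3, s4, s5⟩ := S2 y hy
    rw [sub_sub_cancel_left, norm_neg, norm_mul, norm_div, Complex.norm_ofNat, Complex.norm_real,
      Real.norm_of_nonneg (by positivity)]
    generalize (S y)⁻¹ = q at *
    generalize S y = s at *
    have e1 : 5 / 2 * ‖α‖ ≤ s ^ 3 := by nlinarith
    have e2 : ‖α‖ / 4 * q ^ 2 ≤ (s ^ 3 / 10) * q ^ 2 :=
      mul_le_mul_of_nonneg_right (by linarith) (by positivity)
    have e3 : (s ^ 3 / 10) * q ^ 2 = s / 10 := by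
      linear_combination (s / 10) * (s * q + 1) * s5
    linarith
  obtain ⟨R, hR⟩ : ∃ R, R = 1 + ‖α‖ + ‖α‖ ^ 2 + ‖α‖ ^ 3 := ⟨_, rfl⟩
  have hR0 : 0 ≤ R := by rw [hR]; positivity
  have hS0 : 0 < S a := by have := (S2 a le_rfl).1; linarith
  obtain ⟨C, hC⟩ : ∃ C, C = R + S a ^ 5 *
    (‖u a - S a + α / 4 * (((S a)⁻¹ ^ 2 : ℝ) : ℂ)‖ + 1) := ⟨_, rfl⟩
  have hCR : R ≤ C := by
    have : 0 ≤ S a ^ 5 * (‖u a - S a + α / 4 * (((S a)⁻¹ ^ 2 : ℝ) : ℂ)‖ + 1) := by positivity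
    linarith
  have hC0 : 0 < C := by
    have : 0 < S a ^ 5 * (‖u a - S a + α / 4 * (((S a)⁻¹ ^ 2 : ℝ) : ℂ)‖ + 1) := by positivity
    linarith
  have d1 : ∀ y, a ≤ y → HasDerivAt (fun y => u y - S y + α / 4 * (((S y)⁻¹ ^ 2 : ℝ) : ℂ))
      (v y - ((S y)⁻¹ / 4 : ℝ) + α / 4 * ((-(1 / 2 : ℝ) * (S y)⁻¹ ^ 4 : ℝ) : ℂ)) y := fun y hy => by
    refine (((h1 y (by linarith)).fun_sub (dS y hy).ofReal_comp).fun_add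
      ((dq 2 y hy).ofReal_comp.const_mul (α / 4))).congr_deriv ?_
    norm_num
  have d2 : ∀ y, a ≤ y → HasDerivAt (fun y => v y - ((S y)⁻¹ / 4 : ℝ) +
        α / 4 * ((-(1 / 2 : ℝ) * (S y)⁻¹ ^ 4 : ℝ) : ℂ))
      (2 * u y ^ 3 - y * u y + α + ((1 / 16 * (S y)⁻¹ ^ 3 : ℝ) : ℂ) +
        α / 4 * ((1 / 2 * (S y)⁻¹ ^ 6 : ℝ) : ℂ)) y := fun y hy => by
    have := dq 1 y hy
    simp only [pow_one] at this
    refine (((h2 y (by linarith)).fun_sub (this.div_const 4).ofReal_comp).fun_add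
      (((dq 4 y hy).const_mul (-(1 / 2 : ℝ))).ofReal_comp.const_mul (α / 4))).congr_deriv ?_
    push_cast; ring
  -- Equation for the difference from the two-term approximation: `Q` is the zeroth order coefficient,
  -- `ρ` the residual.
  have hid : ∀ y, a ≤ y → ∃ Q ρ : ℂ, 2 * S y ^ 2 ≤ Q.re ∧ ‖Q‖ ≤ 10 * S y ^ 2 ∧
      ‖ρ‖ ≤ R * (S y)⁻¹ ^ 3 ∧ 2 * u y ^ 3 - y * u y + α + ((1 / 16 * (S y)⁻¹ ^ 3 : ℝ) : ℂ) +
        α / 4 * ((1 / 2 * (S y)⁻¹ ^ 6 : ℝ) : ℂ) =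
        Q * (u y - S y + α / 4 * (((S y)⁻¹ ^ 2 : ℝ) : ℂ)) + ρ := by
    intro y hy
    obtain ⟨s1, s2, s3, s4, s5⟩ := S2 y hy
    have hc := minus_coeff (by linarith : 0 < S y) (h3 y (by linarith)) (hβ y hy)
    refine ⟨_, ((1 / 16 + 3 / 8 * α ^ 2) * (((S y)⁻¹ ^ 3 : ℝ) : ℂ) +
      (α / 8 - α ^ 3 / 32) * (((S y)⁻¹ ^ 6 : ℝ) : ℂ)), hc.1, hc.2, ?_, ?_⟩
    · refine (norm_add_le _ _).trans ?_
      rw [norm_mul, norm_mul, Complex.norm_real, Real.norm_of_nonneg (by positivity),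
        Complex.norm_real, Real.norm_of_nonneg (by positivity)]
      have b1 : ‖(1 / 16 + 3 / 8 * α ^ 2 : ℂ)‖ ≤ 1 + ‖α‖ ^ 2 := by
        refine (norm_add_le _ _).trans ?_
        rw [norm_mul, norm_pow]
        have := sq_nonneg ‖α‖
        norm_num
        linarith
      have b2 : ‖(α / 8 - α ^ 3 / 32 : ℂ)‖ ≤ ‖α‖ + ‖α‖ ^ 3 := by
        refine (norm_sub_le _ _).trans ?_
        rw [norm_div, norm_div, norm_pow]
        have := pow_nonneg hα0 3
        norm_num
        linarith
      have b3 : (S y)⁻¹ ^ 6 ≤ (S y)⁻¹ ^ 3 :=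
        pow_le_pow_of_le_one s3.le (by linarith) (by norm_num)
      rw [hR]
      have c1 := mul_le_mul_of_nonneg_right b1 (pow_nonneg s3.le 3)
      have c2 := mul_le_mul b2 b3 (pow_nonneg s3.le 6) (by positivity)
      linarith
    · have s5' : (S y : ℂ) * (((S y)⁻¹ : ℝ) : ℂ) = 1 := by exact_mod_cast s5
      have s2' : 2 * (S y : ℂ) ^ 2 = y := by exact_mod_cast s2
      rw [← s2']
      generalize (S y)⁻¹ = q at *
      generalize S y = s at *
      push_cast
      linear_combination (-α * ((s : ℂ) * q + 1) + 3 / 8 * α ^ 2 * (q : ℂ) ^ 3) * s5'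
  have key : ∀ y, a ≤ y → ‖u y - S y + α / 4 * (((S y)⁻¹ ^ 2 : ℝ) : ℂ)‖ ≤ C * (S y)⁻¹ ^ 5 := by
    intro x hx
    have hx0 : 0 < x := by linarith
    have hlim : Tendsto (fun b : ℝ => C * (S x)⁻¹ ^ 5 + (Real.sqrt (b / 2))⁻¹ * x) atTop
        (𝓝 (C * (S x)⁻¹ ^ 5 + 0 * x)) :=
      ((tendsto_inv_atTop_zero.comp (Real.tendsto_sqrt_atTop.comp
        (tendsto_id.atTop_div_const two_pos))).mul_const x).const_add _
    rw [zero_mul, add_zero] at hlim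
    refine ge_of_tendsto hlim ?_
    filter_upwards [eventually_ge_atTop x] with b hb
    have hba : a ≤ b := by linarith
    obtain ⟨b1, b2, b3, b4, b5⟩ := S2 b hba
    rw [hSy]
    obtain ⟨ϵ, hϵ⟩ : ∃ ϵ, ϵ = (S b)⁻¹ := ⟨_, rfl⟩
    rw [← hϵ] at b3 b4 b5 ⊢
    have main := barrier_two (a := a) (b := b)
      (E := fun x => C * (S x)⁻¹ ^ 5 + ϵ * x)
      (E1 := fun x => C * (-(5 / 4 : ℝ) * (S x)⁻¹ ^ 7) + ϵ)
      (E2 := fun x => C * (35 / 16 * (S x)⁻¹ ^ 9))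
      (fun x hx => d1 x hx.1) (fun x hx => d2 x hx.1)
      (fun x hx => (((dq 5 x hx.1).const_mul C).fun_add
          ((hasDerivAt_id x).const_mul ϵ)).congr_deriv (by push_cast; ring))
      (fun x hx => ((((dq 7 x hx.1).const_mul (-(5 / 4 : ℝ))).const_mul C).add_const
          ϵ).congr_deriv (by push_cast; ring))
      (fun x hx => by
        have := (S2 x hx.1).2.2.1
        have : 0 < x := by linarith [hx.1]
        positivity)
      (by
        obtain ⟨a1, a2, a3, a4, a5⟩ := S2 a le_rfl
        have e1 : ‖u a - S a + α / 4 * (((S a)⁻¹ ^ 2 : ℝ) : ℂ)‖ + 1 ≤ C * (S a)⁻¹ ^ 5 := by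
          rw [inv_pow _ 5, ← div_eq_mul_inv, le_div_iff₀ (by positivity), hC]
          linarith
        have : 0 < ϵ * a := mul_pos b3 (by linarith)
        show ‖u a - S a + α / 4 * (((S a)⁻¹ ^ 2 : ℝ) : ℂ)‖ < _
        linarith)
      (by
        show ‖u b - S b + α / 4 * (((S b)⁻¹ ^ 2 : ℝ) : ℂ)‖ < C * (S b)⁻¹ ^ 5 + ϵ * b
        have t1 := h3 b (by linarith)
        have t2 := hβ b hba
        rw [sub_sub_cancel_left, norm_neg] at t2
        have e1 : ϵ * b = 2 * S b := by
          linear_combination 2 * S b * b5 - ϵ * b2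
        have := norm_add_le (u b - S b) (α / 4 * (((S b)⁻¹ ^ 2 : ℝ) : ℂ))
        have : 0 < C * (S b)⁻¹ ^ 5 := by rw [← hϵ]; positivity
        rw [e1]
        linarith)
      (fun x hx hE => by
        have hxa : a ≤ x := hx.1.le
        obtain ⟨s1, s2, s3, s4, s5⟩ := S2 x hxa
        obtain ⟨Q, ρ, hQ, -, hρ, e⟩ := hid x hxa
        rw [e]
        have hx0 : 0 < x := by linarith
        refine barrier_alg (q := 2 * S x ^ 2) (r := R * (S x)⁻¹ ^ 3) (by positivity) hE hQ
          (by positivity) hρ ?_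
        generalize (S x)⁻¹ = q at *
        generalize S x = s at *
        have e1 : 2 * s ^ 2 * (C * q ^ 5 + ϵ * x) = 2 * C * q ^ 3 + 2 * s ^ 2 * (ϵ * x) := by
          linear_combination (2 * C * q ^ 3 * (s * q + 1)) * s5
        rw [e1]
        have e3 : q ^ 9 ≤ (1 / 2) ^ 6 * q ^ 3 := by
          rw [show q ^ 9 = q ^ 6 * q ^ 3 by ring]; gcongr
        have e4 : 0 < 2 * s ^ 2 * (ϵ * x) := by
          have : 0 < s := by linarith
          positivity
        have e6 := mul_le_mul_of_nonneg_right hCR (pow_nonneg s3.le 3)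
        have e7 := mul_le_mul_of_nonneg_left e3 hC0.le
        have e8 : 0 ≤ C * q ^ 3 := by positivity
        linarith)
    exact (main x ⟨hx, hb⟩).le
  have key3 : ∀ y, a < y → ‖v y - ((S y)⁻¹ / 4 : ℝ)‖ ≤ (12 * C + R + ‖α‖) * (S y)⁻¹ ^ 3 := by
    intro y hy
    obtain ⟨s1, s2, s3, s4, s5⟩ := S2 y hy.le
    have hmono : ∀ x, y ≤ x → (S x)⁻¹ ≤ (S y)⁻¹ := fun x hx => by
      have : S y ≤ S x := by rw [hS]; exact Real.sqrt_le_sqrt (by linarith)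
      have : 0 < S y := by linarith
      gcongr
    have := landau_ineq (x := y) (h := 1) (A := C * (S y)⁻¹ ^ 5)
      (B := (10 * C + R) * (S y)⁻¹ ^ 3) one_pos (fun x hx => d1 x (by linarith [hx.1]))
      (fun x hx => d2 x (by linarith [hx.1]))
      (fun x hx => by
        have hxa : a ≤ x := by linarith [hx.1]
        obtain ⟨x1, x2, x3, x4, x5⟩ := S2 x hxa
        refine (key x hxa).trans ?_
        have := hmono x hx.1
        gcongr)
      (fun x hx => by
        have hxa : a ≤ x := by linarith [hx.1]
        obtain ⟨x1, x2, x3, x4, x5⟩ := S2 x hxa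
        obtain ⟨Q, ρ, -, hQ, hρ, e⟩ := hid x hxa
        rw [e]
        have c0 := hmono x hx.1
        have c1 : (S x)⁻¹ ^ 3 ≤ (S y)⁻¹ ^ 3 := by gcongr
        have c2 := key x hxa
        refine (norm_add_le _ _).trans ?_
        rw [norm_mul]
        have c3 := mul_le_mul hQ c2 (norm_nonneg _) (by positivity)
        have c4 : 10 * S x ^ 2 * (C * (S x)⁻¹ ^ 5) = 10 * C * (S x)⁻¹ ^ 3 := by
          linear_combination (10 * C * (S x)⁻¹ ^ 3 * (S x * (S x)⁻¹ + 1)) * x5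
        have c5 : (10 * C + R) * (S x)⁻¹ ^ 3 ≤ (10 * C + R) * (S y)⁻¹ ^ 3 :=
          mul_le_mul_of_nonneg_left c1 (by linarith)
        linarith)
    have e := norm_sub_le (v y - ((S y)⁻¹ / 4 : ℝ) + α / 4 * ((-(1 / 2 : ℝ) * (S y)⁻¹ ^ 4 : ℝ) : ℂ))
      (α / 4 * ((-(1 / 2 : ℝ) * (S y)⁻¹ ^ 4 : ℝ) : ℂ))
    rw [add_sub_cancel_right] at e
    have f : ‖α / 4 * ((-(1 / 2 : ℝ) * (S y)⁻¹ ^ 4 : ℝ) : ℂ)‖ ≤ ‖α‖ * (S y)⁻¹ ^ 3 := by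
      rw [norm_mul, norm_div, Complex.norm_ofNat, Complex.norm_real, Real.norm_eq_abs, abs_mul,
        abs_of_nonneg (by positivity : 0 ≤ (S y)⁻¹ ^ 4)]
      have : (S y)⁻¹ ^ 4 ≤ (S y)⁻¹ ^ 3 :=
        pow_le_pow_of_le_one s3.le (by linarith) (by norm_num)
      have := mul_le_mul_of_nonneg_left this hα0
      have : 0 ≤ ‖α‖ * (S y)⁻¹ ^ 4 := by positivity
      rw [show |-(1 / 2 : ℝ)| = 1 / 2 by norm_num]
      linarith
    have g : (S y)⁻¹ ^ 5 ≤ (S y)⁻¹ ^ 3 :=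
      pow_le_pow_of_le_one s3.le (by linarith) (by norm_num)
    have := mul_le_mul_of_nonneg_left g hC0.le
    linarith
  refine ⟨a, 12 * C + R + ‖α‖, haM.le, by positivity, fun y hy => ⟨?_, key3 y hy⟩⟩
  have hk := key y hy.le
  obtain ⟨s1, s2, s3, s4, s5⟩ := S2 y hy.le
  have e : α / (2 * (y : ℂ)) = α / 4 * (((S y)⁻¹ ^ 2 : ℝ) : ℂ) := by
    have hs : (S y : ℂ) ≠ 0 := by
      have : S y ≠ 0 := by linarith
      exact_mod_cast this
    have s2c : (y : ℂ) = 2 * (S y : ℂ) ^ 2 := by exact_mod_cast s2.symm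
    rw [s2c]; push_cast; field_simp; norm_num
  rw [e]
  refine hk.trans ?_
  gcongr
  linarith

/-! ### Analyticity of solutions -/

/-- A power series with geometrically bounded coefficients defines a holomorphic function near `0`
that may be differentiated termwise. -/
theorem pseries_deriv {a : ℕ → ℂ} {A R : ℝ} (hR : 0 < R) (ha : ∀ j, ‖a j‖ ≤ A * R ^ j) :
    DifferentiableOn ℂ (fun z => ∑' j, a j * z ^ j) (Metric.ball 0 (1 / (2 * R))) ∧
    ∀ z ∈ Metric.ball (0 : ℂ) (1 / (2 * R)), (Summable fun j => ‖a j * z ^ j‖) ∧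
      HasSum (fun j : ℕ => ((j : ℂ) + 1) * a (j + 1) * z ^ j)
        (deriv (fun z => ∑' j, a j * z ^ j) z) := by
  have hs : Summable (fun j : ℕ => A * (1 / 2 : ℝ) ^ j) :=
    (summable_geometric_of_lt_one (by norm_num) (by norm_num)).mul_left A
  have hd : ∀ j : ℕ, DifferentiableOn ℂ (fun z => a j * z ^ j) (Metric.ball 0 (1 / (2 * R))) :=
    fun j => by fun_prop
  have hb : ∀ (j : ℕ), ∀ z ∈ Metric.ball (0 : ℂ) (1 / (2 * R)),
      ‖a j * z ^ j‖ ≤ A * (1 / 2 : ℝ) ^ j := by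
    intro j z hz
    rw [mem_ball_zero_iff] at hz
    have h1 : R * ‖z‖ ≤ 1 / 2 := by
      have := mul_le_mul_of_nonneg_left hz.le hR.le
      have e : R * (1 / (2 * R)) = 1 / 2 := by field_simp
      linarith
    have hA : 0 ≤ A := by simpa using (norm_nonneg _).trans (ha 0)
    rw [norm_mul, norm_pow]
    calc ‖a j‖ * ‖z‖ ^ j ≤ A * R ^ j * ‖z‖ ^ j := by gcongr; exact ha j
      _ = A * (R * ‖z‖) ^ j := by ring
      _ ≤ _ := by gcongr
  refine ⟨Complex.differentiableOn_tsum_of_summable_norm hs hd Metric.isOpen_ball hb,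
    fun z hz => ⟨.of_nonneg_of_le (fun _ => norm_nonneg _) (fun j => hb j z hz) hs, ?_⟩⟩
  have := Complex.hasSum_deriv_of_summable_norm hs hd Metric.isOpen_ball hb hz
  rw [← hasSum_nat_add_iff' 1] at this
  simp only [Finset.range_one, Finset.sum_singleton, pow_zero, mul_one, deriv_const',
    sub_zero] at this
  refine this.congr_fun fun j => ?_
  have := ((hasDerivAt_pow (j + 1) z).const_mul (a (j + 1))).deriv
  rw [this]
  push_cast [Nat.add_sub_cancel]
  ring

/-- Existence of a sequence satisfying a recursion in which each term depends on all the previous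
ones. -/
theorem exists_seq_recursion {β : Type*} (p : β) (G : ℕ → (ℕ → β) → β)
    (hG : ∀ n f g, (∀ k ≤ n, f k = g k) → G n f = G n g) :
    ∃ f : ℕ → β, f 0 = p ∧ ∀ n, f (n + 1) = G n f := by
  obtain ⟨g, hg⟩ : ∃ g : ℕ → ℕ → β, g = fun n => Nat.rec (fun _ => p)
    (fun n gn => Function.update gn (n + 1) (G n gn)) n := ⟨_, rfl⟩
  have g0 : g 0 = fun _ => p := by subst hg; rfl
  have gs : ∀ n, g (n + 1) = Function.update (g n) (n + 1) (G n (g n)) := fun n => by subst hg; rfl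
  have hst : ∀ m k, g (k + m) k = g k k := by
    intro m
    induction m with
    | zero => intro k; rfl
    | succ m ih =>
      intro k
      rw [← add_assoc, gs, Function.update_of_ne (by omega), ih]
  refine ⟨fun n => g n n, congrFun g0 0, fun n => ?_⟩
  show g (n + 1) (n + 1) = _
  rw [gs, Function.update_self]
  refine hG n _ _ fun k hk => ?_
  obtain ⟨m, rfl⟩ := Nat.exists_eq_add_of_le hk
  exact hst m k

/-- Geometric bound for Cauchy products. -/
theorem norm_conv_le {a b : ℕ → ℂ} {A R : ℝ} {n : ℕ} (ha : ∀ j ≤ n, ‖a j‖ ≤ A * R ^ j)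
    (hb : ∀ j ≤ n, ‖b j‖ ≤ A * R ^ j) (hA : 0 ≤ A) (hR : 0 ≤ R) :
    ‖∑ k ∈ Finset.range (n + 1), a k * b (n - k)‖ ≤ (n + 1) * (A ^ 2 * R ^ n) := by
  refine (norm_sum_le _ _).trans ?_
  have : ∀ k ∈ Finset.range (n + 1), ‖a k * b (n - k)‖ ≤ A ^ 2 * R ^ n := by
    intro k hk
    have hk' : k ≤ n := by simpa [Nat.lt_succ_iff] using hk
    rw [norm_mul]
    calc ‖a k‖ * ‖b (n - k)‖ ≤ (A * R ^ k) * (A * R ^ (n - k)) :=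
          mul_le_mul (ha k hk') (hb _ (Nat.sub_le _ _)) (norm_nonneg _) (by positivity)
      _ = A ^ 2 * (R ^ k * R ^ (n - k)) := by ring
      _ = _ := by rw [← pow_add, Nat.add_sub_cancel' hk']
  refine (Finset.sum_le_sum this).trans ?_
  rw [Finset.sum_const, Finset.card_range, nsmul_eq_mul]
  push_cast
  exact le_rfl

/-- The system `u' = y - u² - x/2`, `y' = 2uy + c` has a holomorphic local solution through every
initial value. The power series coefficients are bounded by `A R^j` with `R` large. -/
theorem exists_holomorphic_sol (c a0 b0 : ℂ) (x0 : ℝ) :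
    ∃ (F G : ℂ → ℂ) (r : ℝ), 0 < r ∧ DifferentiableOn ℂ F (Metric.ball 0 r) ∧
      DifferentiableOn ℂ G (Metric.ball 0 r) ∧ F 0 = a0 ∧ G 0 = b0 ∧
      ∀ z ∈ Metric.ball (0 : ℂ) r, deriv F z = G z - F z ^ 2 - (x0 + z) / 2 ∧
        deriv G z = 2 * F z * G z + c := by
  obtain ⟨e, he⟩ : ∃ e : ℕ → ℂ, e = fun n => if n = 0 then (x0 / 2 : ℂ) else
    if n = 1 then 1 / 2 else 0 := ⟨_, rfl⟩
  obtain ⟨d, hd⟩ : ∃ d : ℕ → ℂ, d = fun n => if n = 0 then c else 0 := ⟨_, rfl⟩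
  obtain ⟨f, hf0, hf⟩ := exists_seq_recursion (β := ℂ × ℂ) (a0, b0)
    (fun n f => (((f n).2 - ∑ k ∈ Finset.range (n + 1), (f k).1 * (f (n - k)).1 - e n) / (n + 1),
      (2 * ∑ k ∈ Finset.range (n + 1), (f k).1 * (f (n - k)).2 + d n) / (n + 1)))
    (fun n f g h => by
      have h1 : ∀ k ∈ Finset.range (n + 1), f k = g k ∧ f (n - k) = g (n - k) := fun k hk =>
        ⟨h k (by simpa [Nat.lt_succ_iff] using hk), h _ (Nat.sub_le _ _)⟩
      have e1 : ∑ k ∈ Finset.range (n + 1), (f k).1 * (f (n - k)).1 =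
          ∑ k ∈ Finset.range (n + 1), (g k).1 * (g (n - k)).1 :=
        Finset.sum_congr rfl fun k hk => by rw [(h1 k hk).1, (h1 k hk).2]
      have e2 : ∑ k ∈ Finset.range (n + 1), (f k).1 * (f (n - k)).2 =
          ∑ k ∈ Finset.range (n + 1), (g k).1 * (g (n - k)).2 :=
        Finset.sum_congr rfl fun k hk => by rw [(h1 k hk).1, (h1 k hk).2]
      rw [h n le_rfl, e1, e2])
  obtain ⟨a, ha⟩ : ∃ a : ℕ → ℂ, a = fun n => (f n).1 := ⟨_, rfl⟩
  obtain ⟨b, hb⟩ : ∃ b : ℕ → ℂ, b = fun n => (f n).2 := ⟨_, rfl⟩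
  have hn1 : ∀ n : ℕ, ((n : ℂ) + 1) ≠ 0 := fun n => by exact_mod_cast n.succ_ne_zero
  have ra : ∀ n : ℕ, ((n : ℂ) + 1) * a (n + 1) =
      b n - ∑ k ∈ Finset.range (n + 1), a k * a (n - k) - e n := fun n => by
    rw [ha, hb]; simp only; rw [hf, mul_div_cancel₀ _ (hn1 n)]
  have rb : ∀ n : ℕ, ((n : ℂ) + 1) * b (n + 1) =
      2 * ∑ k ∈ Finset.range (n + 1), a k * b (n - k) + d n := fun n => by
    rw [ha, hb]; simp only; rw [hf, mul_div_cancel₀ _ (hn1 n)]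
  obtain ⟨A, hA⟩ : ∃ A : ℝ, A = 1 + ‖a0‖ + ‖b0‖ := ⟨_, rfl⟩
  obtain ⟨R, hR⟩ : ∃ R : ℝ, R = 2 + 2 * A + |x0| + ‖c‖ := ⟨_, rfl⟩
  have hA1 : 1 ≤ A := by have := norm_nonneg a0; have := norm_nonneg b0; linarith
  have hR1 : 1 ≤ R := by have := abs_nonneg x0; have := norm_nonneg c; linarith
  have hR0 : 0 < R := by linarith
  have key1 : A + A ^ 2 + |x0| + 1 ≤ A * R := by
    have := mul_nonneg (by linarith : 0 ≤ A - 1) (abs_nonneg x0)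
    have := mul_nonneg (by linarith : 0 ≤ A) (norm_nonneg c)
    rw [hR]; nlinarith
  have key2 : 2 * A ^ 2 + ‖c‖ ≤ A * R := by
    have := mul_nonneg (by linarith : 0 ≤ A - 1) (norm_nonneg c)
    have := mul_nonneg (by linarith : 0 ≤ A) (abs_nonneg x0)
    rw [hR]; nlinarith
  -- The majorant `A R^j` is reproduced by the recursion since the Cauchy product gains a factor
  -- `n + 1`, which the division by `n + 1` compensates.
  have hbd : ∀ n, ∀ j ≤ n, ‖a j‖ ≤ A * R ^ j ∧ ‖b j‖ ≤ A * R ^ j := by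
    intro n
    induction n with
    | zero =>
      intro j hj
      obtain rfl : j = 0 := by omega
      rw [ha, hb]; simp only; rw [hf0, pow_zero, mul_one, hA]
      have := norm_nonneg a0; have := norm_nonneg b0
      constructor <;> linarith
    | succ n ih =>
      intro j hj
      rcases Nat.lt_or_ge j (n + 1) with hj' | hj'
      · exact ih j (by omega)
      · obtain rfl : j = n + 1 := by omega
        have hRn : 1 ≤ R ^ n := one_le_pow₀ hR1
        have hn0 : (0 : ℝ) < n + 1 := by positivity
        have hnn : ‖((n : ℂ) + 1)‖ = (n : ℝ) + 1 := by
          rw [← Nat.cast_succ, Complex.norm_natCast]; push_cast; rfl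
        have he1 : ‖e n‖ ≤ |x0| + 1 := by
          rw [he]; simp only
          have := abs_nonneg x0
          split_ifs
          · rw [norm_div, Complex.norm_real, Complex.norm_ofNat, Real.norm_eq_abs]; linarith
          · norm_num; linarith
          · rw [norm_zero]; linarith
        have hd1 : ‖d n‖ ≤ ‖c‖ := by
          rw [hd]; simp only
          split_ifs
          · exact le_rfl
          · rw [norm_zero]; exact norm_nonneg c
        have hc0 := norm_nonneg c
        have hx0 := abs_nonneg x0
        constructor
        · refine le_of_mul_le_mul_left ?_ hn0
          rw [← hnn, ← norm_mul, ra, hnn]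
          refine (norm_sub_le _ _).trans ((add_le_add_left (norm_sub_le _ _) _).trans ?_)
          have c1 := norm_conv_le (fun j hj => (ih j hj).1) (fun j hj => (ih j hj).1)
            (by linarith) hR0.le
          have c2 := (ih n le_rfl).2
          calc _ ≤ A * R ^ n + (n + 1) * (A ^ 2 * R ^ n) + (|x0| + 1) := by linarith
            _ ≤ (n + 1) * (A * R ^ n) + (n + 1) * (A ^ 2 * R ^ n) +
                (n + 1) * ((|x0| + 1) * R ^ n) := by
              have hn1 : (1 : ℝ) ≤ n + 1 := by have : (0 : ℝ) ≤ n := n.cast_nonneg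
                                               linarith
              have hAR : 0 ≤ A * R ^ n := by positivity
              refine add_le_add (add_le_add_left (le_mul_of_one_le_left hAR hn1) _) ?_
              · have := le_mul_of_one_le_right (by positivity : 0 ≤ |x0| + 1) hRn
                exact this.trans (le_mul_of_one_le_left (by positivity) hn1)
            _ = (n + 1) * ((A + A ^ 2 + |x0| + 1) * R ^ n) := by ring
            _ ≤ (n + 1) * ((A * R) * R ^ n) := by gcongr
            _ = _ := by ring
        · refine le_of_mul_le_mul_left ?_ hn0
          rw [← hnn, ← norm_mul, rb, hnn]
          refine (norm_add_le _ _).trans ?_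
          have c1 := norm_conv_le (fun j hj => (ih j hj).1) (fun j hj => (ih j hj).2)
            (by linarith) hR0.le
          rw [norm_mul, Complex.norm_ofNat]
          calc _ ≤ 2 * ((n + 1) * (A ^ 2 * R ^ n)) + ‖c‖ := by linarith
            _ ≤ 2 * ((n + 1) * (A ^ 2 * R ^ n)) + (n + 1) * (‖c‖ * R ^ n) := by
              have hn1 : (1 : ℝ) ≤ n + 1 := by have : (0 : ℝ) ≤ n := n.cast_nonneg
                                               linarith
              gcongr
              have := le_mul_of_one_le_right hc0 hRn
              exact this.trans (le_mul_of_one_le_left (by positivity) hn1)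
            _ = (n + 1) * ((2 * A ^ 2 + ‖c‖) * R ^ n) := by ring
            _ ≤ (n + 1) * ((A * R) * R ^ n) := by gcongr
            _ = _ := by ring
  obtain ⟨dF, hF⟩ := pseries_deriv hR0 (fun j => (hbd j j le_rfl).1)
  obtain ⟨dG, hG⟩ := pseries_deriv hR0 (fun j => (hbd j j le_rfl).2)
  have hz0 : ∀ a : ℕ → ℂ, ∑' j, a j * (0 : ℂ) ^ j = a 0 := fun a => by
    rw [tsum_eq_single 0 (fun j hj => by rw [zero_pow hj, mul_zero])]; simp
  refine ⟨_, _, _, by positivity, dF, dG, ?_, ?_, fun z hz => ?_⟩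
  · show ∑' j, a j * (0 : ℂ) ^ j = a0
    rw [hz0, ha]; simp only; rw [hf0]
  · show ∑' j, b j * (0 : ℂ) ^ j = b0
    rw [hz0, hb]; simp only; rw [hf0]
  · obtain ⟨sF, hF'⟩ := hF z hz
    obtain ⟨sG, hG'⟩ := hG z hz
    have hconv : ∀ p q : ℕ → ℂ, ∀ n, ∑ k ∈ Finset.range (n + 1), p k * z ^ k * (q (n - k) * z ^ (n - k))
        = (∑ k ∈ Finset.range (n + 1), p k * q (n - k)) * z ^ n := fun p q n => by
      rw [Finset.sum_mul]
      refine Finset.sum_congr rfl fun k hk => ?_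
      have hk' : k ≤ n := by simpa [Nat.lt_succ_iff] using hk
      have : z ^ n = z ^ k * z ^ (n - k) := by rw [← pow_add, Nat.add_sub_cancel' hk']
      rw [this]; ring
    have hFF := hasSum_sum_range_mul_of_summable_norm sF sF
    have hFG := hasSum_sum_range_mul_of_summable_norm sF sG
    simp only [hconv] at hFF hFG
    have hee : HasSum (fun n => e n * z ^ n) ((x0 + z) / 2) := by
      have : HasSum (fun n => e n * z ^ n) (∑ n ∈ Finset.range 2, e n * z ^ n) :=
        hasSum_sum_of_ne_finset_zero
        (fun n hn => by
          have : ¬ n < 2 := by simpa using hn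
          rw [he]; simp only
          rw [if_neg (by omega), if_neg (by omega), zero_mul])
      convert this using 1
      rw [Finset.sum_range_succ, Finset.sum_range_one, he]
      simp; ring
    have hdd : HasSum (fun n => d n * z ^ n) c := by
      have : HasSum (fun n => d n * z ^ n) (∑ n ∈ Finset.range 1, d n * z ^ n) :=
        hasSum_sum_of_ne_finset_zero
        (fun n hn => by
          have : ¬ n < 1 := by simpa using hn
          rw [hd]; simp only
          rw [if_neg (by omega), zero_mul])
      convert this using 1
      rw [Finset.sum_range_one, hd]
      simp
    constructor
    · have h2 := (sG.of_norm.hasSum.sub hFF).sub hee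
      refine hF'.unique ?_
      rw [← sq] at h2
      refine h2.congr_fun fun n => ?_
      rw [ra]; ring
    · have h2 := (hFG.mul_left 2).add hdd
      refine hG'.unique ?_
      rw [← mul_assoc] at h2
      refine h2.congr_fun fun n => ?_
      rw [rb]; ring

/-- Real solutions of `u' = y - u² - x/2`, `y' = 2uy + c` are real-analytic. -/
theorem analyticAt_of_ode {c : ℂ} {u y : ℝ → ℂ}
    (hu : ∀ x : ℝ, HasDerivAt u (y x - u x ^ 2 - x / 2) x)
    (hy : ∀ x : ℝ, HasDerivAt y (2 * u x * y x + c) x) (x0 : ℝ) :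
    AnalyticAt ℝ u x0 ∧ AnalyticAt ℝ y x0 := by
  obtain ⟨F, G, r, hr, dF, dG, F0, G0, hode⟩ := exists_holomorphic_sol c (u x0) (y x0) x0
  have hm : ∀ᶠ x : ℝ in 𝓝 x0, ((x - x0 : ℝ) : ℂ) ∈ Metric.ball (0 : ℂ) r := by
    have : ContinuousAt (fun x : ℝ => ((x - x0 : ℝ) : ℂ)) x0 := by fun_prop
    refine this.eventually (Metric.isOpen_ball.mem_nhds ?_)
    simpa using hr
  have an : ∀ H : ℂ → ℂ, DifferentiableOn ℂ H (Metric.ball 0 r) →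
      AnalyticAt ℝ (fun x : ℝ => H ((x - x0 : ℝ) : ℂ)) x0 := fun H hH => by
    have h1 : AnalyticAt ℂ H (((x0 - x0 : ℝ) : ℂ)) := by
      apply hH.analyticAt (Metric.isOpen_ball.mem_nhds _)
      simpa using hr
    have h2 : AnalyticAt ℝ (fun x : ℝ => ((x - x0 : ℝ) : ℂ)) x0 :=
      (Complex.ofRealCLM.analyticAt _).comp (analyticAt_id.sub analyticAt_const)
    exact AnalyticAt.fun_comp (f := fun x : ℝ => ((x - x0 : ℝ) : ℂ)) h1.restrictScalars h2
  have dv : ∀ H : ℂ → ℂ, DifferentiableOn ℂ H (Metric.ball 0 r) → ∀ x : ℝ,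
      ((x - x0 : ℝ) : ℂ) ∈ Metric.ball (0 : ℂ) r →
      HasDerivAt (fun x : ℝ => H ((x - x0 : ℝ) : ℂ)) (deriv H ((x - x0 : ℝ) : ℂ)) x :=
    fun H hH x hx => by
    have h1 := (hH.differentiableAt (Metric.isOpen_ball.mem_nhds hx)).hasDerivAt
    have h2 : HasDerivAt (fun x : ℝ => ((x - x0 : ℝ) : ℂ)) ((1 : ℝ) : ℂ) x :=
      ((hasDerivAt_id x).sub_const x0).ofReal_comp
    exact (h1.comp x h2).congr_deriv (by rw [Complex.ofReal_one, mul_one])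
  obtain ⟨B, hB⟩ : ∃ B : ℝ, B = ‖(u x0, y x0)‖ + 1 := ⟨_, rfl⟩
  have hB0 : 0 < B := by have := norm_nonneg (u x0, y x0); linarith
  obtain ⟨K, hK⟩ : ∃ K : NNReal, (K : ℝ) = 1 + 4 * B := ⟨⟨1 + 4 * B, by linarith⟩, rfl⟩
  have hev : ∀ f : ℝ → ℂ × ℂ, ContinuousAt f x0 → f x0 = (u x0, y x0) →
      ∀ᶠ x in 𝓝 x0, f x ∈ Metric.ball (0 : ℂ × ℂ) B := fun f hf h0 => by
    refine hf.eventually (Metric.isOpen_ball.mem_nhds ?_)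
    rw [h0, mem_ball_zero_iff, hB]; linarith
  -- The real solution agrees with the restriction of the holomorphic one, by uniqueness for locally
  -- Lipschitz systems.
  have huniq := ODE_solution_unique_of_eventually (K := K) (t₀ := x0)
    (v := fun (x : ℝ) (p : ℂ × ℂ) => (p.2 - p.1 ^ 2 - x / 2, 2 * p.1 * p.2 + c))
    (s := fun _ => Metric.ball (0 : ℂ × ℂ) B)
    (f := fun x => (u x, y x))
    (g := fun x : ℝ => (F ((x - x0 : ℝ) : ℂ), G ((x - x0 : ℝ) : ℂ)))
    (by
      refine .of_forall fun x => LipschitzOnWith.of_dist_le_mul fun p hp q hq => ?_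
      rw [mem_ball_zero_iff] at hp hq
      rw [hK, dist_eq_norm, dist_eq_norm]
      obtain ⟨p1, p2⟩ := p
      obtain ⟨q1, q2⟩ := q
      rw [Prod.norm_def, max_lt_iff] at hp hq
      simp only [Prod.mk_sub_mk]
      have m1 : ‖p1 - q1‖ ≤ ‖(p1 - q1, p2 - q2)‖ := norm_fst_le (p1 - q1, p2 - q2)
      have m2 : ‖p2 - q2‖ ≤ ‖(p1 - q1, p2 - q2)‖ := norm_snd_le (p1 - q1, p2 - q2)
      generalize ‖(p1 - q1, p2 - q2)‖ = d at *
      have hd0 : 0 ≤ d := (norm_nonneg _).trans m1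
      simp only at hp hq
      rw [Prod.norm_def]
      refine max_le ?_ ?_
      · show ‖p2 - p1 ^ 2 - (x : ℂ) / 2 - (q2 - q1 ^ 2 - (x : ℂ) / 2)‖ ≤ _
        rw [show p2 - p1 ^ 2 - (x : ℂ) / 2 - (q2 - q1 ^ 2 - (x : ℂ) / 2) =
          (p2 - q2) - (p1 + q1) * (p1 - q1) by ring]
        refine (norm_sub_le _ _).trans ?_
        rw [norm_mul]
        have := mul_le_mul ((norm_add_le p1 q1).trans (add_le_add hp.1.le hq.1.le)) m1
          (norm_nonneg _) (by linarith)
        nlinarith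
      · show ‖2 * p1 * p2 + c - (2 * q1 * q2 + c)‖ ≤ _
        rw [show 2 * p1 * p2 + c - (2 * q1 * q2 + c) =
          2 * p1 * (p2 - q2) + 2 * q2 * (p1 - q1) by ring]
        refine (norm_add_le _ _).trans ?_
        rw [norm_mul, norm_mul, norm_mul, norm_mul, Complex.norm_ofNat]
        have e1 := mul_le_mul hp.1.le m2 (norm_nonneg _) hB0.le
        have e2 := mul_le_mul hq.2.le m1 (norm_nonneg _) hB0.le
        nlinarith)
    (by
      filter_upwards [hev _ ((hu x0).continuousAt.prodMk (hy x0).continuousAt) rfl] with x hx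
      exact ⟨(hu x).prodMk (hy x), hx⟩)
    (by
      have h0 := hm.self_of_nhds
      filter_upwards [hm, hev _ ((dv F dF x0 h0).continuousAt.prodMk (dv G dG x0 h0).continuousAt)
        (by simp [F0, G0])] with x hx hx2
      refine ⟨((dv F dF x hx).prodMk (dv G dG x hx)).congr_deriv ?_, hx2⟩
      rw [(hode _ hx).1, (hode _ hx).2]
      push_cast
      simp)
    (by simp [F0, G0])
  constructor
  · exact (an F dF).congr (huniq.mono fun x hx => (congrArg Prod.fst hx).symm)
  · exact (an G dG).congr (huniq.mono fun x hx => (congrArg Prod.snd hx).symm)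

/-! ### Recurrences in `ν` and uniform convergence -/

/-- `Wt ν n t = -t r_n'(t)/r_n(t)`, for `r_n = D_{n,ν+1}/D_{n,ν}`. -/
noncomputable def Wt (ν : ℂ) (n : ℕ) (t : ℝ) : ℂ :=
  (t : ℂ) * (deriv (toeplitzD n ν) t / toeplitzD n ν t -
    deriv (toeplitzD n (ν + 1)) t / toeplitzD n (ν + 1) t)

/-- `Rt ν n t = D_{n,ν+2} D_{n,ν} / D_{n,ν+1}²`. -/
noncomputable def Rt (ν : ℂ) (n : ℕ) (t : ℝ) : ℂ :=
  toeplitzD n (ν + 1 + 1) t * toeplitzD n ν t / toeplitzD n (ν + 1) t ^ 2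

theorem WS_log (ν : ℂ) (n : ℕ) {t : ℝ} (ht : 0 < t) : WS ν n (Real.log t) = Wt ν n t := by
  rw [WS, Wt, Real.exp_log ht]

theorem one_sub_Rt (ν : ℂ) {n : ℕ} (t : ℝ) (h : toeplitzD (n + 1) (ν + 1) t ≠ 0) :
    1 - Rt ν (n + 1) t =
      toeplitzD (n + 2) (ν + 1) t * toeplitzD n (ν + 1) t / toeplitzD (n + 1) (ν + 1) t ^ 2 := by
  have := toeplitzD_P3 n (ν + 1) t
  rw [add_sub_cancel_right] at this
  rw [this, Rt]
  field_simp

/-- The first-order recurrence in `ν` for the logarithmic derivatives. -/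
theorem Wt_succ {ν : ℂ} {n : ℕ} {t : ℝ} (hn : 1 ≤ n) (ht : 0 < t) (h0 : toeplitzD n ν t ≠ 0)
    (h1 : toeplitzD n (ν + 1) t ≠ 0) (hR : Rt ν n t ≠ 0) :
    toeplitzD n (ν + 1 + 1) t ≠ 0 ∧
      Wt (ν + 1) n t = -Wt ν n t - 2 * (ν + 1) * (1 - Rt ν n t) / Rt ν n t := by
  obtain ⟨m, rfl⟩ : ∃ m, n = m + 1 := ⟨n - 1, by omega⟩
  have h2 : toeplitzD (m + 1) (ν + 1 + 1) t ≠ 0 := fun h => hR (by rw [Rt, h]; simp)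
  refine ⟨h2, ?_⟩
  have hC := toeplitzD_C' m (ν + 1) ht h1
  rw [add_sub_cancel_right] at hC
  have htc : (t : ℂ) ≠ 0 := by exact_mod_cast ht.ne'
  rw [one_sub_Rt ν t h1, Rt, Wt, Wt]
  have e : toeplitzD (m + 2) (ν + 1) t * toeplitzD m (ν + 1) t * (2 * (ν + 1)) =
      t * (deriv (toeplitzD (m + 1) (ν + 1 + 1)) t * toeplitzD (m + 1) ν t -
      toeplitzD (m + 1) (ν + 1 + 1) t * deriv (toeplitzD (m + 1) ν) t) := by
    rw [hC]; field_simp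
  generalize toeplitzD (m + 2) (ν + 1) t * toeplitzD m (ν + 1) t = X at *
  field_simp
  linear_combination toeplitzD (m + 1) (ν + 1) t * e

/-- The second recurrence in `ν`: it determines `R` for `ν + 1` from `R` for `ν` and `W` for `ν + 1`. -/
theorem Rt_mul {ν : ℂ} {n : ℕ} {t : ℝ} (hn : 1 ≤ n) (ht : 0 < t)
    (h1 : toeplitzD n (ν + 1) t ≠ 0) (h2 : toeplitzD n (ν + 1 + 1) t ≠ 0) :
    (t : ℂ) ^ 2 * (1 - Rt ν n t) * (1 - Rt (ν + 1) n t) = n ^ 2 - Wt (ν + 1) n t ^ 2 := by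
  obtain ⟨m, rfl⟩ : ∃ m, n = m + 1 := ⟨n - 1, by omega⟩
  have htc : (t : ℂ) ≠ 0 := by exact_mod_cast ht.ne'
  have hA := toeplitzD_Aminus m (ν + 1) ht
  have hB := toeplitzD_Aplus m (ν + 1) ht
  rw [one_sub_Rt ν t h1, one_sub_Rt (ν + 1) t h2]
  have e1 : toeplitzD (m + 2) (ν + 1 + 1) t * toeplitzD m (ν + 1) t =
      toeplitzD (m + 1) (ν + 1) t * toeplitzD (m + 1) (ν + 1 + 1) t / t *
        (((m + 1 : ℕ) : ℂ) + Wt (ν + 1) (m + 1) t) := by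
    rw [hA, Wt]; push_cast; field_simp; ring
  have e2 : toeplitzD (m + 2) (ν + 1) t * toeplitzD m (ν + 1 + 1) t =
      toeplitzD (m + 1) (ν + 1) t * toeplitzD (m + 1) (ν + 1 + 1) t / t *
        (((m + 1 : ℕ) : ℂ) - Wt (ν + 1) (m + 1) t) := by
    rw [hB, Wt]; push_cast; field_simp; ring
  have e3 : (t : ℂ) ^ 2 * (toeplitzD (m + 2) (ν + 1) t * toeplitzD m (ν + 1) t /
      toeplitzD (m + 1) (ν + 1) t ^ 2) * (toeplitzD (m + 2) (ν + 1 + 1) t *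
        toeplitzD m (ν + 1 + 1) t / toeplitzD (m + 1) (ν + 1 + 1) t ^ 2) =
      (t : ℂ) ^ 2 * ((toeplitzD (m + 2) (ν + 1 + 1) t * toeplitzD m (ν + 1) t) *
        (toeplitzD (m + 2) (ν + 1) t * toeplitzD m (ν + 1 + 1) t)) /
        (toeplitzD (m + 1) (ν + 1) t ^ 2 * toeplitzD (m + 1) (ν + 1 + 1) t ^ 2) := by
    field_simp
  rw [e3, e1, e2]
  field_simp
  ring

/-- `R` in terms of `W_n` and `η_n`, used where `η_n` is under control. -/
theorem Rt_base {ν : ℂ} {n : ℕ} {t : ℝ} (hn : 1 ≤ n) (ht : 0 < t)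
    (h0 : NZ ν n (Real.log t)) (h1 : NZ ν (n + 1) (Real.log t)) :
    1 - Rt ν n t = (n - Wt ν n t) / t * Complex.exp (etaS ν n (Real.log t)) := by
  obtain ⟨m, rfl⟩ : ∃ m, n = m + 1 := ⟨n - 1, by omega⟩
  have htc : (t : ℂ) ≠ 0 := by exact_mod_cast ht.ne'
  rw [exp_etaS h0 h1, fS]
  rw [NZ, Real.exp_log ht] at h0 h1
  rw [Real.exp_log ht, one_sub_Rt ν t h0.2]
  have hB := toeplitzD_Aplus m ν ht
  have e2 : toeplitzD (m + 2) ν t * toeplitzD m (ν + 1) t =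
      toeplitzD (m + 1) ν t * toeplitzD (m + 1) (ν + 1) t / t *
        (((m + 1 : ℕ) : ℂ) - Wt ν (m + 1) t) := by
    obtain ⟨h00, h01⟩ := h0
    rw [hB, Wt]; push_cast; field_simp; ring
  obtain ⟨h00, h01⟩ := h0
  obtain ⟨h10, h11⟩ := h1
  change toeplitzD (m + 2) ν t ≠ 0 at h10
  change toeplitzD (m + 2) (ν + 1) t ≠ 0 at h11
  have e3 : toeplitzD m (ν + 1) t = toeplitzD (m + 1) ν t * toeplitzD (m + 1) (ν + 1) t / t *
        (((m + 1 : ℕ) : ℂ) - Wt ν (m + 1) t) / toeplitzD (m + 2) ν t := by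
    rw [← e2]; field_simp
  rw [e3]
  show _ = (((m + 1 : ℕ) : ℂ) - Wt ν (m + 1) t) / t * (toeplitzD (m + 1) (ν + 1) t *
    toeplitzD (m + 2) ν t / (toeplitzD (m + 1) ν t * toeplitzD (m + 2) (ν + 1) t))⁻¹
  field_simp

/-- The scaling variable `ξ = 2^{2/3} n^{2/3} (t/n - 1)`. -/
noncomputable def xi (n : ℕ) (t : ℝ) : ℝ :=
  (2 : ℝ) ^ ((2 : ℝ) / 3) * (n : ℝ) ^ ((2 : ℝ) / 3) * (t / n - 1)

theorem rpow_two_thirds {n : ℕ} (hn : 1 ≤ n) : (n : ℝ) ^ ((2 : ℝ) / 3) = (eps n ^ 2)⁻¹ := by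
  have : (0 : ℝ) < n := by exact_mod_cast hn
  rw [eps, ← Real.rpow_natCast, ← Real.rpow_mul this.le, ← Real.rpow_neg this.le]
  norm_num

theorem div_eq_xi {n : ℕ} (hn : 1 ≤ n) (t : ℝ) : t / n = 1 + eps n ^ 2 * xi n t / lam := by
  have h1 := eps_pos hn
  have h2 := lam_pos
  rw [xi, rpow_two_thirds hn, ← lam]
  field_simp
  ring

/-- The filter of pairs `(n, t)` with `n → ∞` and scaling variable in `K`. -/
def scF (K : Set ℝ) : Filter (ℕ × ℝ) :=
  comap Prod.fst atTop ⊓ 𝓟 {p | 0 < p.2 ∧ xi p.1 p.2 ∈ K}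

theorem eventually_scF {K : Set ℝ} {P : ℕ × ℝ → Prop} :
    (∀ᶠ p in scF K, P p) ↔ ∃ N : ℕ, ∀ n, N ≤ n → ∀ t : ℝ, 0 < t → xi n t ∈ K → P (n, t) := by
  rw [scF, eventually_inf_principal, eventually_comap, eventually_atTop]
  constructor
  · rintro ⟨N, h⟩
    exact ⟨N, fun n hn t ht hx => h n hn (n, t) rfl ⟨ht, hx⟩⟩
  · rintro ⟨N, h⟩
    refine ⟨N, fun n hn p hp hx => ?_⟩
    obtain ⟨m, t⟩ := p
    obtain rfl : m = n := hp
    exact h m hn t hx.1 hx.2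

theorem scF_mem (K : Set ℝ) : ∀ᶠ p in scF K, 1 ≤ p.1 ∧ 0 < p.2 ∧ xi p.1 p.2 ∈ K :=
  eventually_scF.2 ⟨1, fun n hn t ht hx => ⟨hn, ht, hx⟩⟩

theorem scF_mono {K K' : Set ℝ} (h : K ⊆ K') : scF K ≤ scF K' :=
  inf_le_inf le_rfl (principal_mono.2 fun p hp => ⟨hp.1, h hp.2⟩)

theorem eps_scF (K : Set ℝ) : Tendsto (fun p : ℕ × ℝ => eps p.1) (scF K) (𝓝 0) :=
  (eps_tendsto.comp tendsto_comap).mono_left inf_le_left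

theorem eps_bigO_one (K : Set ℝ) :
    (fun p : ℕ × ℝ => eps p.1) =O[scF K] (fun _ => (1 : ℝ)) :=
  (eps_scF K).isBigO_one ℝ

/-- `F(n,t) = f(ξ) + O(n^{-1/3})` as `n → ∞`, uniformly for the scaling variable `ξ ∈ K`. -/
def Conv (K : Set ℝ) (F : ℕ × ℝ → ℂ) (f : ℝ → ℂ) : Prop :=
  (fun p => F p - f (xi p.1 p.2)) =O[scF K] (fun p => eps p.1)

theorem bounded_scF {K : Set ℝ} (hK : IsCompact K) {f : ℝ → ℂ} (hf : ContinuousOn f K) :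
    (fun p : ℕ × ℝ => f (xi p.1 p.2)) =O[scF K] (fun _ => (1 : ℝ)) := by
  obtain ⟨B, hB⟩ := hK.exists_bound_of_continuousOn hf
  refine .of_bound B ((scF_mem K).mono fun p hp => ?_)
  rw [norm_one, mul_one]
  exact hB _ hp.2.2

namespace Conv

variable {K : Set ℝ} {F G : ℕ × ℝ → ℂ} {f g : ℝ → ℂ}

theorem bigO_one (hK : IsCompact K) (hf : ContinuousOn f K) (h : Conv K F f) :
    F =O[scF K] (fun _ => (1 : ℝ)) := by
  have := (h.trans (eps_bigO_one K)).add (bounded_scF hK hf)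
  refine this.congr_left fun p => by ring

theorem add (h : Conv K F f) (h' : Conv K G g) :
    Conv K (fun p => F p + G p) (fun x => f x + g x) :=
  (Asymptotics.IsBigO.add h h').congr_left fun p => by ring

theorem neg (h : Conv K F f) : Conv K (fun p => -F p) (fun x => -f x) :=
  (Asymptotics.IsBigO.neg_left h).congr_left fun p => by ring

theorem sub (h : Conv K F f) (h' : Conv K G g) :
    Conv K (fun p => F p - G p) (fun x => f x - g x) :=
  (Asymptotics.IsBigO.sub h h').congr_left fun p => by ring

theorem mul (hK : IsCompact K) (hf : ContinuousOn f K) (hg : ContinuousOn g K) (h : Conv K F f)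
    (h' : Conv K G g) : Conv K (fun p => F p * G p) (fun x => f x * g x) := by
  have h1 := Asymptotics.IsBigO.mul h (h'.bigO_one hK hg)
  have h2 := Asymptotics.IsBigO.mul (bounded_scF hK hf) h'
  simp only [mul_one, one_mul] at h1 h2
  exact (h1.add h2).congr_left fun p => by ring

theorem const (c : ℂ) : Conv K (fun _ => c) (fun _ => c) := by
  simp only [Conv, sub_self]
  exact Asymptotics.isBigO_zero _ _

theorem id : Conv K (fun p => (xi p.1 p.2 : ℂ)) (fun x => (x : ℂ)) := by
  simp only [Conv, sub_self]
  exact Asymptotics.isBigO_zero _ _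

theorem comp_xi (f : ℝ → ℂ) : Conv K (fun p => f (xi p.1 p.2)) f := by
  simp only [Conv, sub_self]
  exact Asymptotics.isBigO_zero _ _

/-- Multiplication by a power of `n^{-1/3}` makes bounded quantities negligible. -/
theorem eps_mul (hF : F =O[scF K] (fun _ => (1 : ℝ))) :
    Conv K (fun p => (eps p.1 : ℂ) * F p) (fun _ => 0) := by
  have h1 : (fun p : ℕ × ℝ => (eps p.1 : ℂ)) =O[scF K] (fun p => eps p.1) :=
    .of_bound 1 (.of_forall fun p => by rw [Complex.norm_real, one_mul])
  have := h1.mul hF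
  simp only [mul_one] at this
  exact this.congr_left fun p => by ring

theorem congr (h : Conv K F f) (hFG : ∀ᶠ p in scF K, F p = G p) : Conv K G f :=
  h.congr' (hFG.mono fun p hp => by simp only [hp]) EventuallyEq.rfl

theorem congr_right (h : Conv K F f) (hfg : ∀ x ∈ K, f x = g x) : Conv K F g :=
  Asymptotics.IsBigO.congr' h ((scF_mem K).mono fun p hp => by simp only [hfg _ hp.2.2])
    EventuallyEq.rfl

theorem inv (hK : IsCompact K) (hf : ContinuousOn f K) (h0 : ∀ x ∈ K, f x ≠ 0) (h : Conv K F f) :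
    (∀ᶠ p in scF K, F p ≠ 0) ∧ Conv K (fun p => (F p)⁻¹) (fun x => (f x)⁻¹) := by
  obtain ⟨B, hB⟩ := hK.exists_bound_of_continuousOn (hf.inv₀ h0)
  obtain ⟨m, hm⟩ : ∃ m, m = |B| + 1 := ⟨_, rfl⟩
  have hm0 : 0 < m := by have := abs_nonneg B; linarith
  have hfl : ∀ x ∈ K, m⁻¹ ≤ ‖f x‖ := fun x hx => by
    have h1 := hB x hx
    rw [Pi.inv_apply, norm_inv] at h1
    have h2 : 0 < ‖f x‖ := norm_pos_iff.2 (h0 x hx)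
    rw [inv_le_comm₀ hm0 h2]
    have := le_abs_self B
    linarith
  have hsm : ∀ᶠ p in scF K, ‖F p - f (xi p.1 p.2)‖ < m⁻¹ / 2 := by
    have := h.trans_tendsto (eps_scF K)
    rw [tendsto_zero_iff_norm_tendsto_zero] at this
    exact this.eventually (gt_mem_nhds (by positivity))
  have hFl : ∀ᶠ p in scF K, m⁻¹ / 2 ≤ ‖F p‖ := by
    filter_upwards [hsm, scF_mem K] with p h1 h2
    have := hfl _ h2.2.2
    have := norm_sub_norm_le (f (xi p.1 p.2)) (F p)
    rw [norm_sub_rev] at this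
    linarith
  have hne : ∀ᶠ p in scF K, F p ≠ 0 := hFl.mono fun p hp h => by
    rw [h, norm_zero] at hp
    have : 0 < m⁻¹ / 2 := by positivity
    linarith
  refine ⟨hne, ?_⟩
  have hFi : (fun p => (F p)⁻¹) =O[scF K] (fun _ => (1 : ℝ)) := by
    refine .of_bound (2 * m) (hFl.mono fun p hp => ?_)
    rw [norm_one, mul_one, norm_inv]
    rw [inv_le_comm₀ (lt_of_lt_of_le (by positivity) hp) (by positivity)]
    refine le_trans (le_of_eq ?_) hp
    rw [mul_inv]; ring
  have := (Asymptotics.IsBigO.mul h.neg_left (hFi.mul (bounded_scF hK (hf.inv₀ h0))))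
  simp only [mul_one] at this
  refine Asymptotics.IsBigO.congr' this ?_ EventuallyEq.rfl
  filter_upwards [hne, scF_mem K] with p h1 h2
  have := h0 _ h2.2.2
  rw [Pi.inv_apply]
  field_simp
  ring

end Conv

/-! ### The induction package -/

/-- The behaviour at `±∞` of a solution `(u, y)`, `y = u' + u² + x/2`, of the Hamiltonian system
of Painlevé II with parameter `ν + 1/2` that is a Hastings–McLeod solution with positive sign. -/
def HasAsym (ν : ℂ) (U : Set ℝ) (u y : ℝ → ℂ) : Prop :=
  ∃ M C : ℝ, 1 ≤ M ∧ 0 < C ∧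
    (∀ x : ℝ, M < x → x ∈ U ∧ ‖u x + (ν + 1 / 2) / (x : ℂ)‖ ≤ C / x ^ 3 ∧
      ‖y x - u x ^ 2 - (x : ℂ) / 2‖ ≤ C) ∧
    (∀ z : ℝ, M < z → -z ∈ U ∧
      ‖u (-z) - (Real.sqrt (z / 2) : ℂ) + (ν + 1 / 2) / (2 * (z : ℂ))‖
        ≤ C * (Real.sqrt (z / 2))⁻¹ ^ 5 ∧
      ‖-(y (-z) - u (-z) ^ 2 + (z : ℂ) / 2) - (((Real.sqrt (z / 2))⁻¹ / 4 : ℝ) : ℂ)‖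
        ≤ C * (Real.sqrt (z / 2))⁻¹ ^ 3)

/-- Rough localization of a solution near `±∞` already forces the precise asymptotics. -/
theorem hasAsym_of_rough {ν : ℂ} {U : Set ℝ} {u y : ℝ → ℂ} {M : ℝ} (hM : 1 ≤ M)
    (hu : ∀ x ∈ U, HasDerivAt u (y x - u x ^ 2 - x / 2) x)
    (hy : ∀ x ∈ U, HasDerivAt y (2 * u x * y x + (ν + 1)) x)
    (hp : ∀ x : ℝ, M < x → x ∈ U ∧ ‖u x‖ ≤ Real.sqrt x / 4)
    (hm : ∀ z : ℝ, M < z → -z ∈ U ∧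
      ‖u (-z) - Real.sqrt (z / 2)‖ ≤ Real.sqrt (z / 2) / 10) : HasAsym ν U u y := by
  obtain ⟨v, hv⟩ : ∃ v : ℝ → ℂ, v = fun x => y x - u x ^ 2 - x / 2 := ⟨_, rfl⟩
  have hv' : ∀ x, v x = y x - u x ^ 2 - x / 2 := fun x => by rw [hv]
  have h1 : ∀ x ∈ U, HasDerivAt u (v x) x := fun x hx => by rw [hv']; exact hu x hx
  have h2 : ∀ x ∈ U, HasDerivAt v (2 * u x ^ 3 + x * u x + (ν + 1 / 2)) x := fun x hx => by
    rw [hv]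
    have hid : HasDerivAt (fun x : ℝ => (x : ℂ)) 1 x := Complex.ofRealCLM.hasDerivAt
    refine (((hy x hx).sub ((hu x hx).fun_pow 2)).fun_sub (hid.div_const 2)).congr_deriv ?_
    push_cast; ring
  obtain ⟨M1, C1, hM1, hC1, hA1⟩ := asym_plus (α := ν + 1 / 2) hM (fun x hx => h1 x (hp x hx).1)
    (fun x hx => h2 x (hp x hx).1) (fun x hx => (hp x hx).2)
  obtain ⟨M2, C2, hM2, hC2, hA2⟩ := asym_minus (α := ν + 1 / 2) (u := fun z => u (-z))
    (v := fun z => -v (-z)) hM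
    (fun z hz => by
      have := (h1 _ (hm z hz).1).scomp z (hasDerivAt_neg z)
      refine this.congr_deriv ?_
      simp)
    (fun z hz => by
      have := ((h2 _ (hm z hz).1).scomp z (hasDerivAt_neg z)).fun_neg
      refine this.congr_deriv ?_
      simp; ring)
    (fun z hz => (hm z hz).2)
  refine ⟨max M1 M2, max C1 C2, hM.trans (hM1.trans (le_max_left _ _)),
    lt_of_lt_of_le hC1 (le_max_left _ _), fun x hx => ?_, fun z hz => ?_⟩
  · have hx1 : M1 < x := lt_of_le_of_lt (le_max_left _ _) hx
    have hx0 : 0 < x := by linarith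
    obtain ⟨ha, hb⟩ := hA1 x hx1
    refine ⟨(hp x (by linarith)).1, ha.trans ?_, ?_⟩
    · exact div_le_div_of_nonneg_right (le_max_left _ _) (by positivity)
    · rw [← hv']; exact hb.trans (le_max_left _ _)
  · have hx1 : M2 < z := lt_of_le_of_lt (le_max_right _ _) hz
    obtain ⟨ha, hb⟩ := hA2 z hx1
    refine ⟨(hm z (by linarith)).1, ha.trans ?_, ?_⟩
    · exact mul_le_mul_of_nonneg_right (le_max_right _ _) (by positivity)
    · refine le_trans (le_of_eq ?_) (hb.trans
        (mul_le_mul_of_nonneg_right (le_max_right _ _) (by positivity)))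
      congr 1
      show _ = -v (-z) - _
      rw [hv']
      push_cast
      ring

/-- Everything carried along the induction on `ν`: a solution `(u, y)`, meromorphic on the real
line, of the Hamiltonian system of Painlevé II, with the asymptotics of the Hastings–McLeod
solution, that describes the double scaling limit of the Toeplitz determinants. -/
structure Pkg (ν : ℂ) (U : Set ℝ) (u y : ℝ → ℂ) : Prop where
  isOpen : IsOpen U
  punctured : ∀ x, ∀ᶠ z in 𝓝[≠] x, z ∈ U
  mer_u : ∀ x, MeromorphicAt u x
  mer_y : ∀ x, MeromorphicAt y x
  du : ∀ x ∈ U, HasDerivAt u (y x - u x ^ 2 - x / 2) x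
  dy : ∀ x ∈ U, HasDerivAt y (2 * u x * y x + (ν + 1)) x
  asym : HasAsym ν U u y
  ne : ∀ K, IsCompact K → K ⊆ U →
    ∀ᶠ p in scF K, toeplitzD p.1 ν p.2 ≠ 0 ∧ toeplitzD p.1 (ν + 1) p.2 ≠ 0
  conv_u : ∀ K, IsCompact K → K ⊆ U →
    Conv K (fun p => (eps p.1 : ℂ) ^ 2 / lam * Wt ν p.1 p.2) u
  conv_y : ∀ K, IsCompact K → K ⊆ U →
    Conv K (fun p => (lam : ℂ) / 2 * ((eps p.1 : ℂ) ^ 2)⁻¹ * Rt ν p.1 p.2) y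

/-- Localization at `+∞` of a function close to the root of `2w³ + xw = k`. -/
theorem NearRoot.plus {k x w : ℝ} {u : ℂ} (h : NearRoot k x u w) (hk : 0 < k)
    (hx : max 1 (12 * k) < x) : ‖u‖ ≤ Real.sqrt x / 4 := by
  have hx1 : 1 < x := lt_of_le_of_lt (le_max_left _ _) hx
  have hxk : 12 * k < x := lt_of_le_of_lt (le_max_right _ _) hx
  have h1 := h.norm_le
  obtain ⟨hw, h2, h3⟩ := h
  have h4 := (abs_le.1 h2).2
  have h5 : x * w ≤ 3 / 2 * k := by
    have : 0 < w ^ 3 := by positivity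
    linarith
  have h6 : w ≤ 1 / 8 := by
    by_contra! hc
    have : 12 * k * w < x * w := mul_lt_mul_of_pos_right hxk hw
    have : 12 * k * (1 / 8) < 12 * k * w := mul_lt_mul_of_pos_left hc (by linarith)
    linarith
  have h7 : 1 ≤ Real.sqrt x := Real.one_le_sqrt.2 hx1.le
  linarith

/-- Localization at `-∞` of a function close to the root of `2w³ + xw = k`. -/
theorem NearRoot.minus {k z w : ℝ} {u : ℂ} (h : NearRoot k (-z) u w) (hk : 0 < k)
    (hz : max 1 (100 * k) < z) : ‖u - Real.sqrt (z / 2)‖ ≤ Real.sqrt (z / 2) / 10 := by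
  have hx1 : 1 < z := lt_of_le_of_lt (le_max_left _ _) hz
  have hxk : 100 * k < z := lt_of_le_of_lt (le_max_right _ _) hz
  obtain ⟨hw, h2, h3⟩ := h
  obtain ⟨h4, h4'⟩ := abs_le.1 h2
  obtain ⟨s, hs⟩ : ∃ s, s = Real.sqrt (z / 2) := ⟨_, rfl⟩
  have hs2 : s ^ 2 = z / 2 := by rw [hs]; exact Real.sq_sqrt (by linarith)
  have hs0 : 0 < s := by rw [hs]; exact Real.sqrt_pos.2 (by linarith)
  have hs12 : 1 / 2 < s := by
    by_contra! hc
    have : s ^ 2 ≤ (1 / 2) ^ 2 := pow_le_pow_left₀ hs0.le hc 2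
    linarith
  have hz2 : z = 2 * s ^ 2 := by linarith
  rw [← hs]
  have h5 : 2 * w * (w + s) * (w - s) = 2 * w ^ 3 + -z * w := by rw [hz2]; ring
  have hws : s < w := by
    by_contra! hc
    have : 2 * w * (w + s) * (w - s) ≤ 0 :=
      mul_nonpos_of_nonneg_of_nonpos (by positivity) (by linarith)
    linarith
  have h6 : w - s ≤ 3 / 100 * s := by
    by_contra! hc
    have h7 : 2 * s * (s + s) * (3 / 100 * s) ≤ 2 * w * (w + s) * (w - s) := by
      gcongr
    have h8 : 2 * s * (s + s) * (3 / 100 * s) = 3 / 50 * z * s := by rw [hz2]; ring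
    have h9 : 3 / 50 * z * (1 / 2) ≤ 3 / 50 * z * s := by gcongr
    linarith
  have h10 : ‖u - s‖ ≤ ‖u - w‖ + ‖(w : ℂ) - s‖ := by
    have := norm_add_le (u - w) ((w : ℂ) - s)
    rwa [sub_add_sub_cancel] at this
  have h11 : ‖(w : ℂ) - s‖ = w - s := by
    rw [← Complex.ofReal_sub, Complex.norm_real, Real.norm_of_nonneg (by linarith)]
  linarith

/-! ### Scaling variables -/

/-- The logarithmic version of the scaling variable: `t = n e^{ε²x/λ}`. -/
noncomputable def xl (n : ℕ) (t : ℝ) : ℝ := lam * Real.log (t / n) / eps n ^ 2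

theorem sTime_xl {n : ℕ} (hn : 1 ≤ n) {t : ℝ} (ht : 0 < t) : sTime n (xl n t) = Real.log t := by
  have h1 := (eps_pos hn).ne'
  have h2 := lam_pos.ne'
  have h3 : (n : ℝ) ≠ 0 := by exact_mod_cast (by omega : n ≠ 0)
  rw [sTime, xl, Real.log_div ht.ne' h3]
  field_simp
  ring

/-- The two scaling variables differ by `O(n^{-2/3})`. -/
theorem abs_xl_sub_xi {B : ℝ} (hB : 0 ≤ B) {n : ℕ} (hn : 1 ≤ n) {t : ℝ} (ht : 0 < t)
    (hxi : |xi n t| ≤ B) (he : eps n * B ≤ 1 / 2) : |xl n t - xi n t| ≤ 2 * B ^ 2 * eps n := by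
  have h1 := eps_pos hn
  have h2 := lam_pos
  have h2' := lam_ge
  have h3 := eps_le_one hn
  obtain ⟨e, he'⟩ : ∃ e, e = eps n := ⟨_, rfl⟩
  obtain ⟨x, hx'⟩ : ∃ x, x = xi n t := ⟨_, rfl⟩
  obtain ⟨h, hh⟩ : ∃ h, h = e ^ 2 * x / lam := ⟨_, rfl⟩
  have hdiv := div_eq_xi hn t
  rw [xl, hdiv]
  rw [← he', ← hx', ← hh] at hdiv
  rw [← he', ← hx', ← hh]
  rw [← he'] at h1 h3 he
  rw [← hx'] at hxi
  have hxh : x = lam * h / e ^ 2 := by rw [hh]; field_simp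
  have hha : |h| ≤ e ^ 2 * B := by
    rw [hh, abs_div, abs_mul, abs_of_pos h2, abs_of_nonneg (sq_nonneg e)]
    rw [div_le_iff₀ h2]
    calc e ^ 2 * |x| ≤ e ^ 2 * B := by gcongr
      _ ≤ e ^ 2 * B * lam := le_mul_of_one_le_right (by positivity) h2'
  have hh2 : |h| ≤ 1 / 2 := hha.trans (by
    calc e ^ 2 * B = e * (e * B) := by ring
      _ ≤ 1 * (1 / 2) := by gcongr
      _ = 1 / 2 := by ring)
  obtain ⟨hl, hu⟩ := abs_le.1 hh2
  have hpos : 0 < 1 + h := by linarith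
  have l1 := Real.log_le_sub_one_of_pos hpos
  have l2 := Real.one_sub_inv_le_log_of_pos hpos
  have l3 : h - (1 - (1 + h)⁻¹) ≤ 2 * h ^ 2 := by
    have : h - (1 - (1 + h)⁻¹) = h ^ 2 / (1 + h) := by field_simp; ring
    rw [this, div_le_iff₀ hpos]
    have : 0 ≤ h ^ 2 * (1 + 2 * h) := mul_nonneg (sq_nonneg h) (by linarith)
    linarith
  have hd : |Real.log (1 + h) - h| ≤ 2 * h ^ 2 := by
    rw [abs_le]; constructor <;> linarith [sq_nonneg h]
  have e1 : lam * Real.log (1 + h) / e ^ 2 - x = lam * (Real.log (1 + h) - h) / e ^ 2 := by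
    rw [hxh]; ring
  have hle : |h| * lam ≤ e ^ 2 * B := by
    rw [hh, abs_div, abs_mul, abs_of_pos h2, abs_of_nonneg (sq_nonneg e), div_mul_cancel₀ _ h2.ne']
    gcongr
  rw [e1, abs_div, abs_mul, abs_of_pos h2, abs_of_nonneg (sq_nonneg e), div_le_iff₀ (by positivity)]
  calc lam * |Real.log (1 + h) - h| ≤ lam * (2 * h ^ 2) := by gcongr
    _ = 2 * |h| * (|h| * lam) := by rw [← sq_abs]; ring
    _ ≤ 2 * (e ^ 2 * B) * (e ^ 2 * B) := by gcongr
    _ = 2 * B ^ 2 * e ^ 3 * e := by ring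
    _ ≤ 2 * B ^ 2 * e ^ 3 * 1 := by gcongr
    _ = _ := by ring

/-- Passage from the logarithmic grid to the scaling variable of the statement. -/
theorem Conv.of_grid {K : Set ℝ} (hK : IsCompact K) {Fs : ℕ → ℝ → ℂ} {f f' : ℝ → ℂ}
    (hd : ∀ x, HasDerivAt f (f' x) x) (hf' : Continuous f')
    (h : ∀ X : ℝ, 0 ≤ X → ∃ (L : ℝ) (N : ℕ), ∀ n, N ≤ n → ∀ x, |x| ≤ X →
      ‖Fs n x - f x‖ ≤ L * eps n) :
    Conv K (fun p => Fs p.1 (xl p.1 p.2)) f := by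
  obtain ⟨B0, hB0⟩ := hK.isBounded.exists_norm_le
  obtain ⟨B, hB⟩ : ∃ B, B = |B0| := ⟨_, rfl⟩
  have hBp : 0 ≤ B := hB ▸ abs_nonneg _
  have hKB : ∀ x ∈ K, |x| ≤ B := fun x hx => by
    have := hB0 x hx
    rw [Real.norm_eq_abs] at this
    exact this.trans (hB ▸ le_abs_self _)
  obtain ⟨L, N, hL⟩ := h (B + 2 * B ^ 2) (by positivity)
  obtain ⟨D, hD⟩ := (isCompact_Icc (a := -(B + 2 * B ^ 2)) (b := B + 2 * B ^ 2)).exists_bound_of_continuousOn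
    hf'.continuousOn
  refine .of_bound (L + D * (2 * B ^ 2)) ?_
  have hsm : ∀ᶠ p in scF K, eps p.1 * B < 1 / 2 := by
    have := (eps_scF K).mul_const B
    rw [zero_mul] at this
    exact this.eventually (gt_mem_nhds (by norm_num))
  have hN : ∀ᶠ p in scF K, N ≤ p.1 := eventually_scF.2 ⟨N, fun n hn _ _ _ => hn⟩
  filter_upwards [hsm, hN, scF_mem K] with p h1 h2 h3
  have hx := hKB _ h3.2.2
  have he := eps_pos h3.1
  have h4 := abs_xl_sub_xi hBp h3.1 h3.2.1 hx h1.le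
  have he1 := eps_le_one h3.1
  have h5 : 2 * B ^ 2 * eps p.1 ≤ 2 * B ^ 2 := mul_le_of_le_one_right (by positivity) he1
  have h6 : |xl p.1 p.2| ≤ B + 2 * B ^ 2 := by
    have := abs_add_le (xi p.1 p.2) (xl p.1 p.2 - xi p.1 p.2)
    rw [add_sub_cancel] at this
    linarith
  have h7 := hL _ h2 _ h6
  have h8 : ‖f (xl p.1 p.2) - f (xi p.1 p.2)‖ ≤ D * ‖xl p.1 p.2 - xi p.1 p.2‖ := by
    refine (convex_Icc (-(B + 2 * B ^ 2)) (B + 2 * B ^ 2)).norm_image_sub_le_of_norm_hasDerivWithin_le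
      (fun x _ => (hd x).hasDerivWithinAt) hD ?_ ?_
    · rw [mem_Icc, ← abs_le]
      have : 0 ≤ 2 * B ^ 2 := by positivity
      linarith
    · rw [mem_Icc, ← abs_le]; exact h6
  have hD0 : 0 ≤ D := (norm_nonneg _).trans (hD 0 ⟨by nlinarith, by positivity⟩)
  rw [Real.norm_of_nonneg he.le]
  rw [Real.norm_eq_abs] at h8
  have h9 : D * |xl p.1 p.2 - xi p.1 p.2| ≤ D * (2 * B ^ 2 * eps p.1) :=
    mul_le_mul_of_nonneg_left h4 hD0
  have h10 := norm_add_le (Fs p.1 (xl p.1 p.2) - f (xl p.1 p.2)) (f (xl p.1 p.2) - f (xi p.1 p.2))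
  rw [sub_add_sub_cancel] at h10
  linarith

section small
variable {K : Set ℝ} {F : ℕ × ℝ → ℂ} {f : ℝ → ℂ}

theorem eps_mul_tendsto (c : ℂ) (hF : F =O[scF K] (fun _ => (1 : ℝ))) :
    Tendsto (fun p => c * eps p.1 * F p) (scF K) (𝓝 0) := by
  have h1 : Conv K (fun p => (eps p.1 : ℂ) * F p) (fun _ => 0) := Conv.eps_mul hF
  have h2 := Asymptotics.IsBigO.trans_tendsto h1 (eps_scF K)
  have h3 := h2.const_mul c
  rw [mul_zero] at h3
  refine h3.congr fun p => by ring

/-- Under a small scaling, `sinh` linearises. -/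
theorem Conv.sinhc (c : ℂ) (hc : c ≠ 0) (hK : IsCompact K) (hf : ContinuousOn f K)
    (h : Conv K F f) :
    Conv K (fun p => Complex.sinh (c * eps p.1 * F p) / (c * eps p.1)) f := by
  have hb := h.bigO_one hK hf
  have hsm : ∀ᶠ p in scF K, ‖c * eps p.1 * F p‖ < 1 := by
    have := tendsto_zero_iff_norm_tendsto_zero.1 (eps_mul_tendsto c hb)
    exact this.eventually (gt_mem_nhds (by norm_num))
  obtain ⟨B, hB0, hB⟩ := hb.exists_pos
  have hB := hB.bound
  have key : Conv K (fun p => Complex.sinh (c * eps p.1 * F p) / (c * eps p.1) - F p)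
      (fun _ => 0) := by
    refine .of_bound (‖c‖ ^ 2 * B ^ 3) ?_
    filter_upwards [hsm, hB, scF_mem K] with p h1 h2 h3
    have he := eps_pos h3.1
    have he1 := eps_le_one h3.1
    rw [norm_one, mul_one] at h2
    have hec : (eps p.1 : ℂ) ≠ 0 := by exact_mod_cast he.ne'
    have hnce : 0 < ‖c‖ * eps p.1 := mul_pos (norm_pos_iff.2 hc) he
    have e1 : Complex.sinh (c * eps p.1 * F p) / (c * eps p.1) - F p - 0 =
        (Complex.sinh (c * eps p.1 * F p) - c * eps p.1 * F p) / (c * eps p.1) := by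
      field_simp
      ring
    rw [e1, norm_div, norm_mul, Complex.norm_real, Real.norm_of_nonneg he.le, div_le_iff₀ hnce]
    have h4 := norm_sinh_sub_le h1.le
    refine h4.trans ?_
    rw [norm_mul, norm_mul, Complex.norm_real, Real.norm_of_nonneg he.le]
    calc (‖c‖ * eps p.1 * ‖F p‖) ^ 3 ≤ (‖c‖ * eps p.1 * B) ^ 3 := by gcongr
      _ = ‖c‖ ^ 2 * B ^ 3 * (eps p.1 * 1) * (‖c‖ * eps p.1) * eps p.1 := by ring
      _ ≤ ‖c‖ ^ 2 * B ^ 3 * (eps p.1 * 1) * (‖c‖ * eps p.1) * 1 := by gcongr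
      _ = _ := by ring
  refine ((key.add h).congr (.of_forall fun p => by ring)).congr_right fun x _ => by ring

/-- `exp` of a small multiple of a bounded quantity tends to `1`. -/
theorem Conv.exp_one (c : ℂ) (hb : F =O[scF K] (fun _ => (1 : ℝ))) :
    Conv K (fun p => Complex.exp (c * eps p.1 * F p)) (fun _ => 1) := by
  have hsm : ∀ᶠ p in scF K, ‖c * eps p.1 * F p‖ < 1 := by
    have := tendsto_zero_iff_norm_tendsto_zero.1 (eps_mul_tendsto c hb)
    exact this.eventually (gt_mem_nhds (by norm_num))
  obtain ⟨B, hB0, hB⟩ := hb.exists_pos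
  have hB := hB.bound
  refine .of_bound (2 * ‖c‖ * B) ?_
  filter_upwards [hsm, hB, scF_mem K] with p h1 h2 h3
  have he := eps_pos h3.1
  rw [norm_one, mul_one] at h2
  refine (Complex.norm_exp_sub_one_le h1.le).trans ?_
  rw [norm_mul, norm_mul, Complex.norm_real, Real.norm_of_nonneg he.le]
  calc 2 * (‖c‖ * eps p.1 * ‖F p‖) ≤ 2 * (‖c‖ * eps p.1 * B) := by gcongr
    _ = _ := by ring

/-- `t/n → 1` in the scaling regime. -/
theorem Conv.tau (hK : IsCompact K) : Conv K (fun p => ((p.2 / p.1 : ℝ) : ℂ)) (fun _ => 1) := by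
  have h1 : (fun p : ℕ × ℝ => (xi p.1 p.2 : ℂ)) =O[scF K] (fun _ => (1 : ℝ)) :=
    Conv.id.bigO_one hK Complex.continuous_ofReal.continuousOn
  have h2 : (fun p : ℕ × ℝ => ((lam : ℂ)⁻¹ * eps p.1) * (xi p.1 p.2 : ℂ)) =O[scF K]
      (fun _ => (1 : ℝ)) := by
    have := (eps_mul_tendsto (lam : ℂ)⁻¹ h1).isBigO_one ℝ
    exact this
  refine (((Conv.const 1).add (Conv.eps_mul h2)).congr ?_).congr_right fun x _ => by ring
  filter_upwards [scF_mem K] with p hp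
  rw [div_eq_xi hp.1]
  push_cast
  ring

end small

/-! ### The base case -/

/-- `ε² W/λ` in terms of the scaled variables. -/
theorem Wt_scaled {ν : ℂ} {n : ℕ} (hn : 1 ≤ n) {t : ℝ} (ht : 0 < t) :
    (eps n : ℂ) ^ 2 / lam * Wt ν n t =
      (eps n : ℂ) * ((ν + 1 / 2) / lam * eps n) + (eps n : ℂ) * (lam / 2 * vS ν n (xl n t)) +
        ((t / n : ℝ) : ℂ) * (Complex.sinh (lam * eps n * uS ν n (xl n t)) / (lam * eps n)) := by
  have he : (eps n : ℂ) ≠ 0 := by exact_mod_cast (eps_pos hn).ne'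
  have hl : (lam : ℂ) ≠ 0 := by exact_mod_cast lam_pos.ne'
  have hc : (n : ℂ) * eps n ^ 3 = 1 := by exact_mod_cast eps_cube hn
  have hn0 : (n : ℂ) ≠ 0 := by exact_mod_cast (by omega : n ≠ 0)
  rw [uS, vS, sTime_xl hn ht, WS_log ν n ht, Real.exp_log ht, mul_div_cancel₀ _ (mul_ne_zero hl he)]
  obtain ⟨S, hS⟩ : ∃ S, S = Complex.sinh (etaS ν n (Real.log t)) := ⟨_, rfl⟩
  rw [← hS]
  push_cast
  field_simp
  linear_combination 2 * t * S * hc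

/-- `λ ε⁻² R/2` in terms of the scaled variables. -/
theorem Rt_scaled {ν : ℂ} {n : ℕ} (hn : 1 ≤ n) {t : ℝ} (ht : 0 < t)
    (h0 : NZ ν n (Real.log t)) (h1 : NZ ν (n + 1) (Real.log t)) :
    (lam : ℂ) / 2 * ((eps n : ℂ) ^ 2)⁻¹ * Rt ν n t =
      Complex.exp (lam * eps n * uS ν n (xl n t)) * ((t / n : ℝ) : ℂ)⁻¹ *
        (lam / 2 * (((t / n : ℝ) : ℂ) * (lam ^ 2 / 2 *
          ((Complex.sinh (lam / 2 * eps n * uS ν n (xl n t)) / (lam / 2 * eps n)) *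
          (Complex.sinh (lam / 2 * eps n * uS ν n (xl n t)) / (lam / 2 * eps n)))) + xi n t / lam) +
          eps n * (lam / 2 * (ν + 1 / 2)) + vS ν n (xl n t)) := by
  have he : (eps n : ℂ) ≠ 0 := by exact_mod_cast (eps_pos hn).ne'
  have hl : (lam : ℂ) ≠ 0 := by exact_mod_cast lam_pos.ne'
  have hl3 : (lam : ℂ) ^ 3 = 4 := by exact_mod_cast lam_cube
  have hc : (n : ℂ) * eps n ^ 3 = 1 := by exact_mod_cast eps_cube hn
  have hn0 : (n : ℂ) ≠ 0 := by exact_mod_cast (by omega : n ≠ 0)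
  have htc : (t : ℂ) ≠ 0 := by exact_mod_cast ht.ne'
  have hxi : (xi n t : ℂ) = lam * (t / n - 1) / eps n ^ 2 := by
    have h2 : ((t / n : ℝ) : ℂ) = 1 + eps n ^ 2 * xi n t / lam := by
      rw [div_eq_xi hn]; push_cast; ring
    push_cast at h2
    rw [h2]
    field_simp
    ring
  have hR : Rt ν n t = 1 - (n - Wt ν n t) / t * Complex.exp (etaS ν n (Real.log t)) := by
    rw [← Rt_base hn ht h0 h1]; ring
  rw [uS, vS, sTime_xl hn ht, WS_log ν n ht, Real.exp_log ht, mul_div_cancel₀ _ (mul_ne_zero hl he),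
    hR, hxi]
  obtain ⟨η, hη⟩ : ∃ η, η = etaS ν n (Real.log t) := ⟨_, rfl⟩
  rw [← hη]
  have hhalf : (lam : ℂ) / 2 * eps n * (η / (lam * eps n)) = η / 2 := by field_simp
  rw [hhalf]
  have hch : Complex.sinh (η / 2) * Complex.sinh (η / 2) = (Complex.cosh η - 1) / 2 := by
    have h3 := Complex.cosh_two_mul (η / 2)
    rw [Complex.cosh_sq, mul_div_cancel₀ _ (two_ne_zero)] at h3
    rw [h3]; ring
  have hs2 : (Complex.sinh (η / 2) / (lam / 2 * eps n)) *
      (Complex.sinh (η / 2) / (lam / 2 * eps n)) = (Complex.cosh η - 1) * 2 / (lam * eps n) ^ 2 := by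
    rw [div_mul_div_comm, hch]; field_simp
  rw [hs2]
  have hexp : Complex.exp η * (Complex.cosh η - Complex.sinh η) = 1 := by
    rw [Complex.cosh_sub_sinh, ← Complex.exp_add, add_neg_cancel, Complex.exp_zero]
  obtain ⟨E, hE⟩ : ∃ E, E = Complex.exp η := ⟨_, rfl⟩
  obtain ⟨C, hC⟩ : ∃ C, C = Complex.cosh η := ⟨_, rfl⟩
  obtain ⟨S, hS⟩ : ∃ S, S = Complex.sinh η := ⟨_, rfl⟩
  rw [← hE, ← hC, ← hS] at hexp
  rw [← hE, ← hC, ← hS]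
  obtain ⟨W, hW⟩ : ∃ W, W = Wt ν n t := ⟨_, rfl⟩
  rw [← hW]
  obtain ⟨l, hl'⟩ : ∃ l : ℂ, l = lam := ⟨_, rfl⟩
  obtain ⟨e, he'⟩ : ∃ e : ℂ, e = eps n := ⟨_, rfl⟩
  obtain ⟨m, hm'⟩ : ∃ m : ℂ, m = n := ⟨_, rfl⟩
  rw [← hl'] at hl hl3
  rw [← he'] at he hc
  rw [← hm'] at hn0 hc
  rw [← hl', ← he']
  push_cast
  rw [← hm']
  have key : l / 2 * (e ^ 2)⁻¹ * (1 - (m - W) / t * E) = E * (t / m)⁻¹ *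
      (l / (2 * e ^ 2 * m) * (t * (C - S) - m + W)) := by
    have : (1 : ℂ) = E * (C - S) := hexp.symm
    calc l / 2 * (e ^ 2)⁻¹ * (1 - (m - W) / t * E)
        = l / 2 * (e ^ 2)⁻¹ * (E * (C - S) - (m - W) / t * E) := by rw [← this]
      _ = _ := by field_simp; ring
  rw [key]
  congr 1
  have hm1 : m = (e ^ 3)⁻¹ := eq_inv_of_mul_eq_one_left hc
  have hl2 : e / l ^ 2 = e * l / 4 := by
    field_simp
    linear_combination -hl3
  rw [hm1, hl2]
  field_simp
  ring

/-- The package when `Re(-ν)` is large; here the limiting solution has no poles and `U = ℝ`. -/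
theorem pkg_base {ν : ℂ} {k B : ℝ} (hB : 0 ≤ B) (hkB : 4000 * (B + 1) ≤ k)
    (hk : (-ν).re = k + 1 / 2) (hκ : ‖-ν - 1 / 2 - k‖ ≤ B) : ∃ u y, Pkg ν univ u y := by
  have hk0 : 0 < k := by linarith
  obtain ⟨u, v, hu, hv, hnr, hconv⟩ := base_limit hB hkB hk hκ
  obtain ⟨y, hy⟩ : ∃ y : ℝ → ℂ, y = fun x => v x + u x ^ 2 + x / 2 := ⟨_, rfl⟩
  have hy' : ∀ x, y x = v x + u x ^ 2 + x / 2 := fun x => by rw [hy]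
  have du : ∀ x : ℝ, HasDerivAt u (y x - u x ^ 2 - x / 2) x := fun x => by
    refine (hu x).congr_deriv ?_
    rw [hy']; ring
  have dy : ∀ x : ℝ, HasDerivAt y (2 * u x * y x + (ν + 1)) x := fun x => by
    have hid : HasDerivAt (fun x : ℝ => (x : ℂ)) 1 x := Complex.ofRealCLM.hasDerivAt
    rw [hy]
    refine (((hv x).fun_add ((hu x).fun_pow 2)).fun_add (hid.div_const 2)).congr_deriv ?_
    push_cast; ring
  have han := fun x => analyticAt_of_ode du dy x
  have hNZ := fun n : ℕ => (eta_close hB hkB hk hκ n).1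
  have hcu : Continuous u := continuous_iff_continuousAt.2 fun x => (hu x).continuousAt
  have hcv : Continuous v := continuous_iff_continuousAt.2 fun x => (hv x).continuousAt
  have hcU : ∀ K, IsCompact K → Conv K (fun p => uS ν p.1 (xl p.1 p.2)) u := fun K hK =>
    Conv.of_grid hK hu hcv fun X hX => by
      obtain ⟨L, N, h⟩ := hconv X hX
      exact ⟨L, N, fun n hn x hx => (h n hn x hx).1⟩
  have hcV : ∀ K, IsCompact K → Conv K (fun p => vS ν p.1 (xl p.1 p.2)) v := fun K hK =>
    Conv.of_grid hK hv (by fun_prop) fun X hX => by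
      obtain ⟨L, N, h⟩ := hconv X hX
      exact ⟨L, N, fun n hn x hx => (h n hn x hx).2⟩
  have hl : (lam : ℂ) ≠ 0 := by exact_mod_cast lam_pos.ne'
  have hl3 : (lam : ℂ) ^ 3 = 4 := by exact_mod_cast lam_cube
  refine ⟨u, y, isOpen_univ, fun x => by simp, fun x => (han x).1.meromorphicAt,
    fun x => (han x).2.meromorphicAt, fun x _ => du x, fun x _ => dy x, ?_, ?_, ?_, ?_⟩
  · refine hasAsym_of_rough (M := max 1 (100 * k)) (le_max_left _ _) (fun x _ => du x)
      (fun x _ => dy x) (fun x hx => ⟨mem_univ _, ?_⟩) (fun z hz => ⟨mem_univ _, ?_⟩)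
    · obtain ⟨w, hw⟩ := hnr x
      refine hw.plus hk0 (lt_of_le_of_lt (max_le_max le_rfl (by linarith)) hx)
    · obtain ⟨w, hw⟩ := hnr (-z)
      exact hw.minus hk0 hz
  · intro K hK _
    filter_upwards [scF_mem K] with p hp
    have := hNZ p.1 p.1 (by omega) (Real.log p.2)
    rwa [NZ, Real.exp_log hp.2.1] at this
  · intro K hK _
    have h1 : Conv K (fun p => (eps p.1 : ℂ) * ((ν + 1 / 2) / lam * eps p.1)) (fun _ => 0) :=
      Conv.eps_mul ((eps_mul_tendsto ((ν + 1 / 2) / lam) (F := fun _ => 1)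
        (Asymptotics.isBigO_const_const _ one_ne_zero _)).isBigO_one ℝ |>.congr_left
          fun p => by ring)
    have h2 := Conv.eps_mul (((Conv.const (lam / 2 : ℂ)).mul hK continuousOn_const
      hcv.continuousOn (hcV K hK)).bigO_one hK (by fun_prop))
    have h3 := (Conv.tau hK).mul hK continuousOn_const hcu.continuousOn
      (Conv.sinhc lam hl hK hcu.continuousOn (hcU K hK))
    refine (((h1.add h2).add h3).congr ?_).congr_right fun x _ => by ring
    filter_upwards [scF_mem K] with p hp
    rw [Wt_scaled hp.1 hp.2.1]
  · intro K hK _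
    have h1 := Conv.exp_one (lam : ℂ) ((hcU K hK).bigO_one hK hcu.continuousOn)
    have h2 := ((Conv.tau hK).inv hK continuousOn_const (fun x _ => one_ne_zero)).2
    have h3 := Conv.sinhc (lam / 2 : ℂ) (div_ne_zero hl two_ne_zero) hK hcu.continuousOn (hcU K hK)
    have h4 := (Conv.const (lam ^ 2 / 2 : ℂ)).mul hK continuousOn_const (by fun_prop)
      (h3.mul hK hcu.continuousOn hcu.continuousOn h3)
    have h5 := ((Conv.tau hK).mul hK continuousOn_const (by fun_prop) h4).add
      ((Conv.id (K := K)).mul hK (by fun_prop) continuousOn_const (Conv.const (lam : ℂ)⁻¹))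
    have h6 := (Conv.const (lam / 2 : ℂ)).mul hK continuousOn_const (by fun_prop) h5
    have h7 : Conv K (fun p => (eps p.1 : ℂ) * (lam / 2 * (ν + 1 / 2))) (fun _ => 0) :=
      Conv.eps_mul (Asymptotics.isBigO_const_const _ one_ne_zero _)
    have h8 := (h1.mul hK continuousOn_const continuousOn_const h2).mul hK (by fun_prop)
      (by fun_prop) ((h6.add h7).add (hcV K hK))
    refine (h8.congr ?_).congr_right fun x _ => ?_
    · filter_upwards [scF_mem K] with p hp
      have hz0 := hNZ p.1 p.1 (by omega) (Real.log p.2)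
      have hz1 := hNZ p.1 (p.1 + 1) (by omega) (Real.log p.2)
      rw [Rt_scaled hp.1 hp.2.1 hz0 hz1, div_eq_mul_inv (xi p.1 p.2 : ℂ)]
    · rw [hy']
      field_simp
      linear_combination (u x ^ 2) * hl3

/-! ### The Bäcklund transformation at `±∞` -/

/-- The Bäcklund transform at a point near `+∞`: it is at most `√x / 4`. -/
theorem step_asym_plus {α c u y : ℂ} {x C : ℝ} (hC : 0 < C) (hx1 : 1 ≤ x)
    (hu : ‖u + α / x‖ ≤ C / x ^ 3) (hy : ‖y - u ^ 2 - x / 2‖ ≤ C)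
    (hx : 4 * (C + (‖α‖ + C) ^ 2) ≤ x) (hx' : 16 * (‖α‖ + C + 4 * ‖c‖) ^ 2 ≤ x) :
    y ≠ 0 ∧ ‖-u - c / y‖ ≤ Real.sqrt x / 4 := by
  have hx0 : 0 < x := by linarith
  have h1 : ‖u‖ ≤ ‖α‖ + C := by
    have e1 : C / x ^ 3 ≤ C := div_le_self hC.le (one_le_pow₀ hx1)
    have e2 : ‖α / x‖ ≤ ‖α‖ := by
      rw [norm_div, Complex.norm_real, Real.norm_of_nonneg hx0.le]
      exact div_le_self (norm_nonneg _) hx1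
    have := norm_sub_le (u + α / x) (α / x)
    rw [add_sub_cancel_right] at this
    linarith
  have h2 : x / 4 ≤ ‖y‖ := by
    have e1 : ‖u ^ 2‖ ≤ (‖α‖ + C) ^ 2 := by
      rw [norm_pow]; exact pow_le_pow_left₀ (norm_nonneg _) h1 2
    have e2 : ‖(x / 2 : ℂ)‖ = x / 2 := by
      rw [norm_div, Complex.norm_real, Real.norm_of_nonneg hx0.le]; norm_num
    have e3 := norm_sub_le (y - u ^ 2) (y - u ^ 2 - x / 2)
    rw [sub_sub_cancel, e2] at e3
    have e4 := norm_sub_le y (u ^ 2)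
    linarith
  have hy0 : 0 < ‖y‖ := by linarith
  refine ⟨norm_pos_iff.1 hy0, ?_⟩
  have h3 : ‖c / y‖ ≤ 4 * ‖c‖ := by
    rw [norm_div, div_le_iff₀ hy0]
    have : ‖c‖ * 1 ≤ ‖c‖ * (4 * ‖y‖) := mul_le_mul_of_nonneg_left (by linarith) (norm_nonneg _)
    linarith
  have h4 := norm_sub_le (-u) (c / y)
  rw [norm_neg] at h4
  have h5 : 4 * (‖α‖ + C + 4 * ‖c‖) ≤ Real.sqrt x := by
    refine Real.le_sqrt_of_sq_le (le_trans (le_of_eq ?_) hx')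
    ring
  linarith

/-- The Bäcklund transform at a point `-z` near `-∞`, with `s = √(z/2)`: since `y ≈ -c/(2s)`, the new
value is again close to `s`. For `c = 0` this fails, which is why the sign changes for `ν ∈ ℕ`. -/
theorem step_asym_minus {c u y : ℂ} {s C : ℝ} (hc : c ≠ 0) (hC : 0 < C) (hs1 : 1 ≤ s)
    (hu : ‖u - s + (c - 1 / 2) / (4 * s ^ 2)‖ ≤ C * s⁻¹ ^ 5)
    (hy : ‖-(y - u ^ 2 + s ^ 2) - ((s⁻¹ / 4 : ℝ) : ℂ)‖ ≤ C * s⁻¹ ^ 3)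
    (hs : 20 * (‖c - 1 / 2‖ + C) ≤ s)
    (hs' : 160 * (3 * C + (‖c - 1 / 2‖ + C) ^ 2) / ‖c‖ ≤ s) :
    y ≠ 0 ∧ ‖-u - c / y - s‖ ≤ s / 10 := by
  obtain ⟨A, hA⟩ : ∃ A, A = ‖c - 1 / 2‖ + C := ⟨_, rfl⟩
  rw [← hA] at hs hs'
  have hs0 : 0 < s := by linarith
  have hsc : (s : ℂ) ≠ 0 := by exact_mod_cast hs0.ne'
  have hcn : 0 < ‖c‖ := norm_pos_iff.2 hc
  have hA0 : 0 < A := by rw [hA]; positivity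
  obtain ⟨i, hi⟩ : ∃ i, i = s⁻¹ := ⟨_, rfl⟩
  have hi0 : 0 < i := by rw [hi]; positivity
  have hi1 : i ≤ 1 := by rw [hi]; exact inv_le_one_of_one_le₀ hs1
  have his : i * s = 1 := by rw [hi]; field_simp
  have hisc : (i : ℂ) * s = 1 := by exact_mod_cast his
  obtain ⟨r, hr⟩ : ∃ r, r = u - s + (c - 1 / 2) / (4 * s ^ 2) := ⟨_, rfl⟩
  obtain ⟨q, hq⟩ : ∃ q, q = -(y - u ^ 2 + s ^ 2) - ((s⁻¹ / 4 : ℝ) : ℂ) := ⟨_, rfl⟩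
  obtain ⟨d, hd⟩ : ∃ d, d = u - s := ⟨_, rfl⟩
  rw [← hr, ← hi] at hu
  rw [← hq, ← hi] at hy
  have hdr : d = r - (c - 1 / 2) / 4 * (i : ℂ) ^ 2 := by
    rw [hd, hr, hi]; push_cast; field_simp; ring
  have hdn : ‖d‖ ≤ A * i ^ 2 := by
    rw [hdr]
    refine (norm_sub_le _ _).trans ?_
    rw [norm_mul, norm_div, norm_pow, Complex.norm_real, Real.norm_of_nonneg hi0.le]
    have e1 : C * i ^ 5 ≤ C * i ^ 2 := by
      have := pow_le_pow_of_le_one hi0.le hi1 (show 2 ≤ 5 by norm_num)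
      gcongr
    have e2 : ‖(4 : ℂ)‖ = 4 := by norm_num
    rw [e2, hA]
    have e3 : 0 ≤ ‖c - 1 / 2‖ * i ^ 2 := by positivity
    linarith
  obtain ⟨E, hE⟩ : ∃ E, E = 2 * r + (i : ℂ) * d ^ 2 - i * q := ⟨_, rfl⟩
  have hyE : s * y = -c / 2 + s ^ 2 * E := by
    have e1 : y = u ^ 2 - s ^ 2 - q - i / 4 := by
      rw [hq, hi]; push_cast; ring
    have e2 : u = s + d := by rw [hd]; ring
    have e3 : r = d + (c - 1 / 2) / 4 * (i : ℂ) ^ 2 := by rw [hdr]; ring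
    rw [hE, e1, e2, e3]
    linear_combination (-((s : ℂ) * d ^ 2) + s * q - (c - 1 / 2) / 2 * (i * s + 1) - 1 / 4) * hisc
  have hEn : ‖(s : ℂ) ^ 2 * E‖ ≤ (3 * C + A ^ 2) * i := by
    have e0 : (s : ℂ) ^ 2 * E = 2 * (s ^ 2 * r) + s * d ^ 2 - s * q := by
      rw [hE]; linear_combination ((s : ℂ) * d ^ 2 - s * q) * hisc
    have e1 : ‖2 * ((s : ℂ) ^ 2 * r)‖ ≤ 2 * C * i := by
      rw [norm_mul, norm_mul, norm_pow, Complex.norm_real, Real.norm_of_nonneg hs0.le]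
      have e : ‖(2 : ℂ)‖ = 2 := by norm_num
      rw [e]
      calc 2 * (s ^ 2 * ‖r‖) ≤ 2 * (s ^ 2 * (C * i ^ 5)) := by gcongr
        _ = 2 * C * (i * s) ^ 2 * i ^ 3 := by ring
        _ = 2 * C * i ^ 3 := by rw [his]; ring
        _ ≤ 2 * C * i ^ 1 := by
          have := pow_le_pow_of_le_one hi0.le hi1 (show 1 ≤ 3 by norm_num)
          gcongr
        _ = _ := by ring
    have e2 : ‖(s : ℂ) * d ^ 2‖ ≤ A ^ 2 * i := by
      rw [norm_mul, norm_pow, Complex.norm_real, Real.norm_of_nonneg hs0.le]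
      calc s * ‖d‖ ^ 2 ≤ s * (A * i ^ 2) ^ 2 := by gcongr
        _ = A ^ 2 * (i * s) * i ^ 3 := by ring
        _ = A ^ 2 * i ^ 3 := by rw [his]; ring
        _ ≤ A ^ 2 * i ^ 1 := by
          have := pow_le_pow_of_le_one hi0.le hi1 (show 1 ≤ 3 by norm_num)
          gcongr
        _ = _ := by ring
    have e3 : ‖(s : ℂ) * q‖ ≤ C * i := by
      rw [norm_mul, Complex.norm_real, Real.norm_of_nonneg hs0.le]
      calc s * ‖q‖ ≤ s * (C * i ^ 3) := by gcongr
        _ = C * (i * s) * i ^ 2 := by ring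
        _ = C * i ^ 2 := by rw [his]; ring
        _ ≤ C * i ^ 1 := by
          have := pow_le_pow_of_le_one hi0.le hi1 (show 1 ≤ 2 by norm_num)
          gcongr
        _ = _ := by ring
    rw [e0]
    have f1 := norm_sub_le (2 * ((s : ℂ) ^ 2 * r) + s * d ^ 2) (s * q)
    have f2 := norm_add_le (2 * ((s : ℂ) ^ 2 * r)) (s * d ^ 2)
    linarith
  have hEc : ‖(s : ℂ) ^ 2 * E‖ ≤ ‖c‖ / 160 := by
    refine hEn.trans ?_
    rw [div_le_iff₀ hcn] at hs'
    have : 160 * (3 * C + A ^ 2) * i ≤ s * ‖c‖ * i := mul_le_mul_of_nonneg_right hs' hi0.le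
    have e : s * ‖c‖ * i = ‖c‖ := by rw [mul_right_comm, mul_comm s, his, one_mul]
    linarith
  have hsy : ‖c‖ / 4 ≤ ‖(s : ℂ) * y‖ := by
    have e1 : -c / 2 = s * y - s ^ 2 * E := by rw [hyE]; ring
    have e2 : ‖-c / 2‖ = ‖c‖ / 2 := by rw [norm_div, norm_neg]; norm_num
    have e3 := norm_sub_le (s * y) (s ^ 2 * E)
    rw [← e1, e2] at e3
    linarith
  have hsy0 : 0 < ‖(s : ℂ) * y‖ := by linarith
  have hy0 : y ≠ 0 := fun h => by rw [h] at hsy0; simp at hsy0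
  refine ⟨hy0, ?_⟩
  have e1 : -u - c / y - s = -d - 2 * s * ((s ^ 2 * E) / (s * y)) := by
    have e2 : s ^ 2 * E = s * y + c / 2 := by rw [hyE]; ring
    rw [e2, hd]
    field_simp
    ring
  have e3 : ‖2 * (s : ℂ) * ((s ^ 2 * E) / (s * y))‖ ≤ s / 20 := by
    rw [norm_mul, norm_mul, norm_div, Complex.norm_real, Real.norm_of_nonneg hs0.le]
    have e : ‖(2 : ℂ)‖ = 2 := by norm_num
    rw [e]
    have e4 : ‖(s : ℂ) ^ 2 * E‖ / ‖(s : ℂ) * y‖ ≤ 1 / 40 := by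
      rw [div_le_iff₀ hsy0]; linarith
    calc 2 * s * (‖(s : ℂ) ^ 2 * E‖ / ‖(s : ℂ) * y‖) ≤ 2 * s * (1 / 40) := by gcongr
      _ = s / 20 := by ring
  have e5 : ‖d‖ ≤ s / 20 := by
    have : A * i ^ 2 ≤ A * 1 := by
      have := pow_le_one₀ (n := 2) hi0.le hi1
      gcongr
    linarith
  rw [e1]
  refine (norm_sub_le _ _).trans ?_
  rw [norm_neg]
  linarith

/-- The Bäcklund transformation preserves the rough localization at `±∞`. -/
theorem HasAsym.step {ν : ℂ} {U : Set ℝ} {u y : ℝ → ℂ} (hν : ν + 1 ≠ 0) (h : HasAsym ν U u y) :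
    ∃ M : ℝ, 1 ≤ M ∧
      (∀ x : ℝ, M < x → x ∈ U ∧ y x ≠ 0 ∧ ‖-u x - (ν + 1) / y x‖ ≤ Real.sqrt x / 4) ∧
      (∀ z : ℝ, M < z → -z ∈ U ∧ y (-z) ≠ 0 ∧
        ‖-u (-z) - (ν + 1) / y (-z) - Real.sqrt (z / 2)‖ ≤ Real.sqrt (z / 2) / 10) := by
  obtain ⟨M, C, hM, hC, hp, hm⟩ := h
  obtain ⟨A, hA⟩ : ∃ A, A = ‖ν + 1 / 2‖ + C := ⟨_, rfl⟩
  have hA0 : 0 < A := by rw [hA]; positivity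
  obtain ⟨T, hT⟩ : ∃ T, T = 160 * (3 * C + A ^ 2) / ‖ν + 1‖ := ⟨_, rfl⟩
  have hT0 : 0 ≤ T := by rw [hT]; positivity
  obtain ⟨P, hP⟩ : ∃ P, P = 1 + 20 * A + T := ⟨_, rfl⟩
  have hP0 : 0 < P := by linarith
  have p1 : 0 ≤ 2 * P ^ 2 := by positivity
  have p2 : 0 ≤ 4 * (C + A ^ 2) := by positivity
  have p3 : 0 ≤ 16 * (A + 4 * ‖ν + 1‖) ^ 2 := by positivity
  refine ⟨M + 2 * P ^ 2 + 4 * (C + A ^ 2) + 16 * (A + 4 * ‖ν + 1‖) ^ 2, by linarith,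
    fun x hx => ?_, fun z hz => ?_⟩
  · obtain ⟨h1, h2, h3⟩ := hp x (by linarith)
    refine ⟨h1, step_asym_plus hC (by linarith) h2 h3 ?_ ?_⟩ <;> rw [← hA] <;> linarith
  · obtain ⟨h1, h2, h3⟩ := hm z (by linarith)
    obtain ⟨s, hs⟩ : ∃ s, s = Real.sqrt (z / 2) := ⟨_, rfl⟩
    have hs2 : s ^ 2 = z / 2 := by rw [hs]; exact Real.sq_sqrt (by linarith)
    have hsP : P ≤ s := by
      rw [hs]; refine Real.le_sqrt_of_sq_le (by linarith)
    have hz2 : (z : ℂ) = 2 * (s : ℂ) ^ 2 := by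
      have : z = 2 * s ^ 2 := by linarith
      rw [this]; push_cast; ring
    have hc2 : ν + 1 - 1 / 2 = ν + 1 / 2 := by ring
    rw [← hs] at h2 h3 ⊢
    refine ⟨h1, step_asym_minus hν hC (by linarith) ?_ ?_ ?_ ?_⟩
    · rw [hc2]
      refine le_trans (le_of_eq ?_) h2
      rw [hz2]
      congr 3
      ring
    · refine le_trans (le_of_eq ?_) h3
      rw [hz2]
      congr 4
      ring
    · rw [hc2, ← hA]; linarith
    · rw [hc2, ← hA, ← hT]; linarith

/-! ### The Bäcklund step -/

/-- `Rt_mul` solved for `R` at `ν + 1`, in the scaled variables. -/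
theorem Rt_succ_scaled {ν : ℂ} {n : ℕ} {t : ℝ} (hn : 1 ≤ n) (ht : 0 < t)
    (h1 : toeplitzD n (ν + 1) t ≠ 0) (h2 : toeplitzD n (ν + 1 + 1) t ≠ 0) {R U' : ℂ}
    (hR : R = (lam : ℂ) / 2 * ((eps n : ℂ) ^ 2)⁻¹ * Rt ν n t)
    (hU : U' = (eps n : ℂ) ^ 2 / lam * Wt (ν + 1) n t)
    (hD : 1 - 2 / lam * eps n * (eps n * R) ≠ 0) :
    (lam : ℂ) / 2 * ((eps n : ℂ) ^ 2)⁻¹ * Rt (ν + 1) n t =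
      lam / 2 * ((((t / n : ℝ) : ℂ) + 1) * (xi n t * (lam : ℂ)⁻¹) -
        2 / lam * (((t / n : ℝ) : ℂ) * ((t / n : ℝ) : ℂ) * R) + lam ^ 2 * (U' * U')) *
        (((t / n : ℝ) : ℂ)⁻¹ * ((t / n : ℝ) : ℂ)⁻¹ *
        (1 - 2 / lam * eps n * (eps n * R))⁻¹) := by
  have he : (eps n : ℂ) ≠ 0 := by exact_mod_cast (eps_pos hn).ne'
  have hl : (lam : ℂ) ≠ 0 := by exact_mod_cast lam_pos.ne'
  have hc : (n : ℂ) * eps n ^ 3 = 1 := by exact_mod_cast eps_cube hn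
  have hn0 : (n : ℂ) ≠ 0 := by exact_mod_cast (by omega : n ≠ 0)
  have htc : (t : ℂ) ≠ 0 := by exact_mod_cast ht.ne'
  have hxi : (xi n t : ℂ) = lam * (t / n - 1) / eps n ^ 2 := by
    have h2 : ((t / n : ℝ) : ℂ) = 1 + eps n ^ 2 * xi n t / lam := by
      rw [div_eq_xi hn]; push_cast; ring
    push_cast at h2
    rw [h2]
    field_simp
    ring
  have hmul := Rt_mul hn ht h1 h2
  have hR' : Rt ν n t = 2 / lam * eps n * (eps n * R) := by rw [hR]; field_simp
  have hW' : Wt (ν + 1) n t = lam / eps n ^ 2 * U' := by rw [hU]; field_simp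
  rw [hR', hW'] at hmul
  obtain ⟨D, hDD⟩ : ∃ D, D = 1 - 2 / lam * eps n * (eps n * R) := ⟨_, rfl⟩
  rw [← hDD] at hD hmul ⊢
  have hR2 : Rt (ν + 1) n t = 1 - (n ^ 2 - (lam / eps n ^ 2 * U') ^ 2) / (t ^ 2 * D) := by
    rw [← hmul]; field_simp; ring
  have hRD : R = (1 - D) * lam / (2 * eps n ^ 2) := by rw [hDD]; field_simp; ring
  rw [hR2, hxi, hRD]
  have hm1 : (n : ℂ) = ((eps n : ℂ) ^ 3)⁻¹ := eq_inv_of_mul_eq_one_left hc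
  push_cast
  rw [hm1]
  field_simp
  ring

/-- The Bäcklund transformation `ν ↦ ν + 1`. -/
theorem Pkg.step {ν : ℂ} {U : Set ℝ} {u y : ℝ → ℂ} (hν : ν + 1 ≠ 0) (h : Pkg ν U u y) :
    ∃ U' u' y', Pkg (ν + 1) U' u' y' := by
  obtain ⟨u', hu'⟩ : ∃ u' : ℝ → ℂ, u' = fun x => -u x - (ν + 1) / y x := ⟨_, rfl⟩
  obtain ⟨y', hy'⟩ : ∃ y' : ℝ → ℂ, y' = fun x => -y x + 2 * u' x ^ 2 + x := ⟨_, rfl⟩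
  have hu'x : ∀ x, u' x = -u x - (ν + 1) / y x := fun x => by rw [hu']
  have hy'x : ∀ x, y' x = -y x + 2 * u' x ^ 2 + x := fun x => by rw [hy']
  have du : ∀ x ∈ U ∩ {x | y x ≠ 0}, HasDerivAt u' (y' x - u' x ^ 2 - x / 2) x := by
    rintro x ⟨hx, hyx⟩
    have hyx : y x ≠ 0 := hyx
    have := (h.du x hx).fun_neg.fun_sub (((h.dy x hx).fun_inv hyx).const_mul (ν + 1))
    rw [hy'x, hu'x]
    have e : u' = fun x => -u x - (ν + 1) * (y x)⁻¹ := by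
      rw [hu']; funext x; rw [div_eq_mul_inv]
    rw [e]
    refine this.congr_deriv ?_
    field_simp
    ring
  have dy : ∀ x ∈ U ∩ {x | y x ≠ 0}, HasDerivAt y' (2 * u' x * y' x + (ν + 1 + 1)) x := by
    intro x hx
    have hyx : y x ≠ 0 := hx.2
    have hid : HasDerivAt (fun x : ℝ => (x : ℂ)) 1 x := Complex.ofRealCLM.hasDerivAt
    have h1 := du x hx
    rw [hy']
    refine (((h.dy x hx.1).fun_neg.fun_add ((h1.fun_pow 2).const_mul 2)).fun_add hid).congr_deriv ?_
    have e : y x * u' x = -(u x * y x) - (ν + 1) := by rw [hu'x]; field_simp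
    show _ = 2 * u' x * (-y x + 2 * u' x ^ 2 + x) + _
    rw [hy'x]
    push_cast
    linear_combination (-2 : ℂ) * e
  have hmu : ∀ x, MeromorphicAt u' x := fun x => by
    have := (h.mer_u x).neg.sub ((MeromorphicAt.const (ν + 1) x).div (h.mer_y x))
    rw [hu']; exact this
  have hmy : ∀ x, MeromorphicAt y' x := fun x => by
    have hid : MeromorphicAt (fun x : ℝ => (x : ℂ)) x :=
      (Complex.ofRealCLM.analyticAt x).meromorphicAt
    have := ((h.mer_y x).neg.add ((MeromorphicAt.const 2 x).mul ((hmu x).pow 2))).add hid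
    rw [hy']; exact this
  have hcy : ContinuousOn y U := fun x hx => (h.dy x hx).continuousAt.continuousWithinAt
  have hcu : ContinuousOn u U := fun x hx => (h.du x hx).continuousAt.continuousWithinAt
  have hcu' : ContinuousOn u' (U ∩ {x | y x ≠ 0}) :=
    fun x hx => (du x hx).continuousAt.continuousWithinAt
  -- Off the zeros of `y`, the finite-`n` recurrences converge to the Bäcklund transformation.
  have hconv : ∀ K, IsCompact K → K ⊆ U ∩ {x | y x ≠ 0} →
      (∀ᶠ p in scF K, toeplitzD p.1 (ν + 1) p.2 ≠ 0 ∧ toeplitzD p.1 (ν + 1 + 1) p.2 ≠ 0) ∧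
      Conv K (fun p => (eps p.1 : ℂ) ^ 2 / lam * Wt (ν + 1) p.1 p.2) u' := by
    intro K hK hKU
    have hKU1 : K ⊆ U := fun x hx => (hKU hx).1
    have hy0 : ∀ x ∈ K, y x ≠ 0 := fun x hx => (hKU hx).2
    have hY := h.conv_y K hK hKU1
    obtain ⟨hne, hYi⟩ := hY.inv hK (hcy.mono hKU1) hy0
    have hl : (lam : ℂ) ≠ 0 := by exact_mod_cast lam_pos.ne'
    have hall : ∀ᶠ p in scF K, (toeplitzD p.1 (ν + 1) p.2 ≠ 0 ∧ toeplitzD p.1 (ν + 1 + 1) p.2 ≠ 0) ∧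
        Rt ν p.1 p.2 ≠ 0 ∧
        Wt (ν + 1) p.1 p.2 = -Wt ν p.1 p.2 - 2 * (ν + 1) * (1 - Rt ν p.1 p.2) / Rt ν p.1 p.2 := by
      filter_upwards [hne, h.ne K hK hKU1, scF_mem K] with p h1 h2 h3
      have hR : Rt ν p.1 p.2 ≠ 0 := right_ne_zero_of_mul h1
      obtain ⟨h4, h5⟩ := Wt_succ h3.1 h3.2.1 h2.1 h2.2 hR
      exact ⟨⟨h2.2, h4⟩, hR, h5⟩
    refine ⟨hall.mono fun p hp => hp.1, ?_⟩
    have h1 := (h.conv_u K hK hKU1).neg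
    have h2 := (Conv.const (ν + 1)).mul hK continuousOn_const ((hcy.mono hKU1).inv₀ hy0) hYi
    have h3 : Conv K (fun p => (eps p.1 : ℂ) * (2 * (ν + 1) / lam * eps p.1)) (fun _ => 0) :=
      Conv.eps_mul ((eps_mul_tendsto (2 * (ν + 1) / lam) (F := fun _ => 1)
        (Asymptotics.isBigO_const_const _ one_ne_zero _)).isBigO_one ℝ |>.congr_left
          fun p => by ring)
    refine (((h1.sub h2).add h3).congr ?_).congr_right fun x _ => ?_
    · filter_upwards [hall, scF_mem K] with p hp hp1
      have he : (eps p.1 : ℂ) ≠ 0 := by exact_mod_cast (eps_pos hp1.1).ne'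
      obtain ⟨-, hR, hW⟩ := hp
      rw [hW]
      field_simp
      ring
    · rw [hu'x, Pi.inv_apply]; ring
  obtain ⟨M, hM, hp, hm⟩ := h.asym.step hν
  refine ⟨U ∩ {x | y x ≠ 0}, u', y', ?_, ?_, hmu, hmy, du, dy, ?_, fun K hK hKU => (hconv K hK hKU).1,
    fun K hK hKU => (hconv K hK hKU).2, ?_⟩
  · exact hcy.isOpen_inter_preimage h.isOpen isOpen_compl_singleton
  · intro x
    rcases (h.mer_y x).eventually_eq_zero_or_eventually_ne_zero with h0 | h0
    -- If `y` vanished on an open set, `y' = 2uy + (ν + 1)` would force `ν + 1 = 0`.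
    · exfalso
      obtain ⟨z, hz⟩ := ((eventually_eventually_nhdsWithin.2 h0).and (h.punctured x)).and
        (self_mem_nhdsWithin) |>.exists
      obtain ⟨⟨h1, h2⟩, h3⟩ := hz
      have h4 : ∀ᶠ w in 𝓝 z, y w = 0 := by
        rwa [(isOpen_compl_singleton.nhdsWithin_eq h3)] at h1
      have h5 : HasDerivAt y 0 z :=
        (hasDerivAt_const z (0 : ℂ)).congr_of_eventuallyEq h4
      have h6 := h5.unique (h.dy z h2)
      rw [h4.self_of_nhds, mul_zero, zero_add] at h6
      exact hν h6.symm
    · exact (h.punctured x).and h0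
  · refine hasAsym_of_rough hM du dy (fun x hx => ?_) (fun z hz => ?_)
    · obtain ⟨h1, h2, h3⟩ := hp x hx
      exact ⟨⟨h1, h2⟩, by rw [hu'x]; exact h3⟩
    · obtain ⟨h1, h2, h3⟩ := hm z hz
      exact ⟨⟨h1, h2⟩, by rw [hu'x]; exact h3⟩
  · intro K hK hKU
    obtain ⟨hne, hU⟩ := hconv K hK hKU
    have hKU1 : K ⊆ U := fun x hx => (hKU hx).1
    have hY := h.conv_y K hK hKU1
    have hyK := hcy.mono hKU1
    have huK := hcu'.mono hKU
    have hl : (lam : ℂ) ≠ 0 := by exact_mod_cast lam_pos.ne'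
    have hl3 : (lam : ℂ) ^ 3 = 4 := by exact_mod_cast lam_cube
    have hτ := Conv.tau hK
    have hτi := (hτ.inv hK continuousOn_const (fun x _ => one_ne_zero)).2
    have hcid : ContinuousOn (fun x : ℝ => (x : ℂ)) K := Complex.continuous_ofReal.continuousOn
    have h1 := (hτ.add (Conv.const 1)).mul hK (by fun_prop) (by fun_prop)
      ((Conv.id (K := K)).mul hK hcid continuousOn_const (Conv.const (lam : ℂ)⁻¹))
    have h2 := (Conv.const (2 / lam : ℂ)).mul hK continuousOn_const (by fun_prop)
      ((hτ.mul hK continuousOn_const continuousOn_const hτ).mul hK (by fun_prop) hyK hY)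
    have h3 := (Conv.const (lam ^ 2 : ℂ)).mul hK continuousOn_const (by fun_prop)
      (hU.mul hK huK huK hU)
    have h4 := (Conv.const (lam / 2 : ℂ)).mul hK continuousOn_const (by fun_prop)
      ((h1.sub h2).add h3)
    have hb := hY.bigO_one hK hyK
    have h5 : Conv K (fun p => 1 - 2 / lam * eps p.1 * (eps p.1 *
        ((lam : ℂ) / 2 * ((eps p.1 : ℂ) ^ 2)⁻¹ * Rt ν p.1 p.2))) (fun _ => 1) := by
      have h6 := Conv.eps_mul (((eps_mul_tendsto (2 / lam : ℂ) hb)).isBigO_one ℝ)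
      refine (((Conv.const 1).sub h6).congr (.of_forall fun p => by ring)).congr_right
        fun x _ => by ring
    obtain ⟨hne5, h5i⟩ := h5.inv hK continuousOn_const (fun x _ => one_ne_zero)
    have h7 := h4.mul hK (by fun_prop) (by fun_prop)
      ((hτi.mul hK (by fun_prop) (by fun_prop) hτi).mul hK (by fun_prop) (by fun_prop) h5i)
    refine (h7.congr ?_).congr_right fun x _ => ?_
    · filter_upwards [hne, hne5, scF_mem K] with p hp1 hp2 hp3
      rw [Rt_succ_scaled hp3.1 hp3.2.1 hp1.1 hp1.2 rfl rfl hp2]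
    · rw [hy'x]
      field_simp
      linear_combination (u' x ^ 2) * hl3

/-! ### Conclusion -/

/-- Iterating the Bäcklund transformation; no step degenerates when `ν ∉ ℕ`. -/
theorem exists_pkg_of_sub {ν : ℂ} (hν : ∀ m : ℕ, ν ≠ m) (j : ℕ)
    (h : ∃ U u y, Pkg (ν - j) U u y) : ∃ U u y, Pkg ν U u y := by
  induction j with
  | zero => simpa using h
  | succ j ih =>
    obtain ⟨U, u, y, h⟩ := h
    have h1 : ν - (j + 1 : ℕ) + 1 ≠ 0 := fun hz => hν j (by
      push_cast at hz
      linear_combination hz)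
    have h2 := h.step h1
    have e : ν - (j + 1 : ℕ) + 1 = ν - j := by push_cast; ring
    rw [e] at h2
    exact ih h2

/-- The package exists for all `ν ∉ ℕ`: after subtracting a large integer from `ν`, `pkg_base` applies. -/
theorem exists_pkg {ν : ℂ} (hν : ∀ m : ℕ, ν ≠ m) : ∃ U u y, Pkg ν U u y := by
  obtain ⟨j, hj⟩ := exists_nat_ge (4000 * (|ν.im| + 1) + ν.re + 1 / 2)
  refine exists_pkg_of_sub hν j ⟨univ, ?_⟩
  refine pkg_base (k := j - ν.re - 1 / 2) (abs_nonneg ν.im) (by linarith) ?_ (le_of_eq ?_)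
  · simp
  · have : -(ν - j) - 1 / 2 - ((j - ν.re - 1 / 2 : ℝ) : ℂ) = ((-ν.im : ℝ) : ℂ) * Complex.I := by
      apply Complex.ext <;> simp
    rw [this, norm_mul, Complex.norm_real, Complex.norm_I, mul_one, Real.norm_eq_abs, abs_neg]

theorem Pkg.discrete {ν : ℂ} {U : Set ℝ} {u y : ℝ → ℂ} (h : Pkg ν U u y) :
    DiscreteTopology ↥(Uᶜ) := by
  refine discreteTopology_subtype_iff.2 fun x _ => ?_
  rw [← disjoint_iff, disjoint_principal_right, compl_compl]
  exact h.punctured x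

theorem Pkg.contDiffOn {ν : ℂ} {U : Set ℝ} {u y : ℝ → ℂ} (h : Pkg ν U u y) :
    ContDiffOn ℝ 2 u U := by
  have hdu : DifferentiableOn ℝ u U := fun x hx => (h.du x hx).differentiableAt.differentiableWithinAt
  have hdy : DifferentiableOn ℝ y U := fun x hx => (h.dy x hx).differentiableAt.differentiableWithinAt
  have hid : ContDiffOn ℝ 1 (fun x : ℝ => (x : ℂ) / 2) U :=
    (Complex.ofRealCLM.contDiff.div_const 2).contDiffOn
  have hcid : ContinuousOn (fun x : ℝ => (x : ℂ) / 2) U := hid.continuousOn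
  have hcu := hdu.continuousOn
  have hcy := hdy.continuousOn
  have h1u : ContDiffOn ℝ (0 + 1) u U := by
    refine (contDiffOn_succ_iff_deriv_of_isOpen h.isOpen).2 ⟨hdu, by simp, ?_⟩
    refine ContDiffOn.congr (contDiffOn_zero.2 ?_) fun x hx => (h.du x hx).deriv
    exact (hcy.sub (hcu.pow 2)).sub hcid
  have h1y : ContDiffOn ℝ (0 + 1) y U := by
    refine (contDiffOn_succ_iff_deriv_of_isOpen h.isOpen).2 ⟨hdy, by simp, ?_⟩
    refine ContDiffOn.congr (contDiffOn_zero.2 ?_) fun x hx => (h.dy x hx).deriv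
    fun_prop
  rw [zero_add] at h1u h1y
  have : ContDiffOn ℝ (1 + 1) u U := by
    refine (contDiffOn_succ_iff_deriv_of_isOpen h.isOpen).2 ⟨hdu, by simp, ?_⟩
    refine ContDiffOn.congr ?_ fun x hx => (h.du x hx).deriv
    exact (h1y.sub (h1u.pow 2)).sub hid
  rwa [one_add_one_eq_two] at this

/-- Eliminating `y` from the Hamiltonian system gives the Painlevé II equation. -/
theorem Pkg.painleve {ν : ℂ} {U : Set ℝ} {u y : ℝ → ℂ} (h : Pkg ν U u y) :
    ∀ x ∈ U, deriv (deriv u) x = 2 * u x ^ 3 + (x : ℂ) * u x + ν + 1 / 2 := by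
  intro x hx
  have h1 : deriv u =ᶠ[𝓝 x] fun x => y x - u x ^ 2 - x / 2 :=
    (h.isOpen.mem_nhds hx |> fun hU => Filter.mem_of_superset hU fun z hz => (h.du z hz).deriv)
  rw [h1.deriv_eq]
  have hid : HasDerivAt (fun x : ℝ => (x : ℂ)) 1 x := Complex.ofRealCLM.hasDerivAt
  rw [(((h.dy x hx).fun_sub ((h.du x hx).fun_pow 2)).fun_sub (hid.div_const 2)).deriv]
  push_cast; ring

theorem Pkg.asymptotics {ν : ℂ} {U : Set ℝ} {u y : ℝ → ℂ} (h : Pkg ν U u y) :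
    ∃ M : ℝ, 0 < M ∧ ∃ C : ℝ, 0 < C ∧ (Set.Ioi M ∪ Set.Iio (-M)) ⊆ U ∧
      (∀ x : ℝ, M < x → ‖u x + (ν + 1 / 2) / (x : ℂ)‖ ≤ C * x ^ (-(5 : ℝ) / 2)) ∧
      (∀ x : ℝ, x < -M →
        ‖u x - (Real.sqrt (-x / 2) : ℂ) - (ν + 1 / 2) / (2 * (x : ℂ))‖ ≤
          C * (-x) ^ (-(5 : ℝ) / 2)) := by
  obtain ⟨M, C, hM, hC, hp, hm⟩ := h.asym
  refine ⟨M, by linarith, 8 * C, by linarith, ?_, fun x hx => ?_, fun x hx => ?_⟩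
  · rintro x (hx | hx)
    · exact (hp x hx).1
    · have := (hm (-x) (by have := mem_Iio.1 hx; linarith)).1
      rwa [neg_neg] at this
  · refine (hp x hx).2.1.trans ?_
    have hx1 : 1 ≤ x := by linarith
    have hx0 : 0 < x := by linarith
    have e : C / x ^ 3 = C * x ^ (-3 : ℝ) := by
      rw [Real.rpow_neg hx0.le, div_eq_mul_inv]; norm_cast
    rw [e]
    have h1 : x ^ (-3 : ℝ) ≤ x ^ (-(5 : ℝ) / 2) :=
      Real.rpow_le_rpow_of_exponent_le hx1 (by norm_num)
    have h2 : C ≤ 8 * C := by linarith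
    have h3 : 0 ≤ x ^ (-3 : ℝ) := by positivity
    exact mul_le_mul h2 h1 h3 (by linarith)
  · obtain ⟨z, hz⟩ : ∃ z, z = -x := ⟨_, rfl⟩
    obtain rfl : x = -z := by linarith
    rw [neg_neg]
    have hzM : M < z := by linarith
    have hz0 : 0 < z := by linarith
    have h1 := (hm z hzM).2.1
    have e1 : u (-z) - (Real.sqrt (z / 2) : ℂ) - (ν + 1 / 2) / (2 * ((-z : ℝ) : ℂ)) =
        u (-z) - (Real.sqrt (z / 2) : ℂ) + (ν + 1 / 2) / (2 * (z : ℂ)) := by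
      push_cast
      rw [mul_neg, div_neg]; ring
    rw [e1]
    refine h1.trans ?_
    have e2 : (Real.sqrt (z / 2))⁻¹ ^ 5 = z ^ (-(5 : ℝ) / 2) * (2 : ℝ) ^ ((5 : ℝ) / 2) := by
      rw [Real.sqrt_eq_rpow, ← Real.rpow_neg (by positivity), ← Real.rpow_natCast,
        ← Real.rpow_mul (by positivity), Real.div_rpow hz0.le (by norm_num), div_eq_mul_inv,
        ← Real.rpow_neg (by norm_num)]
      norm_num
    have e3 : (2 : ℝ) ^ ((5 : ℝ) / 2) ≤ 8 := by
      calc (2 : ℝ) ^ ((5 : ℝ) / 2) ≤ (2 : ℝ) ^ (3 : ℝ) :=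
            Real.rpow_le_rpow_of_exponent_le (by norm_num) (by norm_num)
        _ = 8 := by norm_num
    rw [e2]
    have h4 : 0 ≤ z ^ (-(5 : ℝ) / 2) := by positivity
    calc C * (z ^ (-(5 : ℝ) / 2) * (2 : ℝ) ^ ((5 : ℝ) / 2)) ≤ C * (z ^ (-(5 : ℝ) / 2) * 8) := by
          gcongr
      _ = _ := by ring

/-- The double scaling limit of `W_n/t`. -/
theorem Pkg.scaling {ν : ℂ} {U : Set ℝ} {u y : ℝ → ℂ} (h : Pkg ν U u y) {K : Set ℝ}
    (hK : IsCompact K) (hKU : K ⊆ U) :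
    ∃ C : ℝ, 0 < C ∧ ∃ N : ℕ, ∀ n : ℕ, N ≤ n → ∀ t : ℝ, 0 < t → xi n t ∈ K →
      toeplitzD n ν t ≠ 0 ∧ toeplitzD n (ν + 1) t ≠ 0 ∧
        ‖-Wt ν n t / t + ((lam * eps n : ℝ) : ℂ) * u (xi n t)‖ ≤ C * (n : ℝ) ^ (-(2 : ℝ) / 3) := by
  have hcu : ContinuousOn u K := fun x hx => (h.du x (hKU hx)).continuousAt.continuousWithinAt
  have hτi := ((Conv.tau hK).inv hK continuousOn_const (fun x _ => one_ne_zero)).2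
  have h1 := (h.conv_u K hK hKU).mul hK hcu (by fun_prop) hτi
  obtain ⟨C, hC, hb⟩ := Asymptotics.IsBigO.exists_pos h1
  have hb := hb.bound
  obtain ⟨N, hN⟩ := eventually_scF.1 (((h.ne K hK hKU).and hb).and (scF_mem K))
  refine ⟨lam * C, mul_pos lam_pos hC, N, fun n hn t ht hx => ?_⟩
  obtain ⟨⟨⟨h2, h3⟩, h4⟩, h5, -⟩ := hN n hn t ht hx
  refine ⟨h2, h3, ?_⟩
  have he := eps_pos h5
  have hn0 : (0 : ℝ) < n := by exact_mod_cast h5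
  have e2 : (n : ℝ) ^ (-(2 : ℝ) / 3) = eps n ^ 2 := by
    rw [neg_div, Real.rpow_neg hn0.le, rpow_two_thirds h5, inv_inv]
  have hec : (eps n : ℂ) ≠ 0 := by exact_mod_cast he.ne'
  have hl : (lam : ℂ) ≠ 0 := by exact_mod_cast lam_pos.ne'
  have hc : (n : ℂ) * eps n ^ 3 = 1 := by exact_mod_cast eps_cube h5
  have hnc : (n : ℂ) ≠ 0 := by exact_mod_cast hn0.ne'
  have htc : (t : ℂ) ≠ 0 := by exact_mod_cast ht.ne'
  have e3 : -Wt ν n t / t + ((lam * eps n : ℝ) : ℂ) * u (xi n t) = -((lam * eps n : ℝ) : ℂ) *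
      ((eps n : ℂ) ^ 2 / lam * Wt ν n t * ((t / n : ℝ) : ℂ)⁻¹ - u (xi n t) * (1 : ℂ)⁻¹) := by
    push_cast
    have hm1 : (n : ℂ) = ((eps n : ℂ) ^ 3)⁻¹ := eq_inv_of_mul_eq_one_left hc
    rw [hm1]
    field_simp
    ring
  rw [e3, norm_mul, norm_neg, Complex.norm_real, Real.norm_of_nonneg (by have := lam_pos; positivity),
    e2]
  have h6 : ‖(eps n : ℂ) ^ 2 / lam * Wt ν n t * ((t / n : ℝ) : ℂ)⁻¹ - u (xi n t) * (1 : ℂ)⁻¹‖ ≤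
      C * eps n := by
    have := h4
    rw [Real.norm_of_nonneg he.le] at this
    exact this
  calc lam * eps n * _ ≤ lam * eps n * (C * eps n) := by
        have := lam_pos
        gcongr
    _ = _ := by ring

/-- Logarithmic derivative of a ratio of determinants. -/
theorem deriv_ratio {ν μ : ℂ} {n : ℕ} {t : ℝ} (ht : 0 < t) (h0 : toeplitzD n ν t ≠ 0)
    (h1 : toeplitzD n μ t ≠ 0) :
    deriv (fun s => toeplitzD n μ s / toeplitzD n ν s) t / (toeplitzD n μ t / toeplitzD n ν t) =
      deriv (toeplitzD n μ) t / toeplitzD n μ t - deriv (toeplitzD n ν) t / toeplitzD n ν t := by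
  have := ((differentiableAt_toeplitzD n μ ht).hasDerivAt.fun_div
    (differentiableAt_toeplitzD n ν ht).hasDerivAt h0).deriv
  rw [this]
  field_simp

/-- `I_{-m} = I_m` for integer order. -/
theorem besselI_neg_nat (m : ℕ) (t : ℝ) : besselI (-(m : ℂ)) t = besselI m t := by
  rw [besselI, besselI]
  have hinj : Function.Injective (fun k : ℕ => k + m) := add_left_injective m
  rw [← hinj.tsum_eq]
  · refine tsum_congr fun k => ?_
    have e1 : ((k + m : ℕ) : ℂ) + -(m : ℂ) + 1 = (k : ℂ) + 1 := by push_cast; ring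
    have e2 : (k : ℂ) + m + 1 = ((k + m : ℕ) : ℂ) + 1 := by push_cast; ring
    have e3 : 2 * ((k + m : ℕ) : ℂ) + -(m : ℂ) = 2 * k + m := by push_cast; ring
    rw [e1, e2, e3, Complex.Gamma_nat_eq_factorial, Complex.Gamma_nat_eq_factorial, mul_comm
      ((k.factorial : ℂ))]
  · intro k hk
    rw [Function.mem_support] at hk
    by_contra hc
    have hkm : k < m := by
      by_contra! hle
      exact hc ⟨k - m, by simp; omega⟩
    apply hk
    have e : (k : ℂ) + -(m : ℂ) + 1 = -((m - 1 - k : ℕ) : ℂ) := by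
      have : ((m - 1 - k : ℕ) : ℂ) + 1 + k = m := by
        have : (m - 1 - k) + 1 + k = m := by omega
        exact_mod_cast this
      linear_combination this
    rw [e, Complex.Gamma_neg_nat_eq_zero]
    simp

theorem besselI_neg_int (k : ℤ) (t : ℝ) : besselI (-(k : ℂ)) t = besselI k t := by
  obtain ⟨m, rfl | rfl⟩ := k.eq_nat_or_neg
  · simpa using besselI_neg_nat m t
  · simpa using (besselI_neg_nat m t).symm

/-- For integer order, the Toeplitz matrix for `-m` is the transpose of the one for `m`. -/
theorem toeplitzD_neg_int (n : ℕ) (m : ℤ) (t : ℝ) :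
    toeplitzD n (-(m : ℂ)) t = toeplitzD n m t := by
  rw [toeplitzD_eq_tz, toeplitzD_eq_tz, ← tz_reflect]
  congr 1
  funext k
  have := besselI_neg_int (k - m) t
  rw [show ((-k : ℤ) : ℂ) - -(m : ℂ) = -((k - m : ℤ) : ℂ) by push_cast; ring, this]
  push_cast
  rfl

/-- double scaling asymptotics of the logarithmic derivative of the ratio
`r_n(t) = D'¹_{n,ν}(t)/D_{n,ν}(t)` (equal up to sign `(-1)^n` to the constant term `π_n(0)`):
there is a Hastings–McLeod solution `u` such that, uniformly for
`ξ = 2^{2/3} n^{2/3}(t/n - 1)` in compact subsets of the domain `U` of `u`,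
`r_n'(t)/r_n(t) = -2^{2/3} n^{-1/3} u(ξ) + O(n^{-2/3})`. -/
theorem recurrence_coefficient_asymp (ν : ℂ) :
    ∃ (U : Set ℝ) (u : ℝ → ℂ), IsHMSolution ν U u ∧
      ∀ K : Set ℝ, IsCompact K → K ⊆ U →
        ∃ C : ℝ, 0 < C ∧ ∃ N : ℕ, ∀ n : ℕ, N ≤ n → ∀ t : ℝ, 0 < t →
          (2 : ℝ) ^ ((2 : ℝ) / 3) * (n : ℝ) ^ ((2 : ℝ) / 3) * (t / n - 1) ∈ K →
            toeplitzD n ν t ≠ 0 ∧ toeplitzD1 n ν t ≠ 0 ∧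
            ‖deriv (fun s => toeplitzD1 n ν s / toeplitzD n ν s) t /
                  (toeplitzD1 n ν t / toeplitzD n ν t) +
                ((((2 : ℝ) ^ ((2 : ℝ) / 3) * (n : ℝ) ^ (-(1 : ℝ) / 3) : ℝ)) : ℂ) *
                  u ((2 : ℝ) ^ ((2 : ℝ) / 3) * (n : ℝ) ^ ((2 : ℝ) / 3) * (t / n - 1))‖ ≤
              C * (n : ℝ) ^ (-(2 : ℝ) / 3) := by
  by_cases hν : ∃ m : ℕ, ν = m
  · -- For `ν ∈ ℕ` the symmetry `D_{n,ν} = D_{n,-ν}` reduces to `-ν-1`, with `u` replaced by `-u`.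
    obtain ⟨m, rfl⟩ := hν
    have hsign : hmSign (m : ℂ) = -1 := by rw [hmSign, if_pos ⟨m, rfl⟩]
    obtain ⟨U, u, y, h⟩ := exists_pkg (ν := -(m : ℂ) - 1) fun j hj => by
      have : ((m + 1 + j : ℕ) : ℂ) = 0 := by push_cast; linear_combination -hj
      have := Nat.cast_eq_zero.1 this
      omega
    have s0 : ∀ n t, toeplitzD n (-(m : ℂ) - 1 + 1) t = toeplitzD n m t := fun n t => by
      have := toeplitzD_neg_int n m t
      push_cast at this
      rw [sub_add_cancel, this]
    have s1 : ∀ n t, toeplitzD n (-(m : ℂ) - 1) t = toeplitzD n (m + 1) t := fun n t => by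
      have := toeplitzD_neg_int n (m + 1) t
      push_cast at this
      rw [← this, neg_add, ← sub_eq_add_neg]
    refine ⟨U, fun x => -u x, ⟨h.isOpen, h.discrete, h.contDiffOn.neg, fun x hx => ?_, ?_⟩, ?_⟩
    · have e : deriv (fun x => -u x) = fun x => -deriv u x := funext fun x => deriv.fun_neg
      rw [e, deriv.fun_neg, h.painleve x hx]
      ring
    · obtain ⟨M, hM, C, hC, h1, h2, h3⟩ := h.asymptotics
      refine ⟨M, hM, C, hC, h1, fun x hx => ?_, fun x hx => ?_⟩
      · refine le_trans (le_of_eq ?_) (h2 x hx)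
        rw [← norm_neg]
        congr 1; ring
      · refine le_trans (le_of_eq ?_) (h3 x hx)
        rw [← norm_neg, hsign]
        congr 1; ring
    · intro K hK hKU
      obtain ⟨C, hC, N, hN⟩ := h.scaling hK hKU
      refine ⟨C, hC, N, fun n hn t ht hx => ?_⟩
      obtain ⟨h1, h2, h3⟩ := hN n hn t ht hx
      have hs1 : toeplitzD n (-(m : ℂ) - 1) = toeplitzD n (m + 1) := funext (s1 n)
      have hs0 : toeplitzD n (-(m : ℂ) - 1 + 1) = toeplitzD n m := funext (s0 n)
      rw [hs1] at h1
      rw [hs0] at h2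
      rw [Wt, hs0, hs1] at h3
      simp only [toeplitzD1_eq]
      refine ⟨h2, h1, ?_⟩
      rw [deriv_ratio ht h2 h1]
      have htc : (t : ℂ) ≠ 0 := by exact_mod_cast ht.ne'
      refine le_trans (le_of_eq ?_) h3
      rw [← norm_neg, ← xi, ← lam, ← eps, neg_div, mul_div_cancel_left₀ _ htc]
      congr 1
      ring
  · have hsign : hmSign ν = 1 := by rw [hmSign, if_neg hν]
    obtain ⟨U, u, y, h⟩ := exists_pkg (ν := ν) fun j hj => hν ⟨j, hj⟩
    refine ⟨U, u, ⟨h.isOpen, h.discrete, h.contDiffOn, h.painleve, ?_⟩, ?_⟩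
    · obtain ⟨M, hM, C, hC, h1, h2, h3⟩ := h.asymptotics
      refine ⟨M, hM, C, hC, h1, h2, fun x hx => ?_⟩
      rw [hsign, one_mul]
      exact h3 x hx
    · intro K hK hKU
      obtain ⟨C, hC, N, hN⟩ := h.scaling hK hKU
      refine ⟨C, hC, N, fun n hn t ht hx => ?_⟩
      obtain ⟨h1, h2, h3⟩ := hN n hn t ht hx
      simp only [toeplitzD1_eq]
      refine ⟨h1, h2, ?_⟩
      rw [deriv_ratio ht h1 h2]
      have htc : (t : ℂ) ≠ 0 := by exact_mod_cast ht.ne'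
      refine le_trans (le_of_eq ?_) h3
      rw [← xi, ← lam, ← eps, Wt, neg_div, mul_div_cancel_left₀ _ htc]
      congr 1
      ring
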